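/- Let r, d, s, π, p be integers with r ≥ 4, r−1 ≤ s ≤ 2r−4, 0 ≤ π ≤ π₀ := s−r+1, −binom(π₀−π+1, 2) ≤ p ≤ 0, and d > d₀(r). Let C ⊂ P^r be an irreducible, reduced, nondegenerate projective curve of degree d, not contained in any surface of degree < s, not contained in any surface of degree s with sectional genus > π and arithmetic genus < p, and suppose p_a(C) = G*(r,d,s,π,p). Then C is contained in a surface S ⊂ P^r of degree s, sectional genus π, and arithmetic genus p_a(S) = p. -/

import Mathlib

/-!
A curve `C` is handled through its generic point `y = (1, y₁, …, y_r)`, with coordinates in an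
extension field `Φ` of `ℂ`. Homogeneous polynomials of degree `t` restricted to `C` form the space
`linSys ℂ y ^ t`, and a generic hyperplane section is the same tuple `y` regarded over the field
`K = ℂ(c)` generated by the coefficients `c` of a generic hyperplane through `y` (`GenSec`). First
differences of Hilbert functions are then Hilbert functions of the section, at least after
saturation (`GenSec.saturated_step`), and this yields the Hilbert polynomials of a surface and of
its curve section (`surf_hilbert`).

*Uniform position.* The pairs of distinct points of a generic section form an irreducible family
(`pair_transfer`), so that the field of definition `L` of a point of the section has no field
strictly between `K` and `L` (`no_intermediate`). The linear Cauchy–Davenport inequality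
(`cauchyDavenport`) then applies and makes the Hilbert function of the section superadditive:
`h(i + j) ≥ min(d, h(i) + h(j) - 1)`.

*A plane curve of degree at most `s`.* Project `C` generically to three-space, take the third
coordinate `w` as the parameter of the hyperplane section, and let `F` be the field generated by `w`
and the coefficients `p` of the projection. The image `z` of the point of the section in the plane
lies on an irreducible plane curve `G = 0` over `F` of least degree. Since
`2 s g ≥ (d - 1)² - s (d - 1)` and `d > s³`, superadditivity and the dimension counts for plane curves
through `z` give `deg G ≤ s` (`plane_degree_numeric`, `ProjBase.exists_plane_curve`), and a weak form
of Bézout's theorem (`dvd_of_bezout`) shows that `G` divides every polynomial of degree at most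
`3 deg G` vanishing at `z`.

*The surface.* Differentiating `G(z) = 0` with respect to the coefficients of the projection
expresses each coordinate `y_l` as a rational function of `z` (`ProjData.coord_eq`). All identities
needed to see that these functions do not depend on the projection have degree at most `3 deg G`, and
so hold on the whole curve `G = 0`. The same formulas therefore define a tuple `η` over the function
field of `G = 0`, the generic point of a surface `S` containing `C` (`exists_surface_model`), whose
second generic hyperplane section has at most `deg G ≤ s` points
(`ProjBase.exists_surface_sections`).

*Conclusion.* As `C` lies on no surface of degree less than `s`, the surface `S` has degree `s`; by
the remaining hypotheses its sectional genus `π'` and arithmetic genus `p'` satisfy `π' ≤ π` and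
`p' ≥ p`. Castelnuovo's method on `S`, again by Cauchy–Davenport, bounds the genus of `C` by
`G*(r, d, s, π', p')` (`genus_le_of_surface`), and `G*` is strictly increasing in `π'` and strictly
decreasing in `p'`; hence `π' = π` and `p' = p`.
-/

open scoped BigOperators

noncomputable section

/-- The homogeneous coordinate ring of `ℙ^{n-1}` over `ℂ`: polynomials in `n` variables. -/
abbrev MPoly (n : ℕ) : Type := MvPolynomial (Fin n) ℂ

/-- An ideal is homogeneous if it contains all homogeneous components of its members. -/
def IsHomogIdeal {n : ℕ} (I : Ideal (MPoly n)) : Prop :=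
  ∀ f ∈ I, ∀ k : ℕ, MvPolynomial.homogeneousComponent k f ∈ I

/-- The degree-`k` graded piece of the homogeneous coordinate ring of the subscheme `V(I)`. -/
def degQ {n : ℕ} (I : Ideal (MPoly n)) (k : ℕ) : Submodule ℂ (MPoly n ⧸ I) :=
  (MvPolynomial.homogeneousSubmodule (Fin n) ℂ k).map (Ideal.Quotient.mkₐ ℂ I).toLinearMap

/-- The graded pieces, indexed by `ℤ` (zero in negative degrees). -/
def degQZ {n : ℕ} (I : Ideal (MPoly n)) (t : ℤ) : Submodule ℂ (MPoly n ⧸ I) :=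
  if 0 ≤ t then degQ I t.toNat else ⊥

/-- The Hilbert function of the closed subscheme `V(I) ⊆ ℙ^{n-1}`. -/
def hilbNat {n : ℕ} (I : Ideal (MPoly n)) (t : ℤ) : ℕ :=
  Module.finrank ℂ (degQZ I t)

/-- The Hilbert function, as an integer-valued function. -/
def hilbZ {n : ℕ} (I : Ideal (MPoly n)) (t : ℤ) : ℤ := (hilbNat I t : ℤ)

/-- The irrelevant maximal ideal `(x_0, …, x_{n-1})`. -/
def mId (n : ℕ) : Ideal (MPoly n) := Ideal.span (Set.range MvPolynomial.X)

/-- The space of degree-`t` graded module homomorphisms `m^k → R/I`. -/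
def gradedHomSub {n : ℕ} (I : Ideal (MPoly n)) (k : ℕ) (t : ℤ) :
    Submodule ℂ ((mId n ^ k : Ideal (MPoly n)) →ₗ[MPoly n] (MPoly n ⧸ I)) where
  carrier := {φ | ∀ (j : ℕ) (f : MPoly n) (hf : f ∈ mId n ^ k),
    f ∈ MvPolynomial.homogeneousSubmodule (Fin n) ℂ j → φ ⟨f, hf⟩ ∈ degQZ I ((j : ℤ) + t)}
  add_mem' := by
    intro a b ha hb j f hf hj
    simpa using Submodule.add_mem _ (ha j f hf hj) (hb j f hf hj)
  zero_mem' := by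
    intro j f hf hj
    simpa using Submodule.zero_mem _
  smul_mem' := by
    intro c φ hφ j f hf hj
    simpa using Submodule.smul_mem _ c (hφ j f hf hj)

/-- `h⁰(X, 𝒪_X(t))` for `X = V(I)`: the stable value of the dimensions of the graded Hom
modules `Hom(m^k, R/I)_t` (the Deligne formula for twisted global sections). -/
def h0Nat {n : ℕ} (I : Ideal (MPoly n)) (t : ℤ) : ℕ :=
  ⨆ k : ℕ, Module.finrank ℂ (gradedHomSub I k t)

/-- `h¹(ℙ^{n-1}, 𝓘_X(t)) = h⁰(X, 𝒪_X(t)) − h_X(t)` (valid for the saturated ideal of `X`). -/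
def h1INat {n : ℕ} (I : Ideal (MPoly n)) (t : ℤ) : ℕ := h0Nat I t - hilbNat I t

/-- The dimension over `ℂ` of the Hartshorne–Rao module `M(X) = ⊕_t H¹(ℙ, 𝓘_X(t))`. -/
def raoDim {n : ℕ} (I : Ideal (MPoly n)) : ℕ := ∑ᶠ t : ℤ, h1INat I t

/-- Arithmetically Cohen–Macaulay (for an integral curve): the Hartshorne–Rao module vanishes. -/
def IsACM {n : ℕ} (I : Ideal (MPoly n)) : Prop := ∀ t : ℤ, h0Nat I t = hilbNat I t

/-- Saturation of an ideal with respect to the irrelevant maximal ideal. -/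
def satIdeal {n : ℕ} (I : Ideal (MPoly n)) : Ideal (MPoly n) where
  carrier := {f | ∃ k : ℕ, ∀ j : Fin n, MvPolynomial.X j ^ k * f ∈ I}
  zero_mem' := ⟨0, fun j => by simpa using I.zero_mem⟩
  add_mem' := by
    rintro f g ⟨k, hk⟩ ⟨l, hl⟩
    refine ⟨k + l, fun j => ?_⟩
    have h1 : MvPolynomial.X (R := ℂ) j ^ (k + l) * (f + g)
        = MvPolynomial.X j ^ l * (MvPolynomial.X j ^ k * f)
          + MvPolynomial.X j ^ k * (MvPolynomial.X j ^ l * g) := by ring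
    rw [h1]
    exact I.add_mem (I.mul_mem_left _ (hk j)) (I.mul_mem_left _ (hl j))
  smul_mem' := by
    rintro c f ⟨k, hk⟩
    refine ⟨k, fun j => ?_⟩
    have h1 : MvPolynomial.X (R := ℂ) j ^ k * (c • f) = c * (MvPolynomial.X j ^ k * f) := by
      rw [smul_eq_mul]; ring
    rw [h1]
    exact I.mul_mem_left _ (hk j)

/-- The hyperplane section of `V(I)` by the hyperplane `{ℓ = 0}`, as a closed subscheme
(its saturated homogeneous ideal). -/
def sect {n : ℕ} (I : Ideal (MPoly n)) (ℓ : MPoly n) : Ideal (MPoly n) :=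
  satIdeal (I ⊔ Ideal.span {ℓ})

/-- A property `P` holds for a *general* `k`-tuple of linear forms (hyperplanes): it holds on a
nonempty Zariski-open subset of the space of coefficients. -/
def GenericForms (n k : ℕ) (P : (Fin k → MPoly n) → Prop) : Prop :=
  ∃ Q : MvPolynomial (Fin k × Fin n) ℂ, Q ≠ 0 ∧
    ∀ c : Fin k → Fin n → ℂ, MvPolynomial.eval (fun p => c p.1 p.2) Q ≠ 0 →
      P fun t => ∑ j : Fin n, MvPolynomial.C (c t j) * MvPolynomial.X j

/-- `V(I) ⊆ ℙ^{n-1}` is nondegenerate: contained in no hyperplane. -/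
def Nondeg {n : ℕ} (I : Ideal (MPoly n)) : Prop :=
  ∀ f ∈ MvPolynomial.homogeneousSubmodule (Fin n) ℂ 1, f ∈ I → f = 0

/-- `V(I)` is an integral curve: `I` homogeneous prime, with cone of Krull dimension 2. -/
def IsCurve {n : ℕ} (I : Ideal (MPoly n)) : Prop :=
  IsHomogIdeal I ∧ I.IsPrime ∧ ringKrullDim (MPoly n ⧸ I) = 2

/-- `V(I)` is an integral surface: `I` homogeneous prime, with cone of Krull dimension 3. -/
def IsSurface {n : ℕ} (I : Ideal (MPoly n)) : Prop :=
  IsHomogIdeal I ∧ I.IsPrime ∧ ringKrullDim (MPoly n ⧸ I) = 3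

/-- The curve `V(I)` has degree `d` and arithmetic genus `g`: its Hilbert polynomial is
`d·t + 1 − g`. -/
def CurveInv {n : ℕ} (I : Ideal (MPoly n)) (d g : ℤ) : Prop :=
  ∃ N : ℤ, ∀ t : ℤ, N ≤ t → hilbZ I t = d * t + 1 - g

/-- The surface `V(I)` has degree `s`, sectional genus `π` and arithmetic genus `pa`:
its Hilbert polynomial is `s·choose(t+1, 2) + (1 − π)·t + 1 + pa`. -/
def SurfInv {n : ℕ} (I : Ideal (MPoly n)) (s π pa : ℤ) : Prop :=
  ∃ N : ℤ, ∀ t : ℤ, N ≤ t → hilbZ I t = s * (t * (t + 1) / 2) + (1 - π) * t + 1 + pa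

/-- `V(IC)` is not contained in any integral surface of degree `< s`. -/
def NotInSurfDegLT {n : ℕ} (IC : Ideal (MPoly n)) (s : ℤ) : Prop :=
  ∀ (T : Ideal (MPoly n)) (s' π' pa' : ℤ), IsSurface T → SurfInv T s' π' pa' → s' < s →
    ¬ T ≤ IC

/-- `V(IC)` is not contained in any integral surface of degree `s` with sectional genus `> π`. -/
def NotInSurfSecGT {n : ℕ} (IC : Ideal (MPoly n)) (s π : ℤ) : Prop :=
  ∀ (T : Ideal (MPoly n)) (π' pa' : ℤ), IsSurface T → SurfInv T s π' pa' → π < π' →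
    ¬ T ≤ IC

/-- `V(IC)` is not contained in any integral surface of degree `s` with arithmetic genus `< p`. -/
def NotInSurfGenLT {n : ℕ} (IC : Ideal (MPoly n)) (s p : ℤ) : Prop :=
  ∀ (T : Ideal (MPoly n)) (π' pa' : ℤ), IsSurface T → SurfInv T s π' pa' → pa' < p →
    ¬ T ≤ IC

/-- `binom2 z = z.choose 2` for integers. -/
def binom2 (z : ℤ) : ℤ := z * (z - 1) / 2

/-- The bound `G*(r,d,s,π,p)` of Di Gennaro–Franco, with `m = (d-1)/s`, `ε = (d-1) % s`. -/
def Gstar (r d s π p : ℤ) : ℤ :=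
  binom2 ((d - 1) / s) * s + ((d - 1) / s) * ((d - 1) % s + π) - p
    + max 0 ((2 * π - (s - 1 - (d - 1) % s)) / 2)

/-- The numerical function `h_{r,d,s,π}`. -/
def hF (r d s π : ℤ) (i : ℤ) : ℤ :=
  if 1 ≤ i ∧ i ≤ (d - 1) / s then
    1 - π + i * s - max 0 ((s - r + 1) - π - i + 1)
  else if i = (d - 1) / s + 1 then
    d - max 0 ((2 * π - (s - 1 - (d - 1) % s)) / 2)
  else if (d - 1) / s + 2 ≤ i then d
  else 0

/-- The threshold `d₀(r)`. -/
def d0 (r : ℤ) : ℤ :=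
  if r ≤ 6 then 16 * (r - 2) * (2 * r - 3)
  else if r ≤ 11 then 8 * (r - 2) ^ 3
  else 2 ^ (r.toNat + 1)

end
noncomputable section

/-- The affine cone of `V(I)`: common zeroes of the elements of `I`. -/
def zeroCone {n : ℕ} (I : Ideal (MPoly n)) : Set (Fin n → ℂ) :=
  {a | ∀ f ∈ I, MvPolynomial.eval a f = 0}

/-- Jacobian-criterion smoothness: at every nonzero point of the affine cone (of dimension `c`)
the gradients of the equations span a subspace of dimension `n - c`. -/
def IsSmooth {n : ℕ} (I : Ideal (MPoly n)) (c : ℕ) : Prop :=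
  ∀ a ∈ zeroCone I, a ≠ 0 →
    Module.finrank ℂ (Submodule.span ℂ
      {g : Fin n → ℂ | ∃ f ∈ I, g = fun j => MvPolynomial.eval a (MvPolynomial.pderiv j f)})
      = n - c

/-- Castelnuovo's bound for the genus of a nondegenerate integral curve of degree `d`
in `ℙ^R`. -/
def castelG (R d : ℤ) : ℤ :=
  binom2 ((d - 1) / (R - 1)) * (R - 1) + ((d - 1) / (R - 1)) * ((d - 1) % (R - 1))

/-- The ideal of the projective cone (from `ℙ^{n-1}` to `ℙ^n`) over `V(I)`. -/
def coneIdeal {n : ℕ} (I : Ideal (MPoly n)) : Ideal (MPoly (n + 1)) :=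
  Ideal.map (MvPolynomial.rename (Fin.castSucc : Fin n → Fin (n + 1))) I

/-- `J` is the (saturated homogeneous) ideal of a line in `ℙ^{n-1}`: it is generated by
`n - 2` linearly independent linear forms. -/
def IsLineIdeal {n : ℕ} (J : Ideal (MPoly n)) : Prop :=
  ∃ V : Submodule ℂ (MPoly n), V ≤ MvPolynomial.homogeneousSubmodule (Fin n) ℂ 1 ∧
    Module.finrank ℂ V = n - 2 ∧ J = Ideal.span (V : Set (MPoly n))

/-- `V(T) ⊆ ℙ^{n-1}` is a smooth rational normal scroll surface: a smooth nondegenerate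
integral surface of minimal degree `n - 2` (with sectional and arithmetic genus `0`)
containing a line (which rules out the Veronese surface). -/
def IsSmoothRNScroll {n : ℕ} (T : Ideal (MPoly n)) : Prop :=
  IsSurface T ∧ Nondeg T ∧ IsSmooth T 3 ∧ SurfInv T ((n : ℤ) - 2) 0 0 ∧
    ∃ J : Ideal (MPoly n), IsLineIdeal J ∧ T ≤ J

/-- The linear projection on points determined by the matrix `L`. -/
def projPt {nb ns : ℕ} (L : Fin ns → Fin nb → ℂ) (a : Fin nb → ℂ) : Fin ns → ℂ :=
  fun t => ∑ j, L t j * a j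

/-- The substitution algebra homomorphism determined by the matrix `L` (pullback of the
linear projection `ℙ^{nb-1} ⇢ ℙ^{ns-1}`). -/
def substHom {nb ns : ℕ} (L : Fin ns → Fin nb → ℂ) : MPoly ns →ₐ[ℂ] MPoly nb :=
  MvPolynomial.aeval fun t => ∑ j, MvPolynomial.C (L t j) * MvPolynomial.X j

/-- The linear projection given by `L` maps `V(I')` isomorphically onto `V(I)`: the center of
projection misses `V(I')`, `V(I)` is the image, and the projection is (projectively) bijective
from `V(I')` onto `V(I)`. -/
def IsIsoProjection {nb ns : ℕ} (L : Fin ns → Fin nb → ℂ)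
    (I' : Ideal (MPoly nb)) (I : Ideal (MPoly ns)) : Prop :=
  I = I'.comap (substHom L) ∧
  (∀ a ∈ zeroCone I', a ≠ 0 → projPt L a ≠ 0) ∧
  (∀ a ∈ zeroCone I', ∀ b ∈ zeroCone I', a ≠ 0 → b ≠ 0 →
    (∃ c : ℂ, c ≠ 0 ∧ projPt L a = c • projPt L b) → ∃ c : ℂ, c ≠ 0 ∧ a = c • b) ∧
  (∀ y ∈ zeroCone I, y ≠ 0 → ∃ a ∈ zeroCone I', a ≠ 0 ∧ ∃ c : ℂ, c ≠ 0 ∧ y = c • projPt L a)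

/-- `t` bounds the Castelnuovo–Mumford regularity of the surface `V(I) ⊆ ℙ^{n-1}`:
for every `t' ≥ t`, `H^i(ℙ, 𝓘(t'-i)) = 0` for all `i ≥ 1`, expressed through the standard
inductive characterization by successive general hyperplane sections. -/
def IsRegBound {n : ℕ} (I : Ideal (MPoly n)) (t : ℤ) : Prop :=
  GenericForms n 2 fun L => ∀ t' : ℤ, t ≤ t' →
    h1INat I (t' - 1) = 0 ∧ h1INat (sect I (L 0)) (t' - 1) = 0 ∧
      h1INat (sect (sect I (L 0)) (L 1)) (t' - 1) = 0

end

/-! ### The linear Cauchy–Davenport inequality -/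

section

open Submodule Module

/-- Cauchy–Davenport with `1 ∈ B`. -/
theorem cauchyDavenport_aux {K Φ : Type*} [Field K] [Field Φ] [Algebra K Φ]
    (L : IntermediateField K Φ) [FiniteDimensional K L]
    (hNI : ∀ H : IntermediateField K Φ, H ≤ L → H = ⊥ ∨ H = L) (n : ℕ) :
    ∀ A B : Submodule K Φ, A ≠ ⊥ → (1 : Φ) ∈ B → A ≤ L.toSubalgebra.toSubmodule →
      B ≤ L.toSubalgebra.toSubmodule → finrank K B ≤ n →
      finrank K L ≤ finrank K (A * B : Submodule K Φ) ∨
        finrank K A + finrank K B ≤ finrank K (A * B : Submodule K Φ) + 1 := by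
  have hLfin : FiniteDimensional K L.toSubalgebra.toSubmodule := ‹FiniteDimensional K L›
  induction n with
  | zero =>
    intro A B hA h1 hAL hBL hn
    exfalso
    have : FiniteDimensional K B := Submodule.finiteDimensional_of_le hBL
    have : B = ⊥ := Submodule.finrank_eq_zero.mp (by omega)
    rw [this] at h1
    exact one_ne_zero ((Submodule.mem_bot K).mp h1)
  | succ n ih =>
    intro A B hA h1 hAL hBL hn
    have fB : FiniteDimensional K B := Submodule.finiteDimensional_of_le hBL
    have fA : FiniteDimensional K A := Submodule.finiteDimensional_of_le hAL
    have hABL : A * B ≤ L.toSubalgebra.toSubmodule := by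
      rw [Submodule.mul_le]
      intro a ha b hb
      exact L.mul_mem (hAL ha) (hBL hb)
    have fAB : FiniteDimensional K (A * B : Submodule K Φ) :=
      Submodule.finiteDimensional_of_le hABL
    have hAAB : A ≤ A * B := fun a ha => by simpa using Submodule.mul_mem_mul ha h1
    by_cases hst : ∀ e ∈ A, ∀ b ∈ B, e * b ∈ A
    · -- `A` is stable under the field generated by `B`
      have hBalg : Algebra.adjoin K (B : Set Φ) ≤ L.toSubalgebra :=
        Algebra.adjoin_le (fun x hx => hBL hx)
      have hinteg : ∀ x ∈ L, IsIntegral K x := fun x hx =>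
        (IsIntegral.of_finite K (⟨x, hx⟩ : L)).map L.val
      set E : IntermediateField K Φ := IntermediateField.adjoin K (B : Set Φ) with hE
      have hEalg : E.toSubalgebra = Algebra.adjoin K (B : Set Φ) :=
        IntermediateField.adjoin_toSubalgebra_of_isAlgebraic
          (fun x hx => (hinteg x (hBL hx)).isAlgebraic)
      have hEL : E ≤ L := IntermediateField.adjoin_le_iff.mpr (fun x hx => hBL hx)
      have hAE : ∀ x ∈ E, ∀ a ∈ A, a * x ∈ A := by
        intro x hx
        have hx' : x ∈ Algebra.adjoin K (B : Set Φ) := by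
          rw [← hEalg]; exact hx
        induction hx' using Algebra.adjoin_induction with
        | mem b hb => exact fun a ha => hst a ha b hb
        | algebraMap r =>
          intro a ha
          rw [mul_comm, ← Algebra.smul_def]; exact A.smul_mem _ ha
        | add u v hu hv h1 h2 =>
          intro a ha
          rw [mul_add]
          exact A.add_mem (h1 (by rw [← hEalg] at hu; exact hu) a ha)
            (h2 (by rw [← hEalg] at hv; exact hv) a ha)
        | mul u v hu hv h1 h2 =>
          intro a ha
          rw [← mul_assoc]
          exact h2 (by rw [← hEalg] at hv; exact hv) _
            (h1 (by rw [← hEalg] at hu; exact hu) a ha)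
      rcases hNI E hEL with hbot | htop
      · right
        have hB1 : finrank K B ≤ 1 := by
          have : B ≤ Submodule.span K {(1 : Φ)} := by
            intro b hb
            have : b ∈ E := IntermediateField.subset_adjoin K _ hb
            rw [hbot, IntermediateField.mem_bot] at this
            obtain ⟨z, hz⟩ := this
            exact Submodule.mem_span_singleton.mpr ⟨z, by rw [← hz, Algebra.smul_def, mul_one]⟩
          have h2 := Submodule.finrank_mono (M := Φ) this (R := K)
          rwa [finrank_span_singleton one_ne_zero] at h2
        have := Submodule.finrank_mono hAAB
        omega
      · left
        obtain ⟨a, ha, ha0⟩ := Submodule.exists_mem_ne_zero_of_ne_bot hA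
        have hle : (L.toSubalgebra.toSubmodule).map (LinearMap.mulLeft K a) ≤ A := by
          rintro _ ⟨x, hx, rfl⟩
          exact hAE x (by rw [htop]; exact hx) a ha
        have h3 := Submodule.finrank_mono (hle.trans hAAB)
        have h4 : finrank K ((L.toSubalgebra.toSubmodule).map (LinearMap.mulLeft K a)) =
            finrank K L.toSubalgebra.toSubmodule := by
          exact (Submodule.equivMapOfInjective _
            (fun u v huv => mul_left_cancel₀ ha0 huv) _).finrank_eq.symm
        rw [h4] at h3
        exact h3
    · push Not at hst
      obtain ⟨e, he, b0, hb0, heb⟩ := hst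
      have he0 : e ≠ 0 := by
        rintro rfl
        exact heb (by simp)
      have hinj : Function.Injective (LinearMap.mulLeft K e) :=
        fun u v huv => mul_left_cancel₀ he0 huv
      -- the transform `A' = A + eB`, `B' = {b ∈ B : eb ∈ A}`
      set eB := B.map (LinearMap.mulLeft K e) with heB
      set B' := B ⊓ A.comap (LinearMap.mulLeft K e) with hB'
      have hB'map : B'.map (LinearMap.mulLeft K e) = A ⊓ eB := by
        ext x
        constructor
        · rintro ⟨b, ⟨hb, hb2⟩, rfl⟩
          exact ⟨hb2, b, hb, rfl⟩
        · rintro ⟨hx, b, hb, rfl⟩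
          exact ⟨b, ⟨hb, hx⟩, rfl⟩
      have feB : FiniteDimensional K eB := by rw [heB]; infer_instance
      have fB' : FiniteDimensional K B' := Submodule.finiteDimensional_of_le inf_le_left
      have hdim := Submodule.finrank_sup_add_finrank_inf_eq A eB
      rw [← hB'map, (Submodule.equivMapOfInjective _ hinj B').finrank_eq.symm,
        (Submodule.equivMapOfInjective _ hinj B).finrank_eq.symm] at hdim
      have hlt : finrank K B' < finrank K B := by
        apply Submodule.finrank_lt_finrank_of_lt
        refine lt_of_le_of_ne inf_le_left (fun h => heb ?_)
        have : b0 ∈ B' := h ▸ hb0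
        exact this.2
      have hABle : (A ⊔ eB) * B' ≤ A * B := by
        rw [Submodule.sup_mul, sup_le_iff]
        refine ⟨mul_le_mul' le_rfl inf_le_left, ?_⟩
        rw [Submodule.mul_le]
        rintro _ ⟨b, hb, rfl⟩ b' ⟨hb'1, hb'2⟩
        have : LinearMap.mulLeft K e b * b' = (e * b') * b := by
          simp only [LinearMap.mulLeft_apply]; ring
        rw [this]
        exact Submodule.mul_mem_mul hb'2 hb
      have h1B' : (1 : Φ) ∈ B' := ⟨h1, by simpa using he⟩
      have hA'L : A ⊔ eB ≤ L.toSubalgebra.toSubmodule := by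
        refine sup_le hAL ?_
        rintro _ ⟨b, hb, rfl⟩
        exact L.mul_mem (hAL he) (hBL hb)
      have := ih (A ⊔ eB) B' (fun h => hA (le_bot_iff.mp (h ▸ le_sup_left))) h1B' hA'L
        (inf_le_left.trans hBL) (by omega)
      have hmono := Submodule.finrank_mono hABle
      omega

/-- The linear Cauchy–Davenport inequality: if the finite extension `L / K` has no proper
intermediate fields, then `dim AB ≥ min ([L : K], dim A + dim B - 1)`. -/
theorem cauchyDavenport {K Φ : Type*} [Field K] [Field Φ] [Algebra K Φ]
    (L : IntermediateField K Φ) [FiniteDimensional K L]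
    (hNI : ∀ H : IntermediateField K Φ, H ≤ L → H = ⊥ ∨ H = L)
    (A B : Submodule K Φ) (hA : A ≠ ⊥) (hB : B ≠ ⊥) (hAL : A ≤ L.toSubalgebra.toSubmodule)
    (hBL : B ≤ L.toSubalgebra.toSubmodule) :
    finrank K L ≤ finrank K (A * B : Submodule K Φ) ∨
      finrank K A + finrank K B ≤ finrank K (A * B : Submodule K Φ) + 1 := by
  obtain ⟨b, hb, hb0⟩ := Submodule.exists_mem_ne_zero_of_ne_bot hB
  have hinj : Function.Injective (LinearMap.mulLeft K b⁻¹) :=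
    fun u v huv => mul_left_cancel₀ (inv_ne_zero hb0) huv
  have h1 : (1 : Φ) ∈ B.map (LinearMap.mulLeft K b⁻¹) := ⟨b, hb, by simp [hb0]⟩
  have h2 : B.map (LinearMap.mulLeft K b⁻¹) ≤ L.toSubalgebra.toSubmodule := by
    rintro _ ⟨x, hx, rfl⟩
    exact L.mul_mem (L.inv_mem (hBL hb)) (hBL hx)
  have h3 : A * B.map (LinearMap.mulLeft K b⁻¹) = (A * B).map (LinearMap.mulLeft K b⁻¹) := by
    have h4 : ∀ U : Submodule K Φ, U.map (LinearMap.mulLeft K b⁻¹) =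
        Submodule.span K {b⁻¹} * U := by
      intro U
      ext x
      rw [Submodule.mem_span_singleton_mul]
      rfl
    rw [h4, h4, mul_left_comm]
  have := cauchyDavenport_aux L hNI _ A _ hA h1 hAL h2 le_rfl
  rwa [h3, (Submodule.equivMapOfInjective _ hinj _).finrank_eq.symm,
    (Submodule.equivMapOfInjective _ hinj _).finrank_eq.symm] at this

end

/-! ### Linear systems and their section modules -/

section

open Submodule Module

section Filtration

variable {k Φ : Type*} [Field k] [Field Φ] [Algebra k Φ] {r : ℕ}

/-- The span of the coordinate functions `y_0, …, y_r` (the degree one piece of the filtration). -/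
def linSys (k : Type*) {Φ : Type*} [Field k] [Field Φ] [Algebra k Φ] {r : ℕ}
    (y : Fin (r + 1) → Φ) : Submodule k Φ :=
  Submodule.span k (Set.range y)

/-- The sections of `𝒪(n)`: all `f` with `f · V^N ⊆ V^(N+n)` for some `N`, where `V` is the span of
the coordinate functions. -/
def secMod (k : Type*) {Φ : Type*} [Field k] [Field Φ] [Algebra k Φ] {r : ℕ}
    (y : Fin (r + 1) → Φ) (n : ℕ) : Submodule k Φ where
  carrier := {f | ∃ N : ℕ, ∀ M, N ≤ M → ∀ v ∈ linSys k y ^ M, f * v ∈ linSys k y ^ (M + n)}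
  zero_mem' := ⟨0, fun M _ v _ => by simp⟩
  add_mem' := by
    rintro f g ⟨N, hN⟩ ⟨N', hN'⟩
    refine ⟨max N N', fun M hM v hv => ?_⟩
    rw [add_mul]
    exact add_mem (hN M (le_trans (le_max_left _ _) hM) v hv)
      (hN' M (le_trans (le_max_right _ _) hM) v hv)
  smul_mem' := by
    rintro a f ⟨N, hN⟩
    refine ⟨N, fun M hM v hv => ?_⟩
    rw [smul_mul_assoc]
    exact Submodule.smul_mem _ _ (hN M hM v hv)

theorem mem_secMod {y : Fin (r + 1) → Φ} {n : ℕ} {f : Φ} :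
    f ∈ secMod k y n ↔ ∃ N : ℕ, ∀ M, N ≤ M → ∀ v ∈ linSys k y ^ M,
      f * v ∈ linSys k y ^ (M + n) := Iff.rfl

theorem mem_linSys (y : Fin (r + 1) → Φ) (j : Fin (r + 1)) : y j ∈ linSys k y :=
  Submodule.subset_span ⟨j, rfl⟩

instance linSys_pow_finite (y : Fin (r + 1) → Φ) (t : ℕ) :
    FiniteDimensional k (linSys k y ^ t : Submodule k Φ) := by
  have : (linSys k y ^ t).FG := by
    apply Submodule.FG.pow
    exact Submodule.fg_span (Set.finite_range y)
  exact Module.Finite.iff_fg.mpr this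

theorem one_mem_linSys {y : Fin (r + 1) → Φ} (h0 : y 0 = 1) : (1 : Φ) ∈ linSys k y :=
  h0 ▸ mem_linSys y 0

theorem linSys_pow_mono {y : Fin (r + 1) → Φ} (h0 : y 0 = 1) {t u : ℕ} (h : t ≤ u) :
    linSys k y ^ t ≤ linSys k y ^ u := by
  have h1 : (1 : Submodule k Φ) ≤ linSys k y := by
    rw [Submodule.one_le]; exact one_mem_linSys h0
  exact pow_le_pow_right₀ h1 h

theorem one_mem_linSys_pow {y : Fin (r + 1) → Φ} (h0 : y 0 = 1) (t : ℕ) :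
    (1 : Φ) ∈ linSys k y ^ t := by
  have h : (1 : Φ) ∈ linSys k y ^ 0 := by rw [pow_zero]; exact Submodule.one_le.mp le_rfl
  exact linSys_pow_mono h0 (Nat.zero_le t) h

theorem linSys_pow_le_adjoin (y : Fin (r + 1) → Φ) (t : ℕ) :
    linSys k y ^ t ≤ Subalgebra.toSubmodule (Algebra.adjoin k (Set.range y)) := by
  have h1 : linSys k y ≤ Subalgebra.toSubmodule (Algebra.adjoin k (Set.range y)) :=
    Submodule.span_le.mpr Algebra.subset_adjoin
  induction t with
  | zero =>
    rw [pow_zero, Submodule.one_le]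
    exact Subalgebra.one_mem _
  | succ n ih =>
    rw [pow_succ, Submodule.mul_le]
    intro a ha b hb
    exact Subalgebra.mul_mem _ (ih ha) (h1 hb)

theorem exists_mem_linSys_pow {y : Fin (r + 1) → Φ} (h0 : y 0 = 1) {f : Φ}
    (hf : f ∈ Algebra.adjoin k (Set.range y)) : ∃ t, f ∈ linSys k y ^ t := by
  induction hf using Algebra.adjoin_induction with
  | mem x hx => exact ⟨1, by rw [pow_one]; exact Submodule.subset_span hx⟩
  | algebraMap a =>
    refine ⟨0, ?_⟩
    rw [pow_zero]
    exact Submodule.mem_one.mpr ⟨a, rfl⟩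
  | add f g _ _ hf hg =>
    obtain ⟨t, ht⟩ := hf
    obtain ⟨u, hu⟩ := hg
    exact ⟨max t u, add_mem (linSys_pow_mono h0 (le_max_left _ _) ht)
      (linSys_pow_mono h0 (le_max_right _ _) hu)⟩
  | mul f g _ _ hf hg =>
    obtain ⟨t, ht⟩ := hf
    obtain ⟨u, hu⟩ := hg
    exact ⟨t + u, by rw [pow_add]; exact Submodule.mul_mem_mul ht hu⟩

theorem linSys_pow_le_secMod (y : Fin (r + 1) → Φ) (t : ℕ) :
    linSys k y ^ t ≤ secMod k y t := by
  intro f hf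
  refine ⟨0, fun M _ v hv => ?_⟩
  rw [add_comm, pow_add]
  exact Submodule.mul_mem_mul hf hv

theorem secMod_mul_mem {y : Fin (r + 1) → Φ} {t u : ℕ} {f g : Φ} (hf : f ∈ secMod k y t)
    (hg : g ∈ secMod k y u) : f * g ∈ secMod k y (t + u) := by
  obtain ⟨N, hN⟩ := hf
  obtain ⟨N', hN'⟩ := hg
  refine ⟨max N N', fun M hM v hv => ?_⟩
  have h1 := hN' M (le_trans (le_max_right _ _) hM) v hv
  have h2 := hN (M + u) (by have := le_max_left N N'; omega) _ h1
  rw [mul_assoc]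
  convert h2 using 2
  ring

theorem mul_mem_secMod_succ {y : Fin (r + 1) → Φ} {t : ℕ} {f : Φ} (hf : f ∈ secMod k y t)
    (j : Fin (r + 1)) : y j * f ∈ secMod k y (t + 1) := by
  rw [mul_comm]
  exact secMod_mul_mem hf (linSys_pow_le_secMod y 1 (by rw [pow_one]; exact mem_linSys y j))

theorem secMod_le_adjoin {y : Fin (r + 1) → Φ} (h0 : y 0 = 1) (t : ℕ) :
    secMod k y t ≤ Subalgebra.toSubmodule (Algebra.adjoin k (Set.range y)) := by
  rintro f ⟨N, hN⟩
  have := hN N le_rfl 1 (one_mem_linSys_pow h0 N)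
  rw [mul_one] at this
  exact linSys_pow_le_adjoin y _ this

theorem prod_mem_linSys_pow {ι : Type*} {y : Fin (r + 1) → Φ} (S : Finset ι)
    (g : ι → Fin (r + 1)) : ∏ i ∈ S, y (g i) ∈ linSys k y ^ S.card := by
  classical
  induction S using Finset.induction_on with
  | empty => simp
  | insert i S hi ih =>
    rw [Finset.prod_insert hi, Finset.card_insert_of_notMem hi, pow_succ']
    exact Submodule.mul_mem_mul (mem_linSys y _) ih

/-- Pigeonhole: a monomial of large degree is divisible by a high power of one coordinate. -/
theorem mul_mem_of_coord_pow {y : Fin (r + 1) → Φ} {w : Φ} {a N b : ℕ}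
    (h : ∀ j, ∀ M, N ≤ M → ∀ v ∈ linSys k y ^ M, y j ^ a * w * v ∈ linSys k y ^ (M + b))
    {M : ℕ} (hM : (r + 1) * a + a + N ≤ M) {v : Φ} (hv : v ∈ linSys k y ^ M) :
    w * v ∈ linSys k y ^ (M - a + b) := by
  rw [linSys, Submodule.span_pow] at hv
  induction hv using Submodule.span_induction with
  | mem x hx =>
    rw [Set.mem_pow] at hx
    obtain ⟨g, rfl⟩ := hx
    choose g' hg' using fun i => (g i).2
    have hprod : (List.ofFn fun i => (g i : Φ)).prod = ∏ i, y (g' i) := by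
      rw [List.prod_ofFn]; exact Finset.prod_congr rfl fun i _ => (hg' i).symm
    rw [hprod]
    obtain ⟨j, -, hj⟩ := Finset.exists_le_card_fiber_of_mul_le_card_of_maps_to
      (s := (Finset.univ : Finset (Fin M))) (t := (Finset.univ : Finset (Fin (r + 1))))
      (f := g') (n := a) (fun _ _ => Finset.mem_univ _) Finset.univ_nonempty
      (by simp only [Finset.card_univ, Fintype.card_fin]; omega)
    obtain ⟨S, hS, hScard⟩ := Finset.exists_subset_card_eq hj
    rw [← Finset.prod_sdiff (Finset.subset_univ S)]
    have h1 : ∏ i ∈ S, y (g' i) = y j ^ a := by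
      rw [← hScard, ← Finset.prod_const]
      refine Finset.prod_congr rfl fun i hi => ?_
      have := hS hi
      rw [Finset.mem_filter] at this
      rw [this.2]
    have h2 : ∏ i ∈ Finset.univ \ S, y (g' i) ∈ linSys k y ^ (M - a) := by
      have hc : (Finset.univ \ S).card = M - a := by
        rw [Finset.card_sdiff_of_subset (Finset.subset_univ S), hScard]; simp
      rw [← hc]
      exact prod_mem_linSys_pow _ _
    rw [h1]
    have := h j (M - a) (by nlinarith [Nat.sub_add_cancel (show a ≤ M by nlinarith)]) _ h2
    convert this using 1
    ring
  | zero => simp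
  | add x z _ _ hx hz => rw [mul_add]; exact add_mem hx hz
  | smul c x _ hx => rw [mul_smul_comm]; exact Submodule.smul_mem _ _ hx

/-- Multiplying by further coordinates makes the exponents `a` for the finitely many `j` equal. -/
theorem exists_uniform_coord {y : Fin (r + 1) → Φ} {W : ℕ → Submodule k Φ}
    (hW : ∀ j n u, u ∈ W n → y j * u ∈ W (n + 1)) {w : Φ}
    (h : ∀ j, ∃ a, y j ^ a * w ∈ W a) : ∃ a, ∀ j, y j ^ a * w ∈ W a := by
  choose a ha using h
  have step : ∀ j n e, y j ^ n * w ∈ W n → y j ^ (n + e) * w ∈ W (n + e) := by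
    intro j n e h
    induction e with
    | zero => exact h
    | succ e ih =>
      rw [← add_assoc, pow_succ', mul_assoc]; exact hW _ _ _ ih
  refine ⟨Finset.univ.sup a, fun j => ?_⟩
  have hle : a j ≤ Finset.univ.sup a := Finset.le_sup (Finset.mem_univ j)
  obtain ⟨e, he⟩ := Nat.exists_eq_add_of_le hle
  rw [he]
  exact step j _ e (ha j)

/-- The modules `secMod` are saturated. -/
theorem secMod_saturated {y : Fin (r + 1) → Φ} {t : ℕ} {w : Φ}
    (h : ∀ j, ∃ a, y j ^ a * w ∈ secMod k y (t + a)) : w ∈ secMod k y t := by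
  obtain ⟨a, ha⟩ := exists_uniform_coord (W := fun a => secMod k y (t + a))
    (fun j n u hu => mul_mem_secMod_succ hu j) h
  choose N hN using ha
  refine ⟨(r + 1) * a + a + Finset.univ.sup N, fun M hM v hv => ?_⟩
  have := mul_mem_of_coord_pow (k := k) (y := y) (w := w) (a := a) (N := Finset.univ.sup N)
    (b := t + a)
    (fun j M hM v hv => hN j M (le_trans (Finset.le_sup (Finset.mem_univ j)) hM) v hv) hM hv
  convert this using 2
  have : a ≤ M := by nlinarith
  omega

/-- There are no nonzero sections of negative degree, unless the filtration is bounded. -/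
theorem secMod_neg {y : Fin (r + 1) → Φ}
    (hinf : ∀ N, ∃ t, N < finrank k (linSys k y ^ t : Submodule k Φ)) (h0 : y 0 = 1) {w : Φ}
    (h : ∀ j, ∃ a, y j ^ (a + 1) * w ∈ secMod k y a) : w = 0 := by
  by_contra hw
  obtain ⟨a, ha⟩ := exists_uniform_coord (y := y)
    (W := fun a => match a with | 0 => ⊥ | (a + 1) => secMod k y a) (w := w)
    (by
      intro j n u hu
      cases n with
      | zero => rw [Submodule.mem_bot] at hu; subst hu; simp
      | succ n => exact mul_mem_secMod_succ hu j)
    (fun j => by obtain ⟨a, ha⟩ := h j; exact ⟨a + 1, ha⟩)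
  cases a with
  | zero =>
    have := ha 0
    rw [Submodule.mem_bot] at this
    simp at this
    exact hw this
  | succ a =>
  choose N hN using ha
  set M0 := (r + 1) * (a + 1) + (a + 1) + Finset.univ.sup N with hM0
  have key : ∀ M, M0 ≤ M → ∀ v ∈ linSys k y ^ M, w * v ∈ linSys k y ^ (M - (a + 1) + a) := by
    intro M hM v hv
    exact mul_mem_of_coord_pow (k := k) (y := y) (w := w) (a := a + 1) (N := Finset.univ.sup N)
      (b := a)
      (fun j M hM v hv => hN j M (le_trans (Finset.le_sup (Finset.mem_univ j)) hM) v hv) hM hv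
  have key2 : ∀ i, ∀ v ∈ linSys k y ^ (M0 + i), w ^ i * v ∈ linSys k y ^ M0 := by
    intro i
    induction i with
    | zero => intro v hv; simpa using hv
    | succ i ih =>
      intro v hv
      have h1 := key _ (by omega) v hv
      have h2 : M0 + (i + 1) - (a + 1) + a = M0 + i := by
        have : a + 1 ≤ M0 := by nlinarith
        omega
      rw [h2] at h1
      have := ih _ h1
      rwa [← mul_assoc, ← pow_succ] at this
  obtain ⟨t, ht⟩ := hinf (finrank k (linSys k y ^ M0 : Submodule k Φ))
  have h3 : (linSys k y ^ (M0 + t)).map (LinearMap.mulLeft k (w ^ t)) ≤ linSys k y ^ M0 := by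
    rintro _ ⟨v, hv, rfl⟩
    exact key2 t v hv
  have h4 := Submodule.finrank_mono h3
  rw [(Submodule.equivMapOfInjective _
    (fun u v huv => mul_left_cancel₀ (pow_ne_zero t hw) huv) _).finrank_eq.symm] at h4
  have h5 := Submodule.finrank_mono (linSys_pow_mono (k := k) h0 (show t ≤ M0 + t by omega))
  omega

end Filtration

end

/-! ### Generic hyperplane sections -/

section

open Submodule Module MvPolynomial

section Section

variable {k K Φ : Type*} [Field k] [Field K] [Field Φ] [Algebra k K] [Algebra k Φ] [Algebra K Φ]
  [IsScalarTower k K Φ] {r : ℕ}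

/-- A generic hyperplane section.  `K = k(c_0, …, c_r)` is a rational function field, the point
`y` of `Φ` lies on the hyperplane `∑ c_j y_j = 0`, and `c_1, …, c_r` are algebraically independent
over the coordinate ring `k[y]`.  Thus `k[y]` is (an affine chart of) the given variety and `K[y]`
is that of its generic hyperplane section. -/
structure GenSec (k K : Type*) {Φ : Type*} [Field k] [Field K] [Field Φ] [Algebra k K]
    [Algebra k Φ] [Algebra K Φ] {r : ℕ} (y : Fin (r + 1) → Φ) (c : Fin (r + 1) → K) : Prop where
  y_zero : y 0 = 1
  gen : ∀ x : K, ∃ P Q : MvPolynomial (Fin (r + 1)) k, aeval c Q ≠ 0 ∧ x * aeval c Q = aeval c P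
  indep : AlgebraicIndependent k c
  rel : ∑ j, algebraMap K Φ (c j) * y j = 0
  free : AlgebraicIndependent (Algebra.adjoin k (Set.range y))
    (fun j : Fin r => algebraMap K Φ (c j.succ))

/-- The coordinates as elements of the coordinate ring `k[y]`. -/
noncomputable def coordR (k : Type*) {Φ : Type*} [Field k] [Field Φ] [Algebra k Φ] {r : ℕ}
    (y : Fin (r + 1) → Φ) (j : Fin (r + 1)) : Algebra.adjoin k (Set.range y) :=
  ⟨y j, Algebra.subset_adjoin ⟨j, rfl⟩⟩

/-- The universal linear form `∑ y_j X_j` over the coordinate ring. -/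
noncomputable def univForm (k : Type*) {Φ : Type*} [Field k] [Field Φ] [Algebra k Φ] {r : ℕ}
    (y : Fin (r + 1) → Φ) : MvPolynomial (Fin (r + 1)) (Algebra.adjoin k (Set.range y)) :=
  ∑ j, C (coordR k y j) * X j

/-- If the coefficients `c₁, …, c_r` of a hyperplane through `y` are independent over `R`, the linear
form `∑ y_j X_j` generates the ideal of relations satisfied by `c`. -/
theorem linForm_dvd {R Φ : Type*} [CommRing R] [CommRing Φ] [Algebra R Φ] {y : Fin (r + 1) → R}
    {c : Fin (r + 1) → Φ} (h0 : y 0 = 1) (hrel : ∑ j, c j * algebraMap R Φ (y j) = 0)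
    (hfree : AlgebraicIndependent R (fun j : Fin r => c j.succ))
    (q : MvPolynomial (Fin (r + 1)) R) (hq : aeval c q = 0) :
    (∑ j, C (y j) * X j : MvPolynomial (Fin (r + 1)) R) ∣ q := by
  set a : MvPolynomial (Fin r) R := -∑ j : Fin r, C (y j.succ) * X j with ha
  let θ : MvPolynomial (Fin (r + 1)) R →ₐ[R] Φ := (aeval (fun j : Fin r => c j.succ)).comp
        (((Polynomial.aeval a).restrictScalars R).comp
          (MvPolynomial.finSuccEquiv R r).toAlgHom)
  have hθ : ∀ q, θ q = aeval (fun j : Fin r => c j.succ)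
      (Polynomial.aeval a (MvPolynomial.finSuccEquiv R r q)) := fun q => rfl
  have hev : θ = aeval c := by
    apply MvPolynomial.algHom_ext
    intro i
    rw [hθ]
    refine Fin.cases ?_ (fun j => ?_) i
    · rw [finSuccEquiv_X_zero, Polynomial.aeval_X, ha]
      simp only [map_neg, map_sum, map_mul, aeval_X, algHom_C]
      rw [Fin.sum_univ_succ, h0, map_one, mul_one] at hrel
      rw [eq_comm, eq_neg_iff_add_eq_zero, ← hrel]
      congr 1
      exact Finset.sum_congr rfl fun j _ => mul_comm _ _
    · rw [finSuccEquiv_X_succ, Polynomial.aeval_C, aeval_X]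
      simp
  have hroot : Polynomial.aeval a (MvPolynomial.finSuccEquiv R r q) = 0 := by
    have h1 := hθ q
    rw [hev, hq] at h1
    exact (injective_iff_map_eq_zero _).mp hfree _ h1.symm
  have hdvd : (Polynomial.X - Polynomial.C a) ∣ MvPolynomial.finSuccEquiv R r q := by
    rw [Polynomial.dvd_iff_isRoot, Polynomial.IsRoot]
    rwa [Polynomial.coe_aeval_eq_eval] at hroot
  have hform : MvPolynomial.finSuccEquiv R r (∑ j, C (y j) * X j) =
      Polynomial.X - Polynomial.C a := by
    rw [Fin.sum_univ_succ, h0, map_add, map_sum, C_1, one_mul, finSuccEquiv_X_zero, ha,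
      map_neg, sub_neg_eq_add, map_sum]
    congr 1
    refine Finset.sum_congr rfl fun j _ => ?_
    rw [map_mul, finSuccEquiv_X_succ, map_mul]
    congr 1
    exact (MvPolynomial.finSuccEquiv R r).commutes (y j.succ)
  rw [← hform] at hdvd
  exact (map_dvd_iff (MvPolynomial.finSuccEquiv R r)).mp hdvd

/-- A polynomial with coefficients in `k[y]` which vanishes at the generic hyperplane through `y`
is divisible by the universal linear form. -/
theorem univForm_dvd {y : Fin (r + 1) → Φ} {c : Fin (r + 1) → Φ} (h0 : y 0 = 1)
    (hrel : ∑ j, c j * y j = 0)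
    (hfree : AlgebraicIndependent (Algebra.adjoin k (Set.range y)) (fun j : Fin r => c j.succ))
    (q : MvPolynomial (Fin (r + 1)) (Algebra.adjoin k (Set.range y)))
    (hq : aeval c q = 0) : univForm k y ∣ q :=
  linForm_dvd (y := coordR k y) (Subtype.ext h0) hrel hfree q hq

theorem univForm_ne_zero {y : Fin (r + 1) → Φ} (h0 : y 0 = 1) : univForm k y ≠ 0 := by
  intro h
  have h1 := congrArg (aeval (Pi.single 0 (1 : Φ))) h
  simp only [univForm, map_sum, map_mul, aeval_X, algHom_C, map_zero] at h1
  rw [Finset.sum_eq_single 0 (by intro b _ hb; simp [hb]) (by simp)] at h1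
  simp only [Pi.single_eq_same, mul_one] at h1
  have h2 : algebraMap (Algebra.adjoin k (Set.range y)) Φ (coordR k y 0) = y 0 := rfl
  rw [h2, h0] at h1
  exact one_ne_zero h1

theorem coeff_univForm_mul (y : Fin (r + 1) → Φ)
    (w : MvPolynomial (Fin (r + 1)) (Algebra.adjoin k (Set.range y))) (β : Fin (r + 1) →₀ ℕ) :
    coeff β (univForm k y * w) = ∑ j, if j ∈ β.support then
      coordR k y j * coeff (β - Finsupp.single j 1) w else 0 := by
  rw [univForm, Finset.sum_mul, coeff_sum]
  refine Finset.sum_congr rfl fun j _ => ?_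
  rw [mul_assoc, coeff_C_mul, coeff_X_mul']
  split_ifs <;> simp

/-- If `W` is a filtered module over the coordinate ring, saturated in degree `0`, then a polynomial
`w` with `ℓ w` having coefficients in `W 1` has coefficients in `W 0`. -/
theorem coeff_mem_of_saturated {y : Fin (r + 1) → Φ} {W : ℕ → Submodule k Φ}
    (hW : ∀ j n u, u ∈ W n → y j * u ∈ W (n + 1))
    (hs : ∀ w : Φ, (∀ j, ∃ a, y j ^ a * w ∈ W a) → w ∈ W 0)
    (w : MvPolynomial (Fin (r + 1)) (Algebra.adjoin k (Set.range y)))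
    (h : ∀ β, (coeff β (univForm k y * w)).1 ∈ W 1) (β : Fin (r + 1) →₀ ℕ) :
    (coeff β w).1 ∈ W 0 := by
  refine hs _ fun j => ?_
  -- descending induction on the exponent of `X_j`
  suffices H : ∀ n : ℕ, ∀ β : Fin (r + 1) →₀ ℕ, w.totalDegree + 1 ≤ β j + n →
      y j ^ n * (coeff β w).1 ∈ W n from ⟨w.totalDegree + 1, H _ β (by omega)⟩
  intro n
  induction n with
  | zero =>
    intro β hβ
    have : coeff β w = 0 := by
      apply coeff_eq_zero_of_totalDegree_lt
      have h1 : β j ≤ ∑ i ∈ β.support, β i := by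
        by_cases hj : j ∈ β.support
        · exact Finset.single_le_sum (f := fun i => β i) (fun _ _ => Nat.zero_le _) hj
        · rw [Finsupp.notMem_support_iff] at hj; omega
      omega
    rw [this]; simp
  | succ n ih =>
    intro β hβ
    have h1 := h (β + Finsupp.single j 1)
    rw [coeff_univForm_mul, ← Finset.add_sum_erase _ _ (Finset.mem_univ j), if_pos (by simp),
      add_tsub_cancel_right] at h1
    have pw : ∀ e (u : Φ) m, u ∈ W m → y j ^ e * u ∈ W (m + e) := by
      intro e u m hu
      induction e with
      | zero => simpa using hu
      | succ e ihe => rw [pow_succ', mul_assoc, ← add_assoc]; exact hW _ _ _ ihe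
    have h2 := pw n _ _ h1
    rw [add_comm 1 n] at h2
    push_cast at h2
    rw [mul_add] at h2
    have h3 : y j ^ n * ∑ i ∈ Finset.univ.erase j, ((if i ∈ (β + Finsupp.single j 1).support then
      coordR k y i * coeff (β + Finsupp.single j 1 - Finsupp.single i 1) w else 0 :
        Algebra.adjoin k (Set.range y)) : Φ) ∈ W (n + 1) := by
      rw [Finset.mul_sum]
      refine Submodule.sum_mem _ fun i hi => ?_
      have hij : i ≠ j := Finset.ne_of_mem_erase hi
      split_ifs with hsupp
      · have h4 := ih (β + Finsupp.single j 1 - Finsupp.single i 1) (by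
          simp [Finsupp.single_apply, hij]; omega)
        have h5 := hW i _ _ h4
        convert h5 using 1
        push_cast
        have : ((coordR k y i : Algebra.adjoin k (Set.range y)) : Φ) = y i := rfl
        rw [this]; ring
      · simp
    have h4 := (Submodule.add_mem_iff_left _ h3).mp h2
    convert h4 using 1
    rw [pow_succ, mul_assoc]
    rfl

end Section

end

/-! ### Relations on a generic hyperplane section -/

section

open Submodule Module MvPolynomial

section Delta

variable {k K Φ : Type*} [Field k] [Field K] [Field Φ] [Algebra k K] [Algebra k Φ] [Algebra K Φ]
  [IsScalarTower k K Φ] {r : ℕ}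

/-- Common denominators in the field of fractions of `k[c]`. -/
theorem exists_common_den {σ : Type*} {c : σ → K}
    (gen : ∀ x : K, ∃ P Q : MvPolynomial σ k, aeval c Q ≠ 0 ∧ x * aeval c Q = aeval c P)
    {n : Type*} [Fintype n] (g : n → K) :
    ∃ (D : MvPolynomial σ k) (P : n → MvPolynomial σ k), aeval c D ≠ 0 ∧
      ∀ i, g i * aeval c D = aeval c (P i) := by
  classical
  choose P Q hQ hPQ using fun i => gen (g i)
  refine ⟨∏ i, Q i, fun i => P i * ∏ j ∈ Finset.univ.erase i, Q j, ?_, fun i => ?_⟩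
  · rw [map_prod]; exact Finset.prod_ne_zero_iff.mpr fun i _ => hQ i
  · rw [map_mul, ← hPQ, ← Finset.mul_prod_erase _ _ (Finset.mem_univ i), map_mul, mul_assoc]

/-- Coefficients of a combination `∑ u_l P_l` of polynomials over `k`. -/
theorem coeff_sum_C_mul_map {y : Fin (r + 1) → Φ} {n : Type*} [Fintype n] {σ : Type*}
    (u : n → Algebra.adjoin k (Set.range y)) (P : n → MvPolynomial σ k) (β : σ →₀ ℕ) :
    (coeff β (∑ l, C (u l) * MvPolynomial.map (algebraMap k (Algebra.adjoin k (Set.range y)))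
      (P l))).1 = ∑ l, coeff β (P l) • (u l).1 := by
  rw [coeff_sum, AddSubmonoidClass.coe_finsetSum]
  refine Finset.sum_congr rfl fun l _ => ?_
  rw [coeff_C_mul, coeff_map, mul_comm, ← Algebra.smul_def]
  rfl

theorem aeval_sum_C_mul_map {y : Fin (r + 1) → Φ} {n : Type*} [Fintype n] {σ : Type*}
    (u : n → Algebra.adjoin k (Set.range y)) (P : n → MvPolynomial σ k) (c : σ → K) :
    aeval (fun j => algebraMap K Φ (c j))
      (∑ l, C (u l) * MvPolynomial.map (algebraMap k (Algebra.adjoin k (Set.range y))) (P l))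
      = ∑ l, algebraMap K Φ (aeval c (P l)) * (u l).1 := by
  rw [map_sum]
  refine Finset.sum_congr rfl fun l _ => ?_
  rw [map_mul, algHom_C, mul_comm, aeval_map_algebraMap]
  congr 1
  rw [← MvPolynomial.aeval_algebraMap_apply]
  rfl

theorem sum_C_mul_map_eq_zero {y : Fin (r + 1) → Φ} {n : Type*} [Fintype n] {σ : Type*}
    {u : n → Algebra.adjoin k (Set.range y)} (hu : LinearIndependent k fun i => (u i).1)
    {P : n → MvPolynomial σ k}
    (h : ∑ l, C (u l) * MvPolynomial.map (algebraMap k (Algebra.adjoin k (Set.range y)))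
      (P l) = 0) (l : n) : P l = 0 := by
  ext β
  have h1 := coeff_sum_C_mul_map u P β
  rw [h] at h1
  exact Fintype.linearIndependent_iff.mp hu (fun l => coeff β (P l)) (by rw [← h1]; simp) l

variable {y : Fin (r + 1) → Φ} {c : Fin (r + 1) → K}

/-- The linear algebra behind both inequalities: with bases `u'` of `W` and `u` of `U`, and
`y_j u'_i = ∑_l A_{j,i,l} u_l`, the relations `ξ_i = (∑_j c_j A_{j,i,l})_l` among the `u_l` over `K`
are independent; and they generate all relations if the saturation condition holds. -/
theorem GenSec.finrank_span_aux (S : GenSec k K y c) (W U : Submodule k Φ)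
    [FiniteDimensional k W] [FiniteDimensional k U]
    (hU : U ≤ Subalgebra.toSubmodule (Algebra.adjoin k (Set.range y)))
    (hW : W ≤ Subalgebra.toSubmodule (Algebra.adjoin k (Set.range y)))
    (hy : ∀ j, ∀ u ∈ W, y j * u ∈ U) :
    finrank K (span K (U : Set Φ)) + finrank k W ≤ finrank k U ∧
    ((∀ w : MvPolynomial (Fin (r + 1)) (Algebra.adjoin k (Set.range y)),
      (∀ β, (coeff β (univForm k y * w)).1 ∈ U) → ∀ β, (coeff β w).1 ∈ W) →
      finrank k U ≤ finrank K (span K (U : Set Φ)) + finrank k W) := by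
  classical
  set bU := finBasis k U with hbU
  set bW := finBasis k W with hbW
  set n := finrank k U
  set n' := finrank k W
  set R := Algebra.adjoin k (Set.range y) with hR
  let A : Fin (r + 1) → Fin n' → Fin n → k := fun j i l => bU.repr ⟨y j * bW i, hy j _ (bW i).2⟩ l
  have hA : ∀ j i, y j * (bW i : Φ) = ∑ l, A j i l • (bU l : Φ) := by
    intro j i
    have := congrArg (Subtype.val) (bU.sum_repr ⟨y j * bW i, hy j _ (bW i).2⟩)
    rw [AddSubmonoidClass.coe_finsetSum] at this
    exact this.symm
  let uR : Fin n → R := fun l => ⟨bU l, hU (bU l).2⟩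
  let wR : Fin n' → R := fun i => ⟨bW i, hW (bW i).2⟩
  have huR : LinearIndependent k fun l => (uR l).1 :=
    bU.linearIndependent.map' U.subtype (Submodule.ker_subtype U)
  have hwR : LinearIndependent k fun l => (wR l).1 :=
    bW.linearIndependent.map' W.subtype (Submodule.ker_subtype W)
  -- the entries of `ξ` as polynomials
  let ξP : Fin n' → Fin n → MvPolynomial (Fin (r + 1)) k := fun i l => ∑ j, C (A j i l) * X j
  let ξ : Fin n' → Fin n → K := fun i l => aeval c (ξP i l)
  have hpoly : ∀ P : Fin n' → MvPolynomial (Fin (r + 1)) k,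
      ∑ l, C (uR l) * MvPolynomial.map (algebraMap k R) (∑ i, P i * ξP i l) =
      univForm k y * ∑ i, C (wR i) * MvPolynomial.map (algebraMap k R) (P i) := by
    intro P
    have h1 : ∀ i, univForm k y * C (wR i) =
        ∑ l, C (uR l) * MvPolynomial.map (algebraMap k R) (ξP i l) := by
      intro i
      simp only [univForm, ξP, map_sum, map_mul, map_X, map_C, Finset.sum_mul, Finset.mul_sum]
      rw [Finset.sum_comm]
      refine Finset.sum_congr rfl fun j _ => ?_
      have h2 : coordR k y j * wR i = ∑ l, uR l * algebraMap k R (A j i l) := by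
        apply Subtype.ext
        rw [AddSubmonoidClass.coe_finsetSum]
        refine (hA j i).trans (Finset.sum_congr rfl fun l _ => ?_)
        rw [Algebra.smul_def, mul_comm]
        rfl
      calc C (coordR k y j) * X j * C (wR i) = C (coordR k y j * wR i) * X j := by
            rw [C_mul]; ring
        _ = _ := by
            rw [h2, map_sum, Finset.sum_mul]
            refine Finset.sum_congr rfl fun l _ => ?_
            rw [C_mul]; ring
    rw [Finset.mul_sum]
    simp only [← mul_assoc, h1, map_sum, map_mul, Finset.mul_sum, Finset.sum_mul]
    rw [Finset.sum_comm]
    refine Finset.sum_congr rfl fun l _ => Finset.sum_congr rfl fun i _ => ?_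
    ring
  let Θ : (Fin n → K) →ₗ[K] Φ := Fintype.linearCombination K (fun l => (bU l : Φ))
  have hΘ : ∀ g, Θ g = ∑ l, algebraMap K Φ (g l) * (uR l).1 := by
    intro g
    rw [Fintype.linearCombination_apply]
    exact Finset.sum_congr rfl fun l _ => Algebra.smul_def _ _
  have hrange : LinearMap.range Θ = span K (U : Set Φ) := by
    rw [Fintype.range_linearCombination]
    apply le_antisymm
    · exact span_mono (by rintro _ ⟨l, rfl⟩; exact (bU l).2)
    · rw [span_le]
      intro u hu
      have := congrArg (Subtype.val) (bU.sum_repr ⟨u, hu⟩)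
      rw [AddSubmonoidClass.coe_finsetSum] at this
      change u ∈ _
      have this : _ = u := this
      rw [← this]
      refine Submodule.sum_mem _ fun l _ => ?_
      rw [Submodule.coe_smul, ← IsScalarTower.algebraMap_smul K]
      exact smul_mem _ _ (subset_span ⟨l, rfl⟩)
  have hrn := LinearMap.finrank_range_add_finrank_ker Θ
  rw [hrange, finrank_fin_fun] at hrn
  have hξker : ∀ i, ξ i ∈ LinearMap.ker Θ := by
    intro i
    rw [LinearMap.mem_ker, hΘ]
    have h1 := hpoly (Pi.single i 1)
    have h2 := congrArg (aeval (fun j => algebraMap K Φ (c j))) h1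
    rw [aeval_sum_C_mul_map, map_mul] at h2
    have h3 : aeval (fun j => algebraMap K Φ (c j)) (univForm k y) = 0 := by
      rw [← S.rel, univForm, map_sum]
      refine Finset.sum_congr rfl fun j _ => ?_
      rw [map_mul, aeval_X, algHom_C, mul_comm]
      rfl
    rw [h3, zero_mul] at h2
    rw [← h2]
    refine Finset.sum_congr rfl fun l _ => ?_
    rw [Finset.sum_eq_single i (by intro b _ hb; simp [hb]) (by simp)]
    simp [ξ]
  have hξind : LinearIndependent K ξ := by
    rw [Fintype.linearIndependent_iff]
    intro g hg
    obtain ⟨D, P, hD, hP⟩ := exists_common_den S.gen g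
    have h1 : ∀ l, ∑ i, P i * ξP i l = 0 := by
      intro l
      apply (injective_iff_map_eq_zero _).mp S.indep
      have h2 := congrFun hg l
      simp only [Finset.sum_apply, Pi.smul_apply, smul_eq_mul, Pi.zero_apply] at h2
      calc aeval c (∑ i, P i * ξP i l) = (∑ i, g i * ξ i l) * aeval c D := by
            rw [map_sum, Finset.sum_mul]
            refine Finset.sum_congr rfl fun i _ => ?_
            rw [map_mul, ← hP]
            simp only [ξ]; ring
        _ = 0 := by rw [h2, zero_mul]
    have h2 := hpoly P
    simp only [h1, map_zero, mul_zero, Finset.sum_const_zero] at h2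
    have h3 := (mul_eq_zero.mp h2.symm).resolve_left (univForm_ne_zero S.y_zero)
    intro i
    have h4 := hP i
    rw [sum_C_mul_map_eq_zero hwR h3 i, map_zero] at h4
    exact (mul_eq_zero.mp h4).resolve_right hD
  constructor
  · have h1 : LinearIndependent K (fun i => (⟨ξ i, hξker i⟩ : LinearMap.ker Θ)) :=
      LinearIndependent.of_comp (LinearMap.ker Θ).subtype hξind
    have h2 := h1.fintype_card_le_finrank
    rw [Fintype.card_fin] at h2
    omega
  · intro hsat
    have hle : LinearMap.ker Θ ≤ span K (Set.range ξ) := by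
      intro g hg
      obtain ⟨D, P, hD, hP⟩ := exists_common_den S.gen g
      rw [LinearMap.mem_ker, hΘ] at hg
      have h1 : aeval (fun j => algebraMap K Φ (c j))
          (∑ l, C (uR l) * MvPolynomial.map (algebraMap k R) (P l)) = 0 := by
        rw [aeval_sum_C_mul_map]
        simp only [← hP, map_mul]
        calc _ = (∑ l, algebraMap K Φ (g l) * (uR l).1) * algebraMap K Φ (aeval c D) := by
              rw [Finset.sum_mul]
              exact Finset.sum_congr rfl fun l _ => by ring
          _ = 0 := by rw [hg, zero_mul]
      obtain ⟨w, hw⟩ := univForm_dvd (k := k) S.y_zero S.rel S.free _ h1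
      have h2 := hsat w (fun β => by
        rw [← hw, coeff_sum_C_mul_map]
        exact Submodule.sum_mem _ fun l _ => smul_mem _ _ (bU l).2)
      let Q : Fin n' → MvPolynomial (Fin (r + 1)) k := fun i =>
        ∑ β ∈ w.support, monomial β (bW.repr ⟨_, h2 β⟩ i)
      have hQ : w = ∑ i, C (wR i) * MvPolynomial.map (algebraMap k R) (Q i) := by
        ext β
        rw [coeff_sum_C_mul_map]
        have h3 := congrArg (Subtype.val) (bW.sum_repr ⟨_, h2 β⟩)
        rw [AddSubmonoidClass.coe_finsetSum] at h3
        rw [← h3]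
        refine Finset.sum_congr rfl fun i _ => ?_
        simp only [Q, coeff_sum, coeff_monomial, Finset.sum_ite_eq', Submodule.coe_smul]
        split_ifs with hβ
        · rfl
        · rw [MvPolynomial.notMem_support_iff] at hβ
          have : (⟨_, h2 β⟩ : W) = 0 := by
            apply Subtype.ext
            simp [hβ]
          rw [this]
          simp
      have h3 := hpoly Q
      rw [← hQ, ← hw] at h3
      have h4 : ∑ l, C (uR l) * MvPolynomial.map (algebraMap k R) (∑ i, Q i * ξP i l - P l) = 0 := by
        simp only [map_sub, mul_sub, Finset.sum_sub_distrib]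
        rw [h3, sub_self]
      have h5 : ∀ l, ∑ i, aeval c (Q i) * ξ i l = g l * aeval c D := by
        intro l
        have := sub_eq_zero.mp (sum_C_mul_map_eq_zero huR h4 l)
        rw [hP l, ← this, map_sum]
        exact Finset.sum_congr rfl fun i _ => by rw [map_mul]
      have h6 : g = ∑ i, ((aeval c D)⁻¹ * aeval c (Q i)) • ξ i := by
        funext l
        simp only [Finset.sum_apply, Pi.smul_apply, smul_eq_mul, mul_assoc]
        rw [← Finset.mul_sum, h5 l]
        field_simp
      rw [h6]
      exact Submodule.sum_mem _ fun i _ => smul_mem _ _ (subset_span ⟨i, rfl⟩)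
    have h1 := Submodule.finrank_mono hle
    rw [finrank_span_eq_card hξind, Fintype.card_fin] at h1
    omega

end Delta

end

/-! ### Hilbert functions of generic hyperplane sections -/

section

open Submodule Module MvPolynomial

section Delta2

variable {k K Φ : Type*} [Field k] [Field K] [Field Φ] [Algebra k K] [Algebra k Φ] [Algebra K Φ]
  [IsScalarTower k K Φ] {r : ℕ}

theorem span_linSys_pow (y : Fin (r + 1) → Φ) (t : ℕ) :
    span K ((linSys k y ^ t : Submodule k Φ) : Set Φ) = linSys K y ^ t := by
  rw [linSys, linSys, Submodule.span_pow, Submodule.span_pow, Submodule.span_span_of_tower]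

theorem span_secMod_le (y : Fin (r + 1) → Φ) (n : ℕ) :
    span K (secMod k y n : Set Φ) ≤ secMod K y n := by
  rw [span_le]
  rintro f ⟨N, hN⟩
  refine ⟨N, fun M hM v hv => ?_⟩
  rw [← span_linSys_pow (k := k)] at hv
  induction hv using Submodule.span_induction with
  | mem x hx =>
    rw [← span_linSys_pow (k := k)]
    exact subset_span (hN M hM x hx)
  | zero => simp
  | add a b _ _ ha hb => rw [mul_add]; exact add_mem ha hb
  | smul a x _ hx => rw [mul_smul_comm]; exact smul_mem _ _ hx

theorem adjoin_le_adjoin (y : Fin (r + 1) → Φ) {f : Φ} (hf : f ∈ Algebra.adjoin k (Set.range y)) :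
    f ∈ Algebra.adjoin K (Set.range y) := by
  induction hf using Algebra.adjoin_induction with
  | mem x hx => exact Algebra.subset_adjoin hx
  | algebraMap a => rw [IsScalarTower.algebraMap_apply k K Φ]; exact Subalgebra.algebraMap_mem _ _
  | add f g _ _ hf hg => exact add_mem hf hg
  | mul f g _ _ hf hg => exact mul_mem hf hg

theorem finrank_linSys_pow_pos {y : Fin (r + 1) → Φ} (h0 : y 0 = 1) (t : ℕ) :
    0 < finrank k (linSys k y ^ t : Submodule k Φ) := by
  rw [Module.finrank_pos_iff_exists_ne_zero]
  exact ⟨⟨1, one_mem_linSys_pow h0 t⟩, fun h => one_ne_zero (congrArg Subtype.val h)⟩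

variable {y : Fin (r + 1) → Φ} {c : Fin (r + 1) → K}

/-- For an arbitrary filtered submodule, the restriction to the generic hyperplane section is at
most the first difference. -/
theorem GenSec.finrank_span_add_le (S : GenSec k K y c) (W U : Submodule k Φ)
    [FiniteDimensional k W] [FiniteDimensional k U]
    (hU : U ≤ Subalgebra.toSubmodule (Algebra.adjoin k (Set.range y)))
    (hW : W ≤ Subalgebra.toSubmodule (Algebra.adjoin k (Set.range y)))
    (hy : ∀ j, ∀ u ∈ W, y j * u ∈ U) :
    finrank K (span K (U : Set Φ)) + finrank k W ≤ finrank k U :=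
  (S.finrank_span_aux W U hU hW hy).1

/-- The first difference of the Hilbert function of a variety is at least the Hilbert function of its
generic hyperplane section. -/
theorem GenSec.linSys_step (S : GenSec k K y c) (t : ℕ) :
    finrank K (linSys K y ^ (t + 1) : Submodule K Φ) + finrank k (linSys k y ^ t : Submodule k Φ) ≤
      finrank k (linSys k y ^ (t + 1) : Submodule k Φ) := by
  rw [← span_linSys_pow (k := k)]
  refine S.finrank_span_add_le _ _ (linSys_pow_le_adjoin y _) (linSys_pow_le_adjoin y _) ?_
  intro j u hu
  rw [pow_succ']
  exact Submodule.mul_mem_mul (mem_linSys y j) hu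

theorem GenSec.unbounded (S : GenSec k K y c) (N : ℕ) :
    ∃ t, N < finrank k (linSys k y ^ t : Submodule k Φ) := by
  refine ⟨N, ?_⟩
  induction N with
  | zero => exact finrank_linSys_pow_pos S.y_zero 0
  | succ n ih =>
    have := S.linSys_step n
    have := finrank_linSys_pow_pos (k := K) S.y_zero (n + 1)
    omega

/-- For a saturated filtered submodule, the first difference equals the dimension of the restriction
to the generic hyperplane section. -/
theorem GenSec.saturated_step (S : GenSec k K y c) {W : ℕ → Submodule k Φ}
    (hR : ∀ n, W n ≤ Subalgebra.toSubmodule (Algebra.adjoin k (Set.range y)))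
    (hW : ∀ j n u, u ∈ W n → y j * u ∈ W (n + 1))
    (hs : ∀ w : Φ, (∀ j, ∃ a, y j ^ a * w ∈ W a) → w ∈ W 0)
    [FiniteDimensional k (W 0)] [FiniteDimensional K (span K (W 1 : Set Φ))] :
    FiniteDimensional k (W 1) ∧
      finrank k (W 1) = finrank K (span K (W 1 : Set Φ)) + finrank k (W 0) := by
  classical
  have hsat : ∀ U : Submodule k Φ, U ≤ W 1 →
      ∀ w : MvPolynomial (Fin (r + 1)) (Algebra.adjoin k (Set.range y)),
      (∀ β, (coeff β (univForm k y * w)).1 ∈ U) → ∀ β, (coeff β w).1 ∈ W 0 :=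
    fun U hU w hw β => coeff_mem_of_saturated hW hs w (fun β => hU (hw β)) β
  have hfin : FiniteDimensional k (W 1) := by
    have hb : Module.rank k (W 1) ≤ ((finrank K (span K (W 1 : Set Φ)) + finrank k (W 0) : ℕ) :
        Cardinal) := by
      apply _root_.rank_le
      intro s hs'
      let U1 : Submodule k Φ := (span k (s : Set (W 1))).map (W 1).subtype
      let U2 : Submodule k Φ := linSys k y * W 0
      have hfg1 : U1.FG := (Submodule.fg_span s.finite_toSet).map _
      have hfg2 : U2.FG := by
        apply Submodule.FG.mul
        · exact Submodule.fg_span (Set.finite_range y)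
        · exact Module.Finite.iff_fg.mp inferInstance
      have : FiniteDimensional k (U1 ⊔ U2 : Submodule k Φ) :=
        Module.Finite.iff_fg.mpr (hfg1.sup hfg2)
      have hU2 : U2 ≤ W 1 := by
        rw [Submodule.mul_le]
        intro m hm n hn
        induction hm using Submodule.span_induction with
        | mem x hx => obtain ⟨j, rfl⟩ := hx; exact hW j 0 n hn
        | zero => simp
        | add a b _ _ ha hb => rw [add_mul]; exact add_mem ha hb
        | smul a x _ hx => rw [smul_mul_assoc]; exact smul_mem _ _ hx
      have hU1 : U1 ≤ W 1 := Submodule.map_subtype_le _ _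
      have hle : U1 ⊔ U2 ≤ W 1 := sup_le hU1 hU2
      have h1 := (S.finrank_span_aux (W 0) (U1 ⊔ U2) (hle.trans (hR 1)) (hR 0)
        (fun j u hu => mem_sup_right (Submodule.mul_mem_mul (mem_linSys y j) hu))).2
        (hsat _ hle)
      have h2 : finrank K (span K ((U1 ⊔ U2 : Submodule k Φ) : Set Φ)) ≤
          finrank K (span K (W 1 : Set Φ)) := Submodule.finrank_mono (span_mono hle)
      have h3 : s.card ≤ finrank k U1 := by
        have : finrank k U1 = finrank k (span k (s : Set (W 1))) :=
          (Submodule.equivMapOfInjective _ (W 1).injective_subtype _).finrank_eq.symm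
        rw [this, finrank_span_finset_eq_card hs']
      have h4 : finrank k U1 ≤ finrank k (U1 ⊔ U2 : Submodule k Φ) :=
        Submodule.finrank_mono le_sup_left
      omega
    exact Module.rank_lt_aleph0_iff.mp (lt_of_le_of_lt hb (Cardinal.natCast_lt_aleph0))
  refine ⟨hfin, ?_⟩
  have h1 := S.finrank_span_aux (W 0) (W 1) (hR 1) (hR 0) (fun j u hu => hW j 0 u hu)
  have h2 := h1.2 (hsat _ le_rfl)
  have h3 := h1.1
  omega

/-- Degree zero: there are no sections of degree `-1`, so restriction to the section is injective. -/
theorem GenSec.secMod_zero (S : GenSec k K y c)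
    (hf : FiniteDimensional K (secMod K y 0)) :
    FiniteDimensional k (secMod k y 0) ∧
      finrank k (secMod k y 0) = finrank K (span K (secMod k y 0 : Set Φ)) := by
  have hsp : FiniteDimensional K (span K (secMod k y 0 : Set Φ)) :=
    Submodule.finiteDimensional_of_le (span_secMod_le y 0)
  let W : ℕ → Submodule k Φ := fun n => match n with | 0 => ⊥ | n + 1 => secMod k y n
  have : FiniteDimensional k (W 0) := inferInstanceAs (FiniteDimensional k (⊥ : Submodule k Φ))
  have : FiniteDimensional K (span K (W 1 : Set Φ)) := hsp
  have h := S.saturated_step (W := W)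
    (by
      intro n
      cases n with
      | zero => exact bot_le
      | succ n => exact secMod_le_adjoin S.y_zero n)
    (by
      intro j n u hu
      cases n with
      | zero => rw [(Submodule.mem_bot k).mp hu, mul_zero]; exact zero_mem _
      | succ n => exact mul_mem_secMod_succ hu j)
    (by
      intro w hw
      refine (Submodule.mem_bot k).mpr (secMod_neg S.unbounded S.y_zero fun j => ?_)
      obtain ⟨a, ha⟩ := hw j
      cases a with
      | zero =>
        refine ⟨0, ?_⟩
        have : w = 0 := by simpa using (Submodule.mem_bot k).mp ha
        rw [this, mul_zero]; exact zero_mem _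
      | succ a => exact ⟨a, ha⟩)
  refine ⟨h.1, ?_⟩
  have h2 := h.2
  have h3 : finrank k (W 0) = 0 := finrank_bot k Φ
  rw [h3, add_zero] at h2
  exact h2

/-- The modules `secMod` are saturated, so that their first difference is exactly the dimension of the
space they span on the generic hyperplane section. -/
theorem GenSec.secMod_succ (S : GenSec k K y c) (t : ℕ)
    (h0 : FiniteDimensional k (secMod k y t))
    (hf : FiniteDimensional K (secMod K y (t + 1))) :
    FiniteDimensional k (secMod k y (t + 1)) ∧
      finrank k (secMod k y (t + 1)) =
        finrank K (span K (secMod k y (t + 1) : Set Φ)) + finrank k (secMod k y t) := by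
  have hsp : FiniteDimensional K (span K (secMod k y (t + 1) : Set Φ)) :=
    Submodule.finiteDimensional_of_le (span_secMod_le y _)
  let W : ℕ → Submodule k Φ := fun n => secMod k y (t + n)
  have : FiniteDimensional k (W 0) := h0
  have : FiniteDimensional K (span K (W 1 : Set Φ)) := hsp
  exact S.saturated_step (W := W) (fun n => secMod_le_adjoin S.y_zero _)
    (fun j n u hu => mul_mem_secMod_succ hu j) (fun w hw => secMod_saturated hw)

theorem GenSec.secMod_finite (S : GenSec k K y c)
    (hf : ∀ t, FiniteDimensional K (secMod K y t)) (t : ℕ) :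
    FiniteDimensional k (secMod k y t) := by
  induction t with
  | zero => exact (S.secMod_zero (hf 0)).1
  | succ t ih => exact (S.secMod_succ t ih (hf _)).1

/-- A finite dimensional coordinate ring is filled by the powers of the linear system. -/
theorem exists_linSys_pow_eq (h0 : y 0 = 1)
    (hf : FiniteDimensional k (Subalgebra.toSubmodule (Algebra.adjoin k (Set.range y)))) :
    ∃ T, ∀ t, T ≤ t →
      linSys k y ^ t = Subalgebra.toSubmodule (Algebra.adjoin k (Set.range y)) := by
  obtain ⟨s, hs⟩ := (Module.Finite.iff_fg.mp hf)
  have h1 : ∀ x : s, ∃ t, x.1 ∈ linSys k y ^ t := by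
    intro x
    apply exists_mem_linSys_pow h0
    have : x.1 ∈ span k (s : Set Φ) := subset_span x.2
    rw [hs] at this
    exact this
  choose T hT using h1
  refine ⟨Finset.univ.sup T, fun t ht => le_antisymm (linSys_pow_le_adjoin y t) ?_⟩
  rw [← hs, span_le]
  intro x hx
  exact linSys_pow_mono h0 ((Finset.le_sup (Finset.mem_univ (⟨x, hx⟩ : s))).trans ht) (hT ⟨x, hx⟩)

/-- On a finite set of points all sections come from forms, in large degree. -/
theorem secMod_eq_of_finite (h0 : y 0 = 1)
    (hf : FiniteDimensional k (Subalgebra.toSubmodule (Algebra.adjoin k (Set.range y)))) :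
    ∃ T, ∀ t, T ≤ t → secMod k y t = linSys k y ^ t := by
  obtain ⟨T, hT⟩ := exists_linSys_pow_eq h0 hf
  refine ⟨T, fun t ht => le_antisymm ?_ (linSys_pow_le_secMod y t)⟩
  rw [hT t ht]
  exact secMod_le_adjoin h0 t

/-- If every section of `𝒪(t)` on the hyperplane section is cut out by hypersurfaces for large `t`,
then the same holds on the variety itself. -/
theorem GenSec.eventually_secMod_eq (S : GenSec k K y c)
    (hf : ∀ t, FiniteDimensional K (secMod K y t))
    (hE : ∃ T, ∀ t, T ≤ t → secMod K y t = linSys K y ^ t) :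
    ∃ T, ∀ t, T ≤ t → secMod k y t = linSys k y ^ t := by
  obtain ⟨T, hT⟩ := hE
  have hfk := S.secMod_finite hf
  set a : ℕ → ℕ := fun t => finrank k (secMod k y t) with ha
  set h : ℕ → ℕ := fun t => finrank k (linSys k y ^ t : Submodule k Φ) with hh
  set x : ℕ → ℕ := fun t => finrank K (linSys K y ^ t : Submodule K Φ) with hx
  have hha : ∀ t, h t ≤ a t := fun t => Submodule.finrank_mono (linSys_pow_le_secMod y t)
  have hstep_a : ∀ t, T ≤ t → a (t + 1) ≤ x (t + 1) + a t := by
    intro t ht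
    have h1 := (S.secMod_succ t (hfk t) (hf _)).2
    have := hf (t + 1)
    have h2 := Submodule.finrank_mono (span_secMod_le (k := k) (K := K) y (t + 1))
    rw [hT (t + 1) (by omega)] at h2
    simp only [ha, hx]; omega
  have hstep_h : ∀ t, x (t + 1) + h t ≤ h (t + 1) := fun t => S.linSys_step t
  obtain ⟨t1, ht1, hmin⟩ : ∃ t1, T ≤ t1 ∧ ∀ t, T ≤ t → a t1 - h t1 ≤ a t - h t := by
    have hne : ((fun t => a t - h t) '' Set.Ici T).Nonempty := ⟨_, T, le_refl T, rfl⟩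
    obtain ⟨t1, ht1, he⟩ := Nat.sInf_mem hne
    exact ⟨t1, ht1, fun t ht => by
      have := Nat.sInf_le (Set.mem_image_of_mem (fun t => a t - h t) (Set.mem_Ici.mpr ht))
      simp only at he; omega⟩
  have hconst : ∀ e, a (t1 + e) + h t1 = a t1 + h (t1 + e) := by
    intro e
    induction e with
    | zero => rfl
    | succ e ih =>
      have h1 := hstep_a (t1 + e) (by omega)
      have h2 := hstep_h (t1 + e)
      have h3 := hmin (t1 + e + 1) (by omega)
      have h4 := hha (t1 + e + 1)
      have h5 := hha (t1 + e)
      have h6 := hha t1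
      rw [← add_assoc]
      omega
  let M : ℕ → Submodule k Φ := fun e => secMod k y t1 * linSys k y ^ e
  have hMfin : ∀ e, FiniteDimensional k (M e) := fun e => by
    apply Module.Finite.iff_fg.mpr
    exact Submodule.FG.mul (Module.Finite.iff_fg.mp inferInstance)
      (Module.Finite.iff_fg.mp inferInstance)
  have hMle : ∀ e, M e ≤ secMod k y (t1 + e) := by
    intro e
    rw [Submodule.mul_le]
    intro m hm n hn
    exact secMod_mul_mem hm (linSys_pow_le_secMod y e hn)
  have hleM : ∀ e, linSys k y ^ (t1 + e) ≤ M e := by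
    intro e
    rw [pow_add]
    exact mul_le_mul_left (linSys_pow_le_secMod y t1) _
  have hM : ∀ e, M e = secMod k y (t1 + e) := by
    intro e
    induction e with
    | zero =>
      simp only [M, pow_zero, mul_one, add_zero]
    | succ e ih =>
      apply Submodule.eq_of_le_of_finrank_le (hMle _)
      have h1 := S.finrank_span_add_le (M e) (M (e + 1))
        ((hMle _).trans (secMod_le_adjoin S.y_zero _)) ((hMle _).trans (secMod_le_adjoin S.y_zero _))
        (by
          intro j u hu
          have : M (e + 1) = M e * linSys k y := by simp only [M]; rw [mul_assoc, ← pow_succ]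
          rw [this, mul_comm (y j)]
          exact Submodule.mul_mem_mul hu (mem_linSys y j))
      have h2 : x (t1 + (e + 1)) ≤ finrank K (span K (M (e + 1) : Set Φ)) := by
        simp only [hx]
        rw [← span_linSys_pow (k := k)]
        have : FiniteDimensional K (span K (M (e + 1) : Set Φ)) :=
          have := hf (t1 + (e + 1))
          Submodule.finiteDimensional_of_le ((span_mono (hMle (e + 1))).trans
            (span_secMod_le (k := k) (K := K) y _))
        exact Submodule.finrank_mono (span_mono (hleM (e + 1)))
      have h3 : finrank k (M e) = a (t1 + e) := by rw [ih]
      have h4 := hstep_a (t1 + e) (by omega)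
      have h5 : finrank k (secMod k y (t1 + (e + 1))) = a (t1 + e + 1) := rfl
      rw [← add_assoc] at h2
      omega
  obtain ⟨s, hs⟩ := (Module.Finite.iff_fg.mp (hfk t1))
  have h1 : ∀ u : s, ∃ N : ℕ, ∀ M, N ≤ M → ∀ v ∈ linSys k y ^ M,
      u.1 * v ∈ linSys k y ^ (M + t1) := by
    intro u
    have : u.1 ∈ span k (s : Set Φ) := subset_span u.2
    rw [hs] at this
    exact this
  choose N hN using h1
  refine ⟨t1 + Finset.univ.sup N, fun t ht => le_antisymm ?_ (linSys_pow_le_secMod y t)⟩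
  obtain ⟨e, rfl⟩ : ∃ e, t = t1 + e := ⟨t - t1, by omega⟩
  rw [← hM e, Submodule.mul_le]
  intro m hm n hn
  rw [← hs] at hm
  induction hm using Submodule.span_induction with
  | mem x hx =>
    have := hN ⟨x, hx⟩ e ((Finset.le_sup (Finset.mem_univ (⟨x, hx⟩ : s))).trans (by omega)) n hn
    rwa [add_comm t1 e]
  | zero => simp
  | add a b _ _ ha hb => rw [add_mul]; exact add_mem ha hb
  | smul a x _ hx => rw [smul_mul_assoc]; exact smul_mem _ _ hx

/-- In large degree the first difference of the Hilbert function is the Hilbert function of the generic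
hyperplane section. -/
theorem GenSec.linSys_step_eq (S : GenSec k K y c)
    (hf : ∀ t, FiniteDimensional K (secMod K y t))
    (hE : ∃ T, ∀ t, T ≤ t → secMod K y t = linSys K y ^ t) :
    ∃ T, ∀ t, T ≤ t → finrank k (linSys k y ^ (t + 1) : Submodule k Φ) =
      finrank K (linSys K y ^ (t + 1) : Submodule K Φ) +
        finrank k (linSys k y ^ t : Submodule k Φ) := by
  obtain ⟨T, hT⟩ := S.eventually_secMod_eq hf hE
  refine ⟨T, fun t ht => ?_⟩
  have := (S.secMod_succ t (S.secMod_finite hf t) (hf _)).2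
  rwa [hT t ht, hT (t + 1) (by omega), span_linSys_pow] at this

end Delta2

end

/-! ### Products of varieties and algebraic closure in domains -/

section

open Submodule Module MvPolynomial TensorProduct

section TensorDomain

variable {k A B : Type*} [Field k] [IsAlgClosed k] [CommRing A] [IsDomain A] [Algebra k A]
  [CommRing B] [IsDomain B] [Algebra k B]

/-- The Nullstellensatz: a nonzero regular function is nonzero at some rational point. -/
theorem exists_point_ne_zero [Algebra.FiniteType k B] {f : B} (hf : f ≠ 0) :
    ∃ e : B →ₐ[k] k, e f ≠ 0 := by
  have hJ : IsJacobsonRing B := isJacobsonRing_of_finiteType (A := k)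
  have h1 : (⊥ : Ideal B).jacobson = ⊥ := hJ.out (Ideal.isRadical_bot)
  have h2 : f ∉ (⊥ : Ideal B).jacobson := by rw [h1]; simpa using hf
  rw [Ideal.jacobson, Submodule.mem_sInf] at h2
  push Not at h2
  obtain ⟨m, ⟨-, hm⟩, hfm⟩ := h2
  letI : Field (B ⧸ m) := Ideal.Quotient.field m
  have : Module.Finite k (B ⧸ m) := finite_of_finite_type_of_isJacobsonRing k (B ⧸ m)
  have hbij := IsAlgClosed.algebraMap_bijective_of_isIntegral (k := k) (K := B ⧸ m)
  let ε : k ≃ₐ[k] (B ⧸ m) := AlgEquiv.ofBijective (Algebra.ofId k (B ⧸ m)) hbij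
  refine ⟨(ε.symm : (B ⧸ m) →ₐ[k] k).comp (Ideal.Quotient.mkₐ k m), ?_⟩
  intro h
  have h3 : ε.symm (Ideal.Quotient.mk m f) = 0 := h
  rw [EmbeddingLike.map_eq_zero_iff, Ideal.Quotient.eq_zero_iff_mem] at h3
  exact hfm h3

/-- Over an algebraically closed field the product of two integral varieties is integral. -/
theorem tensor_isDomain [Algebra.FiniteType k B] : IsDomain (B ⊗[k] A) := by
  have hnz : NoZeroDivisors (B ⊗[k] A) := by
    refine ⟨fun {u v} huv => ?_⟩
    by_contra hcon
    push Not at hcon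
    obtain ⟨hu, hv⟩ := hcon
    let b := Basis.ofVectorSpace k A
    let bB := Algebra.TensorProduct.basis B b
    obtain ⟨i, hi⟩ : ∃ i, bB.repr u i ≠ 0 := by
      by_contra h; push Not at h
      exact hu (bB.repr.map_eq_zero_iff.mp (Finsupp.ext h))
    obtain ⟨j, hj⟩ : ∃ i, bB.repr v i ≠ 0 := by
      by_contra h; push Not at h
      exact hv (bB.repr.map_eq_zero_iff.mp (Finsupp.ext h))
    obtain ⟨e, he⟩ := exists_point_ne_zero (k := k) (mul_ne_zero hi hj)
    let Ψ : B ⊗[k] A →ₐ[k] A :=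
      Algebra.TensorProduct.productMap ((Algebra.ofId k A).comp e) (AlgHom.id k A)
    have key : ∀ u : B ⊗[k] A, ∀ i, b.repr (Ψ u) i = e (bB.repr u i) := by
      intro u i
      induction u with
      | zero => simp
      | tmul x a =>
        have : Ψ (x ⊗ₜ a) = e x • a := by
          simp [Ψ, Algebra.ofId_apply, Algebra.smul_def]
        rw [this, Algebra.TensorProduct.basis_repr_tmul]
        simp [mul_comm]
      | add u v hu hv => simp [hu, hv]
    have h1 : Ψ u * Ψ v = 0 := by rw [← map_mul, huv, map_zero]
    rw [map_mul] at he
    rcases mul_eq_zero.mp h1 with h | h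
    · have := key u i; rw [h] at this; simp at this
      exact he (by rw [← this, zero_mul])
    · have := key v j; rw [h] at this; simp at this
      exact he (by rw [← this, mul_zero])
  have : Nontrivial (B ⊗[k] A) := inferInstance
  exact NoZeroDivisors.to_isDomain _

end TensorDomain

/-- A homomorphism out of a domain `E` which is injective on a polynomial subring over which `E` is
algebraic is injective. -/
theorem injective_of_algebraic {k E Ω ι : Type*} [Field k] [CommRing E] [IsDomain E] [Algebra k E]
    [CommRing Ω] [Algebra k Ω] (φ : E →ₐ[k] Ω) (g : ι → E)
    (halg : ∀ e : E, IsAlgebraic (Algebra.adjoin k (Set.range g)) e)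
    (hg : AlgebraicIndependent k (fun i => φ (g i))) : Function.Injective φ := by
  rw [injective_iff_map_eq_zero]
  intro u hu
  by_contra hne
  obtain ⟨r0, hr0, hdvd⟩ := (halg u).exists_nonzero_dvd (mem_nonZeroDivisors_of_ne_zero hne)
  obtain ⟨v, hv⟩ := hdvd
  have h1 : φ r0.1 = 0 := by
    have : (r0.1 : E) = u * v := hv
    rw [this, map_mul, hu, zero_mul]
  obtain ⟨r0, hr⟩ := r0
  rw [Algebra.adjoin_range_eq_range_aeval] at hr
  obtain ⟨P, hP⟩ := hr
  have h2 : aeval (fun i => φ (g i)) P = 0 := by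
    have h1' : φ r0 = 0 := h1
    rw [← h1', ← hP]
    exact (MvPolynomial.comp_aeval_apply g φ P).symm
  have h3 : P = 0 := (injective_iff_map_eq_zero _).mp hg P h2
  apply hr0
  apply Subtype.ext
  change r0 = 0
  rw [← hP, h3]; exact map_zero _

section Acl

variable {k A B : Type*} [Field k] [CommRing A] [IsDomain A] [Algebra k A]
  [CommRing B] [IsDomain B] [Algebra k B]

variable (k) in
/-- The set of elements algebraic over the subalgebra generated by `s`. -/
def acl (s : Set A) : Subalgebra k A :=
  (Subalgebra.algebraicClosure (Algebra.adjoin k s) A).restrictScalars k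

theorem mem_acl {s : Set A} {a : A} : a ∈ acl k s ↔ IsAlgebraic (Algebra.adjoin k s) a := Iff.rfl

theorem subset_acl (s : Set A) : s ⊆ acl k s := fun a ha =>
  mem_acl.mpr (isAlgebraic_algebraMap (⟨a, Algebra.subset_adjoin ha⟩ : Algebra.adjoin k s))

theorem acl_trans {s t : Set A} (h : s ⊆ acl k t) : acl k s ≤ acl k t := fun _ ha =>
  mem_acl.mpr (IsAlgebraic.adjoin_of_forall_isAlgebraic (fun x hx => mem_acl.mp (h hx.1))
    (mem_acl.mp ha))

theorem acl_of_mul {s : Set A} {a b : A} (hb : b ≠ 0) (h1 : b ∈ acl k s) (h2 : b * a ∈ acl k s) :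
    a ∈ acl k s :=
  mem_acl.mpr (IsAlgebraic.of_mul (mem_nonZeroDivisors_of_ne_zero hb) (mem_acl.mp h1)
    (mem_acl.mp h2))

theorem acl_map (θ : A →ₐ[k] B) (hθ : Function.Injective θ) {s : Set A} {t : Set B}
    (h : ∀ a ∈ s, θ a ∈ acl k t) {a : A} (ha : a ∈ acl k s) : θ a ∈ acl k t := by
  have h1 : θ a ∈ acl k (θ '' s) := by
    rw [mem_acl] at ha ⊢
    let f : Algebra.adjoin k s →ₐ[k] Algebra.adjoin k (θ '' s) :=
      (θ.comp (Algebra.adjoin k s).val).codRestrict _ (fun x => by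
        rw [← AlgHom.map_adjoin]; exact ⟨x.1, x.2, rfl⟩)
    refine ha.ringHom_of_comp_eq f θ ?_ ?_
    · intro x y hxy
      have := congrArg Subtype.val hxy
      exact Subtype.ext (hθ this)
    · ext x; rfl
  refine acl_trans ?_ h1
  rintro _ ⟨x, hx, rfl⟩
  exact h x hx

theorem acl_isAlgebraic {s : Set A} (h : ∀ a : A, a ∈ acl k s) :
    Algebra.IsAlgebraic (Algebra.adjoin k s) A := ⟨fun a => mem_acl.mp (h a)⟩

/-- If `K` consists of fractions of polynomials in `c`, and `L` is algebraic over `K`, then `L` is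
algebraic over any set over which the `c` are algebraic. -/
theorem acl_top_of_gen {K L ι : Type*} [Field K] [Field L] [Algebra k K] [Algebra K L] [Algebra k L]
    [IsScalarTower k K L] [Algebra.IsAlgebraic K L] (c : ι → K)
    (gen : ∀ x : K, ∃ P Q : MvPolynomial ι k, aeval c Q ≠ 0 ∧ x * aeval c Q = aeval c P)
    {s : Set L} (hs : ∀ i, algebraMap K L (c i) ∈ acl k s) (a : L) : a ∈ acl k s := by
  have hpol : ∀ P : MvPolynomial ι k, algebraMap K L (aeval c P) ∈ acl k s := by
    intro P
    rw [← MvPolynomial.aeval_algebraMap_apply]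
    have : aeval (algebraMap K L ∘ c) P
        = (acl k s).val (aeval (fun i => (⟨_, hs i⟩ : acl k s)) P) := by
      rw [MvPolynomial.comp_aeval_apply]; rfl
    exact this ▸ Subtype.property _
  have hK : ∀ x : K, algebraMap K L x ∈ acl k s := by
    intro x
    obtain ⟨P, Q, hQ, hx⟩ := gen x
    refine acl_of_mul (b := algebraMap K L (aeval c Q)) ?_ (hpol Q) ?_
    · exact (map_ne_zero _).mpr hQ
    · rw [← map_mul, mul_comm, hx]; exact hpol P
  have h1 : a ∈ acl k (Set.range (algebraMap K L)) := by
    rw [mem_acl]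
    have := Algebra.IsAlgebraic.isAlgebraic (R := K) a
    let f : K →+* Algebra.adjoin k (Set.range (algebraMap K L)) :=
      (algebraMap K L).codRestrict _ (fun x => Algebra.subset_adjoin ⟨x, rfl⟩)
    exact this.ringHom_of_comp_eq f (RingHom.id L)
      (fun x y hxy => (algebraMap K L).injective (congrArg Subtype.val hxy)) (by ext; rfl)
  refine acl_trans ?_ h1
  rintro _ ⟨x, rfl⟩
  exact hK x

end Acl

end

/-! ### Pairs of points on a generic linear section -/

section

open Submodule Module MvPolynomial TensorProduct

theorem acl_comap {k A B : Type*} [Field k] [CommRing A] [IsDomain A] [Algebra k A]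
    [CommRing B] [IsDomain B] [Algebra k B] (θ : A →ₐ[k] B) (hθ : Function.Injective θ) {s : Set A}
    {a : A} (ha : θ a ∈ acl k (θ '' s)) : a ∈ acl k s := by
  rw [mem_acl, ← AlgHom.map_adjoin] at ha
  rw [mem_acl]
  let e := (Algebra.adjoin k s).equivMapOfInjective θ hθ
  obtain ⟨p, hp, hp0⟩ := ha
  refine ⟨p.map (e.symm : _ →+* _), (Polynomial.map_ne_zero_iff e.symm.injective).mpr hp, hθ ?_⟩
  rw [map_zero, ← hp0, Polynomial.aeval_def, Polynomial.aeval_def, Polynomial.eval₂_map]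
  rw [← AlgHom.coe_toRingHom, Polynomial.hom_eval₂]
  congr 1
  ext z
  have := congrArg Subtype.val (e.apply_symm_apply z)
  exact this

section Tensor

variable {k A J u : Type} [Field k] [CommRing A] [IsDomain A] [Algebra k A]

/-- The embedding of `A` in `(A ⊗ A)[J]` through the first factor. -/
noncomputable def tensL (k A J : Type) [Field k] [CommRing A] [Algebra k A] :
    A →ₐ[k] MvPolynomial J (A ⊗[k] A) :=
  (IsScalarTower.toAlgHom k (A ⊗[k] A) _).comp (Algebra.TensorProduct.includeLeft (S := k) (B := A))

/-- The embedding of `A` in `(A ⊗ A)[J]` through the second factor. -/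
noncomputable def tensR (k A J : Type) [Field k] [CommRing A] [Algebra k A] :
    A →ₐ[k] MvPolynomial J (A ⊗[k] A) :=
  (IsScalarTower.toAlgHom k (A ⊗[k] A) _).comp Algebra.TensorProduct.includeRight

/-- If `A` is algebraic over `xa`, then `(A ⊗ A)[J]` is algebraic over the two copies of `xa` together
with the variables. -/
theorem acl_tensor [IsDomain (MvPolynomial J (A ⊗[k] A))] (xa : u → A)
    (hAx : ∀ b : A, b ∈ acl k (Set.range xa)) (e : MvPolynomial J (A ⊗[k] A)) :
    e ∈ acl k (Set.range (Sum.elim (fun a => tensL k A J (xa a))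
      (Sum.elim (fun a => tensR k A J (xa a)) X))) := by
  set g := (Sum.elim (fun a => tensL k A J (xa a)) (Sum.elim (fun a => tensR k A J (xa a)) X))
  have hiL : Function.Injective (tensL k A J) := (MvPolynomial.C_injective J (A ⊗[k] A)).comp
    (Algebra.TensorProduct.includeLeft_injective (S := k) (algebraMap k A).injective)
  have hiR : Function.Injective (tensR k A J) := (MvPolynomial.C_injective J (A ⊗[k] A)).comp
    (Algebra.TensorProduct.includeRight_injective (algebraMap k A).injective)
  have hLg : ∀ a, tensL k A J a ∈ acl k (Set.range g) := fun a =>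
    acl_map (tensL k A J) hiL (by rintro _ ⟨b, rfl⟩; exact subset_acl _ ⟨Sum.inl b, rfl⟩) (hAx a)
  have hRg : ∀ a, tensR k A J a ∈ acl k (Set.range g) := fun a =>
    acl_map (tensR k A J) hiR
      (by rintro _ ⟨b, rfl⟩; exact subset_acl _ ⟨Sum.inr (Sum.inl b), rfl⟩) (hAx a)
  induction e using MvPolynomial.induction_on with
  | C a =>
    induction a with
    | zero => rw [map_zero]; exact Subalgebra.zero_mem _
    | tmul a b =>
      have : (C (a ⊗ₜ b) : MvPolynomial J (A ⊗[k] A)) = tensL k A J a * tensR k A J b := by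
        change _ = C (a ⊗ₜ 1) * C (1 ⊗ₜ b)
        rw [← map_mul]; simp
      rw [this]
      exact Subalgebra.mul_mem _ (hLg a) (hRg b)
    | add a b ha hb => rw [map_add]; exact Subalgebra.add_mem _ ha hb
  | add a b ha hb => exact Subalgebra.add_mem _ ha hb
  | mul_X p i hp =>
    exact Subalgebra.mul_mem _ hp (subset_acl _ ⟨Sum.inr (Sum.inr i), rfl⟩)

/-- A pair of points `τ, τ'` of `A` and values `cJ` of the variables define a homomorphism on
`(A ⊗ A)[J]`; it is injective, hence extends to the fraction field, as soon as it keeps a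
transcendence basis independent. -/
theorem tens_lift {Ω : Type} [Field Ω] [Algebra k Ω] [IsDomain (MvPolynomial J (A ⊗[k] A))]
    (xa : u → A) (hAx : ∀ b : A, b ∈ acl k (Set.range xa)) (τ τ' : A →ₐ[k] Ω) (cJ : J → Ω)
    (hind : AlgebraicIndependent k (Sum.elim (fun a => τ (xa a))
      (Sum.elim (fun a => τ' (xa a)) cJ))) :
    ∃ Ψ : FractionRing (MvPolynomial J (A ⊗[k] A)) →ₐ[k] Ω,
      (∀ a, Ψ (algebraMap _ _ (tensL k A J a)) = τ a) ∧
      (∀ a, Ψ (algebraMap _ _ (tensR k A J a)) = τ' a) ∧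
      (∀ j, Ψ (algebraMap (MvPolynomial J (A ⊗[k] A)) _ (X j)) = cJ j) := by
  let φ0 : A ⊗[k] A →ₐ[k] Ω := Algebra.TensorProduct.productMap τ τ'
  let φ : MvPolynomial J (A ⊗[k] A) →ₐ[k] Ω := MvPolynomial.aevalTower φ0 cJ
  have hφL : ∀ a : A, φ (tensL k A J a) = τ a := by
    intro a
    change φ (C (a ⊗ₜ 1)) = _
    rw [MvPolynomial.aevalTower_C]
    simp [φ0]
  have hφR : ∀ a : A, φ (tensR k A J a) = τ' a := by
    intro a
    change φ (C (1 ⊗ₜ a)) = _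
    rw [MvPolynomial.aevalTower_C]
    simp [φ0]
  have hφX : ∀ j, φ (X j) = cJ j := fun j => MvPolynomial.aevalTower_X _ _ _
  have hinj : Function.Injective φ := by
    refine injective_of_algebraic φ _ (fun e => mem_acl.mp (acl_tensor xa hAx e)) ?_
    convert hind using 1
    ext (a | a | a)
    · exact hφL _
    · exact hφR _
    · exact hφX _
  refine ⟨IsFractionRing.liftAlgHom (R := k) (A := MvPolynomial J (A ⊗[k] A)) (g := φ) hinj,
    ?_, ?_, ?_⟩
  · intro j; rw [IsFractionRing.liftAlgHom_apply, IsFractionRing.lift_algebraMap]; exact hφL _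
  · intro j; rw [IsFractionRing.liftAlgHom_apply, IsFractionRing.lift_algebraMap]; exact hφR _
  · intro j; rw [IsFractionRing.liftAlgHom_apply, IsFractionRing.lift_algebraMap]; exact hφX _

/-- Solving the incidence relations with two points for the coefficients with index `0`, `j1`. -/
theorem exists_univ_coeff {Fr : Type} [Field Fr] {q r : ℕ} (yL yR : Fin (r + 1) → Fr)
    (j1 : Fin (r + 1)) (hj1 : j1 ≠ 0)
    (xJ : Fin q × {j : Fin (r + 1) // j ≠ 0 ∧ j ≠ j1} → Fr) :
    ∃ cc : Fin q → Fin (r + 1) → Fr, ∀ (Ω : Type) [Field Ω] (Ψ : Fr →+* Ω)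
      (cs : Fin q → Fin (r + 1) → Ω) (a b : Fin (r + 1) → Ω) (_ : ∀ j, Ψ (yL j) = a j)
      (_ : ∀ j, Ψ (yR j) = b j) (_ : a 0 = 1) (_ : b 0 = 1) (_ : a j1 ≠ b j1)
      (_ : ∀ i, ∑ j, cs i j * a j = 0) (_ : ∀ i, ∑ j, cs i j * b j = 0)
      (_ : ∀ ij, Ψ (xJ ij) = cs ij.1 ij.2), ∀ i j, Ψ (cc i j) = cs i j := by
  classical
  let c0 : Fin q → Fin (r + 1) → Fr := fun i j =>
    if hj : j ≠ 0 ∧ j ≠ j1 then xJ (i, ⟨j, hj⟩) else 0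
  let c1 : Fin q → Fr := fun i => -(∑ j, c0 i j * (yL j - yR j)) / (yL j1 - yR j1)
  let c2 : Fin q → Fin (r + 1) → Fr := fun i j => if j = j1 then c1 i else c0 i j
  let cc : Fin q → Fin (r + 1) → Fr := fun i j => if j = 0 then -(∑ j, c2 i j * yL j) else c2 i j
  refine ⟨cc, ?_⟩
  intro Ω _ Ψ c a b hL' hR' a0 b0 hab ha hb hX
  have h0 : ∀ i j, j ≠ 0 → j ≠ j1 → Ψ (c0 i j) = c i j := by
    intro i j h1 h2
    simp only [c0, dif_pos (And.intro h1 h2)]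
    exact hX _
  have h1 : ∀ i, Ψ (c1 i) = c i j1 := by
    intro i
    have hne' : a j1 - b j1 ≠ 0 := sub_ne_zero.mpr hab
    simp only [c1, map_div₀, map_neg, map_sum, map_mul, map_sub, hL', hR']
    rw [div_eq_iff hne', neg_eq_iff_add_eq_zero]
    have h1 : ∑ j, c i j * (a j - b j) = 0 := by
      simp only [mul_sub, Finset.sum_sub_distrib, ha, hb, sub_zero]
    rw [← Finset.sum_erase_add _ _ (Finset.mem_univ j1)] at h1
    rw [← h1]
    congr 1
    rw [← Finset.sum_erase_add _ _ (Finset.mem_univ j1)]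
    have : c0 i j1 = 0 := by simp [c0]
    rw [this, map_zero, zero_mul, add_zero]
    refine Finset.sum_congr rfl fun j hj => ?_
    by_cases hj2 : j = 0
    · subst hj2; simp [a0, b0]
    · rw [h0 i j hj2 (Finset.ne_of_mem_erase hj)]
  have h2 : ∀ i j, j ≠ 0 → Ψ (c2 i j) = c i j := by
    intro i j hj
    by_cases h : j = j1
    · simp only [c2, h, if_true]; exact h1 i
    · simp only [c2, h, if_false]; exact h0 i j hj h
  intro i j
  by_cases hj : j = 0
  · subst hj
    simp only [cc, if_true, map_neg, map_sum, map_mul, hL']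
    rw [neg_eq_iff_add_eq_zero]
    have := ha i
    rw [← Finset.sum_erase_add _ _ (Finset.mem_univ 0), a0, mul_one] at this
    rw [← this]
    congr 1
    rw [← Finset.sum_erase_add _ _ (Finset.mem_univ 0)]
    have : c2 i 0 = 0 := by simp [c2, c0, hj1.symm]
    rw [this, map_zero, zero_mul, add_zero]
    exact Finset.sum_congr rfl fun j hj => by rw [h2 i j (Finset.ne_of_mem_erase hj)]
  · simp only [cc, hj, if_false]; exact h2 i j hj

end Tensor

section Pair

variable {k K L Ω : Type} [Field k] [Field K] [Field L] [Field Ω]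
  [Algebra k K] [Algebra K L] [Algebra k L] [IsScalarTower k K L] [Algebra K Ω] [Algebra k Ω]
  [IsScalarTower k K Ω] [Algebra.IsAlgebraic K Ω] {q r : ℕ} {c : Fin q → Fin (r + 1) → K}
  {y : Fin (r + 1) → L}

/-- The `c i j` determined by the incidence relations in terms of the two points and the
remaining `c i j`. -/
theorem pair_indep
    (hc : AlgebraicIndependent k (fun ij : Fin q × Fin (r + 1) => c ij.1 ij.2))
    (gen : ∀ x : K, ∃ P Q : MvPolynomial (Fin q × Fin (r + 1)) k,
      aeval (fun ij => c ij.1 ij.2) Q ≠ 0 ∧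
        x * aeval (fun ij => c ij.1 ij.2) Q = aeval (fun ij => c ij.1 ij.2) P)
    (y0 : y 0 = 1) (hrel : ∀ i, ∑ j, algebraMap K L (c i j) * y j = 0)
    {u : Type} [Fintype u] (x : u → L) (hx : ∀ j, y j ∈ acl k (Set.range x))
    (hu : Fintype.card u ≤ q) (τ τ' : L →ₐ[K] Ω) (j0 : Fin (r + 1)) (h0 : j0 ≠ 0)
    (hj0 : τ (y j0) ≠ τ' (y j0)) :
    AlgebraicIndependent k (Sum.elim (fun a => τ (x a)) (Sum.elim (fun a => τ' (x a))
      (fun ij : Fin q × {j : Fin (r + 1) // j ≠ 0 ∧ j ≠ j0} => algebraMap K Ω (c ij.1 ij.2)))) := by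
  set F := (Sum.elim (fun a => τ (x a)) (Sum.elim (fun a => τ' (x a))
      (fun ij : Fin q × {j : Fin (r + 1) // j ≠ 0 ∧ j ≠ j0} =>
        algebraMap K Ω (c ij.1 ij.2)))) with hF
  have hr1 : 1 ≤ r := by
    rcases Nat.eq_zero_or_pos r with h | h
    · subst h; exact absurd (Fin.ext (by omega)) h0
    · exact h
  have hτ : ∀ j, τ (y j) ∈ acl k (Set.range F) := fun j =>
    acl_map (τ.restrictScalars k) τ.toRingHom.injective
      (by rintro _ ⟨a, rfl⟩; exact subset_acl _ ⟨Sum.inl a, rfl⟩) (hx j)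
  have hτ' : ∀ j, τ' (y j) ∈ acl k (Set.range F) := fun j =>
    acl_map (τ'.restrictScalars k) τ'.toRingHom.injective
      (by rintro _ ⟨a, rfl⟩; exact subset_acl _ ⟨Sum.inr (Sum.inl a), rfl⟩) (hx j)
  have hJ : ∀ i j, j ≠ 0 → j ≠ j0 → algebraMap K Ω (c i j) ∈ acl k (Set.range F) :=
    fun i j h1 h2 => subset_acl _ ⟨Sum.inr (Sum.inr (i, ⟨j, h1, h2⟩)), rfl⟩
  have hre : ∀ (σ : L →ₐ[K] Ω) i, ∑ j, algebraMap K Ω (c i j) * σ (y j) = 0 := by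
    intro σ i
    have := congrArg σ (hrel i)
    simpa [map_sum, map_mul] using this
  have hJ0 : ∀ i, algebraMap K Ω (c i j0) ∈ acl k (Set.range F) := by
    intro i
    refine acl_of_mul (sub_ne_zero.mpr hj0) (Subalgebra.sub_mem _ (hτ j0) (hτ' j0)) ?_
    have h1 : ∑ j, algebraMap K Ω (c i j) * (τ (y j) - τ' (y j)) = 0 := by
      simp only [mul_sub, Finset.sum_sub_distrib, hre, sub_zero]
    rw [← Finset.add_sum_erase _ _ (Finset.mem_univ j0)] at h1
    rw [mul_comm, eq_neg_of_add_eq_zero_left h1]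
    refine Subalgebra.neg_mem _ (Subalgebra.sum_mem _ fun j hj => ?_)
    by_cases hj2 : j = 0
    · subst hj2; simp only [y0, map_one, sub_self, mul_zero]; exact Subalgebra.zero_mem _
    · exact Subalgebra.mul_mem _ (hJ i j hj2 (Finset.ne_of_mem_erase hj))
        (Subalgebra.sub_mem _ (hτ j) (hτ' j))
  have hpos : ∀ i j, j ≠ 0 → algebraMap K Ω (c i j) ∈ acl k (Set.range F) := by
    intro i j h1
    by_cases h2 : j = j0
    · subst h2; exact hJ0 i
    · exact hJ i j h1 h2
  have hall : ∀ ij : Fin q × Fin (r + 1), algebraMap K Ω (c ij.1 ij.2) ∈ acl k (Set.range F) := by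
    rintro ⟨i, j⟩
    by_cases h : j = 0
    · subst h
      have h1 := hre τ i
      rw [← Finset.add_sum_erase _ _ (Finset.mem_univ 0), y0, map_one, mul_one] at h1
      simp only
      rw [eq_neg_of_add_eq_zero_left h1]
      exact Subalgebra.neg_mem _ (Subalgebra.sum_mem _ fun j hj =>
        Subalgebra.mul_mem _ (hpos i j (Finset.ne_of_mem_erase hj)) (hτ j))
    · exact hpos i j h
  have halg := acl_isAlgebraic (acl_top_of_gen _ gen hall)
  have hcΩ : AlgebraicIndependent k (fun ij : Fin q × Fin (r + 1) =>
      algebraMap K Ω (c ij.1 ij.2)) :=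
    hc.map' (f := IsScalarTower.toAlgHom k K Ω) (algebraMap K Ω).injective
  have hcard := hcΩ.cardinalMk_le_trdeg
  refine (Algebra.IsAlgebraic.isTranscendenceBasis_of_le_trdeg_of_finite k F ?_).1
  refine le_trans ?_ hcard
  have hJc : Fintype.card {j : Fin (r + 1) // j ≠ 0 ∧ j ≠ j0} = r - 1 := by
    rw [Fintype.card_subtype]
    have : (Finset.univ.filter fun j : Fin (r + 1) => j ≠ 0 ∧ j ≠ j0) =
        (Finset.univ.erase j0).erase 0 := by ext; simp
    rw [this, Finset.card_erase_of_mem (by simp [h0.symm]), Finset.card_erase_of_mem (by simp)]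
    simp
  rw [Cardinal.mk_fintype, Cardinal.mk_fintype, Nat.cast_le]
  simp only [Fintype.card_sum, Fintype.card_prod, Fintype.card_fin, hJc]
  obtain ⟨r', rfl⟩ : ∃ r', r = r' + 1 := ⟨r - 1, by omega⟩
  simp only [Nat.add_sub_cancel]
  nlinarith


/-- Every element of `L = K[y]` is a fraction with numerator a polynomial in `c`, `y` and
denominator a polynomial in `c`. -/
theorem exists_poly_frac {ι κ : Type} {c : ι → K} {y : κ → L}
    (gen : ∀ x : K, ∃ P Q : MvPolynomial ι k, aeval c Q ≠ 0 ∧ x * aeval c Q = aeval c P)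
    (θ : L) (hθ : θ ∈ Algebra.adjoin K (Set.range y)) :
    ∃ (D : MvPolynomial ι k) (P : MvPolynomial (ι ⊕ κ) k), aeval c D ≠ 0 ∧
      algebraMap K L (aeval c D) * θ = aeval (Sum.elim (fun i => algebraMap K L (c i)) y) P := by
  have hren : ∀ Q : MvPolynomial ι k, algebraMap K L (aeval c Q) =
      aeval (Sum.elim (fun i => algebraMap K L (c i)) y) (rename Sum.inl Q) := by
    intro Q
    rw [aeval_rename, ← MvPolynomial.aeval_algebraMap_apply]; rfl
  induction hθ using Algebra.adjoin_induction with
  | mem x hx =>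
    obtain ⟨j, rfl⟩ := hx
    exact ⟨1, X (Sum.inr j), by simp, by simp⟩
  | algebraMap x =>
    obtain ⟨P, Q, hQ, h⟩ := gen x
    refine ⟨Q, rename Sum.inl P, hQ, ?_⟩
    rw [← map_mul, mul_comm, h, hren]
  | add a b _ _ ha hb =>
    obtain ⟨D, P, hD, h⟩ := ha
    obtain ⟨D', P', hD', h'⟩ := hb
    refine ⟨D * D', rename Sum.inl D' * P + rename Sum.inl D * P', ?_, ?_⟩
    · rw [map_mul]; exact mul_ne_zero hD hD'
    · simp only [map_mul, map_add, ← hren, ← h, ← h']; ring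
  | mul a b _ _ ha hb =>
    obtain ⟨D, P, hD, h⟩ := ha
    obtain ⟨D', P', hD', h'⟩ := hb
    refine ⟨D * D', P * P', ?_, ?_⟩
    · rw [map_mul]; exact mul_ne_zero hD hD'
    · simp only [map_mul, ← h, ← h']; ring

/-- Distinct embeddings are already distinguished by any transcendental coordinate. -/
theorem pair_dist
    (hc : AlgebraicIndependent k (fun ij : Fin q × Fin (r + 1) => c ij.1 ij.2))
    (gen : ∀ x : K, ∃ P Q : MvPolynomial (Fin q × Fin (r + 1)) k,
      aeval (fun ij => c ij.1 ij.2) Q ≠ 0 ∧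
        x * aeval (fun ij => c ij.1 ij.2) Q = aeval (fun ij => c ij.1 ij.2) P)
    (y0 : y 0 = 1) (hrel : ∀ i, ∑ j, algebraMap K L (c i j) * y j = 0)
    (hgen : Algebra.adjoin K (Set.range y) = ⊤)
    {u : Type} [Fintype u] (x : u → L) (hx : ∀ j, y j ∈ acl k (Set.range x))
    (hu : Fintype.card u ≤ q) (j1 : Fin (r + 1)) (a1 : u) (ha1 : x a1 = y j1)
    (τ τ' : L →ₐ[K] Ω) (hne : τ ≠ τ') : τ (y j1) ≠ τ' (y j1) := by
  obtain ⟨j0, hj0⟩ : ∃ j0, τ (y j0) ≠ τ' (y j0) := by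
    by_contra hcon
    push Not at hcon
    apply hne
    apply AlgHom.ext_of_adjoin_eq_top hgen
    rintro _ ⟨j, rfl⟩
    exact hcon j
  have h00 : j0 ≠ 0 := by rintro rfl; simp [y0] at hj0
  have hi := (pair_indep hc gen y0 hrel x hx hu τ τ' j0 h00 hj0).injective
  intro heq
  have := @hi (Sum.inl a1) (Sum.inr (Sum.inl a1)) (by simp [ha1, heq])
  simp at this

/-- The fraction field of `(A ⊗ A)[J]`, with `A` a coordinate ring of the variety, parametrizes all
pairs of points of a linear section that differ in the coordinate `j1`: the coefficients `c i j` with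
`j ≠ 0, j1` are free, and the two remaining ones are determined by the two points. -/
theorem pair_model_aux [IsAlgClosed k]
    (hc : AlgebraicIndependent k (fun ij : Fin q × Fin (r + 1) => c ij.1 ij.2))
    (gen : ∀ x : K, ∃ P Q : MvPolynomial (Fin q × Fin (r + 1)) k,
      aeval (fun ij => c ij.1 ij.2) Q ≠ 0 ∧
        x * aeval (fun ij => c ij.1 ij.2) Q = aeval (fun ij => c ij.1 ij.2) P)
    (y0 : y 0 = 1) (hrel : ∀ i, ∑ j, algebraMap K L (c i j) * y j = 0)
    {u : Type} [Fintype u] (x : u → L) (hx : ∀ j, y j ∈ acl k (Set.range x))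
    (hu : Fintype.card u ≤ q) (j1 : Fin (r + 1)) (hj1 : j1 ≠ 0)
    {A : Type} [CommRing A] [IsDomain A] [Algebra k A] [Algebra.FiniteType k A] (v : A →ₐ[k] L)
    (ya : Fin (r + 1) → A) (hya : ∀ j, v (ya j) = y j) (xa : u → A) (hxa : ∀ a, v (xa a) = x a)
    (hAx : ∀ b : A, b ∈ acl k (Set.range xa)) :
    ∃ (Fr : Type) (_ : Field Fr) (_ : Algebra k Fr)
      (yL yR : Fin (r + 1) → Fr) (xJ : Fin q × {j : Fin (r + 1) // j ≠ 0 ∧ j ≠ j1} → Fr),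
      ∀ τ τ' : L →ₐ[K] Ω, τ (y j1) ≠ τ' (y j1) → ∃ Ψ : Fr →ₐ[k] Ω,
      (∀ j, Ψ (yL j) = τ (y j)) ∧ (∀ j, Ψ (yR j) = τ' (y j)) ∧
      (∀ ij, Ψ (xJ ij) = algebraMap K Ω (c ij.1 ij.2)) := by
  have hdomT : IsDomain (A ⊗[k] A) := tensor_isDomain
  refine ⟨FractionRing (MvPolynomial (Fin q × {j : Fin (r + 1) // j ≠ 0 ∧ j ≠ j1}) (A ⊗[k] A)),
    inferInstance, inferInstance,
    fun j => algebraMap (MvPolynomial (Fin q × {j : Fin (r + 1) // j ≠ 0 ∧ j ≠ j1}) (A ⊗[k] A)) _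
      (tensL k A (Fin q × {j : Fin (r + 1) // j ≠ 0 ∧ j ≠ j1}) (ya j)),
    fun j => algebraMap (MvPolynomial (Fin q × {j : Fin (r + 1) // j ≠ 0 ∧ j ≠ j1}) (A ⊗[k] A)) _
      (tensR k A (Fin q × {j : Fin (r + 1) // j ≠ 0 ∧ j ≠ j1}) (ya j)),
    fun ij => algebraMap (MvPolynomial (Fin q × {j : Fin (r + 1) // j ≠ 0 ∧ j ≠ j1}) (A ⊗[k] A)) _
      (X ij), fun τ τ' hne => ?_⟩
  obtain ⟨Ψ, h1, h2, h3⟩ := tens_lift xa hAx ((τ.restrictScalars k).comp v)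
    ((τ'.restrictScalars k).comp v)
    (fun ij : Fin q × {j : Fin (r + 1) // j ≠ 0 ∧ j ≠ j1} => algebraMap K Ω (c ij.1 ij.2)) (by
      convert pair_indep hc gen y0 hrel x hx hu τ τ' j1 hj1 hne using 1
      simp [hxa])
  exact ⟨Ψ, fun j => by rw [h1, ← hya]; rfl, fun j => by rw [h2, ← hya]; rfl, h3⟩

/-- A universal field for the pairs of distinct points. -/
theorem pair_model [IsAlgClosed k]
    (hc : AlgebraicIndependent k (fun ij : Fin q × Fin (r + 1) => c ij.1 ij.2))
    (gen : ∀ x : K, ∃ P Q : MvPolynomial (Fin q × Fin (r + 1)) k,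
      aeval (fun ij => c ij.1 ij.2) Q ≠ 0 ∧
        x * aeval (fun ij => c ij.1 ij.2) Q = aeval (fun ij => c ij.1 ij.2) P)
    (y0 : y 0 = 1) (hrel : ∀ i, ∑ j, algebraMap K L (c i j) * y j = 0)
    {u : Type} [Fintype u] (x : u → L) (hx : ∀ j, y j ∈ acl k (Set.range x))
    (hxy : ∀ a, ∃ j, x a = y j) (hu : Fintype.card u ≤ q) (j1 : Fin (r + 1)) (hj1 : j1 ≠ 0) :
    ∃ (Fr : Type) (_ : Field Fr) (_ : Algebra k Fr)
      (yL yR : Fin (r + 1) → Fr) (xJ : Fin q × {j : Fin (r + 1) // j ≠ 0 ∧ j ≠ j1} → Fr),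
      ∀ τ τ' : L →ₐ[K] Ω, τ (y j1) ≠ τ' (y j1) → ∃ Ψ : Fr →ₐ[k] Ω,
      (∀ j, Ψ (yL j) = τ (y j)) ∧ (∀ j, Ψ (yR j) = τ' (y j)) ∧
      (∀ ij, Ψ (xJ ij) = algebraMap K Ω (c ij.1 ij.2)) := by
  classical
  let A := Algebra.adjoin k (Set.range y)
  let ya : Fin (r + 1) → A := fun j => ⟨y j, Algebra.subset_adjoin ⟨j, rfl⟩⟩
  have hft : Algebra.FiniteType k A := by
    rw [← Subalgebra.fg_iff_finiteType]
    exact ⟨(Set.finite_range y).toFinset, by simp [A]⟩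
  have hxA : ∀ a, x a ∈ A := fun a => by
    obtain ⟨j, hj⟩ := hxy a; rw [hj]; exact Algebra.subset_adjoin ⟨j, rfl⟩
  let xa : u → A := fun a => ⟨x a, hxA a⟩
  -- `A` is algebraic over `k[x]`
  have hAx : ∀ b : A, b ∈ acl k (Set.range xa) := by
    have hya : ∀ j, ya j ∈ acl k (Set.range xa) := by
      intro j
      refine acl_comap A.val Subtype.val_injective ?_
      rw [← Set.range_comp]
      exact hx j
    rintro ⟨b, hb⟩
    induction hb using Algebra.adjoin_induction with
    | mem z hz => obtain ⟨j, rfl⟩ := hz; exact hya j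
    | algebraMap z => exact Subalgebra.algebraMap_mem (acl k (Set.range xa)) z
    | add a b _ _ ha hb => exact Subalgebra.add_mem _ ha hb
    | mul a b _ _ ha hb => exact Subalgebra.mul_mem _ ha hb
  exact pair_model_aux hc gen y0 hrel x hx hu j1 hj1 A.val ya (fun _ => rfl) xa (fun _ => rfl) hAx

/-- The pairs of distinct points of a generic linear section form an irreducible variety, so a
rational function taking equal values at one such pair takes equal values at all of them. -/
theorem pair_transfer [IsAlgClosed k]
    (hc : AlgebraicIndependent k (fun ij : Fin q × Fin (r + 1) => c ij.1 ij.2))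
    (gen : ∀ x : K, ∃ P Q : MvPolynomial (Fin q × Fin (r + 1)) k,
      aeval (fun ij => c ij.1 ij.2) Q ≠ 0 ∧
        x * aeval (fun ij => c ij.1 ij.2) Q = aeval (fun ij => c ij.1 ij.2) P)
    (y0 : y 0 = 1) (hrel : ∀ i, ∑ j, algebraMap K L (c i j) * y j = 0)
    (hgen : Algebra.adjoin K (Set.range y) = ⊤)
    {u : Type} [Fintype u] (x : u → L) (hx : ∀ j, y j ∈ acl k (Set.range x))
    (hxy : ∀ a, ∃ j, x a = y j)
    (hu : Fintype.card u ≤ q) (j1 : Fin (r + 1)) (hj1 : j1 ≠ 0) (a1 : u) (ha1 : x a1 = y j1)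
    (τ τ' σ σ' : L →ₐ[K] Ω) (hτ : τ ≠ τ') (hσ : σ ≠ σ') (θ : L) (h : τ θ = τ' θ) :
    σ θ = σ' θ := by
  classical
  have hdist := fun τ τ' h => pair_dist (Ω := Ω) hc gen y0 hrel hgen x hx hu j1 a1 ha1 τ τ' h
  obtain ⟨Fr, _, _, yL, yR, xJ, key⟩ := pair_model (Ω := Ω) hc gen y0 hrel x hx hxy hu j1 hj1
  obtain ⟨cc, hcc⟩ := exists_univ_coeff yL yR j1 hj1 xJ
  have key2 : ∀ τ τ' : L →ₐ[K] Ω, τ ≠ τ' → ∃ Ψ : Fr →ₐ[k] Ω,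
      (∀ j, Ψ (yL j) = τ (y j)) ∧ (∀ j, Ψ (yR j) = τ' (y j)) ∧
      ∀ i j, Ψ (cc i j) = algebraMap K Ω (c i j) := by
    intro τ τ' hne
    obtain ⟨Ψ, hL, hR, hX⟩ := key τ τ' (hdist τ τ' hne)
    have hre : ∀ (σ : L →ₐ[K] Ω) i, ∑ j, algebraMap K Ω (c i j) * σ (y j) = 0 := by
      intro σ i
      have := congrArg σ (hrel i)
      simpa [map_sum, map_mul] using this
    exact ⟨Ψ, hL, hR, hcc Ω Ψ.toRingHom (fun i j => algebraMap K Ω (c i j)) _ _ hL hR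
      (by simp [y0]) (by simp [y0]) (hdist τ τ' hne) (hre τ) (hre τ') hX⟩
  obtain ⟨D, P, hD, hP⟩ := exists_poly_frac gen θ (hgen ▸ Algebra.mem_top : θ ∈ _)
  let w : Fr := aeval (Sum.elim (fun ij : Fin q × Fin (r + 1) => cc ij.1 ij.2) yL) P -
    aeval (Sum.elim (fun ij : Fin q × Fin (r + 1) => cc ij.1 ij.2) yR) P
  have hw : ∀ τ τ' : L →ₐ[K] Ω, τ ≠ τ' → (τ θ = τ' θ ↔ w = 0) := by
    intro τ τ' hne
    obtain ⟨Ψ, hL, hR, hcc⟩ := key2 τ τ' hne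
    have hev : ∀ (ρ : L →ₐ[K] Ω), algebraMap K Ω (aeval (fun ij => c ij.1 ij.2) D) * ρ θ =
        aeval (Sum.elim (fun ij : Fin q × Fin (r + 1) => algebraMap K Ω (c ij.1 ij.2))
          (fun j => ρ (y j))) P := by
      intro ρ
      have := congrArg (ρ.restrictScalars k) hP
      rw [MvPolynomial.comp_aeval_apply] at this
      rw [map_mul] at this
      simp only [AlgHom.restrictScalars_apply, AlgHom.commutes] at this
      rw [this]
      congr 2
      ext (a | a) <;> simp
    have h1 : Ψ w = algebraMap K Ω (aeval (fun ij => c ij.1 ij.2) D) * (τ θ - τ' θ) := by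
      rw [mul_sub, hev, hev]
      simp only [w, map_sub]
      rw [MvPolynomial.comp_aeval_apply, MvPolynomial.comp_aeval_apply]
      congr 3 <;> (congr 1; ext (a | a) <;> simp [hL, hR, hcc])
    have hD' : algebraMap K Ω (aeval (fun ij => c ij.1 ij.2) D) ≠ 0 := (map_ne_zero _).mpr hD
    rw [← map_eq_zero_iff Ψ Ψ.toRingHom.injective, h1, mul_eq_zero, sub_eq_zero]
    exact ⟨fun h => Or.inr h, fun h => h.resolve_left hD'⟩
  exact (hw σ σ' hσ).mpr ((hw τ τ' hτ).mp h)

end Pair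

end

/-! ### Uniform position -/

section

open Submodule Module MvPolynomial TensorProduct

/-- If the pairs of distinct embeddings of `L` cannot be told apart by the elements of `L`, then
there is no field strictly between `K` and `L`. -/
theorem intermediate_of_pairs {K L : Type} [Field K] [Field L] [Algebra K L] [CharZero K]
    [FiniteDimensional K L]
    (h : ∀ (τ τ' σ σ' : L →ₐ[K] AlgebraicClosure K), τ ≠ τ' → σ ≠ σ' → ∀ θ, τ θ = τ' θ → σ θ = σ' θ)
    (H : IntermediateField K L) : H = ⊥ ∨ H = ⊤ := by
  let τ₀ : L →ₐ[K] AlgebraicClosure K := IsAlgClosed.lift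
  have hG : IsGalois K (AlgebraicClosure K) := ⟨⟩
  have sep : ∀ (H : IntermediateField K L) (α : L), α ∉ H →
      ∃ σ : L →ₐ[K] AlgebraicClosure K, σ α ≠ τ₀ α ∧ ∀ β ∈ H, σ β = τ₀ β := by
    intro H α hα
    have h1 := InfiniteGalois.fixedField_fixingSubgroup (H.map τ₀)
    have h2 : τ₀ α ∉ H.map τ₀ := by
      rintro ⟨β, hβ, hβ'⟩
      have : β = α := τ₀.injective hβ'
      exact hα (this ▸ hβ)
    rw [← h1, IntermediateField.mem_fixedField_iff] at h2
    push Not at h2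
    obtain ⟨g, hg, hne⟩ := h2
    refine ⟨(g : AlgebraicClosure K →ₐ[K] AlgebraicClosure K).comp τ₀, hne, fun β hβ => ?_⟩
    rw [IntermediateField.mem_fixingSubgroup_iff] at hg
    exact hg _ ⟨β, hβ, rfl⟩
  by_contra hcon
  push Not at hcon
  obtain ⟨hb, ht⟩ := hcon
  obtain ⟨α, hα⟩ : ∃ α, α ∉ H := by
    by_contra hh; push Not at hh; exact ht (eq_top_iff.mpr fun x _ => hh x)
  obtain ⟨θ, hθ, hθ'⟩ : ∃ θ ∈ H, θ ∉ (⊥ : IntermediateField K L) := by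
    by_contra hh; push Not at hh; exact hb (eq_bot_iff.mpr hh)
  obtain ⟨τ, hτ, hτH⟩ := sep H α hα
  obtain ⟨σ, hσ, -⟩ := sep ⊥ θ hθ'
  exact hσ (h τ τ₀ σ τ₀ (fun e => hτ (by rw [e])) (fun e => hσ (by rw [e])) θ (hτH θ hθ))

section NI

variable {k K L : Type} [Field k] [CharZero k] [IsAlgClosed k] [Field K] [Field L]
  [Algebra k K] [Algebra K L] [Algebra k L] [IsScalarTower k K L] {q r : ℕ}
  {c : Fin q → Fin (r + 1) → K} {y : Fin (r + 1) → L}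

/-- Some coordinate of the generic point of a generic section is transcendental. -/
theorem exists_transcendental_coord (hq : 0 < q)
    (hc : AlgebraicIndependent k (fun ij : Fin q × Fin (r + 1) => c ij.1 ij.2))
    (y0 : y 0 = 1) (hrel : ∀ i, ∑ j, algebraMap K L (c i j) * y j = 0) :
    ∃ j, Transcendental k (y j) := by
  classical
  by_contra hcon
  simp only [not_exists, Transcendental, not_not] at hcon
  have ha : ∀ j, ∃ a : k, algebraMap k L a = y j := fun j => by
    obtain ⟨a, ha⟩ := IsAlgClosed.algebraMap_bijective_of_isIntegral (k := k)
      (K := (integralClosure k L)) |>.2 ⟨y j, (hcon j).isIntegral⟩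
    exact ⟨a, congrArg Subtype.val ha⟩
  choose a ha using ha
  have h0 : a 0 = 1 := (algebraMap k L).injective (by rw [ha, y0, map_one])
  have h1 : aeval (fun ij : Fin q × Fin (r + 1) => c ij.1 ij.2)
      (∑ j, C (a j) * X ((⟨0, hq⟩ : Fin q), j) : MvPolynomial (Fin q × Fin (r + 1)) k) = 0 := by
    apply (algebraMap K L).injective
    rw [map_zero, ← hrel ⟨0, hq⟩, map_sum, map_sum]
    refine Finset.sum_congr rfl fun j _ => ?_
    rw [← ha, map_mul, map_mul, aeval_X, mul_comm, algHom_C,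
      ← IsScalarTower.algebraMap_apply]
  have h2 := (injective_iff_map_eq_zero _).mp hc _ h1
  have h3 := congrArg (coeff (Finsupp.single ((⟨0, hq⟩ : Fin q), (0 : Fin (r + 1))) 1)) h2
  rw [coeff_sum, Finset.sum_eq_single 0] at h3
  · simp [h0] at h3
  · intro j _ hj
    rw [coeff_C_mul, coeff_X', if_neg, mul_zero]
    intro h
    have := Finsupp.single_left_injective (one_ne_zero) h
    exact hj (Prod.ext_iff.mp this).2
  · simp

/-- A set of coordinates over which all of them are algebraic, containing some `y j1` with `j1 ≠ 0`. Its size is at most `q` since `q` linear sections leave only finitely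
many points. -/
theorem exists_trbasis (hq : 0 < q)
    (hc : AlgebraicIndependent k (fun ij : Fin q × Fin (r + 1) => c ij.1 ij.2))
    (gen : ∀ x : K, ∃ P Q : MvPolynomial (Fin q × Fin (r + 1)) k,
      aeval (fun ij => c ij.1 ij.2) Q ≠ 0 ∧
        x * aeval (fun ij => c ij.1 ij.2) Q = aeval (fun ij => c ij.1 ij.2) P)
    (y0 : y 0 = 1) (hrel : ∀ i, ∑ j, algebraMap K L (c i j) * y j = 0)
    [Algebra.IsAlgebraic K L]
    (hfree : AlgebraicIndependent (Algebra.adjoin k (Set.range y))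
      (fun ij : Fin q × Fin r => algebraMap K L (c ij.1 ij.2.succ))) :
    ∃ (u : Type) (_ : Fintype u) (x : u → L) (j1 : Fin (r + 1)) (a1 : u), j1 ≠ 0 ∧
      x a1 = y j1 ∧ (∀ a, ∃ j, x a = y j) ∧ (∀ j, y j ∈ acl k (Set.range x)) ∧
      Fintype.card u ≤ q := by
  obtain ⟨j1, hj1⟩ := exists_transcendental_coord hq hc y0 hrel
  have hj10 : j1 ≠ 0 := by
    rintro rfl
    rw [y0] at hj1
    exact hj1 isAlgebraic_one
  have hyA : ∀ j, y j ∈ Algebra.adjoin k (Set.range y) := fun j => Algebra.subset_adjoin ⟨j, rfl⟩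
  let ya : Fin (r + 1) → Algebra.adjoin k (Set.range y) := fun j => ⟨y j, hyA j⟩
  have htop : Algebra.adjoin k (Set.range ya) = ⊤ := by
    apply Subalgebra.map_injective (f := (Algebra.adjoin k (Set.range y)).val)
      Subtype.val_injective
    rw [AlgHom.map_adjoin, ← Set.range_comp, Algebra.map_top, Subalgebra.range_val]
    rfl
  have hta : Algebra.IsAlgebraic (Algebra.adjoin k (Set.range ya))
      (Algebra.adjoin k (Set.range y)) := by
    constructor
    intro b
    exact isAlgebraic_algebraMap (⟨b, by rw [htop]; trivial⟩ : Algebra.adjoin k (Set.range ya))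
  have hsing : AlgebraicIndepOn k id ({ya j1} : Set (Algebra.adjoin k (Set.range y))) := by
    have : AlgebraicIndependent k (fun _ : ({ya j1} : Set (Algebra.adjoin k (Set.range y))) =>
        ya j1) := by
      rw [algebraicIndependent_unique_type_iff]
      intro h
      exact hj1 (h.algebraMap (A := L))
    convert this using 2 with z
    exact z.2
  obtain ⟨u, hu1, hu2, hu3⟩ := exists_isTranscendenceBasis_between (R := k) {ya j1} (Set.range ya)
    (by rintro _ rfl; exact ⟨j1, rfl⟩) hsing
  have hufin : Finite u := (Set.finite_range ya).subset hu2
  have : Fintype u := Fintype.ofFinite u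
  refine ⟨u, inferInstance, fun a => (a : Algebra.adjoin k (Set.range y)), j1,
    ⟨ya j1, hu1 rfl⟩, hj10, rfl, ?_, ?_, ?_⟩
  · rintro ⟨a, ha⟩
    obtain ⟨j, rfl⟩ := hu2 ha
    exact ⟨j, rfl⟩
  · intro j
    have h1 : ya j ∈ acl k (Set.range (Subtype.val : u → _)) :=
      mem_acl.mpr (hu3.isAlgebraic.isAlgebraic _)
    exact acl_map (Algebra.adjoin k (Set.range y)).val Subtype.val_injective
      (by rintro _ ⟨b, rfl⟩; exact subset_acl _ ⟨b, rfl⟩) h1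
  · have hind := AlgebraicIndependent.sumElim_comp hu3.1 hfree
    have hcard := hind.cardinalMk_le_trdeg
    have hcL : AlgebraicIndependent k (fun ij : Fin q × Fin (r + 1) =>
        algebraMap K L (c ij.1 ij.2)) :=
      hc.map' (f := IsScalarTower.toAlgHom k K L) (algebraMap K L).injective
    have halg := acl_isAlgebraic (acl_top_of_gen (L := L) _ gen
      (fun ij => subset_acl (Set.range fun ij : Fin q × Fin (r + 1) => algebraMap K L (c ij.1 ij.2))
        ⟨ij, rfl⟩))
    have h2 := Algebra.IsAlgebraic.trdeg_le_cardinalMk k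
      (Set.range fun ij : Fin q × Fin (r + 1) => algebraMap K L (c ij.1 ij.2))
    have h3 := (hcard.trans h2).trans Cardinal.mk_range_le
    rw [Cardinal.mk_fintype, Cardinal.mk_fintype, Nat.cast_le] at h3
    simp only [Fintype.card_sum, Fintype.card_prod, Fintype.card_fin] at h3
    nlinarith

/-- The case of `no_intermediate` in which the coordinates generate the whole field `L`. -/
theorem no_intermediate_top (hq : 0 < q)
    (hc : AlgebraicIndependent k (fun ij : Fin q × Fin (r + 1) => c ij.1 ij.2))
    (gen : ∀ x : K, ∃ P Q : MvPolynomial (Fin q × Fin (r + 1)) k,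
      aeval (fun ij => c ij.1 ij.2) Q ≠ 0 ∧
        x * aeval (fun ij => c ij.1 ij.2) Q = aeval (fun ij => c ij.1 ij.2) P)
    (y0 : y 0 = 1) (hrel : ∀ i, ∑ j, algebraMap K L (c i j) * y j = 0)
    [FiniteDimensional K L] (hgen : Algebra.adjoin K (Set.range y) = ⊤)
    (hfree : AlgebraicIndependent (Algebra.adjoin k (Set.range y))
      (fun ij : Fin q × Fin r => algebraMap K L (c ij.1 ij.2.succ)))
    (H : IntermediateField K L) : H = ⊥ ∨ H = ⊤ := by
  obtain ⟨u, _, x, j1, a1, hj1, ha1, hxy, hx, hu⟩ := exists_trbasis hq hc gen y0 hrel hfree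
  have hK : CharZero K := charZero_of_injective_algebraMap (algebraMap k K).injective
  refine intermediate_of_pairs (fun τ τ' σ σ' hτ hσ θ h => ?_) H
  exact pair_transfer hc gen y0 hrel hgen x hx hxy hu j1 hj1 a1 ha1 τ τ' σ σ' hτ hσ θ h

end NI

/-- A generic linear section which is finite over the field of definition of the linear space is
the spectrum of a field without proper intermediate fields (the monodromy is 2-transitive). -/
theorem no_intermediate {k K Φ : Type} [Field k] [CharZero k] [IsAlgClosed k] [Field K] [Field Φ]
    [Algebra k K] [Algebra K Φ] [Algebra k Φ] [IsScalarTower k K Φ] {q r : ℕ}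
    {c : Fin q → Fin (r + 1) → K} {y : Fin (r + 1) → Φ} (hq : 0 < q)
    (hc : AlgebraicIndependent k (fun ij : Fin q × Fin (r + 1) => c ij.1 ij.2))
    (gen : ∀ x : K, ∃ P Q : MvPolynomial (Fin q × Fin (r + 1)) k,
      aeval (fun ij => c ij.1 ij.2) Q ≠ 0 ∧
        x * aeval (fun ij => c ij.1 ij.2) Q = aeval (fun ij => c ij.1 ij.2) P)
    (y0 : y 0 = 1) (hrel : ∀ i, ∑ j, algebraMap K Φ (c i j) * y j = 0)
    (hfree : AlgebraicIndependent (Algebra.adjoin k (Set.range y))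
      (fun ij : Fin q × Fin r => algebraMap K Φ (c ij.1 ij.2.succ)))
    (L : IntermediateField K Φ) [FiniteDimensional K L]
    (hL : L.toSubalgebra = Algebra.adjoin K (Set.range y))
    (H : IntermediateField K Φ) (hH : H ≤ L) : H = ⊥ ∨ H = L := by
  have hyL : ∀ j, y j ∈ L := fun j => by
    rw [← IntermediateField.mem_toSubalgebra, hL]; exact Algebra.subset_adjoin ⟨j, rfl⟩
  let y' : Fin (r + 1) → L := fun j => ⟨y j, hyL j⟩
  have hgen : Algebra.adjoin K (Set.range y') = ⊤ := by
    apply Subalgebra.map_injective (f := L.val) Subtype.val_injective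
    rw [AlgHom.map_adjoin, ← Set.range_comp, Algebra.map_top]
    have h1 : (L.val.comp (AlgHom.id K L)).range = L.toSubalgebra := by
      ext z
      exact ⟨by rintro ⟨w, rfl⟩; exact w.2, fun hz => ⟨⟨z, hz⟩, rfl⟩⟩
    rw [AlgHom.comp_id] at h1
    rw [h1, hL]
    rfl
  have hmem : ∀ z : Algebra.adjoin k (Set.range y'), ((z : L) : Φ) ∈ Algebra.adjoin k (Set.range y) := by
    rintro ⟨z, hz⟩
    have h1 : (L.val.restrictScalars k) z ∈
        (Algebra.adjoin k (Set.range y')).map (L.val.restrictScalars k) := ⟨z, hz, rfl⟩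
    rw [AlgHom.map_adjoin, ← Set.range_comp] at h1
    exact h1
  let f : Algebra.adjoin k (Set.range y') →+* Algebra.adjoin k (Set.range y) :=
    { toFun := fun z => ⟨((z : L) : Φ), hmem z⟩
      map_one' := rfl
      map_mul' := fun _ _ => rfl
      map_zero' := rfl
      map_add' := fun _ _ => rfl }
  have hf : Function.Injective f := fun a b hab =>
    Subtype.ext (Subtype.ext (congrArg (fun z : Algebra.adjoin k (Set.range y) => (z : Φ)) hab))
  have hfree' : AlgebraicIndependent (Algebra.adjoin k (Set.range y'))
      (fun ij : Fin q × Fin r => algebraMap K L (c ij.1 ij.2.succ)) :=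
    AlgebraicIndependent.of_ringHom_of_comp_eq (f := f) (g := (algebraMap L Φ)) hfree hf rfl
  have key := no_intermediate_top (k := k) (L := L) (y := y') hq hc gen (Subtype.ext y0)
    (fun i => Subtype.ext (by simpa [y'] using hrel i)) hgen hfree'
    (IntermediateField.restrict hH)
  rcases key with h | h
  · left
    rw [eq_bot_iff]
    intro z hz
    have : (⟨z, hH hz⟩ : L) ∈ IntermediateField.restrict hH := by
      rw [IntermediateField.mem_restrict]; exact hz
    rw [h, IntermediateField.mem_bot] at this
    obtain ⟨a, ha⟩ := this
    rw [IntermediateField.mem_bot]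
    exact ⟨a, congrArg Subtype.val ha⟩
  · right
    refine le_antisymm hH fun z hz => ?_
    have : (⟨z, hz⟩ : L) ∈ IntermediateField.restrict hH := by rw [h]; trivial
    rwa [IntermediateField.mem_restrict] at this

end

section

open Submodule Module MvPolynomial

/-! ### Algebraic independence over varying base rings -/

/-- Algebraic independence over a subring passes to any ring of elements algebraic over it. -/
theorem indep_of_algebraic {B B' Φ ι : Type} [CommRing B] [CommRing B'] [Field Φ] [IsDomain B]
    [Algebra B Φ] [Algebra B' Φ] (hB' : Function.Injective (algebraMap B' Φ))
    (h : ∀ b : B', IsAlgebraic B (algebraMap B' Φ b)) {x : ι → Φ}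
    (hx : AlgebraicIndependent B x) : AlgebraicIndependent B' x := by
  have h1 := hx.subalgebraAlgebraicClosure
  let f : B' →+* Subalgebra.algebraicClosure B Φ :=
    (algebraMap B' Φ).codRestrict (Subalgebra.algebraicClosure B Φ) h
  refine AlgebraicIndependent.of_ringHom_of_comp_eq (f := f) (g := RingHom.id Φ) h1 ?_ rfl
  intro a b hab
  exact hB' (congrArg Subtype.val hab)

theorem indep_acl {k B' Φ ι : Type} [Field k] [CommRing B'] [Field Φ] [Algebra k Φ]
    [Algebra B' Φ] (hB' : Function.Injective (algebraMap B' Φ)) {s : Set Φ}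
    (h : ∀ b : B', algebraMap B' Φ b ∈ acl k s) {x : ι → Φ}
    (hx : AlgebraicIndependent (Algebra.adjoin k s) x) : AlgebraicIndependent B' x :=
  indep_of_algebraic hB' (fun b => mem_acl.mp (h b)) hx

theorem indep_split {k Φ ι ι' : Type} [Field k] [Field Φ] [Algebra k Φ] {s : Set Φ} {x : ι → Φ}
    {x' : ι' → Φ} (h : AlgebraicIndependent (Algebra.adjoin k s) (Sum.elim x x')) :
    AlgebraicIndependent (Algebra.adjoin k (s ∪ Set.range x')) x := by
  have h1 := (AlgebraicIndependent.sumElim_iff.mp h).2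
  have hle : ∀ b ∈ Algebra.adjoin k (s ∪ Set.range x'),
      b ∈ Algebra.adjoin (Algebra.adjoin k s) (Set.range x') := by
    intro b hb
    induction hb using Algebra.adjoin_induction with
    | mem b hb =>
      rcases hb with hb | hb
      · exact Subalgebra.algebraMap_mem (Algebra.adjoin (Algebra.adjoin k s) (Set.range x'))
          ⟨b, Algebra.subset_adjoin hb⟩
      · exact Algebra.subset_adjoin hb
    | algebraMap a =>
      exact Subalgebra.algebraMap_mem (Algebra.adjoin (Algebra.adjoin k s) (Set.range x'))
          (algebraMap k _ a)
    | add a b _ _ ha hb => exact Subalgebra.add_mem _ ha hb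
    | mul a b _ _ ha hb => exact Subalgebra.mul_mem _ ha hb
  refine indep_of_algebraic (B := Algebra.adjoin (Algebra.adjoin k s) (Set.range x'))
    Subtype.val_injective (fun b => ?_) h1
  exact isAlgebraic_algebraMap
    (⟨b.1, hle b.1 b.2⟩ : Algebra.adjoin (Algebra.adjoin k s) (Set.range x'))

/-- A field generated by elements algebraic over `k[s]` consists of such elements. -/
theorem gen_mem_acl {k K Φ ι : Type} [Field k] [Field K] [Field Φ] [Algebra k K] [Algebra K Φ]
    [Algebra k Φ] [IsScalarTower k K Φ] {c : ι → K}
    (gen : ∀ x : K, ∃ P Q : MvPolynomial ι k, aeval c Q ≠ 0 ∧ x * aeval c Q = aeval c P)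
    {s : Set Φ} (hs : ∀ i, algebraMap K Φ (c i) ∈ acl k s) (a : K) :
    algebraMap K Φ a ∈ acl k s := by
  have hp : ∀ P : MvPolynomial ι k, algebraMap K Φ (aeval c P) ∈ acl k s := by
    intro P
    induction P using MvPolynomial.induction_on with
    | C a =>
      rw [algHom_C, ← IsScalarTower.algebraMap_apply]; exact Subalgebra.algebraMap_mem _ a
    | add p q hp hq => rw [map_add, map_add]; exact Subalgebra.add_mem _ hp hq
    | mul_X p i hp => rw [map_mul, map_mul, aeval_X]; exact Subalgebra.mul_mem _ hp (hs i)
  obtain ⟨P, Q, hQ, h⟩ := gen a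
  refine acl_of_mul ((map_ne_zero (algebraMap K Φ)).mpr hQ) (hp Q) ?_
  rw [← map_mul, mul_comm, h]
  exact hp P

theorem adjoin_mem_acl {k K Φ κ : Type} [Field k] [Field K] [Field Φ] [Algebra K Φ]
    [Algebra k Φ] {y : κ → Φ} {s : Set Φ} (hK : ∀ a : K, algebraMap K Φ a ∈ acl k s)
    (hy : ∀ j, y j ∈ acl k s) (b : Algebra.adjoin K (Set.range y)) : (b : Φ) ∈ acl k s := by
  obtain ⟨b, hb⟩ := b
  induction hb using Algebra.adjoin_induction with
  | mem b hb => obtain ⟨j, rfl⟩ := hb; exact hy j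
  | algebraMap a => exact hK a
  | add a b _ _ ha hb => exact Subalgebra.add_mem _ ha hb
  | mul a b _ _ ha hb => exact Subalgebra.mul_mem _ ha hb

/-- The rational function field in `n` variables, with its universal property. -/
theorem exists_ratField (k : Type) [Field k] (ι : Type) :
    ∃ (K : Type) (_ : Field K) (_ : Algebra k K) (cK : ι → K),
      (∀ x : K, ∃ P Q : MvPolynomial ι k, aeval cK Q ≠ 0 ∧ x * aeval cK Q = aeval cK P) ∧
      AlgebraicIndependent k cK ∧
      ∀ (Φ : Type) [Field Φ] [Algebra k Φ] (c : ι → Φ), AlgebraicIndependent k c →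
        ∃ f : K →ₐ[k] Φ, ∀ j, f (cK j) = c j := by
  have hid : ∀ P : MvPolynomial ι k,
      aeval (fun j => algebraMap (MvPolynomial ι k)
        (FractionRing (MvPolynomial ι k)) (X j)) P = algebraMap _ _ P := by
    intro P
    have h1 := aeval_algebraMap_apply (FractionRing (MvPolynomial ι k))
      (X : ι → MvPolynomial ι k) P
    rwa [aeval_X_left_apply] at h1
  refine ⟨FractionRing (MvPolynomial ι k), inferInstance, inferInstance,
    fun j => algebraMap (MvPolynomial ι k) _ (X j), ?_, ?_, ?_⟩
  · intro x
    obtain ⟨P, Q, hQ, rfl⟩ := IsFractionRing.div_surjective (A := MvPolynomial ι k) x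
    have hQ0 : algebraMap _ (FractionRing (MvPolynomial ι k)) Q ≠ 0 := by
      rw [Ne, IsFractionRing.to_map_eq_zero_iff]; exact nonZeroDivisors.ne_zero hQ
    refine ⟨P, Q, ?_, ?_⟩
    · rwa [hid]
    · rw [hid, hid, div_mul_cancel₀ _ hQ0]
  · rw [algebraicIndependent_iff]
    intro P hP
    rwa [hid, IsFractionRing.to_map_eq_zero_iff] at hP
  · intro Φ _ _ c hc
    refine ⟨IsFractionRing.liftAlgHom (R := k) (A := MvPolynomial ι k) (g := aeval c) hc,
      fun j => ?_⟩
    exact (IsFractionRing.lift_algebraMap (g := (aeval c : MvPolynomial ι k →ₐ[k] Φ).toRingHom)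
      hc (X j)).trans (aeval_X c j)

/-- Elements of `K[y]` independent over `K` remain independent over `K(x)`, if `x` is
algebraically independent over `K[y]`. -/
theorem linearIndependent_of_free {K F Φ ι n : Type} [Field K] [Field F] [Field Φ]
    [Algebra K Φ] [Algebra F Φ] [Fintype n] {r : ℕ} {y : Fin (r + 1) → Φ} {x : ι → Φ}
    (hx : AlgebraicIndependent (Algebra.adjoin K (Set.range y)) x)
    (gen : ∀ f : F, ∃ P Q : MvPolynomial ι K, aeval x Q ≠ 0 ∧
      algebraMap F Φ f * aeval x Q = aeval x P)
    {u : n → Φ} (huA : ∀ i, u i ∈ Algebra.adjoin K (Set.range y))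
    (hu : LinearIndependent K u) : LinearIndependent F u := by
  classical
  rw [Fintype.linearIndependent_iff]
  intro g hg
  choose P Q hQ hPQ using fun i => gen (g i)
  let D : MvPolynomial ι K := ∏ i, Q i
  let P' : n → MvPolynomial ι K := fun i => P i * ∏ j ∈ Finset.univ.erase i, Q j
  have hP' : ∀ i, algebraMap F Φ (g i) * aeval x D = aeval x (P' i) := by
    intro i
    simp only [D, P']
    rw [← Finset.mul_prod_erase _ _ (Finset.mem_univ i), map_mul, map_mul, ← mul_assoc, hPQ]
  have hD : aeval x D ≠ 0 := by
    simp only [D, map_prod]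
    exact Finset.prod_ne_zero_iff.mpr fun i _ => hQ i
  let u' : n → Algebra.adjoin K (Set.range y) := fun i => ⟨u i, huA i⟩
  have hev : aeval x (∑ l, C (u' l) *
      MvPolynomial.map (algebraMap K (Algebra.adjoin K (Set.range y))) (P' l)) = 0 := by
    rw [map_sum]
    have h1 : ∀ l, aeval x (C (u' l) *
        MvPolynomial.map (algebraMap K (Algebra.adjoin K (Set.range y))) (P' l)) =
        aeval x D * (g l • u l) := by
      intro l
      rw [map_mul, algHom_C, aeval_map_algebraMap, ← hP', Algebra.smul_def]
      change u l * _ = _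
      ring
    simp only [h1]
    rw [← Finset.mul_sum, hg, mul_zero]
  have hz := (injective_iff_map_eq_zero _).mp hx _ hev
  have hPz := sum_C_mul_map_eq_zero (u := u') hu hz
  intro i
  have h2 := hP' i
  rw [hPz i, map_zero] at h2
  have h3 := (mul_eq_zero.mp h2).resolve_right hD
  exact (map_eq_zero _).mp h3

theorem finrank_span_of_free {K F Φ ι : Type} [Field K] [Field F] [Field Φ]
    [Algebra K F] [Algebra K Φ] [Algebra F Φ] [IsScalarTower K F Φ] {r : ℕ}
    {y : Fin (r + 1) → Φ} {x : ι → Φ}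
    (hx : AlgebraicIndependent (Algebra.adjoin K (Set.range y)) x)
    (gen : ∀ f : F, ∃ P Q : MvPolynomial ι K, aeval x Q ≠ 0 ∧
      algebraMap F Φ f * aeval x Q = aeval x P)
    (W : Submodule K Φ) [FiniteDimensional K W]
    (hW : W ≤ Subalgebra.toSubmodule (Algebra.adjoin K (Set.range y))) :
    finrank F (span F (W : Set Φ)) = finrank K W := by
  let b := finBasis K W
  have hb : LinearIndependent K (fun i => (b i : Φ)) :=
    b.linearIndependent.map' W.subtype (Submodule.ker_subtype W)
  have hbF : LinearIndependent F (fun i => (b i : Φ)) :=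
    linearIndependent_of_free hx gen (fun i => hW (b i).2) hb
  have hsp : span F (W : Set Φ) = span F (Set.range fun i => (b i : Φ)) := by
    apply le_antisymm
    · rw [span_le]
      intro w hw
      have h1 : w ∈ span K (Set.range fun i => (b i : Φ)) := by
        have h2 := b.mem_span ⟨w, hw⟩
        have h3 := Submodule.mem_map_of_mem (f := W.subtype) h2
        rw [Submodule.map_span, ← Set.range_comp] at h3
        exact h3
      exact span_le_restrictScalars K F _ h1
    · apply span_mono
      rintro _ ⟨i, rfl⟩
      exact (b i).2
  rw [hsp, finrank_span_eq_card hbF, Fintype.card_fin]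

/-! ### Generic hyperplane sections -/

/-- The coefficients of a generic hyperplane through the point `y` of a positive dimensional
variety are algebraically independent. -/
theorem genSec_indep {k Φ : Type} [Field k] [Field Φ] [Algebra k Φ] {r : ℕ}
    {y c : Fin (r + 1) → Φ} (y0 : y 0 = 1)
    (hinf : ∀ N, ∃ t, N < finrank k (linSys k y ^ t : Submodule k Φ))
    (hrel : ∑ j, c j * y j = 0)
    (hfree : AlgebraicIndependent (Algebra.adjoin k (Set.range y)) (fun j : Fin r => c j.succ)) :
    AlgebraicIndependent k c := by
  rw [algebraicIndependent_iff]
  intro q hq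
  obtain ⟨w, hw⟩ := univForm_dvd y0 hrel hfree
    (MvPolynomial.map (algebraMap k (Algebra.adjoin k (Set.range y))) q)
    (by rwa [aeval_map_algebraMap])
  let W : ℕ → Submodule k Φ := fun n => Nat.casesOn n ⊥ (fun m => secMod k y m)
  have h0 := coeff_mem_of_saturated (y := y) (W := W) (fun j n u hu => ?_) (fun w hw => ?_) w
    (fun β => ?_)
  · have hw0 : w = 0 := by
      ext β
      have := h0 β
      simp only [W, Submodule.mem_bot] at this
      simpa using this
    rw [hw0, mul_zero] at hw
    exact (MvPolynomial.map_injective _ (algebraMap k _).injective) (by rw [hw, map_zero])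
  · cases n with
    | zero =>
      have : u = 0 := by simpa [W] using hu
      rw [this, mul_zero]; exact Submodule.zero_mem _
    | succ m => exact mul_mem_secMod_succ hu j
  · change w ∈ (⊥ : Submodule k Φ)
    rw [Submodule.mem_bot]
    refine secMod_neg hinf y0 fun j => ?_
    obtain ⟨a, ha⟩ := hw j
    cases a with
    | zero =>
      have : w = 0 := by simpa [W] using ha
      exact ⟨0, by rw [this, mul_zero]; exact Submodule.zero_mem _⟩
    | succ m => exact ⟨m, ha⟩
  · rw [← hw, coeff_map]
    change _ ∈ secMod k y 0
    have h1 : (1 : Φ) ∈ secMod k y 0 := linSys_pow_le_secMod y 0 (one_mem_linSys_pow y0 0)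
    have := Submodule.smul_mem _ (coeff β q) h1
    rwa [Algebra.smul_def, mul_one] at this

end

/-! ### The generic hyperplane section of a curve -/

section

open Submodule Module MvPolynomial

section Curve

variable {k K Φ : Type} [Field k] [Field K] [Field Φ] [Algebra k K] [Algebra k Φ] [Algebra K Φ]
  [IsScalarTower k K Φ] {r : ℕ} {y : Fin (r + 1) → Φ} {c : Fin (r + 1) → K}

theorem finrank_linSys_mono (h0 : y 0 = 1) {t u : ℕ} (h : t ≤ u) :
    finrank K (linSys K y ^ t : Submodule K Φ) ≤ finrank K (linSys K y ^ u : Submodule K Φ) :=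
  Submodule.finrank_mono (linSys_pow_mono h0 h)

/-- If the filtration pieces have bounded dimension, the coordinate ring is finite. -/
theorem finite_adjoin_of_bounded (h0 : y 0 = 1) {D : ℕ}
    (hD : ∀ t, finrank K (linSys K y ^ t : Submodule K Φ) ≤ D) :
    FiniteDimensional K (Subalgebra.toSubmodule (Algebra.adjoin K (Set.range y))) ∧
    finrank K (Subalgebra.toSubmodule (Algebra.adjoin K (Set.range y))) ≤ D := by
  -- a piece of maximal dimension is the whole ring
  obtain ⟨T, hT⟩ : ∃ T, ∀ t, finrank K (linSys K y ^ t : Submodule K Φ) ≤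
      finrank K (linSys K y ^ T : Submodule K Φ) := by
    have hbdd : BddAbove (Set.range fun t => finrank K (linSys K y ^ t : Submodule K Φ)) :=
      ⟨D, by rintro _ ⟨t, rfl⟩; exact hD t⟩
    obtain ⟨T, hT⟩ := Nat.sSup_mem (Set.range_nonempty _) hbdd
    exact ⟨T, fun t => (le_csSup hbdd ⟨t, rfl⟩).trans hT.symm.le⟩
  have heq : Subalgebra.toSubmodule (Algebra.adjoin K (Set.range y)) = linSys K y ^ T := by
    refine le_antisymm (fun f hf => ?_) (linSys_pow_le_adjoin y T)
    obtain ⟨t, ht⟩ := exists_mem_linSys_pow h0 hf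
    have h1 : linSys K y ^ T = linSys K y ^ (max t T) :=
      Submodule.eq_of_le_of_finrank_le (linSys_pow_mono h0 (le_max_right _ _)) (hT _)
    rw [h1]
    exact linSys_pow_mono h0 (le_max_left _ _) ht
  rw [heq]
  exact ⟨inferInstance, hD T⟩

/-- A finite coordinate ring inside a field is a field. -/
theorem exists_field_adjoin
    (hfin : FiniteDimensional K (Subalgebra.toSubmodule (Algebra.adjoin K (Set.range y)))) :
    ∃ L : IntermediateField K Φ, L.toSubalgebra = Algebra.adjoin K (Set.range y) ∧
      FiniteDimensional K L := by
  have hfin' : FiniteDimensional K (Algebra.adjoin K (Set.range y)) := hfin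
  have hf : IsField (Algebra.adjoin K (Set.range y)) :=
    isField_of_isIntegral_of_isField' (Field.toIsField K)
  refine ⟨IntermediateField.mk (Algebra.adjoin K (Set.range y)) ?_, rfl, hfin'⟩
  intro x hx
  by_cases h : x = 0
  · subst h; rw [inv_zero]; exact hx
  · obtain ⟨b, hb⟩ := hf.mul_inv_cancel (a := ⟨x, hx⟩) (fun e => h (congrArg Subtype.val e))
    have : x⁻¹ = b := by
      rw [inv_eq_iff_eq_inv, ← one_div]
      have h1 : x * (b : Φ) = 1 := congrArg Subtype.val hb
      rw [eq_div_iff (right_ne_zero_of_mul_eq_one h1), h1]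
    rw [this]
    exact b.2

/-- The generic hyperplane section of a curve of degree `d` has `d` points: the first differences of
the Hilbert function are eventually `d`, and bound from above, then equal, the dimension of the
coordinate ring of the section. -/
theorem curve_section_finrank (S : GenSec k K y c) {d g : ℤ} {N : ℕ}
    (hH : ∀ t : ℕ, N ≤ t → (finrank k (linSys k y ^ t : Submodule k Φ) : ℤ) = d * t + 1 - g) :
    FiniteDimensional K (Subalgebra.toSubmodule (Algebra.adjoin K (Set.range y))) ∧
    (finrank K (Subalgebra.toSubmodule (Algebra.adjoin K (Set.range y))) : ℤ) = d := by
  have h0 := S.y_zero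
  have hv : ∀ t, (finrank K (linSys K y ^ t : Submodule K Φ) : ℤ) ≤ d := by
    intro t
    have h1 := S.linSys_step (max t N)
    have h2 := hH (max t N) (le_max_right _ _)
    have h3 := hH (max t N + 1) (by omega)
    have h4 := finrank_linSys_mono (K := K) h0 (show t ≤ max t N + 1 by omega)
    have h1' : (finrank K (linSys K y ^ (max t N + 1) : Submodule K Φ) : ℤ) +
      finrank k (linSys k y ^ (max t N) : Submodule k Φ) ≤
      finrank k (linSys k y ^ (max t N + 1) : Submodule k Φ) := by exact_mod_cast h1
    rw [h2, h3] at h1'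
    have h4' : (finrank K (linSys K y ^ t : Submodule K Φ) : ℤ) ≤
      finrank K (linSys K y ^ (max t N + 1) : Submodule K Φ) := by exact_mod_cast h4
    rw [Nat.cast_add_one] at h1'
    linarith
  have hd : 0 ≤ d := le_trans (by positivity) (hv 0)
  obtain ⟨hfin, hle⟩ := finite_adjoin_of_bounded (K := K) h0 (D := d.toNat)
    (fun t => by have := hv t; omega)
  refine ⟨hfin, le_antisymm (by omega) ?_⟩
  set x := finrank K (Subalgebra.toSubmodule (Algebra.adjoin K (Set.range y)))
  have hf : ∀ t, FiniteDimensional K (secMod K y t) := fun t =>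
    Submodule.finiteDimensional_of_le (secMod_le_adjoin h0 t)
  have hB := S.secMod_finite hf
  have hbound : ∀ t, finrank k (secMod k y t) ≤ finrank k (secMod k y 0) + t * x := by
    intro t
    induction t with
    | zero => simp
    | succ t ih =>
      rw [(S.secMod_succ t (hB t) (hf _)).2]
      have h1 : finrank K (span K (secMod k y (t + 1) : Set Φ)) ≤ x :=
        Submodule.finrank_mono ((span_secMod_le y (t + 1)).trans (secMod_le_adjoin h0 _))
      rw [add_mul, one_mul]; omega
  by_contra hlt
  push Not at hlt
  -- compare growth of `h t = d t + 1 - g` with `dim B_t ≤ b₀ + t x`, `x < d`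
  set b0 := finrank k (secMod k y 0)
  let t : ℕ := N + b0 + g.toNat
  have h1 := hH t (by omega)
  have hBt := hB t
  have h2 : finrank k (linSys k y ^ t : Submodule k Φ) ≤ finrank k (secMod k y t) :=
    Submodule.finrank_mono (linSys_pow_le_secMod y t)
  have h3 := hbound t
  have h4 : (d : ℤ) * t + 1 - g ≤ b0 + t * x := by rw [← h1]; exact_mod_cast h2.trans h3
  have h5 : ((t : ℕ) : ℤ) * (x + 1) ≤ t * d := mul_le_mul_of_nonneg_left (by omega) (by positivity)
  have h6 : (t : ℤ) = N + b0 + g.toNat := by simp [t]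
  have h7 : g ≤ g.toNat := Int.self_le_toNat g
  nlinarith

/-- Superadditivity of the Hilbert function of a generic linear section consisting of finitely many
conjugate points in uniform position. -/
theorem finrank_mul_ge (h0 : y 0 = 1) (L : IntermediateField K Φ) [FiniteDimensional K L]
    (hL : L.toSubalgebra = Algebra.adjoin K (Set.range y))
    (hNI : ∀ H : IntermediateField K Φ, H ≤ L → H = ⊥ ∨ H = L) (i j : ℕ) :
    finrank K L ≤ finrank K (linSys K y ^ (i + j) : Submodule K Φ) ∨
    finrank K (linSys K y ^ i : Submodule K Φ) + finrank K (linSys K y ^ j : Submodule K Φ) ≤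
      finrank K (linSys K y ^ (i + j) : Submodule K Φ) + 1 := by
  have hne : ∀ t, linSys K y ^ t ≠ ⊥ := fun t h => by
    have := finrank_linSys_pow_pos (k := K) h0 t
    rw [h, finrank_bot] at this
    exact lt_irrefl _ this
  have hle : ∀ t, linSys K y ^ t ≤ L.toSubalgebra.toSubmodule := fun t => by
    rw [hL]; exact linSys_pow_le_adjoin y t
  rw [pow_add]
  exact cauchyDavenport L hNI _ _ (hne i) (hne j) (hle i) (hle j)

end Curve

end

/-! ### Restriction to a subvariety -/

section

open Submodule Module MvPolynomial

section Restriction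

variable {k K Φ Φ' : Type} [Field k] [Field K] [Field Φ] [Field Φ'] [Algebra k K] [Algebra k Φ]
  [Algebra K Φ] [IsScalarTower k K Φ] [Algebra k Φ'] [Algebra K Φ'] [IsScalarTower k K Φ'] {r : ℕ}
  {y : Fin (r + 1) → Φ} {y' : Fin (r + 1) → Φ'} {c : Fin (r + 1) → K}

theorem exists_specialization {κ : Type} (y : κ → Φ) (y' : κ → Φ')
    (h : ∀ f : MvPolynomial κ K, aeval y f = 0 → aeval y' f = 0) :
    ∃ ψ : Algebra.adjoin K (Set.range y) →ₐ[K] Φ',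
      ∀ j, ψ ⟨y j, Algebra.subset_adjoin ⟨j, rfl⟩⟩ = y' j := by
  let yA : κ → Algebra.adjoin K (Set.range y) := fun j => ⟨y j, Algebra.subset_adjoin ⟨j, rfl⟩⟩
  have hval : ∀ f : MvPolynomial κ K, ((aeval yA f : Algebra.adjoin K (Set.range y)) : Φ) =
      aeval y f := fun f => (MvPolynomial.aeval_algebraMap_apply Φ yA f).symm
  have hsurj : Function.Surjective (aeval (R := K) yA) := by
    rintro ⟨b, hb⟩
    rw [Algebra.adjoin_range_eq_range_aeval] at hb
    obtain ⟨f, hf⟩ := hb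
    exact ⟨f, Subtype.ext ((hval f).trans hf)⟩
  refine ⟨AlgHom.liftOfSurjective (aeval (R := K) yA) hsurj (aeval (R := K) y')
    (fun f hf => h f ?_), fun j => ?_⟩
  · have hf' : aeval yA f = 0 := hf
    rw [← hval, hf']; rfl
  · have h1 := AlgHom.liftOfSurjective_apply (aeval (R := K) yA) hsurj
      (aeval (R := K) y') (fun f hf => h f (by
        have hf' : aeval yA f = 0 := hf
        rw [← hval, hf']; rfl)) (X j)
    rwa [aeval_X, aeval_X] at h1

/-- The restriction map `K[y] → K[y']`, extended linearly to the ambient field. -/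
structure IsRestr (y : Fin (r + 1) → Φ) (y' : Fin (r + 1) → Φ') (ψ : Φ →ₗ[K] Φ') : Prop where
  map_one : ψ 1 = 1
  map_coord : ∀ j, ψ (y j) = y' j
  map_mul : ∀ a ∈ Algebra.adjoin K (Set.range y), ∀ b ∈ Algebra.adjoin K (Set.range y),
    ψ (a * b) = ψ a * ψ b

/-- If every relation satisfied by `y` holds for `y'`, there is a restriction map; outside `K[y]` its
values are arbitrary. -/
theorem exists_isRestr (y : Fin (r + 1) → Φ) (y' : Fin (r + 1) → Φ')
    (h : ∀ f : MvPolynomial (Fin (r + 1)) K, aeval y f = 0 → aeval y' f = 0) :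
    ∃ ψ : Φ →ₗ[K] Φ', IsRestr y y' ψ := by
  obtain ⟨ψ, hψ⟩ := exists_specialization y y' h
  obtain ⟨Ψ, hΨ⟩ := LinearMap.exists_extend
    (p := Subalgebra.toSubmodule (Algebra.adjoin K (Set.range y))) ψ.toLinearMap
  have hΨ' : ∀ a (ha : a ∈ Algebra.adjoin K (Set.range y)), Ψ a = ψ ⟨a, ha⟩ := fun a ha =>
    LinearMap.congr_fun hΨ ⟨a, ha⟩
  refine ⟨Ψ, ?_, ?_, ?_⟩
  · rw [hΨ' 1 (Subalgebra.one_mem _)]; exact _root_.map_one ψ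
  · intro j; rw [hΨ' _ (Algebra.subset_adjoin ⟨j, rfl⟩)]; exact hψ j
  · intro a ha b hb
    rw [hΨ' _ ha, hΨ' _ hb, hΨ' _ (Subalgebra.mul_mem _ ha hb)]
    exact _root_.map_mul ψ ⟨a, ha⟩ ⟨b, hb⟩

variable {ψ : Φ →ₗ[K] Φ'}

theorem IsRestr.map_linSys (h : IsRestr y y' ψ) (t : ℕ) :
    ((linSys k y ^ t).map (ψ.restrictScalars k)) = linSys k y' ^ t := by
  induction t with
  | zero =>
    rw [pow_zero, pow_zero, Submodule.one_eq_span, Submodule.one_eq_span, Submodule.map_span]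
    simp [h.map_one]
  | succ t ih =>
    have hin : ∀ a ∈ linSys k y ^ t, a ∈ Algebra.adjoin K (Set.range y) := fun a ha =>
      adjoin_le_adjoin y (linSys_pow_le_adjoin y t ha)
    have hin1 : ∀ a ∈ linSys k y, a ∈ Algebra.adjoin K (Set.range y) := fun a ha =>
      adjoin_le_adjoin y (linSys_pow_le_adjoin y 1 (by rwa [pow_one]))
    have h1 : (linSys k y).map (ψ.restrictScalars k) = linSys k y' := by
      rw [linSys, linSys, Submodule.map_span, ← Set.range_comp]
      congr 1
      ext z
      simp [h.map_coord]
    rw [pow_succ, pow_succ]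
    apply le_antisymm
    · rw [Submodule.map_le_iff_le_comap, Submodule.mul_le]
      intro a ha b hb
      change ψ (a * b) ∈ linSys k y' ^ t * linSys k y'
      rw [h.map_mul a (hin a ha) b (hin1 b hb)]
      refine Submodule.mul_mem_mul ?_ ?_
      · rw [← ih]; exact ⟨a, ha, rfl⟩
      · rw [← h1]; exact ⟨b, hb, rfl⟩
    · rw [Submodule.mul_le]
      intro a ha b hb
      rw [← ih] at ha
      rw [← h1] at hb
      obtain ⟨a, ha, rfl⟩ := ha
      obtain ⟨b, hb, rfl⟩ := hb
      refine ⟨a * b, Submodule.mul_mem_mul ha hb, ?_⟩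
      exact h.map_mul a (hin a ha) b (hin1 b hb)

theorem IsRestr.map_secMod (h : IsRestr y y' ψ) (h0 : y 0 = 1) {t : ℕ} {f : Φ}
    (hf : f ∈ secMod k y t) : ψ f ∈ secMod k y' t := by
  rw [mem_secMod] at hf ⊢
  obtain ⟨N, hN⟩ := hf
  have hfR : f ∈ Algebra.adjoin K (Set.range y) :=
    adjoin_le_adjoin y (secMod_le_adjoin h0 t (mem_secMod.mpr ⟨N, hN⟩))
  refine ⟨N, fun M hM v hv => ?_⟩
  rw [← h.map_linSys] at hv
  obtain ⟨v, hv, rfl⟩ := hv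
  have h1 := hN M hM v hv
  rw [← h.map_linSys]
  refine ⟨f * v, h1, ?_⟩
  exact h.map_mul f hfR v (adjoin_le_adjoin y (linSys_pow_le_adjoin y M hv))

end Restriction

end

/-! ### Numerics of the genus bound -/

section

/-- Numerics of the generic curve section: its Hilbert function (of the section modules) equals
the Hilbert polynomial from degree one on, as soon as the degree is large compared to the genus. -/
theorem section_numeric {s π' : ℤ} {σ x : ℕ → ℤ} (hs : 2 * π' + 2 ≤ s) (hx0 : x 0 = 1)
    (hx : ∀ t, x (t + 1) = σ (t + 1) + x t) (hσ : ∀ t, σ t ≤ s)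
    (hCD : ∀ i j, s ≤ σ (i + j) ∨ σ i + σ j ≤ σ (i + j) + 1)
    (hev : ∃ N : ℕ, ∀ t ≥ N, x t = s * t + 1 - π') :
    0 ≤ π' ∧ (∀ t : ℕ, 1 ≤ t → x t = s * t + 1 - π') ∧ σ 1 = s - π' := by
  obtain ⟨N, hN⟩ := hev
  have hmono : Monotone fun t : ℕ => s * t + 1 - x t := by
    refine monotone_nat_of_le_succ fun t => ?_
    have := hσ (t + 1)
    simp only [hx]; push_cast; linarith
  have hle : ∀ t : ℕ, s * t + 1 - x t ≤ π' := by
    intro t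
    have h1 := hmono (le_max_left t N)
    have h2 := hN (max t N) (le_max_right _ _)
    simp only at h1
    rw [h2] at h1; linarith
  have h0 : 0 ≤ π' := by have := hle 0; rw [hx0] at this; simpa using this
  have h1 : s - π' ≤ σ 1 := by
    have h2 := hle 1
    have h3 := hx 0
    simp only [zero_add] at h3
    rw [h3, hx0] at h2; push_cast at h2; linarith
  have hge : ∀ t, s ≤ σ (t + 2) := by
    intro t
    induction t with
    | zero => rcases hCD 1 1 with h | h <;> simp at h ⊢ <;> linarith
    | succ t ih =>
      have e : t + 1 + 2 = t + 2 + 1 := by ring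
      rw [e]
      rcases hCD (t + 2) 1 with h | h
      · exact h
      · linarith
  have hconst : ∀ t : ℕ, x (t + 1) = x 1 + s * t := by
    intro t
    induction t with
    | zero => simp
    | succ t ih =>
      rw [hx, ih, le_antisymm (hσ _) (hge t)]; push_cast; ring
  have h4 : x 1 = s + 1 - π' := by
    have := hN (N + 1) (by omega)
    rw [hconst] at this; push_cast at this; linarith
  refine ⟨h0, ?_, ?_⟩
  · intro t ht
    obtain ⟨u, rfl⟩ : ∃ u, t = u + 1 := ⟨t - 1, by omega⟩
    rw [hconst, h4]; push_cast; ring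
  · have := hx 0
    rw [h4, hx0] at this; simp only [zero_add] at this; linarith

/-- Numerics of the genus bound for a curve on a surface. -/
theorem genus_numeric {s d π' p' g ε : ℤ} {m : ℕ} {a D j q : ℕ → ℤ} (hs : 2 * π' + 2 ≤ s)
    (hπ : 0 ≤ π') (hd : d - 1 = m * s + ε) (hε0 : 0 ≤ ε) (hε1 : ε < s) (hm : 1 ≤ m)
    (he0 : ∀ t : ℕ, 1 ≤ t → 0 ≤ d - (s * t + 1 - π') + j t)
    (heN : ∃ N : ℕ, ∀ t : ℕ, N ≤ t → d - (s * t + 1 - π') + j t = 0)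
    (hj0 : j m = 0) (hq : ∀ t, j (t + 1) = q (t + 1) + j t) (hqs : ∀ t, q t ≤ s)
    (hq0 : ∀ t, 0 ≤ q t)
    (hCD : ∀ t, 1 ≤ q t → s ≤ q (t + 1) ∨ q t + (s - π') ≤ q (t + 1) + 1)
    (hD : ∀ t, a (t + 1) - a t - j (t + 1) + D t ≤ D (t + 1)) (hDm : D m = a m)
    (hev : ∃ N : ℕ, ∀ t : ℕ, N ≤ t → a t = s * ((t : ℤ) * (t + 1) / 2) + (1 - π') * t + 1 + p' ∧
      D t = d * t + 1 - g) :
    g ≤ (m : ℤ) * (m - 1) / 2 * s + m * (ε + π') - p' + max 0 ((2 * π' - (s - 1 - ε)) / 2) := by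
  set e : ℕ → ℤ := fun t => d - (s * t + 1 - π') + j t with he
  have hestep : ∀ t, e (t + 1) = e t + q (t + 1) - s := by
    intro t; simp only [he, hq]; push_cast; ring
  obtain ⟨N1, hN1⟩ := heN
  obtain ⟨N2, hN2⟩ := hev
  have hem : e m = d - (s * m + 1 - π') := by simp [he, hj0]
  have e1 := hestep m
  have e2 := hestep (m + 1)
  have p1 : 0 ≤ e (m + 1) := he0 (m + 1) (by omega)
  have p2 : 0 ≤ e (m + 2) := he0 (m + 2) (by omega)
  have q2 : s - π' ≤ q (m + 2) := by
    rcases le_or_gt 1 (q (m + 1)) with h | h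
    · rcases hCD _ h with h' | h'
      · change s ≤ q (m + 2) at h'; linarith
      · change _ ≤ q (m + 2) + 1 at h'; linarith
    · have : q (m + 1) = 0 := le_antisymm (by omega) (hq0 _)
      rw [this] at e1
      rw [show m + 1 + 1 = m + 2 from rfl] at e2
      nlinarith
  have q3 : ∀ t, s ≤ q (m + 3 + t) := by
    intro t
    induction t with
    | zero =>
      rcases hCD (m + 2) (by linarith) with h | h
      · exact h
      · change _ ≤ q (m + 3) + 1 at h
        change s ≤ q (m + 3); linarith
    | succ t ih =>
      rcases hCD (m + 3 + t) (by linarith) with h | h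
      · exact h
      · change _ ≤ q (m + 3 + (t + 1)) + 1 at h
        linarith
  have ec : ∀ t, e (m + 2 + t) = e (m + 2) := by
    intro t
    induction t with
    | zero => rfl
    | succ t ih =>
      have h1 := hestep (m + 2 + t)
      have h2 : q (m + 2 + t + 1) = s := le_antisymm (hqs _) (by
        have := q3 t; rwa [show m + 3 + t = m + 2 + t + 1 by ring] at this)
      rw [h2, ih] at h1
      rw [← add_assoc, h1]; ring
  have ez : ∀ t, e (m + 2 + t) = 0 := by
    intro t
    rw [ec t, ← ec N1]
    exact hN1 _ (by omega)
  have ez2 : e (m + 2) = 0 := ez 0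
  have hemax : e (m + 1) ≤ max 0 ((2 * π' - (s - 1 - ε)) / 2) := by
    rw [show m + 1 + 1 = m + 2 from rfl, ez2] at e2
    have hd' : s * m = d - 1 - ε := by linarith
    rw [hd'] at hem
    rcases le_or_gt 1 (q (m + 1)) with h | h
    · rcases hCD _ h with h' | h'
      · change s ≤ q (m + 2) at h'
        exact le_max_of_le_left (by linarith)
      · change _ ≤ q (m + 2) + 1 at h'
        apply le_max_of_le_right
        rw [Int.le_ediv_iff_mul_le (by norm_num)]
        linarith
    · have : q (m + 1) = 0 := le_antisymm (by omega) (hq0 _)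
      apply le_max_of_le_right
      rw [Int.le_ediv_iff_mul_le (by norm_num)]
      linarith
  -- summation
  have hsum : ∀ t : ℕ, 2 * (a (m + 1 + t) - D (m + 1 + t)) ≤
      s * ((m + 1 + t) * (m + 1 + t + 1)) + 2 * (1 - π' - d) * (m + 1 + t)
      - (s * (m * (m + 1)) + 2 * (1 - π' - d) * m) + 2 * e (m + 1) := by
    intro t
    induction t with
    | zero =>
      have h1 := hD m
      rw [hDm] at h1
      have h2 : e (m + 1) = d - (s * (m + 1 : ℕ) + 1 - π') + j (m + 1) := rfl
      push_cast at h2 ⊢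
      simp only [add_zero]
      nlinarith
    | succ t ih =>
      have h1 := hD (m + 1 + t)
      have h2 : e (m + 2 + t) = d - (s * (m + 2 + t : ℕ) + 1 - π') + j (m + 2 + t) := rfl
      rw [ez] at h2
      rw [show m + 1 + t + 1 = m + 2 + t by ring] at h1
      rw [show m + 1 + (t + 1) = m + 2 + t by ring]
      push_cast at h2 ih ⊢
      nlinarith
  obtain ⟨ha, hDT⟩ := hN2 (m + 1 + N2) (by omega)
  have h3 := hsum N2
  have hT : 2 * (((m + 1 + N2 : ℕ) : ℤ) * ((m + 1 + N2 : ℕ) + 1) / 2) =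
      ((m + 1 + N2 : ℕ) : ℤ) * ((m + 1 + N2 : ℕ) + 1) :=
    Int.two_mul_ediv_two_of_even (Int.even_mul_succ_self _)
  have hM : 2 * ((m : ℤ) * (m - 1) / 2) = (m : ℤ) * (m - 1) := by
    refine Int.two_mul_ediv_two_of_even ?_
    have := Int.even_mul_succ_self ((m : ℤ) - 1)
    rwa [sub_add_cancel, mul_comm] at this
  generalize (((m + 1 + N2 : ℕ) : ℤ) * ((m + 1 + N2 : ℕ) + 1) / 2) = T at *
  generalize ((m : ℤ) * (m - 1) / 2) = M at *
  rw [ha, hDT] at h3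
  push_cast at h3 hT
  have h4 : 2 * g ≤ 2 * (M * s + m * (ε + π') - p' + e (m + 1)) := by
    have : 2 * g ≤ 2 * (d * m) - s * (m * (m + 1)) - 2 * (1 - π') * m - 2 * p' + 2 * e (m + 1) := by
      nlinarith
    have h5 : d = m * s + ε + 1 := by linarith
    have h6 : 2 * (M * s) = s * (m * (m - 1)) := by linear_combination s * hM
    rw [h5] at this
    nlinarith
  linarith

end

/-! ### Hilbert polynomial of a surface -/

section

open Submodule Module MvPolynomial

section SurfaceSection

variable {k K K' Φ : Type} [Field k] [Field K] [Field K'] [Field Φ] [Algebra k K] [Algebra k Φ]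
  [Algebra K Φ] [IsScalarTower k K Φ] [Algebra K K'] [Algebra K' Φ] [IsScalarTower K K' Φ] {r : ℕ}
  {y : Fin (r + 1) → Φ} {c : Fin (r + 1) → K} {c' : Fin (r + 1) → K'}

theorem secMod_finite_of_adjoin (h0 : y 0 = 1)
    (hfin : FiniteDimensional K (Subalgebra.toSubmodule (Algebra.adjoin K (Set.range y)))) (t : ℕ) :
    FiniteDimensional K (secMod K y t) :=
  Submodule.finiteDimensional_of_le (secMod_le_adjoin h0 t)

/-- Integrating an eventual first difference. -/
theorem eventually_linear {f : ℕ → ℤ} {s : ℤ} {T : ℕ} (h : ∀ t, T ≤ t → f (t + 1) = s + f t) :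
    ∃ a : ℤ, ∀ t, T ≤ t → f t = s * t + a := by
  refine ⟨f T - s * T, fun t ht => ?_⟩
  induction t, ht using Nat.le_induction with
  | base => ring
  | succ t ht ih => rw [h t ht, ih]; push_cast; ring

theorem eventually_quadratic {f : ℕ → ℤ} {s a : ℤ} {T : ℕ}
    (h : ∀ t : ℕ, T ≤ t → f (t + 1) = s * ((t : ℤ) + 1) + a + f t) :
    ∃ b : ℤ, ∀ t : ℕ, T ≤ t → f t = s * ((t : ℤ) * (t + 1) / 2) + a * t + b := by
  have h2 : ∀ t : ℕ, 2 * ((t : ℤ) * (t + 1) / 2) = t * (t + 1) := fun t =>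
    Int.two_mul_ediv_two_of_even (Int.even_mul_succ_self _)
  refine ⟨f T - s * ((T : ℤ) * (T + 1) / 2) - a * T, fun t ht => ?_⟩
  induction t, ht using Nat.le_induction with
  | base => ring
  | succ t ht ih =>
    rw [h t ht, ih]
    have h3 := h2 (t + 1)
    have h4 := h2 t
    have : (((t + 1 : ℕ) : ℤ) * ((t + 1 : ℕ) + 1) / 2) = (t : ℤ) * (t + 1) / 2 + (t + 1) := by
      push_cast at h3 ⊢; linarith
    rw [this]; push_cast; ring

/-- Hilbert polynomials of a surface and of its generic curve section. -/
theorem surf_hilbert (S1 : GenSec k K y c) (S2 : GenSec K K' y c')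
    (hfin : FiniteDimensional K' (Subalgebra.toSubmodule (Algebra.adjoin K' (Set.range y)))) :
    (∀ t, FiniteDimensional K (secMod K y t)) ∧ (∀ t, FiniteDimensional k (secMod k y t)) ∧
    ∃ (π' p' : ℤ) (N : ℕ), ∀ t : ℕ, N ≤ t →
      (finrank k (linSys k y ^ t : Submodule k Φ) : ℤ) =
        (finrank K' (Subalgebra.toSubmodule (Algebra.adjoin K' (Set.range y))) : ℤ) *
          ((t : ℤ) * (t + 1) / 2) + (1 - π') * t + 1 + p' ∧
      (finrank K (linSys K y ^ t : Submodule K Φ) : ℤ) =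
        (finrank K' (Subalgebra.toSubmodule (Algebra.adjoin K' (Set.range y))) : ℤ) * t
          + 1 - π' ∧
      secMod k y t = linSys k y ^ t ∧ secMod K y t = linSys K y ^ t := by
  have h0 := S1.y_zero
  have hf' := secMod_finite_of_adjoin h0 hfin
  have hE' := secMod_eq_of_finite h0 hfin
  have hf := S2.secMod_finite hf'
  have hE := S2.eventually_secMod_eq hf' hE'
  obtain ⟨T1, hT1⟩ := S2.linSys_step_eq hf' hE'
  obtain ⟨T2, hT2⟩ := S1.linSys_step_eq hf hE
  obtain ⟨T3, hT3⟩ := hE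
  obtain ⟨T4, hT4⟩ := S1.eventually_secMod_eq hf ⟨T3, hT3⟩
  obtain ⟨T5, hT5⟩ := exists_linSys_pow_eq h0 hfin
  refine ⟨hf, S1.secMod_finite hf, ?_⟩
  set s : ℤ := (finrank K' (Subalgebra.toSubmodule (Algebra.adjoin K' (Set.range y))) : ℤ) with hs
  obtain ⟨a, ha⟩ := eventually_linear (f := fun t => (finrank K (linSys K y ^ t : Submodule K Φ) : ℤ))
    (s := s) (T := max T1 T5) (fun t ht => by
      have := hT1 t (le_trans (le_max_left _ _) ht)
      simp only [this]
      rw [hT5 (t + 1) (by have := le_max_right T1 T5; omega)]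
      push_cast; rfl)
  obtain ⟨b, hb⟩ := eventually_quadratic
    (f := fun t => (finrank k (linSys k y ^ t : Submodule k Φ) : ℤ))
    (s := s) (a := a) (T := max T2 (max T1 T5)) (fun t ht => by
      have := hT2 t (le_trans (le_max_left _ _) ht)
      have h5 := ha (t + 1) (by have := le_max_right T2 (max T1 T5); omega)
      simp only [this]
      push_cast at h5 ⊢
      rw [h5])
  refine ⟨1 - a, b - 1, max (max T3 T4) (max T2 (max T1 T5)), fun t ht => ⟨?_, ?_, ?_, ?_⟩⟩
  · rw [hb t (le_trans (le_max_right _ _) ht)]; ring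
  · rw [ha t (le_trans (le_trans (le_max_right _ _) (le_max_right _ _)) ht)]; ring
  · exact hT4 t (le_trans (le_trans (le_max_right _ _) (le_max_left _ _)) ht)
  · exact hT3 t (le_trans (le_trans (le_max_left _ _) (le_max_left _ _)) ht)

end SurfaceSection

section CurveOnSurface

variable {k K K' Φ Φ' : Type} [Field k] [Field K] [Field K'] [Field Φ] [Field Φ'] [Algebra k K]
  [Algebra k Φ] [Algebra K Φ] [IsScalarTower k K Φ] [Algebra K K'] [Algebra K' Φ]
  [IsScalarTower K K' Φ] [Algebra k Φ'] [Algebra K Φ'] [IsScalarTower k K Φ'] {r : ℕ}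
  {y : Fin (r + 1) → Φ} {y' : Fin (r + 1) → Φ'} {c : Fin (r + 1) → K} {c' : Fin (r + 1) → K'}
  {ψ : Φ →ₗ[K] Φ'}

theorem IsRestr.map_adjoin (h : IsRestr y y' ψ) (h0 : y 0 = 1) {f : Φ}
    (hf : f ∈ Algebra.adjoin K (Set.range y)) : ψ f ∈ Algebra.adjoin K (Set.range y') := by
  obtain ⟨t, ht⟩ := exists_mem_linSys_pow h0 hf
  have : ψ f ∈ (linSys K y ^ t).map (ψ.restrictScalars K) := ⟨f, ht, rfl⟩
  rw [h.map_linSys] at this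
  exact linSys_pow_le_adjoin y' t this

/-- The degree-zero sections on the curve section are constants: their restrictions to the point
section generate a proper subfield. -/
theorem secMod_zero_eq (h : IsRestr y y' ψ) (h0 : y 0 = 1) (L : IntermediateField K Φ')
    [FiniteDimensional K L] (hL : L.toSubalgebra = Algebra.adjoin K (Set.range y'))
    (hNI : ∀ H : IntermediateField K Φ', H ≤ L → H = ⊥ ∨ H = L)
    (hf : FiniteDimensional K (secMod K y 0))
    (hlt : finrank K (secMod K y 0) < finrank K L) :
    finrank K (secMod K y 0) = 1 ∧ ∀ f ∈ secMod K y 0, ψ f = 0 → f = 0 := by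
  have hA : ∀ f ∈ secMod K y 0, f ∈ Algebra.adjoin K (Set.range y) := fun f hf =>
    secMod_le_adjoin h0 0 hf
  have hpow : ∀ f ∈ secMod K y 0, ∀ n, f ^ n ∈ secMod K y 0 := by
    intro f hf n
    induction n with
    | zero => rw [pow_zero]; exact linSys_pow_le_secMod y 0 (one_mem_linSys_pow h0 0)
    | succ n ih => rw [pow_succ]; exact secMod_mul_mem ih hf
  have hψpow : ∀ f ∈ secMod K y 0, ∀ n, ψ (f ^ n) = ψ f ^ n := by
    intro f hf n
    induction n with
    | zero => rw [pow_zero, pow_zero, h.map_one]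
    | succ n ih =>
      rw [pow_succ, h.map_mul _ (hA _ (hpow f hf n)) _ (hA _ hf), ih, pow_succ]
  have hone : (1 : Φ) ∈ secMod K y 0 := linSys_pow_le_secMod y 0 (one_mem_linSys_pow h0 0)
  have hInteg : ∀ f ∈ secMod K y 0, IsIntegral K f := by
    intro f hf'
    refine IsIntegral.of_mem_of_fg (Algebra.adjoin K {f}) ?_ f (Algebra.self_mem_adjoin_singleton K f)
    have : Subalgebra.toSubmodule (Algebra.adjoin K {f}) ≤ secMod K y 0 := by
      rw [Algebra.adjoin_singleton_eq_range_aeval]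
      rintro _ ⟨P, rfl⟩
      change Polynomial.aeval f P ∈ _
      rw [Polynomial.aeval_eq_sum_range]
      exact Submodule.sum_mem _ fun i _ => Submodule.smul_mem _ _ (hpow f hf' i)
    have := Submodule.finiteDimensional_of_le this
    exact (Submodule.fg_iff_finiteDimensional _).mpr this
  have hinj : ∀ f ∈ secMod K y 0, ψ f = 0 → f = 0 := by
    intro f hf' hψ
    by_contra hne
    have h1 : f⁻¹ ∈ Algebra.adjoin K (Set.range y) :=
      Subalgebra.inv_mem_of_algebraic (Algebra.adjoin K (Set.range y)) (x := ⟨f, hA f hf'⟩)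
        (hInteg f hf').isAlgebraic
    have h2 := h.map_mul f (hA f hf') f⁻¹ h1
    rw [mul_inv_cancel₀ hne, h.map_one, hψ, zero_mul] at h2
    exact one_ne_zero h2
  refine ⟨?_, hinj⟩
  have hle : secMod K y 0 ≤ span K {(1 : Φ)} := by
    intro f hf'
    have hmemL : ψ f ∈ L := by
      have : ψ f ∈ L.toSubalgebra := by rw [hL]; exact h.map_adjoin h0 (hA f hf')
      exact this
    have hHL : IntermediateField.adjoin K {ψ f} ≤ L := by
      rw [IntermediateField.adjoin_simple_le_iff]; exact hmemL
    rcases hNI _ hHL with hH | hH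
    · have : ψ f ∈ (⊥ : IntermediateField K Φ') := by
        rw [← hH]; exact IntermediateField.mem_adjoin_simple_self K (ψ f)
      rw [IntermediateField.mem_bot] at this
      obtain ⟨a, ha⟩ := this
      have h3 : f - a • (1 : Φ) = 0 := by
        apply hinj
        · exact Submodule.sub_mem _ hf' (Submodule.smul_mem _ _ hone)
        · rw [_root_.map_sub, _root_.map_smul, h.map_one, ← ha, Algebra.smul_def, mul_one, sub_self]
      rw [sub_eq_zero.mp h3]
      exact Submodule.smul_mem _ _ (Submodule.mem_span_singleton_self _)
    · exfalso
      have hIntegψ : IsIntegral K (ψ f) := by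
        have : IsIntegral K (⟨ψ f, hmemL⟩ : L) := IsIntegral.of_finite K _
        exact (isIntegral_algebraMap_iff (algebraMap L Φ').injective).mpr this
      have h5 : Subalgebra.toSubmodule L.toSubalgebra ≤ (secMod K y 0).map ψ := by
        rw [← hH, IntermediateField.adjoin_simple_toSubalgebra_of_isAlgebraic hIntegψ.isAlgebraic,
          Algebra.adjoin_singleton_eq_range_aeval]
        rintro _ ⟨P, rfl⟩
        change Polynomial.aeval (ψ f) P ∈ _
        rw [Polynomial.aeval_eq_sum_range]
        refine Submodule.sum_mem _ fun i _ => Submodule.smul_mem _ _ ?_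
        exact ⟨f ^ i, hpow f hf' i, hψpow f hf' i⟩
      have h6 := (Submodule.finrank_mono h5).trans (Submodule.finrank_map_le ψ (secMod K y 0))
      have h7 : finrank K (Subalgebra.toSubmodule L.toSubalgebra) = finrank K L := rfl
      omega
  have heq : secMod K y 0 = span K {(1 : Φ)} :=
    le_antisymm hle ((Submodule.span_singleton_le_iff_mem _ _).mpr hone)
  rw [heq, finrank_span_singleton one_ne_zero]

end CurveOnSurface

end

/-! ### The genus of a curve on a surface -/

section

open Submodule Module MvPolynomial

section CurveOnSurface

variable {k K K' Φ Φ' : Type} [Field k] [Field K] [Field K'] [Field Φ] [Field Φ'] [Algebra k K]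
  [Algebra k Φ] [Algebra K Φ] [IsScalarTower k K Φ] [Algebra K K'] [Algebra K' Φ]
  [IsScalarTower K K' Φ] [Algebra k Φ'] [Algebra K Φ'] [IsScalarTower k K Φ'] {r : ℕ}
  {y : Fin (r + 1) → Φ} {y' : Fin (r + 1) → Φ'} {c : Fin (r + 1) → K} {c' : Fin (r + 1) → K'}
  {ψ : Φ →ₗ[K] Φ'}

theorem span_le_field (L : IntermediateField K' Φ)
    (hL : L.toSubalgebra = Algebra.adjoin K' (Set.range y)) {U : Submodule K Φ}
    (hU : U ≤ Subalgebra.toSubmodule (Algebra.adjoin K (Set.range y))) :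
    span K' (U : Set Φ) ≤ Subalgebra.toSubmodule L.toSubalgebra := by
  rw [Submodule.span_le, hL]
  intro u hu
  exact adjoin_le_adjoin y (hU hu)

/-- The Cauchy–Davenport inequality for the restrictions of linear systems to the point section. -/
theorem span_cauchyDavenport (L : IntermediateField K' Φ) [FiniteDimensional K' L]
    (hL : L.toSubalgebra = Algebra.adjoin K' (Set.range y))
    (hNI : ∀ H : IntermediateField K' Φ, H ≤ L → H = ⊥ ∨ H = L) (U V W : Submodule K Φ)
    (hU : U ≤ Subalgebra.toSubmodule (Algebra.adjoin K (Set.range y)))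
    (hV : V ≤ Subalgebra.toSubmodule (Algebra.adjoin K (Set.range y)))
    (hW : W ≤ Subalgebra.toSubmodule (Algebra.adjoin K (Set.range y)))
    (hU0 : U ≠ ⊥) (hV0 : V ≠ ⊥) (hmul : ∀ u ∈ U, ∀ v ∈ V, u * v ∈ W) :
    finrank K' L ≤ finrank K' (span K' (W : Set Φ)) ∨
      finrank K' (span K' (U : Set Φ)) + finrank K' (span K' (V : Set Φ)) ≤
        finrank K' (span K' (W : Set Φ)) + 1 := by
  have hne : ∀ {U : Submodule K Φ}, U ≠ ⊥ → span K' (U : Set Φ) ≠ ⊥ := by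
    intro U hU h
    obtain ⟨u, hu, hu0⟩ := Submodule.exists_mem_ne_zero_of_ne_bot hU
    have : u ∈ span K' (U : Set Φ) := Submodule.subset_span hu
    rw [h, Submodule.mem_bot] at this
    exact hu0 this
  have hle : span K' (U : Set Φ) * span K' (V : Set Φ) ≤ span K' (W : Set Φ) := by
    rw [Submodule.span_mul_span, Submodule.span_le]
    rintro _ ⟨u, hu, v, hv, rfl⟩
    exact Submodule.subset_span (hmul u hu v hv)
  have hfin : FiniteDimensional K' (Subalgebra.toSubmodule L.toSubalgebra) :=
    inferInstanceAs (FiniteDimensional K' L)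
  have : FiniteDimensional K' (span K' (W : Set Φ)) :=
    Submodule.finiteDimensional_of_le (span_le_field L hL hW)
  have hm := Submodule.finrank_mono hle
  rcases cauchyDavenport L hNI _ _ (hne hU0) (hne hV0) (span_le_field L hL hU)
    (span_le_field L hL hV) with h | h
  · left; omega
  · right; omega

/-- The sections on the curve section vanishing at the point section of the smaller curve. -/
def vanMod (K : Type) {Φ Φ' : Type} [Field K] [Field Φ] [Field Φ'] [Algebra K Φ] [Algebra K Φ']
    {r : ℕ} (y : Fin (r + 1) → Φ) (ψ : Φ →ₗ[K] Φ') (t : ℕ) : Submodule K Φ :=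
  secMod K y t ⊓ LinearMap.ker ψ

theorem vanMod_mul (h : IsRestr y y' ψ) (h0 : y 0 = 1) {i j : ℕ} {u v : Φ}
    (hu : u ∈ secMod K y i) (hv : v ∈ vanMod K y ψ j) : u * v ∈ vanMod K y ψ (i + j) := by
  refine ⟨secMod_mul_mem hu hv.1, ?_⟩
  have hv2 : ψ v = 0 := hv.2
  change ψ (u * v) = 0
  rw [h.map_mul _ (secMod_le_adjoin h0 _ hu) _ (secMod_le_adjoin h0 _ hv.1),
    hv2, mul_zero]

/-- The modules `vanMod` are saturated, so that their first difference is the dimension of the space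
they span on the second section. -/
theorem vanMod_step (S2 : GenSec K K' y c') (h : IsRestr y y' ψ)
    (hf : ∀ t, FiniteDimensional K (secMod K y t))
    (hf' : FiniteDimensional K' (Subalgebra.toSubmodule (Algebra.adjoin K' (Set.range y)))) (t : ℕ) :
    finrank K (vanMod K y ψ (t + 1)) =
      finrank K' (span K' (vanMod K y ψ (t + 1) : Set Φ)) + finrank K (vanMod K y ψ t) := by
  have h0 := S2.y_zero
  have hR : ∀ n, vanMod K y ψ (t + n) ≤
      Subalgebra.toSubmodule (Algebra.adjoin K (Set.range y)) := fun n =>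
    inf_le_left.trans (secMod_le_adjoin h0 _)
  have i1 : FiniteDimensional K (vanMod K y ψ (t + 0)) :=
    Submodule.finiteDimensional_of_le (inf_le_left : _ ≤ secMod K y (t + 0))
  have i2 : FiniteDimensional K' (span K' (vanMod K y ψ (t + 1) : Set Φ)) := by
    refine Submodule.finiteDimensional_of_le
      (S₂ := Subalgebra.toSubmodule (Algebra.adjoin K' (Set.range y))) ?_
    rw [Submodule.span_le]
    intro u hu
    exact adjoin_le_adjoin y (hR 1 hu)
  refine (S2.saturated_step (W := fun n => vanMod K y ψ (t + n)) hR ?_ ?_).2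
  · intro j n u hu
    have := vanMod_mul h h0 (i := 1) (u := y j)
      (linSys_pow_le_secMod y 1 (by rw [pow_one]; exact mem_linSys y j)) hu
    rwa [add_comm 1] at this
  · intro w hw
    refine ⟨secMod_saturated fun j => ?_, ?_⟩
    · obtain ⟨a, ha⟩ := hw j
      exact ⟨a, ha.1⟩
    · obtain ⟨a, ha⟩ := hw 0
      rw [h0, one_pow, one_mul] at ha
      exact ha.2

theorem finrank_map_add_vanMod (hf : ∀ t, FiniteDimensional K (secMod K y t)) (t : ℕ) :
    finrank K ((secMod K y t).map ψ) + finrank K (vanMod K y ψ t) = finrank K (secMod K y t) := by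
  have := hf t
  have h1 := LinearMap.finrank_range_add_finrank_ker (ψ.domRestrict (secMod K y t))
  rw [LinearMap.range_domRestrict, LinearMap.ker_domRestrict] at h1
  rw [← h1, vanMod, inf_comm, ← Submodule.finrank_map_subtype_eq, Submodule.map_comap_subtype,
    inf_comm]

/-- A section of degree `t + 1` on the surface restricts to the curve section; what is lost are the
sections of degree `t` and the sections vanishing at the points of the smaller curve. -/
theorem finrank_span_ge (S1 : GenSec k K y c) (hf : ∀ t, FiniteDimensional K (secMod K y t))
    (t : ℕ) :
    finrank k (secMod k y (t + 1)) ≤ finrank k (secMod k y t) +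
      finrank K (vanMod K y ψ (t + 1)) +
      finrank K (span K (((secMod k y (t + 1)).map (ψ.restrictScalars k) : Submodule k Φ') : Set Φ'))
      := by
  have h1 := (S1.secMod_succ t (S1.secMod_finite hf t) (hf (t + 1))).2
  have hsp : span K (((secMod k y (t + 1)).map (ψ.restrictScalars k) : Submodule k Φ') : Set Φ') =
      (span K (secMod k y (t + 1) : Set Φ)).map ψ := by
    rw [Submodule.map_span]; rfl
  have hle := span_secMod_le (K := K) (k := k) y (t + 1)
  have := hf (t + 1)
  have i1 : FiniteDimensional K (span K (secMod k y (t + 1) : Set Φ)) :=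
    Submodule.finiteDimensional_of_le hle
  set U := span K (secMod k y (t + 1) : Set Φ)
  have h2 := LinearMap.finrank_range_add_finrank_ker (ψ.domRestrict U)
  rw [LinearMap.range_domRestrict, LinearMap.ker_domRestrict,
    ← Submodule.finrank_map_subtype_eq, Submodule.map_comap_subtype] at h2
  have i2 : FiniteDimensional K (vanMod K y ψ (t + 1)) :=
    Submodule.finiteDimensional_of_le (inf_le_left : _ ≤ secMod K y (t + 1))
  have h3 : finrank K (U ⊓ LinearMap.ker ψ : Submodule K Φ) ≤ finrank K (vanMod K y ψ (t + 1)) :=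
    Submodule.finrank_mono (inf_le_inf_right _ hle)
  rw [hsp]
  omega

/-- The genus bound for a curve of degree `d` on a surface of degree `s`, sectional genus `π'` and
arithmetic genus `p'`. -/
theorem genus_le_of_surface (S1 : GenSec k K y c) (S2 : GenSec K K' y c') (SC : GenSec k K y' c)
    (h : IsRestr y y' ψ) (LS : IntermediateField K' Φ) [FiniteDimensional K' LS]
    (hLS : LS.toSubalgebra = Algebra.adjoin K' (Set.range y))
    (hNIS : ∀ H : IntermediateField K' Φ, H ≤ LS → H = ⊥ ∨ H = LS)
    (LC : IntermediateField K Φ') [FiniteDimensional K LC]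
    (hLC : LC.toSubalgebra = Algebra.adjoin K (Set.range y'))
    (hNIC : ∀ H : IntermediateField K Φ', H ≤ LC → H = ⊥ ∨ H = LC)
    {s d π' p' g ε : ℤ} {m N : ℕ} (hs : (finrank K' LS : ℤ) = s) (hd : (finrank K LC : ℤ) = d)
    (hπ : 2 * π' + 2 ≤ s) (hdm : d - 1 = m * s + ε) (hε0 : 0 ≤ ε) (hε1 : ε < s) (hm : 1 ≤ m)
    (hS : ∀ t : ℕ, N ≤ t →
      (finrank k (linSys k y ^ t : Submodule k Φ) : ℤ) =
        s * ((t : ℤ) * (t + 1) / 2) + (1 - π') * t + 1 + p' ∧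
      (finrank K (linSys K y ^ t : Submodule K Φ) : ℤ) = s * t + 1 - π' ∧
      secMod k y t = linSys k y ^ t ∧ secMod K y t = linSys K y ^ t)
    (hC : ∀ t : ℕ, N ≤ t → (finrank k (linSys k y' ^ t : Submodule k Φ') : ℤ) = d * t + 1 - g) :
    g ≤ (m : ℤ) * (m - 1) / 2 * s + m * (ε + π') - p' + max 0 ((2 * π' - (s - 1 - ε)) / 2) := by
  have h0 := S1.y_zero
  have h0' := SC.y_zero
  have hfinS : FiniteDimensional K' (Subalgebra.toSubmodule LS.toSubalgebra) :=
    inferInstanceAs (FiniteDimensional K' LS)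
  have hfinC : FiniteDimensional K (Subalgebra.toSubmodule LC.toSubalgebra) :=
    inferInstanceAs (FiniteDimensional K LC)
  have hrS : finrank K' (Subalgebra.toSubmodule LS.toSubalgebra) = finrank K' LS := rfl
  have hrC : finrank K (Subalgebra.toSubmodule LC.toSubalgebra) = finrank K LC := rfl
  have hfinS' := hfinS
  rw [hLS] at hfinS'
  obtain ⟨hfK, hfk, -⟩ := surf_hilbert S1 S2 hfinS'
  have hone : ∀ t, (1 : Φ) ∈ secMod K y t := fun t =>
    linSys_pow_le_secMod y t (one_mem_linSys_pow h0 t)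
  have hsec0 : ∀ t, secMod K y t ≠ ⊥ := fun t hb => by
    have := hone t
    rw [hb, Submodule.mem_bot] at this
    exact one_ne_zero this
  have hspan_le : ∀ (U : Submodule K Φ) (hU : U ≤ Subalgebra.toSubmodule
      (Algebra.adjoin K (Set.range y))), (finrank K' (span K' (U : Set Φ)) : ℤ) ≤ s := by
    intro U hU
    have := Submodule.finrank_mono (span_le_field LS hLS hU)
    rw [← hs]; exact_mod_cast this
  -- the curve section of the surface
  have hx0le : finrank K (secMod K y 0) ≤ finrank K' LS := by
    rw [(S2.secMod_zero (secMod_finite_of_adjoin h0 hfinS' 0)).2]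
    exact Submodule.finrank_mono (span_le_field LS hLS (secMod_le_adjoin h0 0))
  have hsd : s < d := by
    have hm' : (1 : ℤ) ≤ m := by exact_mod_cast hm
    have : (0 : ℤ) ≤ s := by rw [← hs]; positivity
    nlinarith
  obtain ⟨hx01, hinj0⟩ := secMod_zero_eq h h0 LC hLC hNIC (hfK 0) (by
    have : (finrank K' LS : ℤ) < finrank K LC := by rw [hs, hd]; exact hsd
    omega)
  obtain ⟨hπ0, hx, hσ1⟩ := section_numeric (s := s) (π' := π')
    (σ := fun t => (finrank K' (span K' (secMod K y t : Set Φ)) : ℤ))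
    (x := fun t => (finrank K (secMod K y t) : ℤ)) hπ (by simp [hx01])
    (fun t => by
      have := (S2.secMod_succ t (hfK t) (secMod_finite_of_adjoin h0 hfinS' (t + 1))).2
      exact_mod_cast this)
    (fun t => hspan_le _ (secMod_le_adjoin h0 t))
    (fun i j => by
      have := span_cauchyDavenport LS hLS hNIS (secMod K y i) (secMod K y j) (secMod K y (i + j))
        (secMod_le_adjoin h0 i) (secMod_le_adjoin h0 j) (secMod_le_adjoin h0 _) (hsec0 i) (hsec0 j)
        (fun u hu v hv => secMod_mul_mem hu hv)
      rw [← hs]; exact_mod_cast this)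
    ⟨N, fun t ht => by
      rw [(hS t ht).2.2.2]; exact (hS t ht).2.1⟩
  -- restriction to the point section of the curve
  have hρle : ∀ t, (finrank K ((secMod K y t).map ψ) : ℤ) ≤ d := by
    intro t
    have : (secMod K y t).map ψ ≤ Subalgebra.toSubmodule LC.toSubalgebra := by
      rw [hLC]
      rintro _ ⟨f, hf, rfl⟩
      exact h.map_adjoin h0 (secMod_le_adjoin h0 t hf)
    have := Submodule.finrank_mono this
    rw [← hd]; exact_mod_cast this
  have hfinC' := hfinC
  rw [hLC] at hfinC'
  obtain ⟨T, hT⟩ := exists_linSys_pow_eq h0' hfinC'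
  have hρeq : ∀ t, T ≤ t → (finrank K ((secMod K y t).map ψ) : ℤ) = d := by
    intro t ht
    refine le_antisymm (hρle t) ?_
    have h1 : linSys K y' ^ t ≤ (secMod K y t).map ψ := by
      rw [← h.map_linSys]
      rintro _ ⟨f, hf, rfl⟩
      exact ⟨f, linSys_pow_le_secMod y t hf, rfl⟩
    have := hfK t
    have := Submodule.finrank_mono h1
    rw [hT t ht, ← hLC] at this
    rw [← hd]; exact_mod_cast this
  have hrn : ∀ t, (finrank K ((secMod K y t).map ψ) : ℤ) + finrank K (vanMod K y ψ t) =
      finrank K (secMod K y t) := fun t => by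
    exact_mod_cast finrank_map_add_vanMod (ψ := ψ) hfK t
  have hvR : ∀ t, vanMod K y ψ t ≤ Subalgebra.toSubmodule (Algebra.adjoin K (Set.range y)) :=
    fun t => inf_le_left.trans (secMod_le_adjoin h0 _)
  have hvfin : ∀ t, FiniteDimensional K (vanMod K y ψ t) := fun t => by
    have := hfK t
    exact Submodule.finiteDimensional_of_le (inf_le_left : _ ≤ secMod K y t)
  -- a section of degree `t` vanishing on the point section forces `d ≤ ts`
  have hbez : ∀ t : ℕ, vanMod K y ψ t ≠ ⊥ → d ≤ t * s := by
    intro t ht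
    obtain ⟨f, hf, hf0⟩ := Submodule.exists_mem_ne_zero_of_ne_bot ht
    have h1 : (secMod K y (T + 1)).map (LinearMap.mulRight K f) ≤ vanMod K y ψ (T + 1 + t) := by
      rintro _ ⟨u, hu, rfl⟩
      exact vanMod_mul h h0 hu hf
    have := hvfin (T + 1 + t)
    have h2 := Submodule.finrank_mono h1
    have hinj : Function.Injective (LinearMap.mulRight K f) := fun a b hab =>
      mul_right_cancel₀ hf0 (by simpa using hab)
    rw [(Submodule.equivMapOfInjective _ hinj (secMod K y (T + 1))).finrank_eq.symm] at h2
    have h3 := hrn (T + 1 + t)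
    rw [hρeq _ (by omega)] at h3
    have h4 := hx (T + 1 + t) (by omega)
    have h5 := hx (T + 1) (by omega)
    have h6 : (finrank K (secMod K y (T + 1)) : ℤ) ≤ finrank K (vanMod K y ψ (T + 1 + t)) := by
      exact_mod_cast h2
    push_cast at h4 h5
    nlinarith
  have hvm : vanMod K y ψ m = ⊥ := by
    by_contra hne
    have := hbez m hne
    linarith
  -- the images of the sections on the surface
  set D : ℕ → Submodule k Φ' := fun t => (secMod k y t).map (ψ.restrictScalars k) with hDdef
  have hDfin : ∀ t, FiniteDimensional k (D t) := fun t => by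
    have := hfk t
    exact inferInstanceAs (FiniteDimensional k ((secMod k y t).map (ψ.restrictScalars k)))
  have hDR : ∀ t, D t ≤ Subalgebra.toSubmodule (Algebra.adjoin k (Set.range y')) := by
    rintro t _ ⟨f, hf, rfl⟩
    exact secMod_le_adjoin h0' t (h.map_secMod h0 hf)
  refine genus_numeric (a := fun t => (finrank k (secMod k y t) : ℤ))
    (D := fun t => (finrank k (D t) : ℤ)) (j := fun t => (finrank K (vanMod K y ψ t) : ℤ))
    (q := fun t => (finrank K' (span K' (vanMod K y ψ t : Set Φ)) : ℤ)) hπ hπ0 hdm hε0 hε1 hm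
    ?_ ?_ ?_ ?_ ?_ ?_ ?_ ?_ ?_ ?_
  · intro t ht
    have h1 := hx t ht
    have h2 := hrn t
    have h3 := hρle t
    linarith
  · refine ⟨T + 1, fun t ht => ?_⟩
    have h1 := hx t (by omega)
    have h2 := hrn t
    have h3 := hρeq t (by omega)
    linarith
  · simp [hvm]
  · intro t
    have := vanMod_step S2 h hfK hfinS' t
    exact_mod_cast this
  · exact fun t => hspan_le _ (hvR t)
  · exact fun t => by positivity
  · intro t ht
    have hne : vanMod K y ψ t ≠ ⊥ := by
      intro hb
      have hz : span K' (((⊥ : Submodule K Φ)) : Set Φ) = ⊥ := by simp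
      rw [hb, hz, finrank_bot] at ht
      norm_num at ht
    have := span_cauchyDavenport LS hLS hNIS (vanMod K y ψ t) (secMod K y 1)
      (vanMod K y ψ (t + 1)) (hvR t) (secMod_le_adjoin h0 1) (hvR _) hne (hsec0 1)
      (fun u hu v hv => by
        rw [mul_comm, add_comm t]; exact vanMod_mul h h0 hv hu)
    rw [← hσ1, ← hs]
    exact_mod_cast this
  · intro t
    have h1 := finrank_span_ge (ψ := ψ) S1 hfK t
    have h2 := SC.finrank_span_add_le (D t) (D (t + 1)) (hDR _) (hDR _) (by
      rintro j _ ⟨f, hf, rfl⟩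
      refine ⟨y j * f, mul_mem_secMod_succ hf j, ?_⟩
      have h3 : f ∈ Algebra.adjoin K (Set.range y) := adjoin_le_adjoin y (secMod_le_adjoin h0 t hf)
      change ψ (y j * f) = y' j * ψ f
      rw [h.map_mul _ (Algebra.subset_adjoin ⟨j, rfl⟩) _ h3, h.map_coord])
    have h1' : (finrank k (secMod k y (t + 1)) : ℤ) ≤ finrank k (secMod k y t) +
      finrank K (vanMod K y ψ (t + 1)) + finrank K (span K (D (t + 1) : Set Φ')) := by
      exact_mod_cast h1
    have h2' : (finrank K (span K (D (t + 1) : Set Φ')) : ℤ) + finrank k (D t) ≤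
      finrank k (D (t + 1)) := by exact_mod_cast h2
    linarith
  · have hinj : Function.Injective ((ψ.restrictScalars k).domRestrict (secMod k y m)) := by
      rw [← LinearMap.ker_eq_bot, LinearMap.ker_eq_bot']
      rintro ⟨f, hf⟩ hf0
      have h1 : f ∈ vanMod K y ψ m :=
        ⟨span_secMod_le (K := K) y m (Submodule.subset_span hf), hf0⟩
      rw [hvm, Submodule.mem_bot] at h1
      exact Subtype.ext h1
    have h1 := LinearMap.finrank_range_of_inj hinj
    rw [LinearMap.range_domRestrict] at h1
    exact_mod_cast h1
  · refine ⟨N, fun t ht => ?_⟩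
    obtain ⟨ha, -, hb, -⟩ := hS t ht
    rw [← hb] at ha
    refine ⟨ha, ?_⟩
    rw [← hC t ht, ← h.map_linSys, ← hb]

end CurveOnSurface

end

/-! ### Numerics of the plane degree -/

section

open Finset

/-- A truncated arithmetic progression is summed exactly up to its last positive term. -/
theorem sum_max_eq (X e : ℤ) (he : 0 < e) (T : ℕ) : ∃ n : ℕ, n ≤ T ∧
    2 * ∑ i ∈ range T, max 0 (X - e * (i + 1)) = 2 * n * X - e * (n * (n + 1)) ∧
    (n = T ∨ X ≤ e * (n + 1)) := by
  induction T with
  | zero => exact ⟨0, le_rfl, by simp, Or.inl rfl⟩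
  | succ T ih =>
    obtain ⟨n, hn, hsum, hor⟩ := ih
    rw [sum_range_succ, mul_add, hsum]
    by_cases hX : X ≤ e * (T + 1)
    · refine ⟨n, by omega, ?_, ?_⟩
      · rw [max_eq_left (by linarith)]; ring
      · rcases hor with rfl | h
        · exact Or.inr hX
        · exact Or.inr h
    · push Not at hX
      have hnT : n = T := by
        rcases hor with h | h
        · exact h
        · exfalso
          have : (n : ℤ) + 1 ≤ T + 1 := by exact_mod_cast (by omega)
          nlinarith
      subst hnT
      refine ⟨n + 1, le_rfl, ?_, Or.inl rfl⟩
      rw [max_eq_right (by linarith)]; push_cast; ring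

theorem sum_max_le (X e : ℤ) (he : 0 < e) (T : ℕ) :
    8 * e * ∑ i ∈ range T, max 0 (X - e * (i + 1)) ≤ 4 * X ^ 2 - 4 * X * e + e ^ 2 := by
  obtain ⟨n, -, hsum, -⟩ := sum_max_eq X e he T
  have h1 : 8 * e * ∑ i ∈ range T, max 0 (X - e * (i + 1)) =
      4 * X ^ 2 - 4 * X * e + e ^ 2 - (2 * X - 2 * e * n - e) ^ 2 := by
    linear_combination (4 * e) * hsum
  rw [h1]; nlinarith [sq_nonneg (2 * X - 2 * e * n - e)]

section

variable {d g s e : ℤ} {v : ℕ → ℤ}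

/-- Propagation of the linear lower bound by periodicity. -/
theorem linear_bound {C : ℤ} {τ : ℕ} (hτ0 : 0 < τ)
    (hCD : ∀ i j, d ≤ v (i + j) ∨ v i + v j ≤ v (i + j) + 1)
    (hτ : d ≤ v τ ∨ e * τ + 1 ≤ v τ) (hmono : Monotone v)
    (hlow : ∀ i : ℕ, i < τ → e * i + 1 - C ≤ v i) (I : ℕ) :
    d ≤ v I ∨ e * I + 1 - C ≤ v I := by
  induction I using Nat.strong_induction_on with
  | _ I ih =>
    by_cases hI : I < τ
    · exact Or.inr (hlow I hI)
    · push Not at hI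
      obtain ⟨J, rfl⟩ : ∃ J, I = J + τ := ⟨I - τ, by omega⟩
      rcases hτ with h | h
      · left; exact h.trans (hmono (by omega))
      rcases ih J (by omega) with h1 | h1
      · left; exact h1.trans (hmono (by omega))
      rcases hCD J τ with h2 | h2
      · exact Or.inl h2
      · right; push_cast; linarith

/-- The quadratic inequality that closes `case_A`; the constant `C` is the genus of a plane curve of
degree `s + 1`. -/
theorem poly_ineq_A {D C : ℤ} (hs : 3 ≤ s) (hD : s ^ 3 ≤ D) (hC : 2 * C = s * (s - 1)) :
    s * (4 * (D + C) ^ 2 - 4 * (D + C) * (s + 1) + (s + 1) ^ 2) <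
      4 * (s + 1) * (D ^ 2 - s * D) := by
  have hC2 : 4 * C ^ 2 = s ^ 2 * (s - 1) ^ 2 := by
    have : (2 * C) ^ 2 = (s * (s - 1)) ^ 2 := by rw [hC]
    linarith
  obtain ⟨u, hu⟩ : ∃ u, D = s ^ 3 + u := ⟨D - s ^ 3, by ring⟩
  have hu0 : 0 ≤ u := by linarith
  subst hu
  obtain ⟨w, rfl⟩ : ∃ w, s = w + 3 := ⟨s - 3, by ring⟩
  have hw : 0 ≤ w := by linarith
  have key : 4 * (w + 3 + 1) * (((w + 3) ^ 3 + u) ^ 2 - (w + 3) * ((w + 3) ^ 3 + u)) -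
      (w + 3) * (4 * ((w + 3) ^ 3 + u + C) ^ 2 - 4 * ((w + 3) ^ 3 + u + C) * (w + 3 + 1) +
        (w + 3 + 1) ^ 2) = 4 * ((w + 3) ^ 3 + u) ^ 2
        - 4 * (w+3)^2 * (w + 2) * ((w + 3) ^ 3 + u) - (w + 3) * (w+3) ^ 2 * (w + 2) ^ 2
        + 2 * (w + 3) * (w + 4) * (w + 3) * (w + 2) - (w + 3) * (w + 4) ^ 2 := by
    linear_combination (-4 * (w + 3) * ((w + 3) ^ 3 + u) + 2 * (w + 3) * (w + 4)) * hC
      - (w + 3) * hC2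
  have : 0 < 4 * ((w + 3) ^ 3 + u) ^ 2
        - 4 * (w+3)^2 * (w + 2) * ((w + 3) ^ 3 + u) - (w + 3) * (w+3) ^ 2 * (w + 2) ^ 2
        + 2 * (w + 3) * (w + 4) * (w + 3) * (w + 2) - (w + 3) * (w + 4) ^ 2 := by
    ring_nf; positivity
  linarith

/-- The case of a lower bound linear of slope `s + 1` for the Hilbert function `v`, up to the constant
`C`, in all degrees: summing `d - v` gives a genus of leading term `d² / (2 (s + 1))`. -/
theorem case_A {C : ℤ} (hs : 3 ≤ s) (hd : s ^ 3 < d) (hC : 2 * C = s * (s - 1))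
    (hvd : ∀ i, v i ≤ d)
    (hlow : ∀ I, d ≤ v I ∨ (s + 1) * I + 1 - C ≤ v I)
    (T : ℕ) (hg : g ≤ ∑ i ∈ range T, (d - v (i + 1))) :
    2 * s * g < (d - 1) ^ 2 - s * (d - 1) := by
  have h1 : g ≤ ∑ i ∈ range T, max 0 ((d - 1 + C) - (s + 1) * (i + 1)) := by
    refine hg.trans (sum_le_sum fun i _ => ?_)
    rcases hlow (i + 1) with h | h
    · exact le_max_of_le_left (by linarith)
    · apply le_max_of_le_right; push_cast at h; linarith
  have h2 := sum_max_le (d - 1 + C) (s + 1) (by linarith) T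
  have h3 := poly_ineq_A (D := d - 1) hs (by omega) hC
  have h4 : 8 * (s + 1) * g ≤
      4 * (d - 1 + C) ^ 2 - 4 * (d - 1 + C) * (s + 1) + (s + 1) ^ 2 := by
    refine le_trans ?_ h2
    exact mul_le_mul_of_nonneg_left h1 (by linarith)
  have h5 := mul_le_mul_of_nonneg_left h4 (show 0 ≤ s by linarith)
  have h6 : 4 * (s + 1) * (2 * s * g) < 4 * (s + 1) * ((d - 1) ^ 2 - s * (d - 1)) := by
    nlinarith
  exact lt_of_mul_lt_mul_left h6 (by linarith)

/-- The common lower bound obtained from plane curves of degree `e ≥ s + 1`. -/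
theorem low_bound (hs : 3 ≤ s) (he : s + 1 ≤ e)
    (hsmall : ∀ t : ℕ, (t : ℤ) < e → ((t : ℤ) + 1) * (t + 2) ≤ 2 * v t)
    (hmid : ∀ t : ℕ, e ≤ t → t * e < d → 2 * (e * t + 1) - (e - 1) * (e - 2) ≤ 2 * v t)
    (t : ℕ) (ht : (t : ℤ) < e ∨ t * e < d) : 2 * ((s + 1) * t + 1) - s * (s - 1) ≤ 2 * v t := by
  by_cases h : (t : ℤ) < e
  · have h1 := hsmall t h
    have h2 : 0 ≤ ((t : ℤ) - s) * (t - s + 1) := by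
      rcases lt_or_ge (t : ℤ) s with h3 | h3
      · nlinarith
      · nlinarith
    nlinarith
  · have h3 := hmid t (by omega) (ht.resolve_left h)
    push Not at h
    nlinarith

theorem sum_tail (A : ℤ) (n : ℕ) : 3 * ∑ x ∈ range n, (A - ((x : ℤ) + 2) * (x + 3)) =
    3 * n * A - n * ((n : ℤ) ^ 2 + 6 * n + 11) := by
  induction n with
  | zero => simp
  | succ n ih => rw [sum_range_succ, mul_add, ih]; push_cast; ring

theorem sum_linear (X e : ℤ) (n : ℕ) : 2 * ∑ i ∈ range n, (X - e * ((i : ℤ) + 1)) =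
    2 * n * X - e * (n * (n + 1)) := by
  induction n with
  | zero => simp
  | succ n ih => rw [sum_range_succ, mul_add, ih]; push_cast; ring

/-- The case of a plane curve of degree exactly `s + 1`: the bounds from curves of degree below and above
`s + 1` are available, the latter only while `t (s + 1) < d`, and superadditivity gives the rest. -/
theorem case_B {T0 : ℕ} (hs : 3 ≤ s) (hd : s ^ 3 < d) (hmono : Monotone v)
    (hCD : ∀ i j, d ≤ v (i + j) ∨ v i + v j ≤ v (i + j) + 1)
    (hsmall : ∀ t : ℕ, (t : ℤ) < s + 1 → ((t : ℤ) + 1) * (t + 2) ≤ 2 * v t)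
    (hmid : ∀ t : ℕ, s + 1 ≤ t → t * (s + 1) < d →
      2 * ((s + 1) * t + 1) - (s + 1 - 1) * (s + 1 - 2) ≤ 2 * v t)
    (hg : ∀ T, T0 ≤ T → g ≤ ∑ i ∈ range T, (d - v (i + 1))) :
    2 * s * g < (d - 1) ^ 2 - s * (d - 1) := by
  have hs3 : 0 < s ^ 3 := by positivity
  obtain ⟨t, ρ, hρ0, hρ1, hD⟩ : ∃ (t : ℕ) (ρ : ℤ), 0 ≤ ρ ∧ ρ ≤ s ∧ d - 1 = t * (s + 1) + ρ := by
    refine ⟨((d - 1) / (s + 1)).toNat, (d - 1) % (s + 1), Int.emod_nonneg _ (by omega), ?_, ?_⟩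
    · have := Int.emod_lt_of_pos (d - 1) (show 0 < s + 1 by omega); omega
    · rw [Int.toNat_of_nonneg (Int.ediv_nonneg (by omega) (by omega))]
      have := Int.mul_ediv_add_emod (d - 1) (s + 1); linarith
  obtain ⟨n, hn⟩ : ∃ n : ℕ, s = n + 1 := ⟨(s - 1).toNat, by omega⟩
  have hlow := low_bound hs le_rfl hsmall hmid
  have hG := hg (t + n + T0) (by omega)
  rw [sum_range_add, sum_range_add] at hG
  have hvt := hlow t (Or.inr (by linarith))
  have p1 : 2 * ∑ i ∈ range t, (d - v (i + 1)) ≤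
      2 * ∑ i ∈ range t, (d - 1 - (s + 1) * ((i : ℤ) + 1)) + t * (s * (s - 1)) := by
    have : t * (s * (s - 1)) = ∑ i ∈ range t, s * (s - 1) := by simp
    rw [this, mul_sum, mul_sum, ← sum_add_distrib]
    refine sum_le_sum fun i hi => ?_
    have hi' : (i : ℤ) + 1 ≤ t := by exact_mod_cast mem_range.mp hi
    have := hlow (i + 1) (Or.inr (by push_cast; nlinarith))
    push_cast at this; linarith
  have hstep : ∀ j : ℕ, (j : ℤ) ≤ s → d ≤ v (t + j) ∨
      2 * (d - v (t + j)) ≤ s ^ 2 + s + 2 - ((j : ℤ) + 1) * (j + 2) := by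
    intro j hj
    rcases hCD t j with h | h
    · exact Or.inl h
    · right
      have := hsmall j (by omega)
      nlinarith
  have p2 : 2 * ∑ x ∈ range n, (d - v (t + x + 1)) ≤
      ∑ x ∈ range n, (s ^ 2 + s + 2 - ((x : ℤ) + 2) * (x + 3)) := by
    rw [mul_sum]
    refine sum_le_sum fun x hx => ?_
    have hx' : (x : ℤ) + 1 ≤ n := by exact_mod_cast mem_range.mp hx
    rcases hstep (x + 1) (by push_cast; omega) with h | h
    · rw [← add_assoc] at h
      have : ((x : ℤ) + 2) * (x + 3) ≤ s ^ 2 + s := by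
        have : (x : ℤ) + 2 ≤ s := by omega
        nlinarith
      linarith
    · rw [← add_assoc] at h; push_cast at h; linarith
  have p3 : ∑ x ∈ range T0, (d - v (t + n + x + 1)) ≤ 0 := by
    refine sum_nonpos fun x _ => ?_
    have h1 : d ≤ v (t + (n + 1)) := by
      rcases hstep (n + 1) (by push_cast; omega) with h | h
      · exact h
      · push_cast at h
        rw [← hn] at h
        have : (2 : ℤ) * (d - v (t + (n + 1))) ≤ 2 - 2 * s - 2 := by
          have : (n : ℤ) + 1 + 1 = s + 1 := by omega
          nlinarith
        omega
    have := hmono (show t + (n + 1) ≤ t + n + x + 1 by omega)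
    linarith
  have q1 := sum_linear (d - 1) (s + 1) t
  have q2 := sum_tail (s ^ 2 + s + 2) n
  have hn' : (n : ℤ) = s - 1 := by omega
  rw [hn'] at q2
  -- the resulting bound
  have hb : 6 * g ≤ 3 * (2 * t * (d - 1) - (s + 1) * (t * (t + 1))) + 3 * (t * (s * (s - 1)))
      + s * (s - 1) * (2 * s - 1) := by
    nlinarith
  have hb2 : 6 * (s + 1) * g ≤ 3 * ((d - 1) ^ 2 - (s + 1) * (d - 1) + ρ * (s + 1 - ρ))
      + 3 * ((d - 1) * (s * (s - 1))) + (s + 1) * (s * (s - 1) * (2 * s - 1)) := by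
    have h1 := mul_le_mul_of_nonneg_left hb (show 0 ≤ s + 1 by linarith)
    have h2 : (s + 1) * (2 * t * (d - 1) - (s + 1) * (t * (t + 1))) =
        (d - 1) ^ 2 - (s + 1) * (d - 1) + ρ * (s + 1 - ρ) := by
      rw [hD]; ring
    have h3 : (s + 1) * (t * (s * (s - 1))) ≤ (d - 1) * (s * (s - 1)) := by
      have : 0 ≤ ρ * (s * (s - 1)) := by
        have : 0 ≤ s - 1 := by linarith
        positivity
      rw [hD]; nlinarith
    nlinarith
  have hρ2 : 4 * (ρ * (s + 1 - ρ)) ≤ (s + 1) ^ 2 := by nlinarith [sq_nonneg (s + 1 - 2 * ρ)]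
  obtain ⟨u, hu⟩ : ∃ u, d - 1 = s ^ 3 + u := ⟨d - 1 - s ^ 3, by ring⟩
  have hu0 : 0 ≤ u := by omega
  have hfin : s * (3 * (s + 1) ^ 2 + 12 * ((d - 1) * (s * (s - 1)))
      + 4 * ((s + 1) * (s * (s - 1) * (2 * s - 1)))) < 12 * (d - 1) ^ 2 := by
    rw [hu]
    obtain ⟨w, rfl⟩ : ∃ w, s = w + 3 := ⟨s - 3, by ring⟩
    have hw : 0 ≤ w := by linarith
    have : 0 < 12 * ((w + 3) ^ 3 + u) ^ 2 - (w + 3) * (3 * ((w + 3) + 1) ^ 2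
        + 12 * (((w + 3) ^ 3 + u) * ((w + 3) * ((w + 3) - 1)))
        + 4 * (((w + 3) + 1) * ((w + 3) * ((w + 3) - 1) * (2 * (w + 3) - 1)))) := by
      ring_nf; positivity
    linarith
  have h4 : 24 * (s + 1) * g * s ≤ (12 * ((d - 1) ^ 2 - (s + 1) * (d - 1)) + 3 * (s + 1) ^ 2
      + 12 * ((d - 1) * (s * (s - 1))) + 4 * ((s + 1) * (s * (s - 1) * (2 * s - 1)))) * s := by
    refine mul_le_mul_of_nonneg_right ?_ (by linarith)
    linarith
  have h6 : 12 * (s + 1) * (2 * s * g) < 12 * (s + 1) * ((d - 1) ^ 2 - s * (d - 1)) := by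
    linarith
  exact lt_of_mul_lt_mul_left h6 (by linarith)

/-- Numerics: a projected plane model of degree `e > s` forces the genus to be small. -/
theorem plane_degree_numeric {T0 : ℕ} (hs : 3 ≤ s) (hd : s ^ 3 < d) (hd3 : 30 < d)
    (he : s + 1 ≤ e) (hmono : Monotone v) (hvd : ∀ i, v i ≤ d)
    (hCD : ∀ i j, d ≤ v (i + j) ∨ v i + v j ≤ v (i + j) + 1)
    (hsmall : ∀ t : ℕ, (t : ℤ) < e → ((t : ℤ) + 1) * (t + 2) ≤ 2 * v t)
    (hmid : ∀ t : ℕ, e ≤ t → t * e < d → 2 * (e * t + 1) - (e - 1) * (e - 2) ≤ 2 * v t)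
    (hg : ∀ T, T0 ≤ T → g ≤ ∑ i ∈ range T, (d - v (i + 1))) :
    2 * s * g < (d - 1) ^ 2 - s * (d - 1) := by
  rcases he.eq_or_lt with rfl | he
  · exact case_B hs hd hmono hCD hsmall hmid hg
  obtain ⟨C, hC⟩ : ∃ C, 2 * C = s * (s - 1) := by
    obtain ⟨C, hC⟩ := Int.even_mul_pred_self s
    exact ⟨C, by rw [hC]; ring⟩
  have hlow := low_bound hs (by omega) hsmall hmid
  -- it suffices to find a period
  suffices h : ∃ τ : ℕ, 0 < τ ∧ ((τ : ℤ) < e ∨ τ * e < d) ∧ (s + 1) * τ + 1 ≤ v τ by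
    obtain ⟨τ, hτ0, hτ1, hτ2⟩ := h
    refine case_A hs hd hC hvd (linear_bound hτ0 hCD (Or.inr hτ2) hmono fun i hi => ?_) T0
      (hg T0 le_rfl)
    have := hlow i (by
      have hi' : (i : ℤ) < τ := by exact_mod_cast hi
      rcases hτ1 with h | h
      · left; linarith
      · right; nlinarith)
    linarith
  by_cases h2s : 2 * s ≤ e
  · refine ⟨(2 * s - 1).toNat, by omega, ?_, ?_⟩
    · left; omega
    · have := hsmall (2 * s - 1).toNat (by omega)
      have hc : (((2 * s - 1).toNat : ℕ) : ℤ) = 2 * s - 1 := Int.toNat_of_nonneg (by omega)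
      rw [hc] at this ⊢
      nlinarith
  push Not at h2s
  obtain ⟨f, rfl⟩ : ∃ f, e = s + 1 + f := ⟨e - s - 1, by ring⟩
  by_cases hf : f = 1
  · subst hf
    obtain ⟨E, hE⟩ := Int.even_mul_succ_self s
    have hE0 : s + 2 ≤ E := by nlinarith
    have hc : ((E.toNat : ℕ) : ℤ) = E := Int.toNat_of_nonneg (by omega)
    have hlt : E * (s + 1 + 1) < d := by
      rcases hs.eq_or_lt with rfl | hs4
      · norm_num at hE
        have : E = 6 := by omega
        subst this; norm_num; omega
      · have : 2 * (E * (s + 1 + 1)) ≤ 2 * s ^ 3 := by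
          have : 2 * (E * (s + 1 + 1)) = s * (s + 1) * (s + 2) := by rw [hE]; ring
          nlinarith
        linarith
    refine ⟨E.toNat, by omega, Or.inr (by rw [hc]; exact hlt), ?_⟩
    have := hmid E.toNat (by rw [hc]; linarith) (by rw [hc]; exact hlt)
    rw [hc] at this ⊢
    nlinarith
  · have hf2 : 2 ≤ f := by omega
    have hs4 : 4 ≤ s := by omega
    obtain ⟨E, hE1, hE2⟩ : ∃ E, 2 * E ≤ s ^ 2 ∧ s ^ 2 - 1 ≤ 2 * E := ⟨s ^ 2 / 2, by omega, by omega⟩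
    have hE0 : 2 * s - 1 ≤ E := by nlinarith
    have hc : ((E.toNat : ℕ) : ℤ) = E := Int.toNat_of_nonneg (by omega)
    have hlt : E * (s + 1 + f) < d := by
      have h1 : E * (s + 1 + f) ≤ E * (2 * s) := mul_le_mul_of_nonneg_left (by omega) (by omega)
      nlinarith
    refine ⟨E.toNat, by omega, Or.inr (by rw [hc]; exact hlt), ?_⟩
    have := hmid E.toNat (by rw [hc]; omega) (by rw [hc]; exact hlt)
    rw [hc] at this ⊢
    have hkey : (s + f) * (s + f - 1) ≤ 2 * E * f := by
      have h1 : (s ^ 2 - 1) * f ≤ 2 * E * f := mul_le_mul_of_nonneg_right hE2 (by omega)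
      have h2 : (s + f) * (s + f - 1) ≤ (s ^ 2 - 1) * f := by
        have hfs : f ≤ s - 2 := by omega
        obtain ⟨a, rfl⟩ : ∃ a, f = 2 + a := ⟨f - 2, by ring⟩
        obtain ⟨b, hb⟩ : ∃ b, s = 4 + a + b := ⟨s - 4 - a, by ring⟩
        have ha : 0 ≤ a := by omega
        have hb0 : 0 ≤ b := by omega
        subst hb
        have : 0 ≤ ((4 + a + b) ^ 2 - 1) * (2 + a) - (4 + a + b + (2 + a)) * (4 + a + b + (2 + a) - 1) := by
          ring_nf; positivity
        linarith
      linarith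
    nlinarith

end

end

/-! ### Plane curves through a point -/

section

open Submodule Module MvPolynomial

section PlaneCurves

variable {F Φ : Type} [Field F] [Field Φ] [Algebra F Φ]

theorem card_plane_monomials (t : ℕ) :
    2 * Nat.card { n : Fin 2 →₀ ℕ | (n.sum fun _ e => e) ≤ t } = (t + 1) * (t + 2) := by
  have e : { n : Fin 2 →₀ ℕ | (n.sum fun _ e => e) ≤ t } ≃
      (Sigma fun i : Fin (t + 1) => Fin (t + 1 - i)) :=
    { toFun := fun n => ⟨⟨n.1 0, by
          have := n.2; simp [Finsupp.sum_fintype] at this; omega⟩, ⟨n.1 1, by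
          have := n.2; simp [Finsupp.sum_fintype] at this; simp; omega⟩⟩
      invFun := fun x => ⟨Finsupp.equivFunOnFinite.symm ![x.1, x.2], by
          have h1 := x.1.2
          have h2 := x.2.2
          simp [Finsupp.sum_fintype]; omega⟩
      left_inv := by
        rintro ⟨n, hn⟩
        ext i
        fin_cases i <;> simp
      right_inv := by
        rintro ⟨⟨i, hi⟩, ⟨j, hj⟩⟩
        simp }
  rw [Nat.card_congr e, Nat.card_eq_fintype_card, Fintype.card_sigma]
  simp only [Fintype.card_fin]
  rw [Fin.sum_univ_eq_sum_range (fun i => t + 1 - i) (t + 1), Finset.sum_range_reflect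
    (fun i => i + 1) (t + 1) |>.symm.trans (Finset.sum_congr rfl fun i hi => ?_) |>.symm]
  · clear e
    induction t with
    | zero => simp
    | succ t ih => rw [Finset.sum_range_succ, mul_add, ih]; ring
  · have := Finset.mem_range.1 hi
    omega

theorem finrank_restrictTotalDegree (F : Type) [Field F] (t : ℕ) :
    2 * finrank F (restrictTotalDegree (Fin 2) F t) = (t + 1) * (t + 2) := by
  rw [← card_plane_monomials t]
  congr 1
  exact finrank_eq_nat_card_basis (basisRestrictSupport F _)

/-- On finitely many points every function is given by a polynomial of bounded degree. -/
theorem exists_eval_eq (z : Fin 2 → Φ)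
    [FiniteDimensional F (Subalgebra.toSubmodule (Algebra.adjoin F (Set.range z)))] :
    ∃ T, ∀ t, T ≤ t → (restrictTotalDegree (Fin 2) F t).map (aeval z).toLinearMap =
      Subalgebra.toSubmodule (Algebra.adjoin F (Set.range z)) := by
  obtain ⟨s, hs⟩ : (Subalgebra.toSubmodule (Algebra.adjoin F (Set.range z))).FG :=
    Module.Finite.iff_fg.1 inferInstance
  have h : ∀ x ∈ s, ∃ P : MvPolynomial (Fin 2) F, aeval z P = x := by
    intro x hx
    have : x ∈ Subalgebra.toSubmodule (Algebra.adjoin F (Set.range z)) := by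
      rw [← hs]; exact subset_span hx
    rw [Subalgebra.mem_toSubmodule, Algebra.adjoin_range_eq_range_aeval] at this
    exact this
  choose! P hP using h
  refine ⟨s.sup fun x => (P x).totalDegree, fun t ht => le_antisymm ?_ ?_⟩
  · rintro _ ⟨Q, -, rfl⟩
    rw [Subalgebra.mem_toSubmodule, Algebra.adjoin_range_eq_range_aeval]
    exact ⟨Q, rfl⟩
  · rw [← hs, Submodule.span_le]
    intro x hx
    refine ⟨P x, ?_, hP x hx⟩
    exact (mem_restrictTotalDegree _ _ _).2
      ((Finset.le_sup (f := fun x => (P x).totalDegree) hx).trans ht)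

/-- A weak form of Bézout's theorem: a curve of degree `D` through a point of degree `d > D·e`
on an irreducible plane curve of degree `e` contains that curve. -/
theorem dvd_of_bezout {z : Fin 2 → Φ} {G H : MvPolynomial (Fin 2) F} (hG : Prime G)
    (hGz : aeval z G = 0) (hHz : aeval z H = 0)
    [FiniteDimensional F (Subalgebra.toSubmodule (Algebra.adjoin F (Set.range z)))]
    (hd : H.totalDegree * G.totalDegree <
      finrank F (Subalgebra.toSubmodule (Algebra.adjoin F (Set.range z)))) : G ∣ H := by
  by_contra hGH
  have hH0 : H ≠ 0 := by rintro rfl; exact hGH (dvd_zero _)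
  have hG0 := hG.ne_zero
  set e := G.totalDegree with he
  set D := H.totalDegree with hD
  obtain ⟨T, hT⟩ := exists_eval_eq (F := F) z
  obtain ⟨u, hu⟩ : ∃ u, u = T := ⟨_, rfl⟩
  set R := fun t => restrictTotalDegree (Fin 2) F t
  have hmulG : ∀ A ∈ R (u + D), G * A ∈ R (u + D + e) := fun A hA => by
    rw [mem_restrictTotalDegree] at hA ⊢
    exact (totalDegree_mul _ _).trans (by omega)
  have hmulH : ∀ A ∈ R (u + e), H * A ∈ R (u + D + e) := fun A hA => by
    rw [mem_restrictTotalDegree] at hA ⊢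
    exact (totalDegree_mul _ _).trans (by omega)
  have hmulGH : ∀ A ∈ R u, H * A ∈ R (u + D) := fun A hA => by
    rw [mem_restrictTotalDegree] at hA ⊢
    exact (totalDegree_mul _ _).trans (by omega)
  have hmulGG : ∀ A ∈ R u, G * A ∈ R (u + e) := fun A hA => by
    rw [mem_restrictTotalDegree] at hA ⊢
    exact (totalDegree_mul _ _).trans (by omega)
  let α : R (u + D) →ₗ[F] R (u + D + e) := (LinearMap.mulLeft F G).restrict hmulG
  let β : R (u + e) →ₗ[F] R (u + D + e) := (LinearMap.mulLeft F H).restrict hmulH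
  let f : (R (u + D) × R (u + e)) →ₗ[F] R (u + D + e) := α.coprod β
  let a' : R u →ₗ[F] R (u + D) := (LinearMap.mulLeft F H).restrict hmulGH
  let b' : R u →ₗ[F] R (u + e) := (LinearMap.mulLeft F G).restrict hmulGG
  let g : R u →ₗ[F] (R (u + D) × R (u + e)) := (-a').prod b'
  have hker : LinearMap.ker f ≤ LinearMap.range g := by
    rintro ⟨⟨A, hA⟩, ⟨B, hB⟩⟩ hAB
    have h1 : G * A + H * B = 0 := by
      exact congrArg Subtype.val (LinearMap.mem_ker.1 hAB)
    have h2 : G ∣ H * B := ⟨-A, by linear_combination h1⟩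
    obtain ⟨B', rfl⟩ := (hG.dvd_or_dvd h2).resolve_left hGH
    have hA' : A = -(H * B') := by
      apply mul_left_cancel₀ hG0; linear_combination h1
    have hB' : B' ∈ R u := by
      rw [mem_restrictTotalDegree]
      rcases eq_or_ne B' 0 with rfl | h0
      · simp
      · rw [mem_restrictTotalDegree, totalDegree_mul_of_isDomain hG0 h0] at hB
        omega
    refine ⟨⟨B', hB'⟩, ?_⟩
    refine Prod.ext (Subtype.ext ?_) (Subtype.ext rfl)
    exact hA'.symm
  let ev : R (u + D + e) →ₗ[F] Φ := (aeval z).toLinearMap.domRestrict _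
  have hrange : LinearMap.range f ≤ LinearMap.ker ev := by
    rintro _ ⟨⟨⟨A, hA⟩, ⟨B, hB⟩⟩, rfl⟩
    rw [LinearMap.mem_ker]
    change aeval z (G * A + H * B) = 0
    simp [hGz, hHz]
  have hev : finrank F (LinearMap.range ev) =
      finrank F (Subalgebra.toSubmodule (Algebra.adjoin F (Set.range z))) := by
    rw [← hT (u + D + e) (by omega), ← LinearMap.range_domRestrict]
  have h1 := LinearMap.finrank_range_add_finrank_ker f
  have h2 := LinearMap.finrank_range_add_finrank_ker ev
  have h3 := Submodule.finrank_mono hrange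
  have h4 := Submodule.finrank_mono hker
  have h5 := LinearMap.finrank_range_le g
  rw [Module.finrank_prod] at h1
  have b1 := finrank_restrictTotalDegree F (u + D)
  have b2 := finrank_restrictTotalDegree F (u + e)
  have b3 := finrank_restrictTotalDegree F (u + D + e)
  have b4 := finrank_restrictTotalDegree F u
  rw [hev] at h2
  have h6 : 2 * (finrank F (R (u+D)) + finrank F (R (u+e))) + 2 * finrank F (Subalgebra.toSubmodule (Algebra.adjoin F (Set.range z)))
    ≤ 2 * finrank F (R (u+D+e)) + 2 * finrank F (R u) := by omega
  rw [mul_add] at h6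
  simp only [R] at h6
  rw [b1, b2, b3, b4] at h6
  nlinarith

/-- If no curve of degree at most `t` passes through `z`, evaluation at `z` is injective. -/
theorem finrank_eval_small {z : Fin 2 → Φ} {t : ℕ}
    (h : ∀ H : MvPolynomial (Fin 2) F, H.totalDegree ≤ t → aeval z H = 0 → H = 0) :
    (t + 1) * (t + 2) ≤
      2 * finrank F ((restrictTotalDegree (Fin 2) F t).map (aeval z).toLinearMap) := by
  rw [← finrank_restrictTotalDegree F t]
  let ev : restrictTotalDegree (Fin 2) F t →ₗ[F] Φ := (aeval z).toLinearMap.domRestrict _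
  have h2 : finrank F (LinearMap.range ev) = finrank F (restrictTotalDegree (Fin 2) F t) :=
    LinearMap.finrank_range_of_inj (by
      rw [injective_iff_map_eq_zero]
      rintro ⟨A, hA⟩ h0
      exact Subtype.ext (h A ((mem_restrictTotalDegree _ _ _).1 hA) h0))
  rw [← h2, ← LinearMap.range_domRestrict]

/-- If the curves of degree at most `t = u + deg G` through `z` are the multiples of `G`, evaluation at
`z` has a kernel of dimension at most `(u + 1) (u + 2) / 2`. -/
theorem finrank_eval_mid {z : Fin 2 → Φ} {G : MvPolynomial (Fin 2) F} (hG0 : G ≠ 0) {u : ℕ}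
    (h : ∀ H : MvPolynomial (Fin 2) F, H.totalDegree ≤ u + G.totalDegree → aeval z H = 0 → G ∣ H) :
    (u + G.totalDegree + 1) * (u + G.totalDegree + 2) ≤ (u + 1) * (u + 2) +
      2 * finrank F ((restrictTotalDegree (Fin 2) F (u + G.totalDegree)).map
        (aeval z).toLinearMap) := by
  set e := G.totalDegree
  rw [← finrank_restrictTotalDegree F u, ← finrank_restrictTotalDegree F (u + e)]
  let ev : restrictTotalDegree (Fin 2) F (u + e) →ₗ[F] Φ := (aeval z).toLinearMap.domRestrict _
  let α : restrictTotalDegree (Fin 2) F u →ₗ[F] restrictTotalDegree (Fin 2) F (u + e) :=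
    (LinearMap.mulLeft F G).restrict fun A hA => by
      rw [mem_restrictTotalDegree] at hA ⊢
      exact (totalDegree_mul _ _).trans (by omega)
  have hker : LinearMap.ker ev ≤ LinearMap.range α := by
    rintro ⟨A, hA⟩ h0
    obtain ⟨B, rfl⟩ := h A ((mem_restrictTotalDegree _ _ _).1 hA) h0
    refine ⟨⟨B, ?_⟩, Subtype.ext rfl⟩
    rw [mem_restrictTotalDegree]
    rcases eq_or_ne B 0 with rfl | hB
    · simp
    · rw [mem_restrictTotalDegree, totalDegree_mul_of_isDomain hG0 hB] at hA
      omega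
  have h1 := LinearMap.finrank_range_add_finrank_ker ev
  have h2 := Submodule.finrank_mono hker
  have h3 := LinearMap.finrank_range_le α
  have h4 : finrank F (LinearMap.range ev) = finrank F ((restrictTotalDegree (Fin 2) F (u + e)).map
        (aeval z).toLinearMap) := by rw [← LinearMap.range_domRestrict]
  omega

/-- The plane curve of least degree through a point. -/
theorem exists_minimal_curve (z : Fin 2 → Φ)
    [FiniteDimensional F (Subalgebra.toSubmodule (Algebra.adjoin F (Set.range z)))] :
    ∃ G : MvPolynomial (Fin 2) F, Prime G ∧ aeval z G = 0 ∧ 1 ≤ G.totalDegree ∧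
      ∀ H : MvPolynomial (Fin 2) F, aeval z H = 0 → H.totalDegree < G.totalDegree → H = 0 := by
  have hex : ∃ n, ∃ G : MvPolynomial (Fin 2) F, G ≠ 0 ∧ aeval z G = 0 ∧ G.totalDegree = n := by
    by_contra hno
    push Not at hno
    have hle := finrank_eval_small (F := F) (z := z)
      (t := finrank F (Subalgebra.toSubmodule (Algebra.adjoin F (Set.range z)))) (fun H _ h0 => by
        by_contra hH
        exact hno _ H hH h0 rfl)
    have hle2 := Submodule.finrank_mono (show (restrictTotalDegree (Fin 2) F
      (finrank F (Subalgebra.toSubmodule (Algebra.adjoin F (Set.range z))))).map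
        (aeval z).toLinearMap ≤ Subalgebra.toSubmodule (Algebra.adjoin F (Set.range z)) by
      rintro _ ⟨Q, -, rfl⟩
      rw [Subalgebra.mem_toSubmodule, Algebra.adjoin_range_eq_range_aeval]
      exact ⟨Q, rfl⟩)
    nlinarith
  classical
  obtain ⟨G, hG0, hGz, hGn⟩ := Nat.find_spec hex
  have hmin : ∀ H : MvPolynomial (Fin 2) F, aeval z H = 0 → H.totalDegree < G.totalDegree →
      H = 0 := by
    intro H hH hlt
    by_contra h0
    rw [hGn] at hlt
    exact Nat.find_min hex hlt ⟨H, h0, hH, rfl⟩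
  have hC : ∀ a : F, aeval z (C a : MvPolynomial (Fin 2) F) = 0 → a = 0 := by
    intro a ha
    rw [aeval_C] at ha
    exact (map_eq_zero_iff _ (algebraMap F Φ).injective).1 ha
  have hpos : 1 ≤ G.totalDegree := by
    by_contra hlt
    have h0 : G.totalDegree = 0 := by omega
    rw [totalDegree_eq_zero_iff_eq_C] at h0
    rw [h0] at hGz hG0
    exact hG0 (by rw [hC _ hGz, map_zero])
  refine ⟨G, ?_, hGz, hpos, hmin⟩
  refine Irreducible.prime ⟨?_, ?_⟩
  · intro hu
    rw [MvPolynomial.isUnit_iff_totalDegree_of_isReduced] at hu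
    omega
  · intro A B hAB
    have hA0 : A ≠ 0 := by rintro rfl; simp at hAB; exact hG0 hAB
    have hB0 : B ≠ 0 := by rintro rfl; simp at hAB; exact hG0 hAB
    have hdeg : G.totalDegree = A.totalDegree + B.totalDegree := by
      rw [hAB, totalDegree_mul_of_isDomain hA0 hB0]
    have hunit : ∀ A : MvPolynomial (Fin 2) F, A ≠ 0 → A.totalDegree = 0 → IsUnit A := by
      intro A hA h0
      rw [totalDegree_eq_zero_iff_eq_C] at h0
      rw [h0] at hA ⊢
      exact (IsUnit.mk0 _ (by rintro h; exact hA (by rw [h, map_zero]))).map C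
    have h0 : aeval z A * aeval z B = 0 := by rw [← map_mul, ← hAB, hGz]
    rcases mul_eq_zero.1 h0 with h | h
    · right
      refine hunit B hB0 ?_
      by_contra hne
      exact hA0 (hmin A h (by omega))
    · left
      refine hunit A hA0 ?_
      by_contra hne
      exact hB0 (hmin B h (by omega))

end PlaneCurves

end

/-! ### Derivations and algebraic independence -/

section

open MvPolynomial

section DerivationTools

/-- A derivation along `φ : P → M` that vanishes on `ker φ` extends to `M` when `M` is the
fraction field of the image of `φ`. -/
theorem exists_derivation {k P M : Type} [Field k] [CommRing P] [Field M] [Algebra k P]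
    [Algebra k M] (φ : P →ₐ[k] M) (D : P →ₗ[k] M)
    (hD : ∀ a b, D (a * b) = φ a * D b + φ b * D a) (hker : ∀ a, φ a = 0 → D a = 0)
    (hfrac : ∀ m : M, ∃ a b, φ b ≠ 0 ∧ m * φ b = φ a) :
    ∃ D' : Derivation k M M, ∀ a, D' (φ a) = D a := by
  have hone : D 1 = 0 := by have := hD 1 1; simp at this; exact this
  choose n d hd hnd using hfrac
  let δ : M → M := fun m => (D (n m) - m * D (d m)) / φ (d m)
  have hδ : ∀ m a b, φ b ≠ 0 → m * φ b = φ a → δ m * φ b = D a - m * D b := by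
    intro m a b hb hab
    have h1 : φ (n m * b - a * d m) = 0 := by
      rw [map_sub, map_mul, map_mul, ← hab, ← hnd m]; ring
    have h2 := hker _ h1
    rw [map_sub, hD, hD, ← hab, ← hnd m] at h2
    simp only [δ]
    rw [div_mul_eq_mul_div, div_eq_iff (hd m)]
    linear_combination h2
  have hadd : ∀ x y, δ (x + y) = δ x + δ y := by
    intro x y
    have hb : φ (d x * d y) ≠ 0 := by rw [map_mul]; exact mul_ne_zero (hd x) (hd y)
    have h := hδ (x + y) (n x * d y + n y * d x) (d x * d y) hb (by
      rw [map_add, map_mul, map_mul, map_mul, ← hnd, ← hnd]; ring)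
    have hx := hδ x _ _ (hd x) (hnd x)
    have hy := hδ y _ _ (hd y) (hnd y)
    apply mul_right_cancel₀ hb
    rw [h, map_add, hD, hD, hD, ← hnd, ← hnd, map_mul]
    linear_combination (-φ (d y)) * hx + (-φ (d x)) * hy
  have hmul : ∀ x y, δ (x * y) = x * δ y + y * δ x := by
    intro x y
    have hb : φ (d x * d y) ≠ 0 := by rw [map_mul]; exact mul_ne_zero (hd x) (hd y)
    have h := hδ (x * y) (n x * n y) (d x * d y) hb (by
      rw [map_mul, map_mul, ← hnd, ← hnd]; ring)
    have hx := hδ x _ _ (hd x) (hnd x)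
    have hy := hδ y _ _ (hd y) (hnd y)
    apply mul_right_cancel₀ hb
    rw [h, hD, hD, ← hnd, ← hnd, map_mul]
    linear_combination (-y * φ (d y)) * hx + (-x * φ (d x)) * hy
  have hφ : ∀ a, δ (φ a) = D a := by
    intro a
    have := hδ (φ a) a 1 (by simp) (by simp)
    simpa [hone] using this
  have hsmul : ∀ (c : k) x, δ (c • x) = c • δ x := by
    intro c x
    have hc : δ (algebraMap k M c) = 0 := by
      rw [← φ.commutes, hφ, Algebra.algebraMap_eq_smul_one, map_smul, hone, smul_zero]
    rw [Algebra.smul_def, hmul, hc, Algebra.smul_def]; ring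
  refine ⟨Derivation.mk' ⟨⟨δ, hadd⟩, hsmul⟩ ?_, hφ⟩
  intro x y
  exact hmul x y

theorem totalDegree_pderiv_lt {σ R : Type} [CommRing R] (i : σ) (f : MvPolynomial σ R) {n : ℕ}
    (hf : f.totalDegree ≤ n + 1) : (pderiv i f).totalDegree ≤ n := by
  classical
  rw [totalDegree, Finset.sup_le_iff]
  intro m hm
  rw [mem_support_iff, coeff_pderiv] at hm
  have h : m + Finsupp.single i 1 ∈ f.support := by
    rw [mem_support_iff]; intro h; simp [h] at hm
  have := le_totalDegree h
  rw [Finsupp.sum_add_index' (by simp) (by simp), Finsupp.sum_single_index (by simp)] at this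
  omega

theorem totalDegree_pderiv_le {σ R : Type} [CommRing R] (i : σ) (f : MvPolynomial σ R) :
    (pderiv i f).totalDegree ≤ f.totalDegree :=
  totalDegree_pderiv_lt i f (Nat.le_succ _)

theorem eq_C_of_pderiv {σ R : Type} [CommRing R] [IsDomain R] [CharZero R]
    (f : MvPolynomial σ R) (h : ∀ i, pderiv i f = 0) : f = C (coeff 0 f) := by
  classical
  ext m
  rw [coeff_C]
  split_ifs with hm
  · rw [hm]
  · obtain ⟨i, hi⟩ : ∃ i, m i ≠ 0 := by
      by_contra hno
      push Not at hno
      exact hm (by ext j; simp [hno j])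
    have h1 := congrArg (coeff (m - Finsupp.single i 1)) (h i)
    have h2 : m - Finsupp.single i 1 + Finsupp.single i 1 = m :=
      tsub_add_cancel_of_le (by
        rw [Finsupp.single_le_iff]; omega)
    rw [coeff_pderiv, h2, coeff_zero, mul_eq_zero] at h1
    refine h1.resolve_right ?_
    exact Nat.cast_add_one_ne_zero _

/-- In characteristic zero, elements dual to derivations that kill `B` are algebraically
independent over `B`. -/
theorem algebraicIndependent_of_derivation {k M ι : Type} [Field k] [CharZero k] [Field M]
    [Algebra k M] {s : Set M} {p : ι → M} [DecidableEq ι] (D : ι → Derivation k M M)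
    (hp : ∀ i j, D i (p j) = if i = j then 1 else 0) (hs : ∀ i, ∀ b ∈ s, D i b = 0) :
    AlgebraicIndependent (Algebra.adjoin k s) p := by
  have hB : ∀ i, ∀ b ∈ Algebra.adjoin k s, D i b = 0 := by
    intro i b hb
    induction hb using Algebra.adjoin_induction with
    | mem x hx => exact hs i x hx
    | algebraMap r => exact (D i).map_algebraMap r
    | add x y _ _ hx hy => rw [map_add, hx, hy, add_zero]
    | mul x y _ _ hx hy => rw [Derivation.leibniz, hx, hy, smul_zero, smul_zero, add_zero]
  have hchain : ∀ i (f : MvPolynomial ι (Algebra.adjoin k s)),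
      D i (aeval p f) = aeval p (pderiv i f) := by
    intro i f
    induction f using MvPolynomial.induction_on with
    | C a => rw [pderiv_C, map_zero, aeval_C]; exact hB i a a.2
    | add f g hf hg => rw [map_add, map_add, map_add, map_add, hf, hg]
    | mul_X f j hf =>
      rw [map_mul, Derivation.leibniz, hf, Derivation.leibniz, pderiv_X, aeval_X, hp, map_add,
        smul_eq_mul, smul_eq_mul, smul_eq_mul, smul_eq_mul, map_mul, map_mul, aeval_X]
      congr 2
      rw [Pi.single_apply]
      split_ifs with h1 h2 h2
      · simp
      · exact absurd h1.symm h2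
      · exact absurd h2.symm h1
      · simp
  have key : ∀ n (f : MvPolynomial ι (Algebra.adjoin k s)), f.totalDegree ≤ n → aeval p f = 0 →
      f = 0 := by
    have hchar : CharZero (Algebra.adjoin k s) :=
      charZero_of_injective_algebraMap (algebraMap k (Algebra.adjoin k s)).injective
    have hconst : ∀ a : Algebra.adjoin k s,
        aeval p (C a : MvPolynomial ι (Algebra.adjoin k s)) = 0 →
        (C a : MvPolynomial ι (Algebra.adjoin k s)) = 0 := by
      intro a ha
      rw [aeval_C] at ha
      have : a = 0 := Subtype.ext ha
      rw [this, map_zero]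
    intro n
    induction n with
    | zero =>
      intro f hf h0
      rw [Nat.le_zero, totalDegree_eq_zero_iff_eq_C] at hf
      rw [hf] at h0 ⊢
      exact hconst _ h0
    | succ n ih =>
      intro f hf h0
      have hz : ∀ i, pderiv i f = 0 := fun i =>
        ih _ (totalDegree_pderiv_lt i f hf) (by rw [← hchain, h0, map_zero])
      have hC := eq_C_of_pderiv f hz
      rw [hC] at h0 ⊢
      exact hconst _ h0
  rw [algebraicIndependent_iff]
  exact fun f hf => key _ f le_rfl hf

variable {k F : Type} [Field k] [Field F] [Algebra k F] {σ : Type}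

/-- The derivation of `F[X]` acting by `D` on coefficients. -/
noncomputable def coeffD (D : Derivation k F F) (H : MvPolynomial σ F) : MvPolynomial σ F :=
  ∑ m ∈ H.support, monomial m (D (coeff m H))

theorem coeff_coeffD (D : Derivation k F F) (H : MvPolynomial σ F) (m : σ →₀ ℕ) :
    coeff m (coeffD D H) = D (coeff m H) := by
  classical
  simp only [coeffD, coeff_sum, coeff_monomial]
  rw [Finset.sum_ite_eq']
  split_ifs with h
  · rfl
  · rw [notMem_support_iff.1 h, map_zero]

theorem coeffD_add (D : Derivation k F F) (H H' : MvPolynomial σ F) :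
    coeffD D (H + H') = coeffD D H + coeffD D H' := by
  ext m; simp only [coeff_coeffD, coeff_add, map_add]

theorem coeffD_smul (D : Derivation k F F) (a : k) (H : MvPolynomial σ F) :
    coeffD D (a • H) = a • coeffD D H := by
  ext m; rw [coeff_coeffD, coeff_smul, coeff_smul, coeff_coeffD, Derivation.map_smul]

theorem coeffD_mul (D : Derivation k F F) (H H' : MvPolynomial σ F) :
    coeffD D (H * H') = H * coeffD D H' + H' * coeffD D H := by
  classical
  rw [mul_comm H' (coeffD D H)]
  ext m
  simp only [coeff_coeffD, coeff_add, coeff_mul, map_sum, ← Finset.sum_add_distrib,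
    Derivation.leibniz, smul_eq_mul]
  exact Finset.sum_congr rfl fun x _ => by ring

theorem coeffD_C (D : Derivation k F F) (a : F) :
    coeffD D (C a : MvPolynomial σ F) = C (D a) := by
  classical
  ext m
  rw [coeff_coeffD, coeff_C, coeff_C]
  split_ifs <;> simp

theorem coeffD_X (D : Derivation k F F) (i : σ) :
    coeffD D (X i : MvPolynomial σ F) = 0 := by
  classical
  ext m
  rw [coeff_coeffD, coeff_X']
  split_ifs <;> simp

theorem totalDegree_coeffD (D : Derivation k F F) (H : MvPolynomial σ F) :
    (coeffD D H).totalDegree ≤ H.totalDegree := by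
  rw [totalDegree, Finset.sup_le_iff]
  intro m hm
  apply le_totalDegree
  rw [mem_support_iff, coeff_coeffD] at hm
  rw [mem_support_iff]
  intro h; simp [h] at hm

end DerivationTools

end

/-! ### Derivations of rational function fields -/

section

open MvPolynomial

section PlaneDerivations

/-- The partial derivatives of a field of rational functions. -/
theorem exists_ratField_derivation {k F ι : Type} [Field k] [Field F] [Algebra k F]
    [DecidableEq ι] {c : ι → F}
    (gen : ∀ x : F, ∃ P Q : MvPolynomial ι k, aeval c Q ≠ 0 ∧ x * aeval c Q = aeval c P)
    (hc : AlgebraicIndependent k c) :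
    ∃ d : ι → Derivation k F F, ∀ i j, d i (c j) = if i = j then 1 else 0 := by
  have h : ∀ i, ∃ D' : Derivation k F F, ∀ a : MvPolynomial ι k,
      D' (aeval c a) = aeval c (pderiv i a) := by
    intro i
    refine exists_derivation (aeval c)
      ((aeval c).toLinearMap.comp (pderiv i : Derivation k _ _).toLinearMap) ?_ ?_ ?_
    · intro a b
      change aeval c (pderiv i (a * b)) = aeval c a * aeval c (pderiv i b) +
        aeval c b * aeval c (pderiv i a)
      rw [pderiv_mul, map_add, map_mul, map_mul]; ring
    · intro a ha
      have : a = 0 := (algebraicIndependent_iff.1 hc) a ha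
      rw [this]; simp
    · exact gen
  choose d hd using h
  refine ⟨d, fun i j => ?_⟩
  have := hd i (X j)
  rw [aeval_X, pderiv_X, Pi.single_apply] at this
  rw [this]
  split_ifs with h1 h2 h2
  · simp
  · exact absurd h1.symm h2
  · exact absurd h2.symm h1
  · simp

/-- Derivations along `F → Φ` that agree on generators agree. -/
theorem derivation_unique {k F Φ ι : Type} [Field k] [Field F] [Algebra k F] [Field Φ]
    [Algebra k Φ] [Algebra F Φ] [IsScalarTower k F Φ] {c : ι → F}
    (gen : ∀ x : F, ∃ P Q : MvPolynomial ι k, aeval c Q ≠ 0 ∧ x * aeval c Q = aeval c P)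
    (d : F →ₗ[k] Φ)
    (hd : ∀ a b, d (a * b) = algebraMap F Φ a * d b + algebraMap F Φ b * d a)
    (h : ∀ i, d (c i) = 0) (x : F) : d x = 0 := by
  have hone : d 1 = 0 := by have := hd 1 1; simp at this; exact this
  have hP : ∀ P : MvPolynomial ι k, d (aeval c P) = 0 := by
    intro P
    induction P using MvPolynomial.induction_on with
    | C a => rw [aeval_C, Algebra.algebraMap_eq_smul_one, map_smul, hone, smul_zero]
    | add p q hp hq => rw [map_add, map_add, hp, hq, add_zero]
    | mul_X p i hp => rw [map_mul, aeval_X, hd, hp, h]; simp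
  obtain ⟨P, Q, hQ, hx⟩ := gen x
  have h1 := hP P
  rw [← hx, hd, hP Q, mul_zero, zero_add] at h1
  refine (mul_eq_zero.1 h1).resolve_left ?_
  exact fun h0 => hQ ((map_eq_zero_iff _ (algebraMap F Φ).injective).1 h0)

/-- The function field of the irreducible plane curve `G = 0`. -/
theorem exists_plane_field (k : Type) {F : Type} [Field k] [Field F] [Algebra k F]
    {G : MvPolynomial (Fin 2) F} (hG : Prime G) :
    ∃ (M : Type) (_ : Field M) (_ : Algebra k M) (_ : Algebra F M) (_ : IsScalarTower k F M)
      (ζ : Fin 2 → M), (∀ H : MvPolynomial (Fin 2) F, aeval ζ H = 0 ↔ G ∣ H) ∧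
      ∀ m : M, ∃ A B : MvPolynomial (Fin 2) F, aeval ζ B ≠ 0 ∧ m * aeval ζ B = aeval ζ A := by
  let I : Ideal (MvPolynomial (Fin 2) F) := Ideal.span {G}
  have hI : I.IsPrime := (Ideal.span_singleton_prime hG.ne_zero).2 hG
  let A := MvPolynomial (Fin 2) F ⧸ I
  let M := FractionRing A
  let f : MvPolynomial (Fin 2) F →ₐ[F] M :=
    (IsScalarTower.toAlgHom F A M).comp (Ideal.Quotient.mkₐ F I)
  have hf : ∀ H, f H = algebraMap A M (Ideal.Quotient.mk I H) := fun H => rfl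
  let ζ : Fin 2 → M := fun i => f (X i)
  have hζ : ∀ H, aeval ζ H = f H := by
    intro H
    exact (DFunLike.congr_fun (aeval_unique f) H).symm
  let _ : Algebra k M := ((algebraMap F M).comp (algebraMap k F)).toAlgebra
  refine ⟨M, inferInstance, inferInstance, inferInstance, IsScalarTower.of_algebraMap_eq
    (fun x => rfl), ζ, ?_, ?_⟩
  · intro H
    rw [hζ, hf, IsFractionRing.to_map_eq_zero_iff, Ideal.Quotient.eq_zero_iff_mem,
      Ideal.mem_span_singleton]
  · intro m
    obtain ⟨a, b, hb, rfl⟩ := IsFractionRing.div_surjective (A := A) m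
    obtain ⟨a, rfl⟩ := Ideal.Quotient.mk_surjective a
    obtain ⟨b, rfl⟩ := Ideal.Quotient.mk_surjective b
    have hQ0 : algebraMap A M (Ideal.Quotient.mk I b) ≠ 0 := by
      rw [Ne, IsFractionRing.to_map_eq_zero_iff]; exact nonZeroDivisors.ne_zero hb
    refine ⟨a, b, ?_, ?_⟩
    · rwa [hζ, hf]
    · rw [hζ, hζ, hf, hf, div_mul_cancel₀ _ hQ0]

variable {k F : Type} [Field k] [Field F] [Algebra k F]

/-- Differentiation of a polynomial in `X₀, X₁` over `F` with respect to `X₀`, `X₁` or the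
constant `w ∈ F` on which `dw` is the derivative. -/
noncomputable def parD (dw : Derivation k F F) (a : Fin 3) (H : MvPolynomial (Fin 2) F) :
    MvPolynomial (Fin 2) F :=
  if h : (a : ℕ) < 2 then pderiv ⟨a, h⟩ H else coeffD dw H

variable (dw : Derivation k F F) (a : Fin 3)

theorem parD_add (H H' : MvPolynomial (Fin 2) F) :
    parD dw a (H + H') = parD dw a H + parD dw a H' := by
  unfold parD; split_ifs
  · rw [map_add]
  · rw [coeffD_add]

theorem parD_smul (c : k) (H : MvPolynomial (Fin 2) F) :
    parD dw a (c • H) = c • parD dw a H := by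
  unfold parD; split_ifs
  · rw [← algebraMap_smul F c H, Derivation.map_smul, algebraMap_smul]
  · rw [coeffD_smul]

theorem parD_mul (H H' : MvPolynomial (Fin 2) F) :
    parD dw a (H * H') = H * parD dw a H' + H' * parD dw a H := by
  unfold parD; split_ifs
  · rw [pderiv_mul]; ring
  · rw [coeffD_mul]

theorem totalDegree_parD (H : MvPolynomial (Fin 2) F) :
    (parD dw a H).totalDegree ≤ H.totalDegree := by
  unfold parD; split_ifs
  · exact totalDegree_pderiv_le _ _
  · exact totalDegree_coeffD _ _

theorem parD_C (x : F) : parD dw a (C x) = C (if a = 2 then dw x else 0) := by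
  unfold parD
  fin_cases a <;> simp [coeffD_C]

theorem parD_X (i : Fin 2) : parD dw a (X i) = C (if i.castSucc = a then 1 else 0) := by
  unfold parD
  fin_cases a <;> fin_cases i <;> simp [coeffD_X, pderiv_X, Pi.single_apply]

/-- Effect of moving one coordinate `p_{a,l}` of the projection on `H(z)`. -/
theorem deriv_formula {Φ τ : Type} [Field Φ] [Algebra k Φ] [Algebra F Φ] [IsScalarTower k F Φ]
    [DecidableEq τ] {c : Option τ → F}
    (gen : ∀ x : F, ∃ P Q : MvPolynomial (Option τ) k,
      aeval c Q ≠ 0 ∧ x * aeval c Q = aeval c P)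
    {dF : Option τ → Derivation k F F} (hdF : ∀ i j, dF i (c j) = if i = j then 1 else 0)
    {z : Fin 2 → Φ} (D : Derivation k Φ Φ) (l : Φ) (a : Fin 3) (τ₀ : τ)
    (hc : ∀ j, D (algebraMap F Φ (c (some j))) = if τ₀ = j then 1 else 0)
    (hw : D (algebraMap F Φ (c none)) = if a = 2 then l else 0)
    (hz : ∀ i : Fin 2, D (z i) = if i.castSucc = a then l else 0)
    (H : MvPolynomial (Fin 2) F) :
    D (aeval z H) = aeval z (coeffD (dF (some τ₀)) H) + l * aeval z (parD (dF none) a H) := by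
  have hsc : ∀ x : F, D (algebraMap F Φ x) - (algebraMap F Φ (dF (some τ₀) x) +
      l * algebraMap F Φ (if a = 2 then dF none x else 0)) = 0 := by
    let φ : F →ₗ[k] Φ := (IsScalarTower.toAlgHom k F Φ).toLinearMap
    let E : F →ₗ[k] Φ := if a = 2 then φ.comp (dF none).toLinearMap else 0
    have hE : ∀ x, E x = algebraMap F Φ (if a = 2 then dF none x else 0) := by
      intro x; simp only [E]; split_ifs
      · rfl
      · simp
    let d : F →ₗ[k] Φ := D.toLinearMap.comp φ - (φ.comp (dF (some τ₀)).toLinearMap +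
      (LinearMap.mulLeft k l).comp E)
    have hd : ∀ x, d x = D (algebraMap F Φ x) - (algebraMap F Φ (dF (some τ₀) x) +
      l * algebraMap F Φ (if a = 2 then dF none x else 0)) := by
      intro x; rw [← hE]; rfl
    intro x
    rw [← hd]
    refine derivation_unique gen d ?_ ?_ x
    · intro x y
      simp only [hd, map_mul, Derivation.leibniz, smul_eq_mul, map_add]
      split_ifs
      · simp only [map_add, map_mul]; ring
      · simp only [map_zero]; ring
    · intro j
      rw [hd, hdF, hdF]
      cases j with
      | none => rw [hw]; simp
      | some j => rw [hc]; simp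
  induction H using MvPolynomial.induction_on with
  | C x =>
    have := hsc x
    rw [coeffD_C, parD_C, aeval_C, aeval_C, aeval_C]
    linear_combination this
  | add H H' h h' =>
    rw [map_add, map_add, h, h', coeffD_add, parD_add, map_add, map_add]; ring
  | mul_X H i h =>
    have hi : algebraMap F Φ (if i.castSucc = a then 1 else 0) = if i.castSucc = a then 1 else 0 := by
      split_ifs <;> simp
    rw [map_mul, Derivation.leibniz, h, coeffD_mul, parD_mul, parD_X, coeffD_X, aeval_X, hz,
      map_add, map_add, map_mul, map_mul, map_mul, map_mul, aeval_X, aeval_C, hi, smul_eq_mul,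
      smul_eq_mul, map_zero]
    split_ifs <;> ring

end PlaneDerivations

end

/-! ### The surface swept out by plane curves -/

section

open MvPolynomial

section SurfaceModel

/-- The first two coordinates of the image of the generic point `y` under the generic linear
projection with coefficients `p_{a,l} = c (some (a, l))`. -/
noncomputable def planePt {F Φ : Type} [Field F] [Field Φ] [Algebra F Φ] {r : ℕ}
    (c : Option (Fin 3 × Fin r) → F) (y : Fin (r + 1) → Φ) (a : Fin 2) : Φ :=
  ∑ l : Fin r, algebraMap F Φ (c (some (a.castSucc, l))) * y l.succ

/-- `F = k(p, w)` acts on the function field `Φ` of `V(y)` so that `p` is a generic projection to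
three-space and `w` is the third coordinate of the image of `y`. Genericity of `p` is expressed
by derivations dual to `p` and killing `y`. -/
structure ProjData (k : Type) {F Φ : Type} [Field k] [Field F] [Field Φ] [Algebra k Φ]
    [Algebra F Φ] {r : ℕ} (c : Option (Fin 3 × Fin r) → F) (y : Fin (r + 1) → Φ) : Prop where
  y_zero : y 0 = 1
  w_eq : algebraMap F Φ (c none) = ∑ l : Fin r, algebraMap F Φ (c (some (2, l))) * y l.succ
  der : ∃ D : Fin 3 × Fin r → Derivation k Φ Φ,
    (∀ i j, D i (algebraMap F Φ (c (some j))) = if i = j then 1 else 0) ∧ ∀ i j, D i (y j) = 0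

variable {k F Φ : Type} [Field k] [Field F] [Field Φ] [Algebra k F] [Algebra k Φ] [Algebra F Φ]
  [IsScalarTower k F Φ] {r : ℕ} {c : Option (Fin 3 × Fin r) → F} {y : Fin (r + 1) → Φ}
  {dF : Option (Fin 3 × Fin r) → Derivation k F F}

/-- Moving the coefficient `p_{a,l}` changes the `b`-th projected coordinate only if `a = b`. -/
theorem sum_derivation (D : Fin 3 × Fin r → Derivation k Φ Φ)
    (hD : ∀ i j, D i (algebraMap F Φ (c (some j))) = if i = j then 1 else 0)
    (hy : ∀ i j, D i (y j) = 0) (a b : Fin 3) (l : Fin r) :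
    D (a, l) (∑ m : Fin r, algebraMap F Φ (c (some (b, m))) * y m.succ) =
      if b = a then y l.succ else 0 := by
  rw [map_sum]
  simp only [Derivation.leibniz, hD, hy, smul_zero, zero_add, smul_eq_mul, Prod.mk.injEq]
  by_cases h : b = a
  · subst h
    simp
  · rw [if_neg h]
    refine Finset.sum_eq_zero fun m _ => ?_
    rw [if_neg (fun hh => h hh.1.symm), mul_zero, mul_zero, add_zero]

/-- The derivations of `ProjData` act on a function of the projected point through its coefficients and
through the displacement `y_{l+1}` of the `a`-th projected coordinate. -/
theorem ProjData.exists_formula (h : ProjData k c y)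
    (gen : ∀ x : F, ∃ P Q : MvPolynomial (Option (Fin 3 × Fin r)) k,
      aeval c Q ≠ 0 ∧ x * aeval c Q = aeval c P)
    (hdF : ∀ i j, dF i (c j) = if i = j then 1 else 0) :
    ∃ D : Fin 3 × Fin r → Derivation k Φ Φ, (∀ i j, D i (y j) = 0) ∧
      ∀ a l (H : MvPolynomial (Fin 2) F), D (a, l) (aeval (planePt c y) H) =
        aeval (planePt c y) (coeffD (dF (some (a, l))) H) +
          y l.succ * aeval (planePt c y) (parD (dF none) a H) := by
  obtain ⟨D, hD, hy⟩ := h.der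
  refine ⟨D, hy, fun a l H => deriv_formula gen hdF (D (a, l)) _ a (a, l) (hD _) ?_ ?_ H⟩
  · rw [h.w_eq, sum_derivation D hD hy]
    simp only [eq_comm]
  · intro i
    exact sum_derivation D hD hy a i.castSucc l

theorem exists_pderiv_ne [CharZero F] {G : MvPolynomial (Fin 2) F} (he : 1 ≤ G.totalDegree) :
    ∃ i, pderiv i G ≠ 0 := by
  by_contra hno
  push Not at hno
  have := eq_C_of_pderiv G hno
  rw [this, totalDegree_C] at he
  omega

/-- The coordinates `y` are rational functions of the projected point, by differentiating its
equation with respect to the projection. -/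
theorem ProjData.coord_eq (h : ProjData k c y)
    (gen : ∀ x : F, ∃ P Q : MvPolynomial (Option (Fin 3 × Fin r)) k,
      aeval c Q ≠ 0 ∧ x * aeval c Q = aeval c P)
    (hdF : ∀ i j, dF i (c j) = if i = j then 1 else 0)
    {G : MvPolynomial (Fin 2) F} (hGz : aeval (planePt c y) G = 0) (i : Fin 2) (l : Fin r) :
    y l.succ * aeval (planePt c y) (pderiv i G) =
      - aeval (planePt c y) (coeffD (dF (some (i.castSucc, l))) G) := by
  obtain ⟨D, -, hD⟩ := h.exists_formula gen hdF
  have h1 := hD i.castSucc l G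
  have h2 : parD (dF none) i.castSucc G = pderiv i G := by
    unfold parD
    rw [dif_pos (show (i.castSucc : ℕ) < 2 from i.2)]
    rfl
  rw [hGz, map_zero, h2] at h1
  linear_combination -h1

/-- The curves `G = 0`, as the projection varies, sweep out a surface containing `V(y)`. Its generic point
`η` is given on the curve `G = 0` by the formulas `η_l = - N_l / Δ` that hold at `z`, where
`Δ = ∂G/∂X_i` and `N_l` is the derivative of the coefficients of `G` with respect to `p_{i,l}`. Every
identity needed for `η` becomes, after clearing denominators, a polynomial identity of degree at most
`3 deg G` valid at `z`, so that it holds modulo `G` by `htr`. -/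
theorem exists_surface_model [CharZero k] (h : ProjData k c y)
    (gen : ∀ x : F, ∃ P Q : MvPolynomial (Option (Fin 3 × Fin r)) k,
      aeval c Q ≠ 0 ∧ x * aeval c Q = aeval c P)
    (hdF : ∀ i j, dF i (c j) = if i = j then 1 else 0)
    {G : MvPolynomial (Fin 2) F} (hG : Prime G) (hGz : aeval (planePt c y) G = 0)
    (he : 1 ≤ G.totalDegree)
    (hmin : ∀ H : MvPolynomial (Fin 2) F, aeval (planePt c y) H = 0 →
      H.totalDegree < G.totalDegree → H = 0)
    (htr : ∀ H : MvPolynomial (Fin 2) F, H.totalDegree ≤ 3 * G.totalDegree →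
      aeval (planePt c y) H = 0 → G ∣ H) :
    ∃ (M : Type) (_ : Field M) (_ : Algebra k M) (_ : Algebra F M) (_ : IsScalarTower k F M)
      (η : Fin (r + 1) → M), ProjData k c η ∧
      (∀ H : MvPolynomial (Fin 2) F, aeval (planePt c η) H = 0 ↔ G ∣ H) ∧
      (∀ m : M, ∃ A B : MvPolynomial (Fin 2) F,
        aeval (planePt c η) B ≠ 0 ∧ m * aeval (planePt c η) B = aeval (planePt c η) A) ∧
      ∀ f : MvPolynomial (Fin (r + 1)) F, aeval η f = 0 → aeval y f = 0 := by
  have hchar : CharZero F := charZero_of_injective_algebraMap (algebraMap k F).injective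
  obtain ⟨i, hi⟩ := exists_pderiv_ne he
  obtain ⟨D, hDy, hD⟩ := h.exists_formula gen hdF
  have hy0 : ∀ l, y (Fin.succ l) * aeval (planePt c y) (pderiv i G) =
      - aeval (planePt c y) (coeffD (dF (some (i.castSucc, l))) G) :=
    fun l => h.coord_eq gen hdF hGz i l
  have hzdef : ∀ a, planePt c y a = ∑ l : Fin r, algebraMap F Φ (c (some (a.castSucc, l))) * y l.succ :=
    fun a => rfl
  set z := planePt c y with hz
  obtain ⟨Δ, hΔ⟩ : ∃ Δ, Δ = pderiv i G := ⟨_, rfl⟩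
  obtain ⟨N, hN⟩ : ∃ N : Fin r → MvPolynomial (Fin 2) F,
    ∀ l, N l = coeffD (dF (some (i.castSucc, l))) G := ⟨_, fun l => rfl⟩
  have hy : ∀ l, y (Fin.succ l) * aeval z Δ = - aeval z (N l) := by
    intro l; rw [hΔ, hN]; exact hy0 l
  set e := G.totalDegree with hedef
  have dΔ : Δ.totalDegree ≤ e - 1 := by
    rw [hΔ]; exact totalDegree_pderiv_lt i G (by omega)
  have dN : ∀ l, (N l).totalDegree ≤ e := fun l => by rw [hN]; exact totalDegree_coeffD _ _
  have hΔz : aeval z Δ ≠ 0 := fun h0 => (hΔ ▸ hi) (hmin Δ h0 (by omega))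
  obtain ⟨M, iM, ikM, iFM, itw, ζ, hζ, hfrac⟩ := exists_plane_field k hG
  have htr' : ∀ H : MvPolynomial (Fin 2) F, H.totalDegree ≤ 3 * e → aeval z H = 0 →
      aeval ζ H = 0 := fun H hH h0 => (hζ H).2 (htr H hH h0)
  have hΔζ : aeval ζ Δ ≠ 0 := by
    intro h0
    obtain ⟨Q, hQ⟩ := (hζ Δ).1 h0
    apply hΔz
    rw [hQ, map_mul, hGz, zero_mul]
  obtain ⟨ηs, hη⟩ : ∃ ηs : Fin r → M, ∀ l, ηs l * aeval ζ Δ = - aeval ζ (N l) :=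
    ⟨fun l => - aeval ζ (N l) / aeval ζ Δ, fun l => div_mul_cancel₀ _ hΔζ⟩
  -- linear relations
  have hlin : ∀ (A : MvPolynomial (Fin 2) F) (b : Fin 3), A.totalDegree ≤ 1 →
      aeval z A = ∑ l : Fin r, algebraMap F Φ (c (some (b, l))) * y l.succ →
      aeval ζ A = ∑ l : Fin r, algebraMap F M (c (some (b, l))) * ηs l := by
    intro A b hA hAz
    have h1 : aeval ζ (A * Δ + ∑ l, C (c (some (b, l))) * N l) = 0 := by
      apply htr'
      · refine (totalDegree_add _ _).trans (max_le ?_ ?_)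
        · exact (totalDegree_mul _ _).trans (by omega)
        · refine totalDegree_finsetSum_le fun l _ => ?_
          refine (totalDegree_mul _ _).trans ?_
          have := dN l
          rw [totalDegree_C]; omega
      · rw [map_add, map_mul, hAz, map_sum, Finset.sum_mul, ← Finset.sum_add_distrib]
        refine Finset.sum_eq_zero fun l _ => ?_
        rw [map_mul, aeval_C]
        linear_combination algebraMap F Φ (c (some (b, l))) * hy l
    rw [map_add, map_mul, map_sum] at h1
    apply mul_right_cancel₀ hΔζ
    rw [Finset.sum_mul, ← sub_eq_zero, ← h1, sub_eq_add_neg, ← Finset.sum_neg_distrib]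
    congr 1
    refine Finset.sum_congr rfl fun l _ => ?_
    rw [map_mul, aeval_C]
    linear_combination - algebraMap F M (c (some (b, l))) * hη l
  -- the derivations of `F[X₀, X₁]` along the curve `G = 0`
  have hDG : ∀ a l, aeval ζ (coeffD (dF (some (a, l))) G) +
      ηs l * aeval ζ (parD (dF none) a G) = 0 := by
    intro a l
    have h1 : aeval ζ (Δ * coeffD (dF (some (a, l))) G - N l * parD (dF none) a G) = 0 := by
      have d1 := totalDegree_coeffD (dF (some (a, l))) G
      have d2 := totalDegree_parD (dF none) a G
      have d3 := dN l
      apply htr'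
      · refine (totalDegree_sub _ _).trans (max_le ?_ ?_)
        · exact (totalDegree_mul _ _).trans (by omega)
        · exact (totalDegree_mul _ _).trans (by omega)
      · have h2 := hD a l G
        rw [hGz, map_zero] at h2
        rw [map_sub, map_mul, map_mul]
        linear_combination (- aeval z Δ) * h2 - aeval z (parD (dF none) a G) * hy l
    rw [map_sub, map_mul, map_mul] at h1
    apply mul_right_cancel₀ hΔζ
    linear_combination h1 + aeval ζ (parD (dF none) a G) * hη l
  have hDM : ∀ al : Fin 3 × Fin r, ∃ D' : Derivation k M M, ∀ H : MvPolynomial (Fin 2) F,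
      D' (aeval ζ H) = aeval ζ (coeffD (dF (some al)) H) +
        ηs al.2 * aeval ζ (parD (dF none) al.1 H) := by
    rintro ⟨a, l⟩
    refine exists_derivation ((aeval ζ).restrictScalars k)
      { toFun := fun H => aeval ζ (coeffD (dF (some (a, l))) H) +
          ηs l * aeval ζ (parD (dF none) a H)
        map_add' := fun H H' => by
          rw [coeffD_add, parD_add, map_add, map_add]; ring
        map_smul' := fun x H => by
          have hs : ∀ H : MvPolynomial (Fin 2) F, aeval ζ (x • H) = x • aeval ζ H := fun H =>
            LinearMap.map_smul ((aeval ζ).restrictScalars k).toLinearMap x H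
          rw [coeffD_smul, parD_smul, hs, hs, mul_smul_comm, ← smul_add]
          rfl } ?_ ?_ ?_
    · intro H H'
      change aeval ζ (coeffD (dF (some (a, l))) (H * H')) +
          ηs l * aeval ζ (parD (dF none) a (H * H')) = aeval ζ H * (aeval ζ (coeffD (dF (some (a, l))) H') +
          ηs l * aeval ζ (parD (dF none) a H')) + aeval ζ H' * (aeval ζ (coeffD (dF (some (a, l))) H) +
          ηs l * aeval ζ (parD (dF none) a H))
      rw [coeffD_mul, parD_mul]
      simp only [map_add, map_mul]
      ring
    · intro H hH
      obtain ⟨Q, rfl⟩ := (hζ H).1 hH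
      change aeval ζ (coeffD (dF (some (a, l))) (G * Q)) +
          ηs l * aeval ζ (parD (dF none) a (G * Q)) = 0
      have h0 : aeval ζ G = 0 := (hζ G).2 dvd_rfl
      rw [coeffD_mul, parD_mul]
      simp only [map_add, map_mul, h0]
      linear_combination aeval ζ Q * hDG a l
    · exact hfrac
  choose DM hDM using hDM
  -- The point `η` does not move with the projection: differentiating `η_m Δ = - N_m` and clearing
  -- denominators gives an identity of degree at most `3 e`, which holds at `z` since `y` is constant.
  have hDη : ∀ al m, DM al (ηs m) = 0 := by
    rintro ⟨a, l⟩ m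
    have d1 := totalDegree_coeffD (dF (some (a, l))) (N m)
    have d2 := totalDegree_parD (dF none) a (N m)
    have d3 := totalDegree_coeffD (dF (some (a, l))) Δ
    have d4 := totalDegree_parD (dF none) a Δ
    have d5 := dN l
    have d6 := dN m
    have h1 : aeval ζ ((Δ * coeffD (dF (some (a, l))) (N m) - N l * parD (dF none) a (N m)) * Δ
        - N m * (Δ * coeffD (dF (some (a, l))) Δ - N l * parD (dF none) a Δ)) = 0 := by
      apply htr'
      · refine (totalDegree_sub _ _).trans (max_le ?_ ?_)
        · refine (totalDegree_mul _ _).trans ?_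
          have : (Δ * coeffD (dF (some (a, l))) (N m) -
              N l * parD (dF none) a (N m)).totalDegree ≤ 2 * e := by
            refine (totalDegree_sub _ _).trans (max_le ?_ ?_)
            · exact (totalDegree_mul _ _).trans (by omega)
            · exact (totalDegree_mul _ _).trans (by omega)
          omega
        · refine (totalDegree_mul _ _).trans ?_
          have : (Δ * coeffD (dF (some (a, l))) Δ -
              N l * parD (dF none) a Δ).totalDegree ≤ 2 * e := by
            refine (totalDegree_sub _ _).trans (max_le ?_ ?_)
            · exact (totalDegree_mul _ _).trans (by omega)
            · exact (totalDegree_mul _ _).trans (by omega)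
          omega
      · have h2 := congrArg (D (a, l)) (hy m)
        rw [Derivation.leibniz, hDy, map_neg, hD, hD, smul_eq_mul, smul_zero, add_zero] at h2
        have hl := hy l
        have hm := hy m
        simp only [map_sub, map_mul]
        linear_combination (-(aeval z Δ) * aeval z (parD (dF none) a (N m)) +
          aeval z (N m) * aeval z (parD (dF none) a Δ)) * hl + (aeval z Δ) ^ 2 * h2
          - aeval z Δ * (aeval z (coeffD (dF (some (a, l))) Δ) +
            y l.succ * aeval z (parD (dF none) a Δ)) * hm
    have h2 := congrArg (DM (a, l)) (hη m)
    rw [Derivation.leibniz, map_neg, hDM, hDM, smul_eq_mul, smul_eq_mul] at h2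
    have hl := hη l
    have hm := hη m
    simp only [map_sub, map_mul] at h1
    have h3 : (aeval ζ Δ) ^ 3 * DM (a, l) (ηs m) = 0 := by
      linear_combination (aeval ζ Δ) ^ 2 * h2 - h1 + (-(aeval ζ Δ) * aeval ζ (parD (dF none) a (N m)) +
          aeval ζ (N m) * aeval ζ (parD (dF none) a Δ)) * hl
          - aeval ζ Δ * (aeval ζ (coeffD (dF (some (a, l))) Δ) +
            ηs l * aeval ζ (parD (dF none) a Δ)) * hm
    exact (mul_eq_zero.1 h3).resolve_left (pow_ne_zero _ hΔζ)
  let η : Fin (r + 1) → M := Fin.cons 1 ηs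
  have hη0 : η 0 = 1 := rfl
  have hηs : ∀ l : Fin r, η l.succ = ηs l := fun l => rfl
  have hpt : planePt c η = ζ := by
    ext a
    have := hlin (X a) a.castSucc (by rw [totalDegree_X]) (by rw [aeval_X]; exact hzdef a)
    rw [aeval_X] at this
    exact this.symm
  refine ⟨M, iM, ikM, iFM, itw, η, ⟨hη0, ?_, DM, ?_, ?_⟩, ?_, ?_, ?_⟩
  · have := hlin (C (c none)) 2 (by rw [totalDegree_C]; omega) (by rw [aeval_C]; exact h.w_eq)
    rw [aeval_C] at this
    exact this
  · intro i j
    have := hDM i (C (c (some j)))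
    rw [aeval_C, coeffD_C, parD_C, aeval_C, aeval_C, hdF, hdF] at this
    rw [this]
    by_cases hij : i = j <;> simp [hij]
  · intro i j
    refine Fin.cases ?_ (fun l => ?_) j
    · rw [hη0]; exact (DM i).map_one_eq_zero
    · rw [hηs]; exact hDη i l
  · rw [hpt]; exact hζ
  · rw [hpt]; exact hfrac
  -- Clearing denominators simultaneously in `η` and `y`: a relation on `η` becomes a multiple of `G`,
  -- and `G` vanishes at `z`.
  · have key : ∀ f : MvPolynomial (Fin (r + 1)) F, ∃ (n : ℕ) (H : MvPolynomial (Fin 2) F),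
        aeval η f * (aeval ζ Δ) ^ n = aeval ζ H ∧
        aeval y f * (aeval z Δ) ^ n = aeval z H := by
      intro f
      induction f using MvPolynomial.induction_on with
      | C a => exact ⟨0, C a, by simp, by simp⟩
      | add f g hf hg =>
        obtain ⟨n, H, h1, h2⟩ := hf
        obtain ⟨n', H', h1', h2'⟩ := hg
        refine ⟨n + n', H * Δ ^ n' + H' * Δ ^ n, ?_, ?_⟩
        · simp only [map_add, map_mul, map_pow, ← h1, ← h1']; ring
        · simp only [map_add, map_mul, map_pow, ← h2, ← h2']; ring
      | mul_X f j hf =>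
        obtain ⟨n, H, h1, h2⟩ := hf
        refine Fin.cases ?_ (fun l => ?_) j
        · refine ⟨n, H, ?_, ?_⟩
          · rw [map_mul, aeval_X, hη0, mul_one, h1]
          · rw [map_mul, aeval_X, h.y_zero, mul_one, h2]
        · refine ⟨n + 1, H * (- N l), ?_, ?_⟩
          · rw [map_mul, aeval_X, hηs, map_mul, map_neg, ← h1, ← hη l]; ring
          · rw [map_mul, aeval_X, map_mul, map_neg, ← h2, ← hy l]; ring
    intro f hf
    obtain ⟨n, H, h1, h2⟩ := key f
    rw [hf, zero_mul] at h1
    obtain ⟨Q, hQ⟩ := (hζ H).1 h1.symm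
    rw [hQ, map_mul, hGz, zero_mul] at h2
    exact (mul_eq_zero.1 h2).resolve_right (pow_ne_zero _ hΔz)

end SurfaceModel

end

/-! ### Homogeneous ideals and generic points -/

section

open Submodule Module MvPolynomial

section ConeIdeal

theorem map_homogeneous_linSys {k Φ : Type} [Field k] [Field Φ] [Algebra k Φ] {r : ℕ}
    (y : Fin (r + 1) → Φ) (t : ℕ) :
    (homogeneousSubmodule (Fin (r + 1)) k t).map (aeval y).toLinearMap = linSys k y ^ t := by
  rw [← homogeneousSubmodule_one_pow, Submodule.map_pow, homogeneousSubmodule_one_eq_span_X,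
    Submodule.map_span, ← Set.range_comp]
  rw [linSys]
  congr 3
  ext j
  simp

theorem finrank_map_eq_of_ker {k V W W' : Type} [Field k] [AddCommGroup V] [AddCommGroup W]
    [AddCommGroup W'] [Module k V] [Module k W] [Module k W'] (U : Submodule k V) (f : V →ₗ[k] W)
    (f' : V →ₗ[k] W') (h : ∀ u ∈ U, f u = 0 ↔ f' u = 0) :
    finrank k (U.map f) = finrank k (U.map f') := by
  rw [← LinearMap.range_domRestrict, ← LinearMap.range_domRestrict]
  have hk : LinearMap.ker (f.domRestrict U) = LinearMap.ker (f'.domRestrict U) := by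
    ext u
    simpa using h u u.2
  have e1 := (f.domRestrict U).quotKerEquivRange
  have e2 := (f'.domRestrict U).quotKerEquivRange
  rw [← e1.finrank_eq, ← e2.finrank_eq, hk]

/-- The Hilbert function of a homogeneous ideal is computed on the generic point `y`. -/
theorem hilbZ_eq_finrank {r : ℕ} {Φ : Type} [Field Φ] [Algebra ℂ Φ] {I : Ideal (MPoly (r + 1))}
    {y : Fin (r + 1) → Φ}
    (h : ∀ t : ℕ, ∀ f ∈ homogeneousSubmodule (Fin (r + 1)) ℂ t, f ∈ I ↔ aeval y f = 0) (t : ℕ) :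
    hilbZ I (t : ℤ) = finrank ℂ (linSys ℂ y ^ t : Submodule ℂ Φ) := by
  rw [hilbZ, hilbNat, degQZ, if_pos (Int.natCast_nonneg t), Int.toNat_natCast, degQ,
    ← map_homogeneous_linSys]
  congr 1
  refine finrank_map_eq_of_ker _ _ _ fun f hf => ?_
  rw [AlgHom.toLinearMap_apply, AlgHom.toLinearMap_apply, ← h t f hf]
  exact Ideal.Quotient.eq_zero_iff_mem

/-- The homogeneous ideal of the closure of the point `y`: the kernel of the parametrization
`x_j ↦ λ y_j` of the affine cone. -/
noncomputable def coneOf {r : ℕ} {Φ : Type} [Field Φ] [Algebra ℂ Φ] (y : Fin (r + 1) → Φ) :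
    Ideal (MPoly (r + 1)) :=
  RingHom.ker (aeval (fun j => Polynomial.X * Polynomial.C (y j)) : MPoly (r + 1) →ₐ[ℂ] Polynomial Φ)

theorem aeval_cone_homogeneous {r : ℕ} {Φ : Type} [Field Φ] [Algebra ℂ Φ] (y : Fin (r + 1) → Φ)
    {t : ℕ} {f : MPoly (r + 1)} (hf : f ∈ homogeneousSubmodule (Fin (r + 1)) ℂ t) :
    aeval (fun j => Polynomial.X * Polynomial.C (y j)) f =
      Polynomial.X ^ t * Polynomial.C (aeval y f) := by
  rw [mem_homogeneousSubmodule] at hf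
  have hC : Polynomial.C (aeval y f) = aeval (fun j => Polynomial.C (y j)) f := by
    have h := (Polynomial.CAlgHom (R := ℂ) (A := Φ)).comp_apply (aeval y) f
    rw [comp_aeval] at h
    exact h.symm
  rw [hC, aeval_def, aeval_def, eval₂_eq, eval₂_eq, Finset.mul_sum]
  refine Finset.sum_congr rfl fun m hm => ?_
  have hd : ∑ i ∈ m.support, m i = t := by
    have := hf (mem_support_iff.mp hm)
    rw [Finsupp.weight_apply] at this
    simpa [Finsupp.sum] using this
  simp only [mul_pow, Finset.prod_mul_distrib, Finset.prod_pow_eq_pow_sum, hd]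
  ring

/-- The powers of the cone parameter separate the homogeneous components. -/
theorem mem_coneOf_iff {r : ℕ} {Φ : Type} [Field Φ] [Algebra ℂ Φ] (y : Fin (r + 1) → Φ)
    (f : MPoly (r + 1)) : f ∈ coneOf y ↔ ∀ t, aeval y (homogeneousComponent t f) = 0 := by
  have key : aeval (fun j => Polynomial.X * Polynomial.C (y j)) f =
      ∑ t ∈ Finset.range (f.totalDegree + 1),
        Polynomial.X ^ t * Polynomial.C (aeval y (homogeneousComponent t f)) := by
    conv_lhs => rw [← sum_homogeneousComponent f, map_sum]
    exact Finset.sum_congr rfl fun t _ => aeval_cone_homogeneous y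
      ((mem_homogeneousSubmodule _ _).mpr (homogeneousComponent_isHomogeneous _ _))
  rw [coneOf, RingHom.mem_ker]
  constructor
  · intro h t
    by_cases ht : t < f.totalDegree + 1
    · have h2 := congrArg (fun q => Polynomial.coeff q t) (key.symm.trans h)
      rw [Polynomial.finset_sum_coeff, Polynomial.coeff_zero,
        Finset.sum_eq_single_of_mem t (Finset.mem_range.mpr ht) fun u _ hu => ?_] at h2
      · rwa [mul_comm, Polynomial.coeff_C_mul_X_pow, if_pos rfl] at h2
      · rw [mul_comm, Polynomial.coeff_C_mul_X_pow, if_neg hu.symm]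
    · rw [homogeneousComponent_eq_zero _ _ (by omega), map_zero]
  · intro h
    refine key.trans ?_
    simp [h]

theorem mem_coneOf_homogeneous {r : ℕ} {Φ : Type} [Field Φ] [Algebra ℂ Φ] (y : Fin (r + 1) → Φ)
    {t : ℕ} {f : MPoly (r + 1)} (hf : f ∈ homogeneousSubmodule (Fin (r + 1)) ℂ t) :
    f ∈ coneOf y ↔ aeval y f = 0 := by
  rw [coneOf, RingHom.mem_ker]
  refine Eq.congr_left (aeval_cone_homogeneous y hf) |>.trans ?_
  rw [mul_eq_zero, or_iff_right (pow_ne_zero _ Polynomial.X_ne_zero), Polynomial.C_eq_zero]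

theorem coneOf_isHomog {r : ℕ} {Φ : Type} [Field Φ] [Algebra ℂ Φ] (y : Fin (r + 1) → Φ) :
    IsHomogIdeal (coneOf y) := fun f hf k =>
  (mem_coneOf_homogeneous y ((mem_homogeneousSubmodule _ _).mpr
    (homogeneousComponent_isHomogeneous _ _))).mpr ((mem_coneOf_iff y f).mp hf k)

theorem coneOf_isPrime {r : ℕ} {Φ : Type} [Field Φ] [Algebra ℂ Φ] (y : Fin (r + 1) → Φ) :
    (coneOf y).IsPrime := RingHom.ker_isPrime _

/-- If `V(y)` contains the variety of `I`, with generic point `y'`, its ideal is contained in `I`. -/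
theorem coneOf_le {r : ℕ} {Φ Φ' : Type} [Field Φ] [Algebra ℂ Φ] [Field Φ'] [Algebra ℂ Φ']
    {y : Fin (r + 1) → Φ} {y' : Fin (r + 1) → Φ'} {I : Ideal (MPoly (r + 1))}
    (hI : ∀ t : ℕ, ∀ f ∈ homogeneousSubmodule (Fin (r + 1)) ℂ t, f ∈ I ↔ aeval y' f = 0)
    (h : ∀ f : MPoly (r + 1), aeval y f = 0 → aeval y' f = 0) : coneOf y ≤ I := by
  intro f hf
  rw [← sum_homogeneousComponent f]
  exact I.sum_mem fun t _ => (hI t _ ((mem_homogeneousSubmodule _ _).mpr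
    (homogeneousComponent_isHomogeneous _ _))).mpr (h _ ((mem_coneOf_iff y f).mp hf t))

/-- A homogeneous prime not containing `x_0` has a generic point with first coordinate `1`, and
after a purely transcendental extension of its function field there are generic coefficients `p`
with dual derivations killing the generic point. -/
theorem exists_curve_model {r : ℕ} {I : Ideal (MPoly (r + 1))} (hI : I.IsPrime)
    (h0 : X 0 ∉ I) :
    ∃ (Φ : Type) (_ : Field Φ) (_ : Algebra ℂ Φ) (y : Fin (r + 1) → Φ) (p : Fin 3 × Fin r → Φ)
      (D : Fin 3 × Fin r → Derivation ℂ Φ Φ), y 0 = 1 ∧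
      (∀ i j, D i (p j) = if i = j then 1 else 0) ∧ (∀ i j, D i (y j) = 0) ∧
      ∀ t : ℕ, ∀ f ∈ homogeneousSubmodule (Fin (r + 1)) ℂ t, f ∈ I ↔ aeval y f = 0 := by
  let E := FractionRing (MPoly (r + 1) ⧸ I)
  let x : Fin (r + 1) → E := fun j => algebraMap (MPoly (r + 1) ⧸ I) E (Ideal.Quotient.mk I (X j))
  have hx0 : x 0 ≠ 0 := by
    intro h
    have h2 := (IsFractionRing.injective (MPoly (r + 1) ⧸ I) E) (h.trans (map_zero _).symm)
    exact h0 (Ideal.Quotient.eq_zero_iff_mem.mp h2)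
  have hx : ∀ f : MPoly (r + 1), aeval x f = algebraMap (MPoly (r + 1) ⧸ I) E
      (Ideal.Quotient.mk I f) := by
    intro f
    induction f using MvPolynomial.induction_on with
    | C a => 
      rw [aeval_C]
      rfl
    | add p q hp hq => rw [map_add, map_add, map_add, hp, hq]
    | mul_X p j hp => rw [map_mul, map_mul, map_mul, hp, aeval_X]
  have hhom : ∀ t : ℕ, ∀ f ∈ homogeneousSubmodule (Fin (r + 1)) ℂ t,
      f ∈ I ↔ aeval (fun j => (x 0)⁻¹ * x j) f = 0 := by
    intro t f hf
    have h1 : aeval (fun j => (x 0)⁻¹ * x j) f = (x 0)⁻¹ ^ t * aeval x f := by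
      rw [mem_homogeneousSubmodule] at hf
      rw [aeval_def, aeval_def, eval₂_eq, eval₂_eq, Finset.mul_sum]
      refine Finset.sum_congr rfl fun m hm => ?_
      have hd : ∑ i ∈ m.support, m i = t := by
        have := hf (mem_support_iff.mp hm)
        rw [Finsupp.weight_apply] at this
        simpa [Finsupp.sum] using this
      simp only [mul_pow, Finset.prod_mul_distrib, Finset.prod_pow_eq_pow_sum, hd]
      ring
    rw [h1, mul_eq_zero, or_iff_right (pow_ne_zero _ (inv_ne_zero hx0)), hx,
      map_eq_zero_iff _ (IsFractionRing.injective (MPoly (r + 1) ⧸ I) E),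
      Ideal.Quotient.eq_zero_iff_mem]
  obtain ⟨Φ, fΦ, aΦ, p, gen, hp, -⟩ := exists_ratField E (Fin 3 × Fin r)
  obtain ⟨D, hD⟩ := exists_ratField_derivation gen hp
  letI : Algebra ℂ Φ := ((algebraMap E Φ).comp (algebraMap ℂ E)).toAlgebra
  have : IsScalarTower ℂ E Φ := IsScalarTower.of_algebraMap_eq fun _ => rfl
  refine ⟨Φ, fΦ, inferInstance, fun j => algebraMap E Φ ((x 0)⁻¹ * x j), p,
    fun i => (D i).restrictScalars ℂ, ?_, hD, fun i j => (D i).map_algebraMap _, ?_⟩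
  · simp only [inv_mul_cancel₀ hx0, _root_.map_one]
  · intro t f hf
    have : aeval (fun j => algebraMap E Φ ((x 0)⁻¹ * x j)) f =
        algebraMap E Φ (aeval (fun j => (x 0)⁻¹ * x j) f) := by
      have h := (IsScalarTower.toAlgHom ℂ E Φ).comp_apply (aeval (fun j => (x 0)⁻¹ * x j)) f
      rw [comp_aeval] at h
      exact h
    rw [hhom t f hf, this, map_eq_zero_iff _ (algebraMap E Φ).injective]

end ConeIdeal

end

/-! ### Generic projections -/

section

open Submodule Module MvPolynomial

section ProjBase

/-- `F = k(p, w)` is the field of a generic linear projection to three-space, with an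
indeterminate third coordinate `w`; `K = k(-w, p_2)` is the field of a generic hyperplane,
embedded in `F` as the fibre over `w` of the third coordinate. -/
structure ProjBase (k K F : Type) [Field k] [Field K] [Field F] [Algebra k K] [Algebra k F]
    [Algebra K F] {r : ℕ} (c : Option (Fin 3 × Fin r) → F) (cK : Fin (r + 1) → K) : Prop where
  genF : ∀ x : F, ∃ P Q : MvPolynomial (Option (Fin 3 × Fin r)) k,
    aeval c Q ≠ 0 ∧ x * aeval c Q = aeval c P
  indF : AlgebraicIndependent k c
  genK : ∀ x : K, ∃ P Q : MvPolynomial (Fin (r + 1)) k, aeval cK Q ≠ 0 ∧ x * aeval cK Q = aeval cK P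
  indK : AlgebraicIndependent k cK
  map_zero : algebraMap K F (cK 0) = - c none
  map_succ : ∀ l : Fin r, algebraMap K F (cK l.succ) = c (some (2, l))

theorem transcendental_neg {R A : Type} [CommRing R] [CommRing A] [Algebra R A] {a : A}
    (h : Transcendental R a) : Transcendental R (-a) := fun h2 => h (by simpa using h2.neg)

/-- Negating one member of an algebraically independent family and viewing the remaining ones
through `Fin.succ`. -/
theorem indep_hyperplane {k F : Type} [Field k] [Field F] [Algebra k F] {r : ℕ}
    {c : Option (Fin 3 × Fin r) → F} (h : AlgebraicIndependent k c) :
    AlgebraicIndependent k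
      (Fin.cons (- c none) (fun l => c (some (2, l))) : Fin (r + 1) → F) := by
  have h1 : AlgebraicIndependent k (fun o : Option (Fin 3 × Fin r) => o.elim (c none)
      (fun i => c (some i))) := by
    convert h using 2 with o
    cases o <;> rfl
  have h2 := AlgebraicIndependent.option_iff.mp h1
  have h3 := AlgebraicIndependent.option_iff.mpr ⟨h2.1, transcendental_neg h2.2⟩
  have h4 := h3.comp (Fin.cons none (fun l => some (2, l)) : Fin (r + 1) → _) (by
    intro a b hab
    induction a using Fin.cases with
    | zero =>
      induction b using Fin.cases with
      | zero => rfl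
      | succ b => simp at hab
    | succ a =>
      induction b using Fin.cases with
      | zero => simp at hab
      | succ b => simpa using hab)
  convert h4 using 1
  ext j
  induction j using Fin.cases with
  | zero => rfl
  | succ j => rfl

/-- Fields `K ⊆ F` of rational functions for a generic projection exist, and `F` embeds wherever there
are independent elements. -/
theorem exists_projBase (k : Type) [Field k] (r : ℕ) :
    ∃ (K F : Type) (_ : Field K) (_ : Field F) (_ : Algebra k K) (_ : Algebra k F)
      (_ : Algebra K F) (_ : IsScalarTower k K F) (c : Option (Fin 3 × Fin r) → F)
      (cK : Fin (r + 1) → K), ProjBase k K F c cK ∧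
      ∀ (Φ : Type) [Field Φ] [Algebra k Φ] (c' : Option (Fin 3 × Fin r) → Φ),
        AlgebraicIndependent k c' → ∃ f : F →ₐ[k] Φ, ∀ j, f (c j) = c' j := by
  obtain ⟨F, fF, aF, c, genF, indF, univF⟩ := exists_ratField k (Option (Fin 3 × Fin r))
  obtain ⟨K, fK, aK, cK, genK, indK, univK⟩ := exists_ratField k (Fin (r + 1))
  obtain ⟨f, hf⟩ := univK F _ (indep_hyperplane indF)
  letI : Algebra K F := f.toRingHom.toAlgebra
  have : IsScalarTower k K F := IsScalarTower.of_algebraMap_eq fun x => (f.commutes x).symm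
  exact ⟨K, F, fK, fF, aK, aF, inferInstance, this, c, cK,
    ⟨genF, indF, genK, indK, hf 0, fun l => hf l.succ⟩, univF⟩

/-- The coefficients of a generic projection together with its third coordinate at the generic
point of a positive-dimensional variety are algebraically independent. -/
theorem indep_proj {k Φ : Type} [Field k] [Field Φ] [Algebra k Φ] {r : ℕ}
    {y : Fin (r + 1) → Φ} {p : Fin 3 × Fin r → Φ} (y0 : y 0 = 1)
    (hinf : ∀ N, ∃ t, N < finrank k (linSys k y ^ t : Submodule k Φ))
    (hp : AlgebraicIndependent (Algebra.adjoin k (Set.range y)) p) :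
    AlgebraicIndependent k (fun o : Option (Fin 3 × Fin r) =>
      o.elim (∑ l, p (2, l) * y l.succ) p) := by
  set w := ∑ l, p (2, l) * y l.succ with hw
  have h1 : AlgebraicIndependent k
      (Fin.cons (-w) (fun l => p (2, l)) : Fin (r + 1) → Φ) := by
    refine genSec_indep y0 hinf ?_ ?_
    · rw [Fin.sum_univ_succ]
      simp [y0, hw]
    · exact hp.comp (fun l => (2, l)) fun a b h => by simpa using h
  have h2 : AlgebraicIndependent (Algebra.adjoin k (Set.range y))
      (Sum.elim (fun i : Fin 2 × Fin r => p (i.1.castSucc, i.2)) (fun l : Fin r => p (2, l))) := by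
    have h := hp.comp (Sum.elim (fun i : Fin 2 × Fin r => (i.1.castSucc, i.2))
      (fun l : Fin r => ((2 : Fin 3), l))) (by
        rintro (⟨a, i⟩ | l) (⟨b, j⟩ | m) h
        · simpa using h
        · fin_cases a <;> simp at h
        · fin_cases b <;> simp at h
        · simpa using h)
    convert h using 1
    ext (i | l) <;> rfl
  have h3 := indep_split h2
  have h4 := h1.sumElim (indep_acl (B' := Algebra.adjoin k (Set.range
    (Fin.cons (-w) (fun l => p (2, l)) : Fin (r + 1) → Φ))) Subtype.val_injective (fun b => ?_) h3)
  · refine AlgebraicIndependent.option_iff.mpr ?_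
    have h5 := h4.comp (fun o : Option (Fin 3 × Fin r) => o.elim (Sum.inr 0) fun i =>
      Fin.lastCases (motive := fun _ => (Fin 2 × Fin r) ⊕ Fin (r + 1)) (Sum.inr i.2.succ)
        (fun a => Sum.inl (a, i.2)) i.1) (by
        rintro (_ | ⟨a, i⟩) (_ | ⟨b, j⟩) h
        · rfl
        · fin_cases b
          · cases h
          · cases h
          · exact absurd (Sum.inr_injective h) (Fin.succ_ne_zero _).symm
        · fin_cases a
          · cases h
          · cases h
          · exact absurd (Sum.inr_injective h) (Fin.succ_ne_zero _)
        · fin_cases a <;> fin_cases b <;> first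
          | cases h; rfl
          | cases h
          | (have := Fin.succ_injective _ (Sum.inr_injective h); rw [show i = j from this]))
    have h6 : AlgebraicIndependent k (fun o : Option (Fin 3 × Fin r) => o.elim (-w) p) := by
      convert h5 using 1
      ext (_ | ⟨a, i⟩)
      · rfl
      · fin_cases a <;> rfl
    have h7 := AlgebraicIndependent.option_iff.mp h6
    refine ⟨h7.1, ?_⟩
    have := transcendental_neg h7.2
    rwa [neg_neg] at this
  · have hy : ∀ j, y j ∈ acl k (Set.range y ∪ Set.range fun l => p (2, l)) := fun j =>
      subset_acl _ (Or.inl ⟨j, rfl⟩)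
    have hpp : ∀ l, p (2, l) ∈ acl k (Set.range y ∪ Set.range fun l => p (2, l)) := fun l =>
      subset_acl _ (Or.inr ⟨l, rfl⟩)
    refine adjoin_mem_acl (K := k) (fun a => Subalgebra.algebraMap_mem _ a) (fun j => ?_) b
    induction j using Fin.cases with
    | zero =>
      exact neg_mem (sum_mem fun l _ => mul_mem (hpp l) (hy l.succ))
    | succ j => exact hpp j

variable {k K F Φ : Type} [Field k] [Field K] [Field F] [Field Φ] [Algebra k K] [Algebra k F]
  [Algebra K F] [Algebra k Φ] [Algebra K Φ] [Algebra F Φ] [IsScalarTower k K F]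
  [IsScalarTower k F Φ] [IsScalarTower K F Φ] [IsScalarTower k K Φ] {r : ℕ}
  {c : Option (Fin 3 × Fin r) → F} {cK : Fin (r + 1) → K} {y : Fin (r + 1) → Φ}

/-- The dual derivations kill `k[y]`, which makes the coefficients independent over it. -/
theorem ProjData.free [CharZero k] (h : ProjData k c y) :
    AlgebraicIndependent (Algebra.adjoin k (Set.range y))
      (fun i => algebraMap F Φ (c (some i))) := by
  obtain ⟨D, hD, hDy⟩ := h.der
  refine algebraicIndependent_of_derivation D hD ?_
  rintro i _ ⟨j, rfl⟩
  exact hDy i j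

/-- The hyperplane `w = p_2 · y` is a generic hyperplane section through the generic point. -/
theorem ProjBase.genSec [CharZero k] (B : ProjBase k K F c cK) (h : ProjData k c y) :
    GenSec k K y cK where
  y_zero := h.y_zero
  gen := B.genK
  indep := B.indK
  rel := by
    rw [Fin.sum_univ_succ, IsScalarTower.algebraMap_apply K F Φ, B.map_zero, h.y_zero, map_neg,
      h.w_eq, mul_one, neg_add_eq_zero]
    refine Finset.sum_congr rfl fun l _ => ?_
    rw [IsScalarTower.algebraMap_apply K F Φ, B.map_succ]
  free := by
    have h2 := h.free.comp (fun l : Fin r => ((2 : Fin 3), l)) fun a b h => by simpa using h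
    convert h2 using 2 with l
    rw [IsScalarTower.algebraMap_apply K F Φ, B.map_succ]
    rfl

/-- The coefficients `p_0, p_1` stay independent over the coordinate ring of the section. -/
theorem ProjBase.free_section [CharZero k] (B : ProjBase k K F c cK) (h : ProjData k c y) :
    AlgebraicIndependent (Algebra.adjoin K (Set.range y))
      (fun i : Fin 2 × Fin r => algebraMap F Φ (c (some (i.1.castSucc, i.2)))) := by
  have h2 : AlgebraicIndependent (Algebra.adjoin k (Set.range y))
      (Sum.elim (fun i : Fin 2 × Fin r => algebraMap F Φ (c (some (i.1.castSucc, i.2))))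
        (fun l : Fin r => algebraMap F Φ (c (some (2, l))))) := by
    have h := h.free.comp (Sum.elim (fun i : Fin 2 × Fin r => (i.1.castSucc, i.2))
      (fun l : Fin r => ((2 : Fin 3), l))) (by
        rintro (⟨a, i⟩ | l) (⟨b, j⟩ | m) h
        · simpa using h
        · fin_cases a <;> simp at h
        · fin_cases b <;> simp at h
        · simpa using h)
    convert h using 1
    ext (i | l) <;> rfl
  refine indep_acl Subtype.val_injective (fun b => ?_) (indep_split h2)
  have hy : ∀ j, y j ∈ acl k (Set.range y ∪ Set.range fun l => algebraMap F Φ (c (some (2, l)))) :=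
    fun j => subset_acl _ (Or.inl ⟨j, rfl⟩)
  have hpp : ∀ l, algebraMap F Φ (c (some (2, l))) ∈
      acl k (Set.range y ∪ Set.range fun l => algebraMap F Φ (c (some (2, l)))) := fun l =>
    subset_acl _ (Or.inr ⟨l, rfl⟩)
  refine adjoin_mem_acl (K := K) (gen_mem_acl B.genK fun j => ?_) hy b
  rw [IsScalarTower.algebraMap_apply K F Φ]
  induction j using Fin.cases with
  | zero =>
    rw [B.map_zero, map_neg, h.w_eq]
    exact neg_mem (sum_mem fun l _ => mul_mem (hpp l) (hy l.succ))
  | succ j =>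
    rw [B.map_succ]
    exact hpp j

/-- `F` is generated over `K` by `p_0, p_1`. -/
theorem ProjBase.gen_section (B : ProjBase k K F c cK) (f : F) :
    ∃ P Q : MvPolynomial (Fin 2 × Fin r) K,
      aeval (fun i : Fin 2 × Fin r => algebraMap F Φ (c (some (i.1.castSucc, i.2)))) Q ≠ 0 ∧
      algebraMap F Φ f *
        aeval (fun i : Fin 2 × Fin r => algebraMap F Φ (c (some (i.1.castSucc, i.2)))) Q =
        aeval (fun i : Fin 2 × Fin r => algebraMap F Φ (c (some (i.1.castSucc, i.2)))) P := by
  let σ : Option (Fin 3 × Fin r) → MvPolynomial (Fin 2 × Fin r) K := fun o =>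
    o.elim (C (- cK 0)) fun i =>
      Fin.lastCases (motive := fun _ => MvPolynomial (Fin 2 × Fin r) K) (C (cK i.2.succ))
        (fun a => X (a, i.2)) i.1
  have hσ : ∀ P : MvPolynomial (Option (Fin 3 × Fin r)) k,
      aeval (fun i : Fin 2 × Fin r => algebraMap F Φ (c (some (i.1.castSucc, i.2)))) (aeval σ P) =
        algebraMap F Φ (aeval c P) := by
    intro P
    have h1 : ∀ o, aeval (fun i : Fin 2 × Fin r => algebraMap F Φ (c (some (i.1.castSucc, i.2))))
        (σ o) = algebraMap F Φ (c o) := by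
      rintro (_ | ⟨a, i⟩)
      · change aeval _ (C (- cK 0)) = _
        rw [aeval_C, IsScalarTower.algebraMap_apply K F Φ, map_neg, B.map_zero, neg_neg]
      · fin_cases a
        · exact aeval_X _ ((0 : Fin 2), i)
        · exact aeval_X _ ((1 : Fin 2), i)
        · change aeval _ (C (cK i.succ)) = _
          rw [aeval_C, IsScalarTower.algebraMap_apply K F Φ, B.map_succ]
          rfl
    have h2 := ((aeval (R := K) (fun i : Fin 2 × Fin r => algebraMap F Φ
      (c (some (i.1.castSucc, i.2))))).restrictScalars k).comp_apply (aeval σ) P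
    have h3 := (IsScalarTower.toAlgHom k F Φ).comp_apply (aeval c) P
    rw [comp_aeval] at h2 h3
    refine h2.symm.trans (Eq.trans ?_ h3)
    congr 1
    exact congrArg _ (funext h1)
  obtain ⟨P, Q, hQ, hPQ⟩ := B.genF f
  refine ⟨aeval σ P, aeval σ Q, ?_, ?_⟩
  · rw [hσ]
    exact (map_ne_zero _).mpr hQ
  · rw [hσ, hσ, ← hPQ, map_mul]

/-- Passing from `K` to `F` does not change dimensions of spaces of functions. -/
theorem ProjBase.finrank_linSys [CharZero k] (B : ProjBase k K F c cK) (h : ProjData k c y) (t : ℕ) :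
    finrank F (linSys F y ^ t : Submodule F Φ) = finrank K (linSys K y ^ t : Submodule K Φ) := by
  rw [← span_linSys_pow (k := K) y t]
  exact finrank_span_of_free (B.free_section h) B.gen_section _ (linSys_pow_le_adjoin y t)

end ProjBase

end

/-! ### Uniform position for curves and surfaces -/

section

open Submodule Module MvPolynomial

section NoIntermediate

theorem gen_iff_mem_adjoin {k K ι : Type} [Field k] [Field K] [Algebra k K] {c : ι → K} {x : K} :
    (∃ P Q : MvPolynomial ι k, aeval c Q ≠ 0 ∧ x * aeval c Q = aeval c P) ↔
      x ∈ IntermediateField.adjoin k (Set.range c) := by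
  rw [IntermediateField.mem_adjoin_range_iff]
  constructor
  · rintro ⟨P, Q, hQ, h⟩
    exact ⟨P, Q, by rw [← h, mul_div_cancel_right₀ _ hQ]⟩
  · rintro ⟨P, Q, h⟩
    by_cases hQ : aeval c Q = 0
    · exact ⟨0, 1, by simp, by simp [h, hQ]⟩
    · exact ⟨P, Q, hQ, by rw [h, div_mul_cancel₀ _ hQ]⟩

/-- Generators of a tower `K' / K / k` of fields of rational functions. -/
theorem gen_trans {k K K' ι ι' : Type} [Field k] [Field K] [Field K'] [Algebra k K] [Algebra K K']
    [Algebra k K'] [IsScalarTower k K K'] {c : ι → K} {c' : ι' → K'}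
    (gen : ∀ x : K, ∃ P Q : MvPolynomial ι k, aeval c Q ≠ 0 ∧ x * aeval c Q = aeval c P)
    (gen' : ∀ x : K', ∃ P Q : MvPolynomial ι' K, aeval c' Q ≠ 0 ∧ x * aeval c' Q = aeval c' P)
    (E : IntermediateField k K') (hc : ∀ i, algebraMap K K' (c i) ∈ E) (hc' : ∀ i, c' i ∈ E)
    (x : K') : x ∈ E := by
  have hK : ∀ a : K, algebraMap K K' a ∈ E := by
    intro a
    obtain ⟨P, Q, hQ, h⟩ := gen a
    have hP : ∀ P : MvPolynomial ι k, algebraMap K K' (aeval c P) ∈ E := by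
      intro P
      have h := (IsScalarTower.toAlgHom k K K').comp_apply (aeval c) P
      rw [comp_aeval] at h
      rw [show algebraMap K K' (aeval c P) = _ from h.symm]
      rw [aeval_def, eval₂_eq]
      exact sum_mem fun m _ => mul_mem (E.algebraMap_mem _) (prod_mem fun i _ => pow_mem (hc i) _)
    have h2 : algebraMap K K' a = algebraMap K K' (aeval c P) / algebraMap K K' (aeval c Q) := by
      rw [← h, map_mul, mul_div_cancel_right₀ _ ((map_ne_zero _).mpr hQ)]
    rw [h2]
    exact div_mem (hP P) (hP Q)
  have hP : ∀ P : MvPolynomial ι' K, aeval c' P ∈ E := by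
    intro P
    rw [aeval_def, eval₂_eq]
    exact sum_mem fun m _ => mul_mem (hK _) (prod_mem fun i _ => pow_mem (hc' i) _)
  obtain ⟨P, Q, hQ, h⟩ := gen' x
  rw [← mul_div_cancel_right₀ x hQ, h]
  exact div_mem (hP P) (hP Q)

/-- Uniform position for a curve: its generic hyperplane section has no intermediate field. -/
theorem GenSec.no_intermediate {k K Φ : Type} [Field k] [CharZero k] [IsAlgClosed k] [Field K]
    [Field Φ] [Algebra k K] [Algebra K Φ] [Algebra k Φ] [IsScalarTower k K Φ] {r : ℕ}
    {c : Fin (r + 1) → K} {y : Fin (r + 1) → Φ} (S : GenSec k K y c)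
    (L : IntermediateField K Φ) [FiniteDimensional K L]
    (hL : L.toSubalgebra = Algebra.adjoin K (Set.range y))
    (H : IntermediateField K Φ) (hH : H ≤ L) : H = ⊥ ∨ H = L := by
  refine _root_.no_intermediate (k := k) (q := 1) (c := fun _ => c) one_pos
    (S.indep.comp Prod.snd ?_) (fun x => ?_) S.y_zero (fun _ => S.rel) ?_ L hL H hH
  · rintro ⟨a, i⟩ ⟨b, j⟩ h
    exact Prod.ext (Subsingleton.elim _ _) h
  · rw [gen_iff_mem_adjoin]
    have h := gen_iff_mem_adjoin.mp (S.gen x)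
    refine IntermediateField.adjoin.mono _ _ _ ?_ h
    rintro _ ⟨j, rfl⟩
    exact ⟨(0, j), rfl⟩
  · exact S.free.comp Prod.snd (by
      rintro ⟨a, i⟩ ⟨b, j⟩ h
      exact Prod.ext (Subsingleton.elim _ _) h)

/-- Independence over `k[y]` of a family in `K`, and over `K[y]` of a second family, add up. -/
theorem indep_sum_adjoin {k K Φ ι ι' κ : Type} [Field k] [Field K] [Field Φ] [Algebra k K]
    [Algebra K Φ] [Algebra k Φ] [IsScalarTower k K Φ] {y : κ → Φ} {x : ι → K} {x' : ι' → Φ}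
    (h : AlgebraicIndependent (Algebra.adjoin k (Set.range y)) (fun i => algebraMap K Φ (x i)))
    (h' : AlgebraicIndependent (Algebra.adjoin K (Set.range y)) x') :
    AlgebraicIndependent (Algebra.adjoin k (Set.range y))
      (Sum.elim x' (fun i => algebraMap K Φ (x i))) := by
  refine h.sumElim (indep_of_algebraic (B := Algebra.adjoin K (Set.range y))
    Subtype.val_injective (fun b => ?_) h')
  have hb : (b : Φ) ∈ Algebra.adjoin K (Set.range y) := by
    refine Algebra.adjoin_induction (p := fun z _ => z ∈ Algebra.adjoin K (Set.range y))
      ?_ ?_ ?_ ?_ b.2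
    · rintro _ ⟨i, rfl⟩
      exact Subalgebra.algebraMap_mem _ _
    · intro a
      have : Algebra.adjoin k (Set.range y) ≤
          (Algebra.adjoin K (Set.range y)).restrictScalars k :=
        Algebra.adjoin_le Algebra.subset_adjoin
      exact this a.2
    · exact fun _ _ _ _ h1 h2 => add_mem h1 h2
    · exact fun _ _ _ _ h1 h2 => mul_mem h1 h2
  exact isAlgebraic_algebraMap (⟨b, hb⟩ : Algebra.adjoin K (Set.range y))

/-- The coefficients of two successive generic hyperplanes are independent over `k[y]`. -/
theorem GenSec.free_sum {k K K' Φ : Type} [Field k] [Field K]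
    [Field K'] [Field Φ] [Algebra k K] [Algebra K Φ] [Algebra k Φ] [IsScalarTower k K Φ]
    [Algebra K K'] [Algebra K' Φ] [IsScalarTower K K' Φ] {r : ℕ}
    {c : Fin (r + 1) → K} {c' : Fin (r + 1) → K'} {y : Fin (r + 1) → Φ} (S1 : GenSec k K y c)
    (S2 : GenSec K K' y c') : AlgebraicIndependent (Algebra.adjoin k (Set.range y))
      (Sum.elim (fun j : Fin r => algebraMap K' Φ (c' j.succ))
        (fun j : Fin r => algebraMap K Φ (c j.succ))) :=
  indep_sum_adjoin S1.free S2.free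

/-- Uniform position for a surface: its section by two generic hyperplanes has no
intermediate field. -/
theorem GenSec.no_intermediate₂ {k K K' Φ : Type} [Field k] [CharZero k] [IsAlgClosed k] [Field K]
    [Field K'] [Field Φ] [Algebra k K] [Algebra K Φ] [Algebra k Φ] [IsScalarTower k K Φ]
    [Algebra K K'] [Algebra K' Φ] [IsScalarTower K K' Φ] [Algebra k K'] [IsScalarTower k K K']
    [IsScalarTower k K' Φ] {r : ℕ}
    {c : Fin (r + 1) → K} {c' : Fin (r + 1) → K'} {y : Fin (r + 1) → Φ} (S1 : GenSec k K y c)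
    (S2 : GenSec K K' y c')
    (L : IntermediateField K' Φ) [FiniteDimensional K' L]
    (hL : L.toSubalgebra = Algebra.adjoin K' (Set.range y))
    (H : IntermediateField K' Φ) (hH : H ≤ L) : H = ⊥ ∨ H = L := by
  have hinj : Function.Injective (fun ij : Fin 2 × Fin (r + 1) =>
      if ij.1 = 0 then (Sum.inr ij.2 : Fin (r + 1) ⊕ Fin (r + 1)) else Sum.inl ij.2) := by
    rintro ⟨a, i⟩ ⟨b, j⟩ h
    fin_cases a <;> fin_cases b <;> simp at h <;> simp [h]
  have hinj' : Function.Injective (fun ij : Fin 2 × Fin r =>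
      if ij.1 = 0 then (Sum.inr ij.2 : Fin r ⊕ Fin r) else Sum.inl ij.2) := by
    rintro ⟨a, i⟩ ⟨b, j⟩ h
    fin_cases a <;> fin_cases b <;> simp at h <;> simp [h]
  refine _root_.no_intermediate (k := k) (q := 2) (c := ![fun j => algebraMap K K' (c j), c'])
    two_pos ?_ (fun x => ?_) S1.y_zero ?_ ?_ L hL H hH
  · have h1 : AlgebraicIndependent k (fun j => algebraMap K K' (c j)) :=
      S1.indep.map' (f := IsScalarTower.toAlgHom k K K') (algebraMap K K').injective
    have h2 := (h1.sumElim_of_tower (S := K) (y := c')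
      (by rintro _ ⟨j, rfl⟩; exact ⟨c j, rfl⟩) S2.indep).comp _ hinj
    convert h2 using 1
    ext ⟨a, i⟩
    fin_cases a <;> rfl
  · rw [gen_iff_mem_adjoin]
    refine gen_trans S1.gen S2.gen _ (fun i => ?_) (fun i => ?_) x
    · exact IntermediateField.subset_adjoin _ _ ⟨(0, i), rfl⟩
    · exact IntermediateField.subset_adjoin _ _ ⟨(1, i), rfl⟩
  · intro i
    fin_cases i
    · have := S1.rel
      simp only [IsScalarTower.algebraMap_apply K K' Φ] at this
      exact this
    · exact S2.rel
  · have h2 := (S1.free_sum S2).comp _ hinj'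
    have h3 : (fun ij : Fin 2 × Fin r => algebraMap K' Φ
        ((![fun j => algebraMap K K' (c j), c'] : Fin 2 → Fin (r + 1) → K') ij.1 ij.2.succ)) =
        Sum.elim (fun j : Fin r => algebraMap K' Φ (c' j.succ))
          (fun j : Fin r => algebraMap K Φ (c j.succ)) ∘ (fun ij : Fin 2 × Fin r =>
            if ij.1 = 0 then (Sum.inr ij.2 : Fin r ⊕ Fin r) else Sum.inl ij.2) := by
      funext ⟨a, i⟩
      refine Fin.cases ?_ (fun a => ?_) a
      · simp [IsScalarTower.algebraMap_apply K K' Φ]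
      · have : a = 0 := Subsingleton.elim _ _
        subst this
        simp
    rw [h3]
    exact h2

end NoIntermediate

end

/-! ### The degree of the plane projection -/

section

open Submodule Module MvPolynomial

section PlaneDegree

variable {k K F Φ : Type} [Field k] [Field K] [Field F] [Field Φ] [Algebra k K] [Algebra k F]
  [Algebra K F] [Algebra k Φ] [Algebra K Φ] [Algebra F Φ] [IsScalarTower k K F]
  [IsScalarTower k F Φ] [IsScalarTower K F Φ] [IsScalarTower k K Φ] {r : ℕ}
  {c : Option (Fin 3 × Fin r) → F} {cK : Fin (r + 1) → K} {y : Fin (r + 1) → Φ}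
  {dF : Option (Fin 3 × Fin r) → Derivation k F F}

theorem planePt_mem (c : Option (Fin 3 × Fin r) → F) (y : Fin (r + 1) → Φ) (a : Fin 2) :
    planePt c y a ∈ linSys F y := by
  refine sum_mem fun l _ => ?_
  rw [← Algebra.smul_def]
  exact Submodule.smul_mem _ _ (mem_linSys y _)

theorem map_restrict_le (h0 : y 0 = 1) (t : ℕ) :
    (restrictTotalDegree (Fin 2) F t).map (aeval (planePt c y)).toLinearMap ≤
      linSys F y ^ t := by
  rintro _ ⟨H, hH, rfl⟩
  rw [SetLike.mem_coe, mem_restrictTotalDegree] at hH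
  rw [AlgHom.toLinearMap_apply, aeval_def, eval₂_eq]
  refine sum_mem fun m hm => ?_
  rw [← Algebra.smul_def]
  refine Submodule.smul_mem _ _ ?_
  have h1 : ∑ i ∈ m.support, m i ≤ t := (le_totalDegree hm).trans hH
  refine linSys_pow_mono h0 h1 ?_
  generalize m.support = S
  induction S using Finset.induction_on with
  | empty => simp
  | insert a S ha ih =>
    rw [Finset.prod_insert ha, Finset.sum_insert ha, pow_add]
    exact Submodule.mul_mem_mul (Submodule.pow_mem_pow _ (planePt_mem c y a) _) ih

/-- A generic projection to the plane is birational on the hyperplane section: the coordinates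
`y` are rational functions of the projected point. -/
theorem ProjData.adjoin_planePt (h : ProjData k c y)
    (gen : ∀ x : F, ∃ P Q : MvPolynomial (Option (Fin 3 × Fin r)) k,
      aeval c Q ≠ 0 ∧ x * aeval c Q = aeval c P)
    (hdF : ∀ i j, dF i (c j) = if i = j then 1 else 0) [CharZero F]
    [FiniteDimensional F (Subalgebra.toSubmodule (Algebra.adjoin F (Set.range (planePt c y))))]
    {G : MvPolynomial (Fin 2) F} (hGz : aeval (planePt c y) G = 0)
    (he : 1 ≤ G.totalDegree)
    (hmin : ∀ H : MvPolynomial (Fin 2) F, aeval (planePt c y) H = 0 →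
      H.totalDegree < G.totalDegree → H = 0) :
    Algebra.adjoin F (Set.range (planePt c y)) = Algebra.adjoin F (Set.range y) := by
  refine le_antisymm (Algebra.adjoin_le ?_) (Algebra.adjoin_le ?_)
  · rintro _ ⟨a, rfl⟩
    have := linSys_pow_le_adjoin (k := F) y 1 (by rw [pow_one]; exact planePt_mem c y a)
    exact this
  · rintro _ ⟨j, rfl⟩
    induction j using Fin.cases with
    | zero => 
      rw [h.y_zero]
      exact one_mem _
    | succ l =>
      obtain ⟨i, hi⟩ := exists_pderiv_ne he
      have hne : aeval (planePt c y) (pderiv i G) ≠ 0 := fun h0 => hi (hmin _ h0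
        (totalDegree_pderiv_lt i G (n := G.totalDegree - 1) (by omega) |>.trans_lt (by omega)))
      have hmem : ∀ H : MvPolynomial (Fin 2) F, aeval (planePt c y) H ∈
          Algebra.adjoin F (Set.range (planePt c y)) := fun H => by
        rw [Algebra.adjoin_range_eq_range_aeval]
        exact ⟨H, rfl⟩
      have hInteg : Algebra.IsAlgebraic F (Algebra.adjoin F (Set.range (planePt c y))) := by
        have : FiniteDimensional F (Algebra.adjoin F (Set.range (planePt c y))) :=
          ‹FiniteDimensional F (Subalgebra.toSubmodule
            (Algebra.adjoin F (Set.range (planePt c y))))›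
        exact Algebra.IsAlgebraic.of_finite F _
      have hinv : (aeval (planePt c y) (pderiv i G))⁻¹ ∈
          Algebra.adjoin F (Set.range (planePt c y)) := by
        have := Subalgebra.inv_mem_of_algebraic (A := Algebra.adjoin F (Set.range (planePt c y)))
          (x := ⟨_, hmem (pderiv i G)⟩) 
          (isAlgebraic_algebraMap_iff (S := Algebra.adjoin F (Set.range (planePt c y)))
            Subtype.val_injective |>.mpr (hInteg.isAlgebraic ⟨_, hmem (pderiv i G)⟩))
        exact this
      rw [← mul_inv_cancel_right₀ hne (y l.succ), h.coord_eq gen hdF hGz]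
      exact mul_mem (neg_mem (hmem _)) hinv

/-- Castelnuovo's bound: the genus is at most the sum of the failures of the points of a hyperplane
section to impose independent conditions on forms. -/
theorem GenSec.genus_le_sum {c : Fin (r + 1) → K} (S : GenSec k K y c) {d g : ℤ} {N : ℕ}
    (hH : ∀ t : ℕ, N ≤ t → (finrank k (linSys k y ^ t : Submodule k Φ) : ℤ) = d * t + 1 - g)
    (T : ℕ) (hT : N ≤ T) :
    g ≤ ∑ i ∈ Finset.range T,
      (d - (finrank K (linSys K y ^ (i + 1) : Submodule K Φ) : ℤ)) := by
  have h1 : ∀ T : ℕ, ∑ i ∈ Finset.range T, (finrank K (linSys K y ^ (i + 1) : Submodule K Φ) : ℤ)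
      + 1 ≤ finrank k (linSys k y ^ T : Submodule k Φ) := by
    intro T
    induction T with
    | zero =>
      have := finrank_linSys_pow_pos (k := k) S.y_zero 0
      simp only [Finset.range_zero, Finset.sum_empty, zero_add]
      exact_mod_cast this
    | succ T ih =>
      have := S.linSys_step T
      rw [Finset.sum_range_succ]
      zify at this
      linarith
  have h2 := h1 T
  rw [hH T hT] at h2
  rw [Finset.sum_sub_distrib, Finset.sum_const, Finset.card_range, nsmul_eq_mul]
  linarith

/-- The plane projection of a generic hyperplane section of a curve of large genus lies on a plane
curve `G` of degree at most `s`, and `G` divides every curve of degree at most `3 deg G` through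
the projected points. -/
theorem ProjBase.exists_plane_curve [CharZero k] [IsAlgClosed k] (B : ProjBase k K F c cK)
    (h : ProjData k c y) (hdF : ∀ i j, dF i (c j) = if i = j then 1 else 0) {s d g : ℤ} {N : ℕ}
    (hH : ∀ t : ℕ, N ≤ t → (finrank k (linSys k y ^ t : Submodule k Φ) : ℤ) = d * t + 1 - g)
    (hs : 3 ≤ s) (hd : s ^ 3 < d) (hd3 : 30 < d) (hg : (d - 1) ^ 2 - s * (d - 1) ≤ 2 * s * g) :
    ∃ G : MvPolynomial (Fin 2) F, Prime G ∧ aeval (planePt c y) G = 0 ∧ 1 ≤ G.totalDegree ∧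
      (∀ H : MvPolynomial (Fin 2) F, aeval (planePt c y) H = 0 →
        H.totalDegree < G.totalDegree → H = 0) ∧ (G.totalDegree : ℤ) ≤ s ∧
      ∀ H : MvPolynomial (Fin 2) F, H.totalDegree ≤ 3 * G.totalDegree →
        aeval (planePt c y) H = 0 → G ∣ H := by
  have S := B.genSec h
  have hF0 : CharZero F := charZero_of_injective_algebraMap (algebraMap k F).injective
  obtain ⟨hfin, hdeg⟩ := curve_section_finrank S hH
  obtain ⟨L, hL, hLfin⟩ := exists_field_adjoin hfin
  have hNI := S.no_intermediate L hL
  have hLd : (finrank K L : ℤ) = d := by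
    rw [← hdeg, ← hL]
    rfl
  -- dimensions over `F`
  have hvle : ∀ t, finrank K (linSys K y ^ t : Submodule K Φ) ≤
      finrank K (Subalgebra.toSubmodule (Algebra.adjoin K (Set.range y))) := fun t =>
    Submodule.finrank_mono (linSys_pow_le_adjoin y t)
  obtain ⟨hfinF, hFle⟩ := finite_adjoin_of_bounded (K := F) h.y_zero
    (D := finrank K (Subalgebra.toSubmodule (Algebra.adjoin K (Set.range y))))
    fun t => (B.finrank_linSys h t).trans_le (hvle t)
  have hdegF : (finrank F (Subalgebra.toSubmodule (Algebra.adjoin F (Set.range y))) : ℤ) = d := by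
    refine le_antisymm (by rw [← hdeg]; exact_mod_cast hFle) ?_
    obtain ⟨t, ht⟩ := exists_linSys_pow_eq (k := K) h.y_zero hfin
    have h1 : finrank K (Subalgebra.toSubmodule (Algebra.adjoin K (Set.range y))) ≤
        finrank F (Subalgebra.toSubmodule (Algebra.adjoin F (Set.range y))) := by
      rw [← ht t le_rfl, ← B.finrank_linSys h t]
      exact Submodule.finrank_mono (linSys_pow_le_adjoin y t)
    rw [← hdeg]
    exact_mod_cast h1
  have hzle : Algebra.adjoin F (Set.range (planePt c y)) ≤ Algebra.adjoin F (Set.range y) := by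
    refine Algebra.adjoin_le ?_
    rintro _ ⟨a, rfl⟩
    exact linSys_pow_le_adjoin (k := F) y 1 (by rw [pow_one]; exact planePt_mem c y a)
  have hfinz : FiniteDimensional F
      (Subalgebra.toSubmodule (Algebra.adjoin F (Set.range (planePt c y)))) :=
    Submodule.finiteDimensional_of_le (Subalgebra.toSubmodule.monotone hzle)
  obtain ⟨G, hG, hGz, he, hmin⟩ := exists_minimal_curve (F := F) (planePt c y)
  have hadj := h.adjoin_planePt B.genF hdF hGz he hmin
  have hdegz : (finrank F (Subalgebra.toSubmodule
      (Algebra.adjoin F (Set.range (planePt c y)))) : ℤ) = d := by rw [hadj, hdegF]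
  have hbez : ∀ H : MvPolynomial (Fin 2) F, aeval (planePt c y) H = 0 →
      (H.totalDegree : ℤ) * G.totalDegree < d → G ∣ H := by
    intro H hHz hlt
    refine dvd_of_bezout hG hGz hHz ?_
    rw [← hdegz] at hlt
    exact_mod_cast hlt
  have hes : (G.totalDegree : ℤ) ≤ s := by
    by_contra hcon
    refine absurd (plane_degree_numeric (s := s) (d := d) (e := G.totalDegree) (g := g)
      (v := fun t => (finrank K (linSys K y ^ t : Submodule K Φ) : ℤ)) (T0 := N) hs hd hd3
      (by linarith [Int.not_le.mp hcon, Int.add_one_le_iff.mpr (Int.not_le.mp hcon)]) ?_ ?_ ?_ ?_ ?_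
      (fun T hT => S.genus_le_sum hH T hT)) (not_lt.mpr hg)
    · intro a b hab
      exact Int.ofNat_le.mpr (finrank_linSys_mono (K := K) h.y_zero hab)
    · intro t
      rw [← hdeg]
      exact_mod_cast hvle t
    -- Uniform position and the Cauchy–Davenport inequality.
    · intro i j
      have := finrank_mul_ge h.y_zero L hL hNI i j
      rw [← hLd]
      exact_mod_cast this
    · intro t ht
      have h1 := finrank_eval_small (F := F) (z := planePt c y) (t := t) fun H hHt hHz =>
        hmin H hHz (by omega)
      have h2 := Submodule.finrank_mono (map_restrict_le (F := F) (c := c) h.y_zero t)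
      rw [B.finrank_linSys h t] at h2
      have h3 := h1.trans (Nat.mul_le_mul_left 2 h2)
      exact_mod_cast h3
    -- Below the Bézout bound `t deg G < d` only the multiples of `G` pass through the points.
    · intro t het htd
      have het' : G.totalDegree ≤ t := by exact_mod_cast het
      obtain ⟨u, rfl⟩ := Nat.exists_eq_add_of_le' het'
      have h1 := finrank_eval_mid (F := F) (z := planePt c y) hG.ne_zero (u := u)
        fun H hHt hHz => hbez H hHz (lt_of_le_of_lt (by
          have : (H.totalDegree : ℤ) ≤ ((u + G.totalDegree : ℕ) : ℤ) := by exact_mod_cast hHt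
          exact mul_le_mul_of_nonneg_right this (by positivity)) htd)
      have h2 := Submodule.finrank_mono
        (map_restrict_le (F := F) (c := c) h.y_zero (u + G.totalDegree))
      rw [B.finrank_linSys h] at h2
      zify at h1 h2
      push_cast
      nlinarith [h1, h2]
  refine ⟨G, hG, hGz, he, hmin, hes, fun H hHt hHz => hbez H hHz (lt_of_le_of_lt ?_ hd)⟩
  have h1 : (H.totalDegree : ℤ) ≤ 3 * G.totalDegree := by exact_mod_cast hHt
  have h2 : (0 : ℤ) ≤ G.totalDegree := by positivity
  calc (H.totalDegree : ℤ) * G.totalDegree ≤ (3 * s) * s :=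
        mul_le_mul (h1.trans (by linarith)) hes h2 (by linarith)
    _ ≤ s ^ 3 := by nlinarith [mul_nonneg (by linarith : (0 : ℤ) ≤ s) (by linarith : (0 : ℤ) ≤ s)]

end PlaneDegree

end

/-! ### Plane curves over a coordinate line -/

section

open Submodule Module MvPolynomial

section SurfaceDegree

/-- A nonzero polynomial in one variable is not a multiple of a prime involving the other. -/
theorem transcendental_of_pderiv {F M : Type} [Field F] [Field M] [Algebra F M] {ζ : Fin 2 → M}
    {G : MvPolynomial (Fin 2) F}
    (hker : ∀ H : MvPolynomial (Fin 2) F, aeval ζ H = 0 ↔ G ∣ H) {i a : Fin 2} (hai : a ≠ i)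
    (hi : pderiv i G ≠ 0) : Transcendental F (ζ a) := by
  rw [transcendental_iff]
  intro q hq
  by_contra hq0
  have h1 : aeval ζ (Polynomial.aeval (X a : MvPolynomial (Fin 2) F) q) = 0 := by
    rw [← hq, ← Polynomial.aeval_algHom_apply, aeval_X]
  obtain ⟨Q, hQ⟩ := (hker _).mp h1
  have hne : Polynomial.aeval (X a : MvPolynomial (Fin 2) F) q ≠ 0 := fun h0 =>
    hq0 ((transcendental_iff.mp (transcendental_X F a)) q h0)
  have hd : degreeOf i (Polynomial.aeval (X a : MvPolynomial (Fin 2) F) q) = 0 := by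
    rw [Polynomial.aeval_eq_sum_range]
    refine Nat.le_zero.mp ((degreeOf_sum_le _ _ _).trans (Finset.sup_le fun n _ => ?_))
    rw [smul_eq_C_mul]
    refine (degreeOf_C_mul_le _ _ _).trans ?_
    rw [degreeOf_X_pow_of_ne _ hai.symm]
  rw [hQ] at hd hne
  rw [degreeOf_mul_eq (left_ne_zero_of_mul hne) (right_ne_zero_of_mul hne)] at hd
  refine hi (pderiv_eq_zero_of_notMem_vars ?_)
  intro hv
  rw [mem_vars] at hv
  obtain ⟨m, hm, him⟩ := hv
  have h3 := monomial_le_degreeOf i hm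
  exact (Finsupp.mem_support_iff.mp him) (by omega)

/-- Degree of the function field of a plane curve over that of a coordinate line. -/
theorem finrank_le_of_plane {F Kb M : Type} [Field F] [Field Kb] [Field M] [Algebra F Kb]
    [Algebra F M] [Algebra Kb M] [IsScalarTower F Kb M] {ζ : Fin 2 → M}
    {G : MvPolynomial (Fin 2) F} {i : Fin 2} (hG : aeval ζ G = 0)
    (hne : aeval ζ (pderiv i G) ≠ 0) (hmem : ∀ a, a ≠ i → ∃ b : Kb, algebraMap Kb M b = ζ a)
    (hgen : ∀ m : M, ∃ A B : MvPolynomial (Fin 2) F,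
      aeval ζ B ≠ 0 ∧ m * aeval ζ B = aeval ζ A) :
    FiniteDimensional Kb M ∧ finrank Kb M ≤ G.totalDegree := by
  classical
  choose b hb using hmem
  let u : Fin 2 → Polynomial Kb := fun a => if h : a = i then Polynomial.X else Polynomial.C (b a h)
  let ev : MvPolynomial (Fin 2) F →ₐ[F] Polynomial Kb := aeval u
  have hu : ∀ a, Polynomial.aeval (ζ i) (u a) = ζ a := by
    intro a
    by_cases h : a = i
    · simp [u, h]
    · simp [u, h, hb]
  have hev : ∀ H, Polynomial.aeval (ζ i) (ev H) = aeval ζ H := by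
    intro H
    have h := (((Polynomial.aeval (ζ i) : Polynomial Kb →ₐ[Kb] M)).restrictScalars F).comp_apply
      (aeval u) H
    rw [comp_aeval] at h
    refine h.symm.trans ?_
    congr 1
    exact congrArg _ (funext hu)
  have hder : ∀ H, Polynomial.derivative (ev H) = ev (pderiv i H) := by
    intro H
    induction H using MvPolynomial.induction_on with
    | C x =>
      rw [pderiv_C, map_zero]
      change Polynomial.derivative (aeval u (C x)) = 0
      rw [aeval_C, IsScalarTower.algebraMap_apply F Kb (Polynomial Kb)]
      exact Polynomial.derivative_C
    | add p q hp hq => rw [map_add, map_add, map_add, map_add, hp, hq]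
    | mul_X p a hp =>
      rw [map_mul, Polynomial.derivative_mul, hp, Derivation.leibniz, map_add, smul_eq_mul,
        smul_eq_mul, map_mul, map_mul, pderiv_X]
      have : Polynomial.derivative (ev (X a)) = ev (Pi.single (M := fun _ => MvPolynomial (Fin 2) F) i 1 a) := by
        change Polynomial.derivative (aeval u (X a)) = _
        rw [aeval_X]
        by_cases h : a = i
        · subst h
          simp [u]
        · simp [u, h]
      rw [this]
      ring
  have hne0 : ev G ≠ 0 := by
    intro h0
    apply hne
    rw [← hev, ← hder, h0, map_zero, map_zero]
  have hdeg : (ev G).natDegree ≤ G.totalDegree := by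
    change (aeval u G).natDegree ≤ _
    rw [aeval_def, eval₂_eq]
    refine Polynomial.natDegree_sum_le_of_forall_le _ _ fun m hm => ?_
    rw [IsScalarTower.algebraMap_apply F Kb (Polynomial Kb)]
    refine (Polynomial.natDegree_C_mul_le _ _).trans ?_
    refine (Polynomial.natDegree_prod_le _ _).trans ?_
    refine le_trans ?_ (le_totalDegree hm)
    refine Finset.sum_le_sum fun a _ => ?_
    refine Polynomial.natDegree_pow_le.trans ?_
    have : (u a).natDegree ≤ 1 := by
      by_cases h : a = i
      · simp [u, h]
      · simp [u, h]
    nlinarith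
  have hroot : Polynomial.aeval (ζ i) (ev G) = 0 := by rw [hev, hG]
  have hInteg : IsIntegral Kb (ζ i) := isAlgebraic_iff_isIntegral.mp ⟨_, hne0, hroot⟩
  have htop : IntermediateField.adjoin Kb {ζ i} = ⊤ := by
    rw [eq_top_iff]
    intro m _
    have hm : ∀ H : MvPolynomial (Fin 2) F, aeval ζ H ∈ IntermediateField.adjoin Kb {ζ i} := by
      intro H
      rw [← hev]
      exact IntermediateField.algebra_adjoin_le_adjoin Kb {ζ i}
        (Polynomial.aeval_mem_adjoin_singleton Kb (ζ i))
    obtain ⟨A, B, hB, hAB⟩ := hgen m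
    rw [← mul_div_cancel_right₀ m hB, hAB]
    exact div_mem (hm A) (hm B)
  have hf := IntermediateField.adjoin.finrank hInteg
  have hfd := IntermediateField.adjoin.finiteDimensional hInteg
  rw [htop] at hf hfd
  have hfd2 : FiniteDimensional Kb M :=
    Module.Finite.equiv (IntermediateField.topEquiv (F := Kb) (E := M)).toLinearEquiv
  refine ⟨hfd2, ?_⟩
  rw [← IntermediateField.finrank_top', hf]
  exact (Polynomial.natDegree_le_of_dvd (minpoly.dvd Kb (ζ i) hroot) hne0).trans hdeg

end SurfaceDegree

end

/-! ### The second section of the surface -/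

section

open Submodule Module MvPolynomial

section SurfaceSections

/-- An intermediate field containing the image of `F`, as a field with the two algebra structures. -/
theorem exists_subfield_alg {K' F M : Type} [Field K'] [Field F] [Field M] [Algebra K' M]
    [Algebra F M] (E : IntermediateField K' M) (hF : ∀ f : F, algebraMap F M f ∈ E) :
    ∃ (Kb : Type) (_ : Field Kb) (_ : Algebra K' Kb) (_ : Algebra Kb M) (_ : Algebra F Kb)
      (_ : IsScalarTower K' Kb M) (_ : IsScalarTower F Kb M),
      ∀ m, m ∈ E ↔ ∃ b : Kb, algebraMap Kb M b = m := by
  letI : Algebra F E := ((algebraMap F M).codRestrict E hF).toAlgebra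
  exact ⟨E, inferInstance, inferInstance, inferInstance, inferInstance, inferInstance,
    IsScalarTower.of_algebraMap_eq fun _ => rfl,
    fun m => ⟨fun hm => ⟨⟨m, hm⟩, rfl⟩, fun ⟨b, hb⟩ => hb ▸ b.2⟩⟩

/-- The subfield `K(c)` of `M`, as a field of rational functions. -/
theorem exists_ratSection {k K M ι : Type} [Field k] [Field K] [Field M] [Algebra k K] [Algebra k M]
    [Algebra K M] [IsScalarTower k K M] {c : ι → M} (hc : AlgebraicIndependent K c) :
    ∃ (K' : Type) (_ : Field K') (_ : Algebra K K') (_ : Algebra k K') (_ : Algebra K' M)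
      (_ : IsScalarTower k K K') (_ : IsScalarTower K K' M) (_ : IsScalarTower k K' M)
      (c' : ι → K'), (∀ x : K', ∃ P Q : MvPolynomial ι K, aeval c' Q ≠ 0 ∧
        x * aeval c' Q = aeval c' P) ∧ AlgebraicIndependent K c' ∧
        ∀ j, algebraMap K' M (c' j) = c j := by
  obtain ⟨K', iF, iA, c', gen, ind, hf⟩ := exists_ratField K ι
  obtain ⟨f, hf⟩ := hf M c hc
  letI i1 : Algebra k K' := ((algebraMap K K').comp (algebraMap k K)).toAlgebra
  letI i2 : Algebra K' M := f.toRingHom.toAlgebra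
  have t1 : IsScalarTower k K K' := IsScalarTower.of_algebraMap_eq fun _ => rfl
  have t2 : IsScalarTower K K' M := IsScalarTower.of_algebraMap_eq fun x => (f.commutes x).symm
  have t3 : IsScalarTower k K' M := IsScalarTower.of_algebraMap_eq fun x => by
    rw [IsScalarTower.algebraMap_apply k K M]
    exact (f.commutes _).symm
  exact ⟨K', iF, iA, i1, i2, t1, t2, t3, c', gen, ind, hf⟩

/-- The degree of a section is bounded after a free extension of the base field. -/
theorem finrank_linSys_le_of_free {K' Kb M ι : Type} [Field K'] [Field Kb] [Field M]
    [Algebra K' Kb] [Algebra K' M] [Algebra Kb M] [IsScalarTower K' Kb M] {r e : ℕ}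
    {η : Fin (r + 1) → M} {x : ι → M}
    (hx : AlgebraicIndependent (Algebra.adjoin K' (Set.range η)) x)
    (hgen : ∀ b : Kb, algebraMap Kb M b ∈ IntermediateField.adjoin K' (Set.range x))
    (hfin : FiniteDimensional Kb M) (he : finrank Kb M ≤ e) (t : ℕ) :
    finrank K' (linSys K' η ^ t : Submodule K' M) ≤ e := by
  have := linSys_pow_finite (k := K') η t
  rw [← finrank_span_of_free (F := Kb) hx (fun b => gen_iff_mem_adjoin.mpr (hgen b))
    (linSys K' η ^ t) (linSys_pow_le_adjoin η t)]
  exact (Submodule.finrank_le _).trans he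

variable {k K F M : Type} [Field k] [Field K] [Field F] [Field M] [Algebra k K] [Algebra k F]
  [Algebra K F] [Algebra k M] [Algebra K M] [Algebra F M] [IsScalarTower k K F]
  [IsScalarTower k F M] [IsScalarTower K F M] [IsScalarTower k K M] {r : ℕ}
  {c : Option (Fin 3 × Fin r) → F} {cK : Fin (r + 1) → K} {η : Fin (r + 1) → M}

/-- If a projected coordinate is transcendental, the section is not finite: the powers of that coordinate
lie in the spaces spanned by the `linSys`. -/
theorem unbounded_of_transcendental (h0 : η 0 = 1) {i : Fin 2}
    (hi : Transcendental F (planePt c η i)) (N : ℕ) :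
    ∃ t, N < finrank K (linSys K η ^ t : Submodule K M) := by
  by_contra hno
  push Not at hno
  obtain ⟨hfin, -⟩ := finite_adjoin_of_bounded h0 hno
  have halg : ∀ l, IsIntegral F (η l) := by
    intro l
    have : Module.Finite K (Algebra.adjoin K (Set.range η)) := hfin
    have h1 : IsIntegral K (⟨η l, Algebra.subset_adjoin ⟨l, rfl⟩⟩ :
      Algebra.adjoin K (Set.range η)) := Algebra.IsIntegral.isIntegral _
    have h2 : IsIntegral K (η l) := h1.map (Algebra.adjoin K (Set.range η)).val
    exact h2.tower_top
  refine hi (IsIntegral.isAlgebraic ?_)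
  exact IsIntegral.sum _ fun l _ => isIntegral_algebraMap.mul (halg _)

/-- The second generic hyperplane section of the surface `V(η)`; it consists of at most `deg G`
points, since it is cut out on the plane model `G = 0` by a generic line. -/
theorem ProjBase.exists_surface_sections [CharZero k] (B : ProjBase k K F c cK)
    (h : ProjData k c η) {G : MvPolynomial (Fin 2) F} (he : 1 ≤ G.totalDegree)
    (hker : ∀ H : MvPolynomial (Fin 2) F, aeval (planePt c η) H = 0 ↔ G ∣ H)
    (hgen : ∀ m : M, ∃ A B : MvPolynomial (Fin 2) F,
      aeval (planePt c η) B ≠ 0 ∧ m * aeval (planePt c η) B = aeval (planePt c η) A) :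
    ∃ (K' : Type) (_ : Field K') (_ : Algebra K K') (_ : Algebra k K') (_ : Algebra K' M)
      (_ : IsScalarTower k K K') (_ : IsScalarTower K K' M) (_ : IsScalarTower k K' M)
      (c' : Fin (r + 1) → K'), GenSec K K' η c' ∧
      FiniteDimensional K' (Subalgebra.toSubmodule (Algebra.adjoin K' (Set.range η))) ∧
      finrank K' (Subalgebra.toSubmodule (Algebra.adjoin K' (Set.range η))) ≤ G.totalDegree := by
  have hchar : CharZero F := charZero_of_injective_algebraMap (algebraMap k F).injective
  obtain ⟨i, hi⟩ := exists_pderiv_ne he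
  obtain ⟨a, hai⟩ : ∃ a : Fin 2, a ≠ i := ⟨1 - i, by fin_cases i <;> simp⟩
  have hother : ∀ a', a' ≠ i → a' = a := by
    intro a' h'
    fin_cases i <;> fin_cases a <;> fin_cases a' <;> simp_all
  have hζi : aeval (planePt c η) (pderiv i G) ≠ 0 := by
    intro h0
    obtain ⟨Q, hQ⟩ := (hker _).mp h0
    have h1 := totalDegree_pderiv_lt i G (n := G.totalDegree - 1) (by omega)
    rw [hQ] at h1 hi
    rw [totalDegree_mul_of_isDomain (left_ne_zero_of_mul hi) (right_ne_zero_of_mul hi)] at h1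
    omega
  have htrans := transcendental_of_pderiv hker hai hi
  have hfree := B.free_section h
  let p : Fin 2 → Fin r → M := fun b l => algebraMap F M (c (some (b.castSucc, l)))
  have hp : ∀ b l, p b l = algebraMap F M (c (some (b.castSucc, l))) := fun _ _ => rfl
  let cM : Fin (r + 1) → M := Fin.cons (- planePt c η a) (p a)
  have hrel : ∑ j, cM j * η j = 0 := by
    rw [Fin.sum_univ_succ]
    simp only [cM, Fin.cons_zero, Fin.cons_succ, h.y_zero, mul_one]
    exact neg_add_cancel _
  have hcM : AlgebraicIndependent K cM :=
    genSec_indep h.y_zero (unbounded_of_transcendental h.y_zero htrans) hrel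
      (hfree.comp (fun l => (a, l)) fun l l' hl => (Prod.mk.inj hl).2)
  obtain ⟨K', iF, iA, i1, i2, t1, t2, t3, c', gen', ind', hc'⟩ := exists_ratSection (k := k) hcM
  have S2 : GenSec K K' η c' :=
    { y_zero := h.y_zero
      gen := gen'
      indep := ind'
      rel := by simp only [hc']; exact hrel
      free := by
        simp only [hc']
        exact hfree.comp (fun l => (a, l)) fun l l' hl => (Prod.mk.inj hl).2 }
  refine ⟨K', iF, iA, i1, i2, t1, t2, t3, c', S2, ?_⟩
  have hx : AlgebraicIndependent (Algebra.adjoin K' (Set.range η)) (p i) := by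
    have h2 : AlgebraicIndependent (Algebra.adjoin K (Set.range η)) (Sum.elim (p i) (p a)) := by
      have h3 := hfree.comp (Sum.elim (fun l => (i, l)) (fun l => (a, l))) (by
        rintro (l | l) (l' | l') hl
        · simpa using hl
        · exact absurd (Prod.mk.inj hl).1.symm hai
        · exact absurd (Prod.mk.inj hl).1 hai
        · simpa using hl)
      convert h3 using 1
      ext (l | l) <;> rfl
    refine indep_acl Subtype.val_injective (fun b => ?_) (indep_split h2)
    have hy : ∀ j, η j ∈ acl K (Set.range η ∪ Set.range (p a)) :=
      fun j => subset_acl _ (Or.inl ⟨j, rfl⟩)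
    have hpp : ∀ l, p a l ∈ acl K (Set.range η ∪ Set.range (p a)) := fun l =>
      subset_acl _ (Or.inr ⟨l, rfl⟩)
    refine adjoin_mem_acl (K := K') (gen_mem_acl gen' fun j => ?_) hy b
    rw [hc']
    induction j using Fin.cases with
    | zero => exact neg_mem (sum_mem fun l _ => mul_mem (hpp l) (hy l.succ))
    | succ j => exact hpp j
  have hK' : ∀ j, cM j ∈ IntermediateField.adjoin K' (Set.range (p i)) := by
    intro j
    rw [← hc']
    exact IntermediateField.algebraMap_mem _ _
  have hpE : ∀ b l, p b l ∈ IntermediateField.adjoin K' (Set.range (p i)) := by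
    intro b l
    by_cases hb : b = i
    · subst hb
      exact IntermediateField.subset_adjoin _ _ ⟨l, rfl⟩
    · rw [hother b hb]
      exact hK' l.succ
  have hF : ∀ f : F, algebraMap F M f ∈ IntermediateField.adjoin K' (Set.range (p i)) := by
    intro f
    obtain ⟨P, Q, hQ, hPQ⟩ := B.gen_section (Φ := M) f
    have hP : ∀ P : MvPolynomial (Fin 2 × Fin r) K,
        aeval (fun i : Fin 2 × Fin r => algebraMap F M (c (some (i.1.castSucc, i.2)))) P ∈
          IntermediateField.adjoin K' (Set.range (p i)) := by
      intro P
      rw [aeval_def, eval₂_eq]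
      refine sum_mem fun m _ => mul_mem ?_ (prod_mem fun j _ => pow_mem (hpE j.1 j.2) _)
      rw [IsScalarTower.algebraMap_apply K K' M]
      exact IntermediateField.algebraMap_mem _ _
    rw [← mul_div_cancel_right₀ (algebraMap F M f) hQ, hPQ]
    exact div_mem (hP P) (hP Q)
  obtain ⟨Kb, j1, j2, j3, j4, j5, j6, hE⟩ := exists_subfield_alg _ hF
  obtain ⟨hfin, hle⟩ := finrank_le_of_plane (Kb := Kb) ((hker G).mpr dvd_rfl) hζi (fun b hb => by
    rw [← hE, hother b hb]
    have := neg_mem (hK' 0)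
    simpa [cM] using this) hgen
  exact finite_adjoin_of_bounded h.y_zero fun t => finrank_linSys_le_of_free hx
    (fun b => (hE _).mpr ⟨b, rfl⟩) hfin hle t

end SurfaceSections

end

/-! ### Dimension -/

section

open Submodule Module MvPolynomial

section KrullDimension

/-- Lying over and incomparability. -/
theorem ringKrullDim_eq_of_integral {R S : Type} [CommRing R] [CommRing S] [IsDomain R] [IsDomain S]
    [Algebra R S] [Algebra.IsIntegral R S] (hinj : Function.Injective (algebraMap R S)) :
    ringKrullDim S = ringKrullDim R := by
  refine le_antisymm ?_ ?_
  · refine Order.krullDim_le_of_strictMono (PrimeSpectrum.comap (algebraMap R S)) ?_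
    intro P Q h
    exact Ideal.IsIntegral.comap_lt_comap (R := R) (A := S) h
  · refine iSup_le fun l => ?_
    obtain ⟨Q, -, hQ, hQl⟩ := Ideal.exists_ideal_over_prime_of_isIntegral (S := S)
      l.head.asIdeal ⊥ (by
        rw [← RingHom.ker_eq_comap_bot, (RingHom.injective_iff_ker_eq_bot _).mp hinj]
        exact bot_le)
    have : Q.LiesOver (RelSeries.head l).asIdeal := ⟨hQl.symm⟩
    obtain ⟨L, hL, -⟩ := Ideal.exists_ltSeries_of_hasGoingUp l Q
    rw [← hL]
    exact Order.LTSeries.length_le_krullDim L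

/-- By Noether normalization. -/
theorem ringKrullDim_eq_trdeg (k : Type) {A : Type} [Field k] [CommRing A] [IsDomain A] [Algebra k A]
    [Algebra.FiniteType k A] {n : ℕ} (h : Algebra.trdeg k A = n) : ringKrullDim A = n := by
  obtain ⟨s, g, hinj, hInteg⟩ := exists_integral_inj_algHom_of_fg k A
  letI : Algebra (MvPolynomial (Fin s) k) A := g.toRingHom.toAlgebra
  have : IsScalarTower k (MvPolynomial (Fin s) k) A :=
    IsScalarTower.of_algebraMap_eq fun x => (g.commutes x).symm
  have : Algebra.IsIntegral (MvPolynomial (Fin s) k) A := ⟨fun a => hInteg a⟩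
  have hf : FaithfulSMul (MvPolynomial (Fin s) k) A :=
    (faithfulSMul_iff_algebraMap_injective _ _).mpr hinj
  have h1 := trdeg_add_eq k (MvPolynomial (Fin s) k) (A := A)
  rw [trdeg_eq_zero (R := MvPolynomial (Fin s) k) (A := A),
    MvPolynomial.trdeg_of_isDomain, h, add_zero] at h1
  simp only [Cardinal.mk_fin, Cardinal.lift_natCast] at h1
  have hs : s = n := by exact_mod_cast h1
  rw [ringKrullDim_eq_of_integral (R := MvPolynomial (Fin s) k) hinj,
    MvPolynomial.ringKrullDim_of_isNoetherianRing, ringKrullDim_eq_zero_of_field, hs]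
  simp

/-- The number of variables of a field of rational functions. -/
theorem trdeg_of_gen {k K ι : Type} [Field k] [Field K] [Algebra k K] {c : ι → K}
    (gen : ∀ x : K, ∃ P Q : MvPolynomial ι k, aeval c Q ≠ 0 ∧ x * aeval c Q = aeval c P)
    (hc : AlgebraicIndependent k c) : Algebra.trdeg k K = Cardinal.mk ι := by
  have h : IsTranscendenceBasis k c := by
    rw [isTranscendenceBasis_iff_algebraicIndependent_isAlgebraic]
    exact ⟨hc, acl_isAlgebraic (acl_top_of_gen (L := K) c gen fun i => subset_acl _ ⟨i, rfl⟩)⟩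
  exact h.cardinalMk_eq_trdeg.symm

/-- A surface has two-dimensional function field: count transcendence degrees in the function
field of its generic codimension-two section. -/
theorem trdeg_eq_two {k K K' L A : Type} [Field k] [Field K] [Field K'] [Field L] [CommRing A]
    [IsDomain A] [Algebra k K] [Algebra K K'] [Algebra k K'] [Algebra K' L] [Algebra K L]
    [Algebra k L] [IsScalarTower k K K'] [IsScalarTower K K' L] [IsScalarTower k K L]
    [IsScalarTower k K' L] [Algebra k A] [Algebra A L] [IsScalarTower k A L]
    (hA : Function.Injective (algebraMap A L)) [Algebra.IsAlgebraic K' L] {r : ℕ}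
    {c : Fin (r + 1) → K} {c' : Fin (r + 1) → K'} {y : Fin r → A}
    (gen : ∀ x : K, ∃ P Q : MvPolynomial (Fin (r + 1)) k,
      aeval c Q ≠ 0 ∧ x * aeval c Q = aeval c P)
    (hc : AlgebraicIndependent k c)
    (gen' : ∀ x : K', ∃ P Q : MvPolynomial (Fin (r + 1)) K,
      aeval c' Q ≠ 0 ∧ x * aeval c' Q = aeval c' P)
    (hc' : AlgebraicIndependent K c')
    (hrel : algebraMap K L (c 0) = - ∑ j, algebraMap K L (c j.succ) * algebraMap A L (y j))
    (hrel' : algebraMap K' L (c' 0) = - ∑ j, algebraMap K' L (c' j.succ) * algebraMap A L (y j))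
    (hp : AlgebraicIndependent A (Sum.elim (fun j : Fin r => algebraMap K' L (c' j.succ))
        (fun j : Fin r => algebraMap K L (c j.succ)))) :
    Algebra.trdeg k A = 2 := by
  set p : Fin r ⊕ Fin r → L := Sum.elim (fun j : Fin r => algebraMap K' L (c' j.succ))
        (fun j : Fin r => algebraMap K L (c j.succ)) with hpdef
  have hfA : FaithfulSMul A L := (faithfulSMul_iff_algebraMap_injective _ _).mpr hA
  have hbasis : IsTranscendenceBasis A p := by
    rw [isTranscendenceBasis_iff_algebraicIndependent_isAlgebraic]
    refine ⟨hp, ⟨fun a => ?_⟩⟩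
    obtain ⟨B', hB'⟩ : ∃ B' : Subalgebra k L,
      B' = (Algebra.adjoin A (Set.range p)).restrictScalars k := ⟨_, rfl⟩
    have hAB : ∀ a : A, algebraMap A L a ∈ B' := fun a => by
      rw [hB']; exact (Algebra.adjoin A (Set.range p)).algebraMap_mem a
    have hpB : ∀ j, p j ∈ B' := fun j => by
      rw [hB']; exact Algebra.subset_adjoin (R := A) ⟨j, rfl⟩
    have hcB : ∀ j, algebraMap K L (c j) ∈ B' := by
      intro j
      induction j using Fin.cases with
      | zero =>
        rw [hrel]
        exact neg_mem (sum_mem fun j _ => mul_mem (hpB (Sum.inr j)) (hAB _))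
      | succ j => exact hpB (Sum.inr j)
    have hcB' : ∀ j, algebraMap K' L (c' j) ∈ B' := by
      intro j
      induction j using Fin.cases with
      | zero =>
        rw [hrel']
        exact neg_mem (sum_mem fun j _ => mul_mem (hpB (Sum.inl j)) (hAB _))
      | succ j => exact hpB (Sum.inl j)
    have hgen : ∀ x : K', ∃ P Q : MvPolynomial (Fin (r + 1) ⊕ Fin (r + 1)) k,
        aeval (Sum.elim c' fun j => algebraMap K K' (c j)) Q ≠ 0 ∧
        x * aeval (Sum.elim c' fun j => algebraMap K K' (c j)) Q =
          aeval (Sum.elim c' fun j => algebraMap K K' (c j)) P := by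
      intro x
      rw [gen_iff_mem_adjoin]
      exact gen_trans gen gen' (IntermediateField.adjoin k
          (Set.range (Sum.elim c' fun j => algebraMap K K' (c j))))
        (fun i => IntermediateField.subset_adjoin _ _ ⟨Sum.inr i, rfl⟩)
        (fun i => IntermediateField.subset_adjoin _ _ ⟨Sum.inl i, rfl⟩) x
    have h := acl_top_of_gen (L := L) _ hgen (s := (B' : Set L)) (by
      rintro (j | j)
      · exact subset_acl _ (hcB' j)
      · refine subset_acl _ ?_
        simp only [Sum.elim_inr]
        rw [← IsScalarTower.algebraMap_apply K K' L]
        exact hcB j) a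
    rw [mem_acl, Algebra.adjoin_eq, hB'] at h
    exact h
  have e1 := trdeg_add_eq k A (A := L)
  have e2 := trdeg_add_eq k K' (A := L)
  have e3 := trdeg_add_eq k K (A := K')
  rw [← hbasis.cardinalMk_eq_trdeg] at e1
  rw [trdeg_of_gen gen hc, trdeg_of_gen gen' hc'] at e3
  rw [trdeg_eq_zero (R := K') (A := L), ← e3, add_zero, ← e1] at e2
  simp only [Cardinal.mk_fin, Cardinal.mk_sum, Cardinal.lift_natCast] at e2
  have e4 : (2 : Cardinal) + ((r : Cardinal) + r) = Algebra.trdeg k A + ((r : Cardinal) + r) := by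
    rw [← e2]
    push_cast
    ring
  refine (Cardinal.eq_of_add_eq_add_right e4 ?_).symm
  exact_mod_cast Cardinal.natCast_lt_aleph0 (n := r + r)

/-- A variety whose second generic hyperplane section is finite, and which has two such sections
through its generic point, has dimension two. -/
theorem GenSec.trdeg_surface {k K K' Φ : Type} [Field k] [Field K]
    [Field K'] [Field Φ] [Algebra k K] [Algebra K Φ] [Algebra k Φ] [IsScalarTower k K Φ]
    [Algebra K K'] [Algebra K' Φ] [IsScalarTower K K' Φ] [Algebra k K'] [IsScalarTower k K K']
    [IsScalarTower k K' Φ] {r : ℕ}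
    {c : Fin (r + 1) → K} {c' : Fin (r + 1) → K'} {y : Fin (r + 1) → Φ} (S1 : GenSec k K y c)
    (S2 : GenSec K K' y c')
    (hfin : FiniteDimensional K' (Subalgebra.toSubmodule (Algebra.adjoin K' (Set.range y)))) :
    Algebra.trdeg k (Algebra.adjoin k (Set.range y)) = 2 := by
  obtain ⟨L, hL, hLfin⟩ := exists_field_adjoin hfin
  have hyL : ∀ a : Algebra.adjoin k (Set.range y), (a : Φ) ∈ L := by
    intro a
    change (a : Φ) ∈ L.toSubalgebra
    rw [hL]
    have h : Algebra.adjoin k (Set.range y) ≤ (Algebra.adjoin K' (Set.range y)).restrictScalars k :=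
      Algebra.adjoin_le fun x hx => Algebra.subset_adjoin (R := K') hx
    exact h a.2
  letI : Algebra (Algebra.adjoin k (Set.range y)) L :=
    ((algebraMap (Algebra.adjoin k (Set.range y)) Φ).codRestrict L hyL).toAlgebra
  have t0 : IsScalarTower (Algebra.adjoin k (Set.range y)) L Φ :=
    IsScalarTower.of_algebraMap_eq fun _ => rfl
  letI : Algebra K L := ((algebraMap K' L).comp (algebraMap K K')).toAlgebra
  letI : Algebra k L := ((algebraMap K' L).comp (algebraMap k K')).toAlgebra
  have t1 : IsScalarTower K K' L := IsScalarTower.of_algebraMap_eq fun _ => rfl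
  have t2 : IsScalarTower k K' L := IsScalarTower.of_algebraMap_eq fun _ => rfl
  have t3 : IsScalarTower k K L := IsScalarTower.of_algebraMap_eq fun x => by
    change algebraMap K' L (algebraMap k K' x) = algebraMap K' L (algebraMap K K' _)
    rw [← IsScalarTower.algebraMap_apply k K K']
  have hKL : ∀ x : K, algebraMap L Φ (algebraMap K L x) = algebraMap K Φ x := fun x => by
    rw [IsScalarTower.algebraMap_apply K K' Φ]; rfl
  have hK'L : ∀ x : K', algebraMap L Φ (algebraMap K' L x) = algebraMap K' Φ x := fun x => rfl
  have t4 : IsScalarTower k (Algebra.adjoin k (Set.range y)) L :=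
    IsScalarTower.of_algebraMap_eq fun x => by
      apply (algebraMap L Φ).injective
      change algebraMap K' Φ (algebraMap k K' x) = algebraMap k Φ x
      rw [← IsScalarTower.algebraMap_apply k K' Φ]
  have hAL : ∀ x : Algebra.adjoin k (Set.range y), algebraMap L Φ
    (algebraMap (Algebra.adjoin k (Set.range y)) L x) = x := fun _ => rfl
  refine trdeg_eq_two (K := K) (K' := K') (L := L)
    (y := fun j => ⟨y j.succ, Algebra.subset_adjoin ⟨j.succ, rfl⟩⟩)
    (fun a b hab => ?_) S1.gen S1.indep S2.gen S2.indep ?_ ?_ ?_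
  · have := congrArg (algebraMap L Φ) hab
    rw [hAL, hAL] at this
    exact Subtype.ext this
  · apply (algebraMap L Φ).injective
    rw [map_neg, map_sum]
    simp only [map_mul, hKL, hAL]
    have h := S1.rel
    rw [Fin.sum_univ_succ, S1.y_zero, mul_one] at h
    exact eq_neg_of_add_eq_zero_left h
  · apply (algebraMap L Φ).injective
    rw [map_neg, map_sum]
    simp only [map_mul, hK'L, hAL]
    have h := S2.rel
    rw [Fin.sum_univ_succ, S1.y_zero, mul_one] at h
    exact eq_neg_of_add_eq_zero_left h
  · have h := S1.free_sum S2
    refine AlgebraicIndependent.of_comp (IsScalarTower.toAlgHom _ L Φ) ?_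
    convert h using 1
    ext (j | j)
    · exact hK'L _
    · exact hKL _

/-- The cone over a surface has dimension three. -/
theorem coneOf_isSurface {r : ℕ} {Φ : Type} [Field Φ] [Algebra ℂ Φ] {y : Fin (r + 1) → Φ}
    (h0 : y 0 = 1) (htr : Algebra.trdeg ℂ (Algebra.adjoin ℂ (Set.range y)) = 2) :
    IsSurface (coneOf y) := by
  refine ⟨coneOf_isHomog y, coneOf_isPrime y, ?_⟩
  have hprime := coneOf_isPrime y
  have hdom : IsDomain (MPoly (r + 1) ⧸ coneOf y) := Ideal.Quotient.isDomain _
  obtain ⟨A, hA⟩ : ∃ A, A = Algebra.adjoin ℂ (Set.range y) := ⟨_, rfl⟩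
  rw [← hA] at htr
  have hyA : ∀ j, y j ∈ A := fun j => by rw [hA]; exact Algebra.subset_adjoin ⟨j, rfl⟩
  let u : Fin (r + 1) → Polynomial A := fun j => Polynomial.X * Polynomial.C ⟨y j, hyA j⟩
  let f : MPoly (r + 1) →ₐ[ℂ] Polynomial A := aeval u
  have hker : RingHom.ker f = coneOf y := by
    ext g
    rw [coneOf, RingHom.mem_ker, RingHom.mem_ker]
    have h1 : Polynomial.mapAlgHom A.val (f g) =
        aeval (fun j => Polynomial.X * Polynomial.C (y j)) g := by
      have h2 := (Polynomial.mapAlgHom A.val).comp_apply f g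
      rw [comp_aeval] at h2
      refine h2.symm.trans ?_
      congr 2
      ext1 j
      simp [u]
    refine Iff.trans ?_ (Eq.congr_left h1)
    exact (map_eq_zero_iff _ (Polynomial.map_injective _ Subtype.val_injective)).symm
  have e : (MPoly (r + 1) ⧸ coneOf y) ≃ₐ[ℂ] f.range :=
    (Ideal.quotientEquivAlgOfEq ℂ hker.symm).trans (Ideal.quotientKerEquivRange f)
  have hfu : ∀ j, u j ∈ acl ℂ (f.range : Set (Polynomial A)) := fun j =>
    subset_acl _ ⟨X j, aeval_X _ _⟩
  have hX : (Polynomial.X : Polynomial A) ∈ acl ℂ (f.range : Set (Polynomial A)) := by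
    have h := hfu 0
    have h1 : u 0 = Polynomial.X := by
      change Polynomial.X * Polynomial.C (⟨y 0, hyA 0⟩ : A) = _
      rw [show (⟨y 0, hyA 0⟩ : A) = 1 from Subtype.ext h0, Polynomial.C_1, mul_one]
    rwa [h1] at h
  have hC : ∀ a : A, Polynomial.C a ∈ acl ℂ (f.range : Set (Polynomial A)) := by
    rintro ⟨a, ha⟩
    have hle : A ≤ ((acl ℂ (f.range : Set (Polynomial A))).comap
        (Polynomial.CAlgHom (R := ℂ) (A := A))).map A.val := by
      conv_lhs => rw [hA]
      refine Algebra.adjoin_le ?_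
      rintro _ ⟨j, rfl⟩
      exact ⟨⟨y j, hyA j⟩, acl_of_mul Polynomial.X_ne_zero hX (hfu j), rfl⟩
    obtain ⟨b, hb, hba⟩ := hle ha
    have : b = ⟨a, ha⟩ := Subtype.ext hba
    rw [← this]
    exact hb
  have hall : ∀ q : Polynomial A, q ∈ acl ℂ (f.range : Set (Polynomial A)) := by
    intro q
    rw [q.as_sum_range_C_mul_X_pow]
    exact sum_mem fun i _ => mul_mem (hC _) (pow_mem hX _)
  have halg : Algebra.IsAlgebraic f.range (Polynomial A) := by
    have h := acl_isAlgebraic hall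
    rwa [Algebra.adjoin_eq] at h
  have i1 : FaithfulSMul ℂ A := (faithfulSMul_iff_algebraMap_injective _ _).mpr
    (algebraMap ℂ A).injective
  have i2 : FaithfulSMul ℂ f.range := (faithfulSMul_iff_algebraMap_injective _ _).mpr
    (algebraMap ℂ f.range).injective
  have t1 := trdeg_add_eq ℂ f.range (A := Polynomial A)
  have t2 := trdeg_add_eq ℂ A (A := Polynomial A)
  rw [trdeg_eq_zero (R := f.range) (A := Polynomial A), add_zero, ← t2, htr,
    Polynomial.trdeg_of_isDomain, ← e.trdeg_eq] at t1
  exact ringKrullDim_eq_trdeg ℂ (n := 3) (by rw [t1]; norm_num)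

end KrullDimension

end

/-! ### The surface containing the curve -/

section

open Submodule Module MvPolynomial

section Assembly

variable {K F Φ : Type} [Field K] [Field F] [Field Φ] [Algebra ℂ K] [Algebra ℂ F]
  [Algebra K F] [Algebra ℂ Φ] [Algebra K Φ] [Algebra F Φ] [IsScalarTower ℂ K F]
  [IsScalarTower ℂ F Φ] [IsScalarTower K F Φ] [IsScalarTower ℂ K Φ] {r : ℕ}
  {c : Option (Fin 3 × Fin r) → F} {cK : Fin (r + 1) → K} {y : Fin (r + 1) → Φ}

theorem aeval_map_specialize {k F M Φ κ : Type} [Field k] [Field F] [Field M] [Field Φ]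
    [Algebra k F] [Algebra k M] [Algebra F M] [Algebra k Φ] [Algebra F Φ] [IsScalarTower k F M]
    [IsScalarTower k F Φ] {η : κ → M} {y : κ → Φ}
    (h : ∀ f : MvPolynomial κ F, aeval η f = 0 → aeval y f = 0) (f : MvPolynomial κ k)
    (hf : aeval η f = 0) : aeval y f = 0 := by
  have := h (map (algebraMap k F) f) (by rw [aeval_map_algebraMap]; exact hf)
  rwa [aeval_map_algebraMap] at this

/-- A surface `V(η)` through the curve `V(y)`, with its generic sections, bounds the genus of
the curve. -/
theorem ProjBase.surface_conclusion {M : Type} [Field M] [Algebra ℂ M] [Algebra K M] [Algebra F M]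
    [IsScalarTower ℂ F M] [IsScalarTower K F M] [IsScalarTower ℂ K M]
    (B : ProjBase ℂ K F c cK) (h : ProjData ℂ c y) {d g : ℤ} {N : ℕ}
    (hH : ∀ t : ℕ, N ≤ t → (finrank ℂ (linSys ℂ y ^ t : Submodule ℂ Φ) : ℤ) = d * t + 1 - g)
    {η : Fin (r + 1) → M} (hη : ProjData ℂ c η) {G : MvPolynomial (Fin 2) F}
    (he : 1 ≤ G.totalDegree)
    (hker : ∀ H : MvPolynomial (Fin 2) F, aeval (planePt c η) H = 0 ↔ G ∣ H)
    (hgen : ∀ m : M, ∃ A B : MvPolynomial (Fin 2) F,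
      aeval (planePt c η) B ≠ 0 ∧ m * aeval (planePt c η) B = aeval (planePt c η) A)
    (hsp : ∀ f : MvPolynomial (Fin (r + 1)) F, aeval η f = 0 → aeval y f = 0) :
    ∃ s' π' p' : ℤ, s' ≤ G.totalDegree ∧ IsSurface (coneOf η) ∧ SurfInv (coneOf η) s' π' p' ∧
      (2 * π' + 2 ≤ s' → ∀ (m : ℕ) (ε : ℤ), d - 1 = m * s' + ε → 0 ≤ ε → ε < s' → 1 ≤ m →
        g ≤ (m : ℤ) * (m - 1) / 2 * s' + m * (ε + π') - p' +
          max 0 ((2 * π' - (s' - 1 - ε)) / 2)) := by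
  obtain ⟨K', _, _, _, _, _, _, _, c', S2, hfin, hle⟩ := B.exists_surface_sections hη he hker hgen
  have S1 : GenSec ℂ K η cK := B.genSec hη
  have SC : GenSec ℂ K y cK := B.genSec h
  obtain ⟨-, -, π', p', N', hS⟩ := surf_hilbert S1 S2 hfin
  refine ⟨_, π', p', Nat.cast_le.mpr hle, coneOf_isSurface S1.y_zero (S1.trdeg_surface S2 hfin),
    ⟨N', fun t ht => ?_⟩, fun hπ m ε hdm hε0 hε1 hm => ?_⟩
  · lift t to ℕ using (by omega)
    rw [hilbZ_eq_finrank (y := η) (fun t f hf => mem_coneOf_homogeneous η hf) t]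
    exact (hS t (by exact_mod_cast ht)).1
  · obtain ⟨ψ, hψ⟩ := exists_isRestr (K := K) η y (aeval_map_specialize hsp)
    obtain ⟨LS, hLS, _⟩ := exists_field_adjoin hfin
    obtain ⟨hfC, hdC⟩ := curve_section_finrank SC hH
    obtain ⟨LC, hLC, _⟩ := exists_field_adjoin hfC
    refine genus_le_of_surface S1 S2 SC hψ LS hLS (fun H hH => S1.no_intermediate₂ S2 LS hLS H hH)
      LC hLC (fun H hH => SC.no_intermediate LC hLC H hH) (N := max N N') ?_ ?_ hπ hdm hε0 hε1 hm
      (fun t ht => hS t (le_trans (le_max_right _ _) ht))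
      (fun t ht => hH t (le_trans (le_max_left _ _) ht))
    · rw [← hLS]; rfl
    · rw [← hdC, ← hLC]; rfl

/-- A curve of large genus, given by its generic point with a generic projection, lies on a surface of
degree at most `s`; the last clause is the genus bound on that surface. -/
theorem ProjBase.exists_surface (B : ProjBase ℂ K F c cK) (h : ProjData ℂ c y) {s d g : ℤ} {N : ℕ}
    (hH : ∀ t : ℕ, N ≤ t → (finrank ℂ (linSys ℂ y ^ t : Submodule ℂ Φ) : ℤ) = d * t + 1 - g)
    (hs : 3 ≤ s) (hd : s ^ 3 < d) (hd3 : 30 < d) (hg : (d - 1) ^ 2 - s * (d - 1) ≤ 2 * s * g)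
    {I : Ideal (MPoly (r + 1))}
    (hI : ∀ t : ℕ, ∀ f ∈ homogeneousSubmodule (Fin (r + 1)) ℂ t, f ∈ I ↔ aeval y f = 0) :
    ∃ (T : Ideal (MPoly (r + 1))) (s' π' p' : ℤ), s' ≤ s ∧ IsSurface T ∧ SurfInv T s' π' p' ∧
      T ≤ I ∧
      (2 * π' + 2 ≤ s' → ∀ (m : ℕ) (ε : ℤ), d - 1 = m * s' + ε → 0 ≤ ε → ε < s' → 1 ≤ m →
        g ≤ (m : ℤ) * (m - 1) / 2 * s' + m * (ε + π') - p' +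
          max 0 ((2 * π' - (s' - 1 - ε)) / 2)) := by
  obtain ⟨dF, hdF⟩ := exists_ratField_derivation B.genF B.indF
  obtain ⟨G, hG, hGz, he, hmin, hes, htr⟩ := B.exists_plane_curve h hdF hH hs hd hd3 hg
  obtain ⟨M, _, _, _, _, η, hη, hker, hgen, hsp⟩ :=
    exists_surface_model h B.genF hdF hG hGz he hmin htr
  letI : Algebra K M := ((algebraMap F M).comp (algebraMap K F)).toAlgebra
  have t1 : IsScalarTower K F M := IsScalarTower.of_algebraMap_eq fun _ => rfl
  have t2 : IsScalarTower ℂ K M := IsScalarTower.of_algebraMap_eq fun x => by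
    rw [IsScalarTower.algebraMap_apply K F M, ← IsScalarTower.algebraMap_apply ℂ K F,
      ← IsScalarTower.algebraMap_apply ℂ F M]
  obtain ⟨s', π', p', hs', hsurf, hinv, hgenus⟩ :=
    B.surface_conclusion h hH hη he hker hgen hsp
  exact ⟨coneOf η, s', π', p', hs'.trans hes, hsurf, hinv,
    coneOf_le hI (aeval_map_specialize hsp), hgenus⟩

end Assembly

/-- A curve of large genus lies on a surface of degree at most `s`. -/
theorem exists_surface_of_genus {r : ℕ} {IC : Ideal (MPoly (r + 1))} (hcurve : IsCurve IC)
    (hnd : Nondeg IC) {s d g : ℤ} (hinv : CurveInv IC d g) (hs : 3 ≤ s) (hd : s ^ 3 < d)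
    (hd3 : 30 < d) (hg : (d - 1) ^ 2 - s * (d - 1) ≤ 2 * s * g) :
    ∃ (T : Ideal (MPoly (r + 1))) (s' π' p' : ℤ), s' ≤ s ∧ IsSurface T ∧ SurfInv T s' π' p' ∧
      T ≤ IC ∧
      (2 * π' + 2 ≤ s' → ∀ (m : ℕ) (ε : ℤ), d - 1 = m * s' + ε → 0 ≤ ε → ε < s' → 1 ≤ m →
        g ≤ (m : ℤ) * (m - 1) / 2 * s' + m * (ε + π') - p' +
          max 0 ((2 * π' - (s' - 1 - ε)) / 2)) := by
  have hX : (X 0 : MPoly (r + 1)) ∉ IC := fun h =>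
    X_ne_zero (R := ℂ) (0 : Fin (r + 1)) (hnd _ (isHomogeneous_X ℂ 0) h)
  obtain ⟨Φ, _, _, y, p, D, hy0, hDp, hDy, hI⟩ := exists_curve_model hcurve.2.1 hX
  obtain ⟨N, hN⟩ := hinv
  have hH : ∀ t : ℕ, N.toNat ≤ t →
      (finrank ℂ (linSys ℂ y ^ t : Submodule ℂ Φ) : ℤ) = d * t + 1 - g := fun t ht => by
    rw [← hilbZ_eq_finrank hI t]
    exact hN t (by omega)
  have hinf : ∀ n, ∃ t, n < finrank ℂ (linSys ℂ y ^ t : Submodule ℂ Φ) := by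
    intro n
    refine ⟨N.toNat + n + g.natAbs, ?_⟩
    have h1 := hH (N.toNat + n + g.natAbs) (by omega)
    have h2 : (((N.toNat + n + g.natAbs : ℕ) : ℤ)) ≤ d * ((N.toNat + n + g.natAbs : ℕ) : ℤ) :=
      le_mul_of_one_le_left (by positivity) (by omega)
    omega
  obtain ⟨K, F, _, _, _, _, _, _, c, cK, B, hB⟩ := exists_projBase ℂ r
  obtain ⟨f, hf⟩ := hB Φ _ (indep_proj hy0 hinf (algebraicIndependent_of_derivation D hDp
    (by rintro i _ ⟨j, rfl⟩; exact hDy i j)))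
  letI : Algebra F Φ := f.toRingHom.toAlgebra
  letI : Algebra K Φ := ((algebraMap F Φ).comp (algebraMap K F)).toAlgebra
  have t1 : IsScalarTower ℂ F Φ := IsScalarTower.of_algebraMap_eq fun x => (f.commutes x).symm
  have t2 : IsScalarTower K F Φ := IsScalarTower.of_algebraMap_eq fun _ => rfl
  have t3 : IsScalarTower ℂ K Φ := IsScalarTower.of_algebraMap_eq fun x => by
    rw [IsScalarTower.algebraMap_apply K F Φ, ← IsScalarTower.algebraMap_apply ℂ K F,
      ← IsScalarTower.algebraMap_apply ℂ F Φ]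
  have hcp : ∀ j, algebraMap F Φ (c (some j)) = p j := fun j => hf (some j)
  have h : ProjData ℂ c y := by
    refine ⟨hy0, ?_, D, fun i j => ?_, hDy⟩
    · simp only [hcp]
      exact hf none
    · rw [hcp]; exact hDp i j
  exact B.exists_surface h hH hs hd hd3 hg hI

section Numerics

theorem pow_bound (n : ℕ) (hn : 10 ≤ n) : 8 * n ^ 3 ≤ 2 ^ (n + 3) := by
  induction n, hn using Nat.le_induction with
  | base => norm_num
  | succ n hn ih =>
    have : 3 * n ^ 2 + 3 * n + 1 ≤ n ^ 3 := by nlinarith [mul_le_mul hn hn (by norm_num) (by omega)]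
    calc 8 * (n + 1) ^ 3 = 8 * n ^ 3 + 8 * (3 * n ^ 2 + 3 * n + 1) := by ring
      _ ≤ 2 * 2 ^ (n + 3) := by omega
      _ = 2 ^ (n + 1 + 3) := by ring

/-- The bound `d₀(r)` is at least `(2r - 4)³ ≥ s³`. -/
theorem threshold {r : ℕ} {d s : ℤ} (hr : 4 ≤ r) (hs0 : 3 ≤ s) (hs : s ≤ 2 * (r : ℤ) - 4)
    (hd : d0 (r : ℤ) < d) : s ^ 3 < d ∧ 30 < d := by
  have hs3 : s ^ 3 ≤ (2 * (r : ℤ) - 4) ^ 3 := by gcongr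
  have hs27 : (27 : ℤ) ≤ s ^ 3 := by
    calc (27 : ℤ) = 3 ^ 3 := by norm_num
      _ ≤ s ^ 3 := by gcongr
  unfold d0 at hd
  split_ifs at hd with h1 h2
  · have : r = 4 ∨ r = 5 ∨ r = 6 := by omega
    rcases this with rfl | rfl | rfl <;> norm_num at hd hs3 <;> omega
  · have e : (2 * (r : ℤ) - 4) ^ 3 = 8 * ((r : ℤ) - 2) ^ 3 := by ring
    have h7 : (5 : ℤ) ^ 3 ≤ ((r : ℤ) - 2) ^ 3 := by gcongr; omega
    constructor <;> linarith
  · obtain ⟨n, rfl⟩ : ∃ n, r = n + 2 := ⟨r - 2, by omega⟩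
    have h := pow_bound n (by omega)
    have h' : (8 : ℤ) * (n : ℤ) ^ 3 ≤ 2 ^ (n + 3) := by exact_mod_cast h
    have e : (2 * ((n + 2 : ℕ) : ℤ) - 4) ^ 3 = 8 * (n : ℤ) ^ 3 := by push_cast; ring
    rw [e] at hs3
    rw [Int.toNat_natCast] at hd
    have h10 : (10 : ℤ) ^ 3 ≤ (n : ℤ) ^ 3 := by gcongr; omega
    constructor <;> linarith

theorem two_mul_binom2 (z : ℤ) : 2 * binom2 z = z * (z - 1) := by
  unfold binom2
  obtain ⟨k, hk⟩ := Int.even_mul_pred_self z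
  omega

/-- `G*` is at least Castelnuovo's leading term. -/
theorem Gstar_lower {r d s π p : ℤ} (hs : 3 ≤ s) (hd : 0 < d) (hπ : 0 ≤ π) (hp : p ≤ 0) :
    (d - 1) ^ 2 - s * (d - 1) ≤ 2 * s * Gstar r d s π p := by
  unfold Gstar
  have e1 := Int.mul_ediv_add_emod (d - 1) s
  have e2 := Int.emod_nonneg (d - 1) (show s ≠ 0 by omega)
  have e3 := Int.emod_lt_of_pos (d - 1) (show 0 < s by omega)
  have e4 : 0 ≤ (d - 1) / s := Int.ediv_nonneg (by omega) (by omega)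
  have e5 := two_mul_binom2 ((d - 1) / s)
  have e6 := le_max_left 0 ((2 * π - (s - 1 - (d - 1) % s)) / 2)
  generalize max 0 ((2 * π - (s - 1 - (d - 1) % s)) / 2) = μ at *
  generalize (d - 1) / s = m at *
  generalize (d - 1) % s = ε at *
  generalize binom2 m = b at *
  rw [← e1]
  have h1 : 0 ≤ s * (m * π - p + μ) := by
    have := mul_nonneg e4 hπ
    apply mul_nonneg <;> linarith
  have h2 : 0 ≤ ε * (s - ε) := mul_nonneg e2 (by omega)
  have h3 : 2 * s * (b * s + m * (ε + π) - p + μ) =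
      s * s * (2 * b) + 2 * s * m * ε + 2 * (s * (m * π - p + μ)) := by ring
  rw [h3, e5]
  nlinarith

end Numerics

end

/-- Proposition 1.2(b).  Under the hypotheses of Proposition 1.2, if the
arithmetic genus of `C` equals `G*(r,d,s,π,p)`, then `C` lies on a surface of degree `s`,
sectional genus `π` and arithmetic genus `p`. -/
theorem statement_4 (r : ℕ) (d s π p g : ℤ) (hr : 4 ≤ r)
    (hs1 : (r : ℤ) - 1 ≤ s) (hs2 : s ≤ 2 * (r : ℤ) - 4)
    (hπ1 : 0 ≤ π) (hπ2 : π ≤ s - (r : ℤ) + 1)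
    (hp1 : -(binom2 (s - (r : ℤ) + 1 - π + 1)) ≤ p) (hp2 : p ≤ 0)
    (hd : d0 (r : ℤ) < d)
    (IC : Ideal (MPoly (r + 1)))
    (hcurve : IsCurve IC) (hnd : Nondeg IC) (hinv : CurveInv IC d g)
    (h1 : NotInSurfDegLT IC s) (h2 : NotInSurfSecGT IC s π)
    (h3 : NotInSurfGenLT IC s p)
    (hext : g = Gstar (r : ℤ) d s π p) :
    ∃ T : Ideal (MPoly (r + 1)), IsSurface T ∧ SurfInv T s π p ∧ T ≤ IC := by
  have hs3 : 3 ≤ s := by omega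
  obtain ⟨hds, hd30⟩ := threshold hr hs3 hs2 hd
  obtain ⟨T, s', π', p', hs's, hT, hTinv, hTC, hgenus⟩ :=
    exists_surface_of_genus hcurve hnd hinv hs3 hds hd30
      (by rw [hext]; exact Gstar_lower hs3 (by omega) hπ1 hp2)
  have hs' : s' = s := le_antisymm hs's (not_lt.mp fun h => h1 T s' π' p' hT hTinv h hTC)
  subst hs'
  have hπ' : π' ≤ π := not_lt.mp fun h => h2 T π' p' hT hTinv h hTC
  have hp' : p ≤ p' := not_lt.mp fun h => h3 T π' p' hT hTinv h hTC
  have hm1 : 1 ≤ (d - 1) / s' := by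
    rw [Int.le_ediv_iff_mul_le (by omega)]
    nlinarith [mul_le_mul hs3 hs3 (by norm_num) (by omega)]
  have e1 := Int.mul_ediv_add_emod (d - 1) s'
  have e2 := Int.emod_nonneg (d - 1) (show s' ≠ 0 by omega)
  have e3 := Int.emod_lt_of_pos (d - 1) (show 0 < s' by omega)
  have hm : ((((d - 1) / s').toNat : ℕ) : ℤ) = (d - 1) / s' := Int.toNat_of_nonneg (by omega)
  have hle := hgenus (by omega) ((d - 1) / s').toNat ((d - 1) % s')
    (by rw [hm]; linarith [mul_comm s' ((d - 1) / s')]) e2 e3 (by omega)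
  rw [hm, hext] at hle
  unfold Gstar binom2 at hle
  -- `G*` is strictly increasing in the sectional genus and strictly decreasing in the
  -- arithmetic genus, so equality forces both invariants of the surface.
  have hmax : max 0 ((2 * π' - (s' - 1 - (d - 1) % s')) / 2) ≤
      max 0 ((2 * π - (s' - 1 - (d - 1) % s')) / 2) := by
    apply max_le_max le_rfl
    omega
  have hmπ : π - π' ≤ (d - 1) / s' * (π - π') := le_mul_of_one_le_left (by omega) hm1
  have hsum : (π - π') + (p' - p) ≤ 0 := by linarith
  obtain rfl : π' = π := by omega
  obtain rfl : p' = p := by omega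
  exact ⟨T, hT, hTinv, hTC⟩
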